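/- Let S ⊂ P^r be an irreducible, reduced, nondegenerate projective surface of degree s ≥ r−1 ≥ 2, sectional genus π and arithmetic genus p_a(S), and let C ⊂ S be an irreducible, reduced, nondegenerate projective curve of degree d ≥ s⁴/(2(r−2)), with general hyperplane section Γ. Write d−1 = ms+ε, 0 ≤ ε ≤ s−1. Then: (i) p_a(C) = binom(m,2)·s + m(ε+π) − p_a(S) + ∑_{i=m+1}^{∞} (d − Δh_C(i)); (ii) consequently p_a(C) ≤ binom(m,2)·s + m(ε+π) − p_a(S) + ∑_{i=m+1}^{∞} (d − h_Γ(i)); and (iii) equality holds in (ii) if and only if h¹(P^r, I_C(i)) = 0 for every i ≥ m. -/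

import Mathlib

/-!
Put `m = ⌊(d - 1) / s⌋` and `e = r - 2`.  Everything rests on one fact about the surface,
`surface_hilb`: its Hilbert function agrees with its Hilbert polynomial in degree `m` as soon as
`s ^ 3 ≤ 2 e (m + 1)`, which the lower bound on `d` guarantees (`degree_bound`).

**From the surface to the curve.**  Since `d > s m`, a form of degree `m` vanishing on `C` vanishes
on `S` (`curve_eq_surface`), so `h_C(m) = h_S(m)` is known (`hilb_curve_m`); summing
`d - Δh_C(i)` over `i > m` telescopes and gives (i).  For a linear form `ℓ` not vanishing on `C`,
`Δh_C` is the Hilbert function of `I_C + (ℓ)`, and `h_Γ` that of its saturation; this gives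
`Δh_C ≥ h_Γ`, hence (ii), and equality in (ii) means that `I_C + (ℓ)` is saturated in all degrees
`> m`.  This is equivalent to all graded homomorphisms `𝔪 ^ k → R / I_C` of degrees `≥ m` being
multiplications, that is, to the vanishing of `h¹(I_C(i))` for `i ≥ m` (`h1_vanish_iff`).  That
the dimensions of the spaces of such homomorphisms stay bounded as `k` grows, so that
their supremum over `k` is meaningful, is `finrank_hom_bdd`.

**The surface.**  Graded Noether normalization by three linear forms, a linear form `z` primitive
over them, and a form `H` multiplying the coordinate ring into the subring generated by these four
(`prim_data_gp`) are dehomogenized to a model `SM` of the surface inside its function field `L`: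
`V ⊆ L` is the space of linear forms, `V ^ k` that of forms of degree `k`, and `A k ⊇ V ^ k` is the
space of sections of the `k`-th twist away from the points `y₀ = y₁ = 0`.  Let `u k` be the
dimension of the defect space `A k / V ^ k`.

* The generic member of the pencil `y₀ = t y₁` is a curve `CM` over `ℂ(t)`.  Its forms of degree
  `≥ 2 s - 3` make up all sections, by the duality for plane curves (`CM.G_eq_V`), and in lower
  degrees the failure is controlled by Castelnuovo's bound (`CM.defect_one`, `CM.defect_two`).
  Comparison of dimensions in the pencil (`pencil_ge`, `pencil_le`) bounds the `u k` from above.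
* For `k + 1 ≥ s (s - 1) / 2` the section of the surface by any nonzero linear form `y` attains its
  Hilbert polynomial in degree `k + 1` (`hf_curve`), and this makes multiplication by `y` from
  the defect space in degree `k` to the one in degree `k + 1` surjective (`SM.A_le_of`).  By the
  Hopf lemma on bilinear maps (`hopf`), `u (k + 1) = 0` or `u (k + 1) + e + 2 ≤ u k`.
* The two estimates are incompatible with `u m ≠ 0` (`num_F`), and the vanishing of the defect
  from degree `m` on gives the claim.
-/


open scoped BigOperators

noncomputable section

/-- The homogeneous coordinate ring of `ℙ^{n-1}` over `ℂ`: polynomials in `n` variables. -/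
abbrev MPoly (n : ℕ) : Type := MvPolynomial (Fin n) ℂ

/-- An ideal is homogeneous if it contains all homogeneous components of its members. -/
def IsHomogIdeal {n : ℕ} (I : Ideal (MPoly n)) : Prop :=
  ∀ f ∈ I, ∀ k : ℕ, MvPolynomial.homogeneousComponent k f ∈ I

/-- The degree-`k` graded piece of the homogeneous coordinate ring of the subscheme `V(I)`. -/
def degQ {n : ℕ} (I : Ideal (MPoly n)) (k : ℕ) : Submodule ℂ (MPoly n ⧸ I) :=
  (MvPolynomial.homogeneousSubmodule (Fin n) ℂ k).map (Ideal.Quotient.mkₐ ℂ I).toLinearMap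

/-- The graded pieces, indexed by `ℤ` (zero in negative degrees). -/
def degQZ {n : ℕ} (I : Ideal (MPoly n)) (t : ℤ) : Submodule ℂ (MPoly n ⧸ I) :=
  if 0 ≤ t then degQ I t.toNat else ⊥

/-- The Hilbert function of the closed subscheme `V(I) ⊆ ℙ^{n-1}`. -/
def hilbNat {n : ℕ} (I : Ideal (MPoly n)) (t : ℤ) : ℕ :=
  Module.finrank ℂ (degQZ I t)

/-- The Hilbert function, as an integer-valued function. -/
def hilbZ {n : ℕ} (I : Ideal (MPoly n)) (t : ℤ) : ℤ := (hilbNat I t : ℤ)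

/-- The irrelevant maximal ideal `(x_0, …, x_{n-1})`. -/
def mId (n : ℕ) : Ideal (MPoly n) := Ideal.span (Set.range MvPolynomial.X)

/-- The space of degree-`t` graded module homomorphisms `m^k → R/I`. -/
def gradedHomSub {n : ℕ} (I : Ideal (MPoly n)) (k : ℕ) (t : ℤ) :
    Submodule ℂ ((mId n ^ k : Ideal (MPoly n)) →ₗ[MPoly n] (MPoly n ⧸ I)) where
  carrier := {φ | ∀ (j : ℕ) (f : MPoly n) (hf : f ∈ mId n ^ k),
    f ∈ MvPolynomial.homogeneousSubmodule (Fin n) ℂ j → φ ⟨f, hf⟩ ∈ degQZ I ((j : ℤ) + t)}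
  add_mem' := by
    intro a b ha hb j f hf hj
    simpa using Submodule.add_mem _ (ha j f hf hj) (hb j f hf hj)
  zero_mem' := by
    intro j f hf hj
    simpa using Submodule.zero_mem _
  smul_mem' := by
    intro c φ hφ j f hf hj
    simpa using Submodule.smul_mem _ c (hφ j f hf hj)

/-- `h⁰(X, 𝒪_X(t))` for `X = V(I)`: the stable value of the dimensions of the graded Hom
modules `Hom(m^k, R/I)_t` (the Deligne formula for twisted global sections). -/
def h0Nat {n : ℕ} (I : Ideal (MPoly n)) (t : ℤ) : ℕ :=
  ⨆ k : ℕ, Module.finrank ℂ (gradedHomSub I k t)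

/-- `h¹(ℙ^{n-1}, 𝓘_X(t)) = h⁰(X, 𝒪_X(t)) − h_X(t)` (valid for the saturated ideal of `X`). -/
def h1INat {n : ℕ} (I : Ideal (MPoly n)) (t : ℤ) : ℕ := h0Nat I t - hilbNat I t

/-- The dimension over `ℂ` of the Hartshorne–Rao module `M(X) = ⊕_t H¹(ℙ, 𝓘_X(t))`. -/
def raoDim {n : ℕ} (I : Ideal (MPoly n)) : ℕ := ∑ᶠ t : ℤ, h1INat I t

/-- Arithmetically Cohen–Macaulay (for an integral curve): the Hartshorne–Rao module vanishes. -/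
def IsACM {n : ℕ} (I : Ideal (MPoly n)) : Prop := ∀ t : ℤ, h0Nat I t = hilbNat I t

/-- Saturation of an ideal with respect to the irrelevant maximal ideal. -/
def satIdeal {n : ℕ} (I : Ideal (MPoly n)) : Ideal (MPoly n) where
  carrier := {f | ∃ k : ℕ, ∀ j : Fin n, MvPolynomial.X j ^ k * f ∈ I}
  zero_mem' := ⟨0, fun j => by simpa using I.zero_mem⟩
  add_mem' := by
    rintro f g ⟨k, hk⟩ ⟨l, hl⟩
    refine ⟨k + l, fun j => ?_⟩
    have h1 : MvPolynomial.X (R := ℂ) j ^ (k + l) * (f + g)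
        = MvPolynomial.X j ^ l * (MvPolynomial.X j ^ k * f)
          + MvPolynomial.X j ^ k * (MvPolynomial.X j ^ l * g) := by ring
    rw [h1]
    exact I.add_mem (I.mul_mem_left _ (hk j)) (I.mul_mem_left _ (hl j))
  smul_mem' := by
    rintro c f ⟨k, hk⟩
    refine ⟨k, fun j => ?_⟩
    have h1 : MvPolynomial.X (R := ℂ) j ^ k * (c • f) = c * (MvPolynomial.X j ^ k * f) := by
      rw [smul_eq_mul]; ring
    rw [h1]
    exact I.mul_mem_left _ (hk j)

/-- The hyperplane section of `V(I)` by the hyperplane `{ℓ = 0}`, as a closed subscheme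
(its saturated homogeneous ideal). -/
def sect {n : ℕ} (I : Ideal (MPoly n)) (ℓ : MPoly n) : Ideal (MPoly n) :=
  satIdeal (I ⊔ Ideal.span {ℓ})

/-- A property `P` holds for a *general* `k`-tuple of linear forms (hyperplanes): it holds on a
nonempty Zariski-open subset of the space of coefficients. -/
def GenericForms (n k : ℕ) (P : (Fin k → MPoly n) → Prop) : Prop :=
  ∃ Q : MvPolynomial (Fin k × Fin n) ℂ, Q ≠ 0 ∧
    ∀ c : Fin k → Fin n → ℂ, MvPolynomial.eval (fun p => c p.1 p.2) Q ≠ 0 →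
      P fun t => ∑ j : Fin n, MvPolynomial.C (c t j) * MvPolynomial.X j

/-- `V(I) ⊆ ℙ^{n-1}` is nondegenerate: contained in no hyperplane. -/
def Nondeg {n : ℕ} (I : Ideal (MPoly n)) : Prop :=
  ∀ f ∈ MvPolynomial.homogeneousSubmodule (Fin n) ℂ 1, f ∈ I → f = 0

/-- `V(I)` is an integral curve: `I` homogeneous prime, with cone of Krull dimension 2. -/
def IsCurve {n : ℕ} (I : Ideal (MPoly n)) : Prop :=
  IsHomogIdeal I ∧ I.IsPrime ∧ ringKrullDim (MPoly n ⧸ I) = 2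

/-- `V(I)` is an integral surface: `I` homogeneous prime, with cone of Krull dimension 3. -/
def IsSurface {n : ℕ} (I : Ideal (MPoly n)) : Prop :=
  IsHomogIdeal I ∧ I.IsPrime ∧ ringKrullDim (MPoly n ⧸ I) = 3

/-- The curve `V(I)` has degree `d` and arithmetic genus `g`: its Hilbert polynomial is
`d·t + 1 − g`. -/
def CurveInv {n : ℕ} (I : Ideal (MPoly n)) (d g : ℤ) : Prop :=
  ∃ N : ℤ, ∀ t : ℤ, N ≤ t → hilbZ I t = d * t + 1 - g

/-- The surface `V(I)` has degree `s`, sectional genus `π` and arithmetic genus `pa`: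
its Hilbert polynomial is `s·choose(t+1, 2) + (1 − π)·t + 1 + pa`. -/
def SurfInv {n : ℕ} (I : Ideal (MPoly n)) (s π pa : ℤ) : Prop :=
  ∃ N : ℤ, ∀ t : ℤ, N ≤ t → hilbZ I t = s * (t * (t + 1) / 2) + (1 - π) * t + 1 + pa

/-- `V(IC)` is not contained in any integral surface of degree `< s`. -/
def NotInSurfDegLT {n : ℕ} (IC : Ideal (MPoly n)) (s : ℤ) : Prop :=
  ∀ (T : Ideal (MPoly n)) (s' π' pa' : ℤ), IsSurface T → SurfInv T s' π' pa' → s' < s →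
    ¬ T ≤ IC

/-- `V(IC)` is not contained in any integral surface of degree `s` with sectional genus `> π`. -/
def NotInSurfSecGT {n : ℕ} (IC : Ideal (MPoly n)) (s π : ℤ) : Prop :=
  ∀ (T : Ideal (MPoly n)) (π' pa' : ℤ), IsSurface T → SurfInv T s π' pa' → π < π' →
    ¬ T ≤ IC

/-- `V(IC)` is not contained in any integral surface of degree `s` with arithmetic genus `< p`. -/
def NotInSurfGenLT {n : ℕ} (IC : Ideal (MPoly n)) (s p : ℤ) : Prop :=
  ∀ (T : Ideal (MPoly n)) (π' pa' : ℤ), IsSurface T → SurfInv T s π' pa' → pa' < p →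
    ¬ T ≤ IC

/-- `binom2 z = z.choose 2` for integers. -/
def binom2 (z : ℤ) : ℤ := z * (z - 1) / 2

/-- The bound `G*(r,d,s,π,p)` of Di Gennaro–Franco, with `m = (d-1)/s`, `ε = (d-1) % s`. -/
def Gstar (r d s π p : ℤ) : ℤ :=
  binom2 ((d - 1) / s) * s + ((d - 1) / s) * ((d - 1) % s + π) - p
    + max 0 ((2 * π - (s - 1 - (d - 1) % s)) / 2)

/-- The numerical function `h_{r,d,s,π}`. -/
def hF (r d s π : ℤ) (i : ℤ) : ℤ :=
  if 1 ≤ i ∧ i ≤ (d - 1) / s then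
    1 - π + i * s - max 0 ((s - r + 1) - π - i + 1)
  else if i = (d - 1) / s + 1 then
    d - max 0 ((2 * π - (s - 1 - (d - 1) % s)) / 2)
  else if (d - 1) / s + 2 ≤ i then d
  else 0

/-- The threshold `d₀(r)`. -/
def d0 (r : ℤ) : ℤ :=
  if r ≤ 6 then 16 * (r - 2) * (2 * r - 3)
  else if r ≤ 11 then 8 * (r - 2) ^ 3
  else 2 ^ (r.toNat + 1)

end
noncomputable section

/-- The affine cone of `V(I)`: common zeroes of the elements of `I`. -/
def zeroCone {n : ℕ} (I : Ideal (MPoly n)) : Set (Fin n → ℂ) :=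
  {a | ∀ f ∈ I, MvPolynomial.eval a f = 0}

/-- Jacobian-criterion smoothness: at every nonzero point of the affine cone (of dimension `c`)
the gradients of the equations span a subspace of dimension `n - c`. -/
def IsSmooth {n : ℕ} (I : Ideal (MPoly n)) (c : ℕ) : Prop :=
  ∀ a ∈ zeroCone I, a ≠ 0 →
    Module.finrank ℂ (Submodule.span ℂ
      {g : Fin n → ℂ | ∃ f ∈ I, g = fun j => MvPolynomial.eval a (MvPolynomial.pderiv j f)})
      = n - c

/-- Castelnuovo's bound for the genus of a nondegenerate integral curve of degree `d`
in `ℙ^R`. -/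
def castelG (R d : ℤ) : ℤ :=
  binom2 ((d - 1) / (R - 1)) * (R - 1) + ((d - 1) / (R - 1)) * ((d - 1) % (R - 1))

/-- The ideal of the projective cone (from `ℙ^{n-1}` to `ℙ^n`) over `V(I)`. -/
def coneIdeal {n : ℕ} (I : Ideal (MPoly n)) : Ideal (MPoly (n + 1)) :=
  Ideal.map (MvPolynomial.rename (Fin.castSucc : Fin n → Fin (n + 1))) I

/-- `J` is the (saturated homogeneous) ideal of a line in `ℙ^{n-1}`: it is generated by
`n - 2` linearly independent linear forms. -/
def IsLineIdeal {n : ℕ} (J : Ideal (MPoly n)) : Prop :=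
  ∃ V : Submodule ℂ (MPoly n), V ≤ MvPolynomial.homogeneousSubmodule (Fin n) ℂ 1 ∧
    Module.finrank ℂ V = n - 2 ∧ J = Ideal.span (V : Set (MPoly n))

/-- `V(T) ⊆ ℙ^{n-1}` is a smooth rational normal scroll surface: a smooth nondegenerate
integral surface of minimal degree `n - 2` (with sectional and arithmetic genus `0`)
containing a line (which rules out the Veronese surface). -/
def IsSmoothRNScroll {n : ℕ} (T : Ideal (MPoly n)) : Prop :=
  IsSurface T ∧ Nondeg T ∧ IsSmooth T 3 ∧ SurfInv T ((n : ℤ) - 2) 0 0 ∧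
    ∃ J : Ideal (MPoly n), IsLineIdeal J ∧ T ≤ J

/-- The linear projection on points determined by the matrix `L`. -/
def projPt {nb ns : ℕ} (L : Fin ns → Fin nb → ℂ) (a : Fin nb → ℂ) : Fin ns → ℂ :=
  fun t => ∑ j, L t j * a j

/-- The substitution algebra homomorphism determined by the matrix `L` (pullback of the
linear projection `ℙ^{nb-1} ⇢ ℙ^{ns-1}`). -/
def substHom {nb ns : ℕ} (L : Fin ns → Fin nb → ℂ) : MPoly ns →ₐ[ℂ] MPoly nb :=
  MvPolynomial.aeval fun t => ∑ j, MvPolynomial.C (L t j) * MvPolynomial.X j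

/-- The linear projection given by `L` maps `V(I')` isomorphically onto `V(I)`: the center of
projection misses `V(I')`, `V(I)` is the image, and the projection is (projectively) bijective
from `V(I')` onto `V(I)`. -/
def IsIsoProjection {nb ns : ℕ} (L : Fin ns → Fin nb → ℂ)
    (I' : Ideal (MPoly nb)) (I : Ideal (MPoly ns)) : Prop :=
  I = I'.comap (substHom L) ∧
  (∀ a ∈ zeroCone I', a ≠ 0 → projPt L a ≠ 0) ∧
  (∀ a ∈ zeroCone I', ∀ b ∈ zeroCone I', a ≠ 0 → b ≠ 0 →
    (∃ c : ℂ, c ≠ 0 ∧ projPt L a = c • projPt L b) → ∃ c : ℂ, c ≠ 0 ∧ a = c • b) ∧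
  (∀ y ∈ zeroCone I, y ≠ 0 → ∃ a ∈ zeroCone I', a ≠ 0 ∧ ∃ c : ℂ, c ≠ 0 ∧ y = c • projPt L a)

/-- `t` bounds the Castelnuovo–Mumford regularity of the surface `V(I) ⊆ ℙ^{n-1}`:
for every `t' ≥ t`, `H^i(ℙ, 𝓘(t'-i)) = 0` for all `i ≥ 1`, expressed through the standard
inductive characterization by successive general hyperplane sections. -/
def IsRegBound {n : ℕ} (I : Ideal (MPoly n)) (t : ℤ) : Prop :=
  GenericForms n 2 fun L => ∀ t' : ℤ, t ≤ t' →
    h1INat I (t' - 1) = 0 ∧ h1INat (sect I (L 0)) (t' - 1) = 0 ∧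
      h1INat (sect (sect I (L 0)) (L 1)) (t' - 1) = 0

end

/-! ### Graded pieces, Hilbert functions and saturation -/

section
namespace S17
open MvPolynomial

/-- The space of homogeneous forms of degree `k` in `n` variables. -/
abbrev Rk (n k : ℕ) : Submodule ℂ (MPoly n) := homogeneousSubmodule (Fin n) ℂ k

instance instFiniteRk (n k : ℕ) : Module.Finite ℂ (Rk n k) :=
  Module.Finite.iff_fg.2 (homogeneousSubmodule_fg (Fin n) ℂ k)

/-- The degree `k` part of an ideal. -/
noncomputable def Ik {n : ℕ} (I : Ideal (MPoly n)) (k : ℕ) : Submodule ℂ (MPoly n) :=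
  Rk n k ⊓ I.restrictScalars ℂ

/-- The Hilbert function of `R/I`, in natural degrees. -/
noncomputable def hf {n : ℕ} (I : Ideal (MPoly n)) (k : ℕ) : ℕ := Module.finrank ℂ (degQ I k)

/-- `f` is a nonzerodivisor modulo `I`. -/
def RegMod {n : ℕ} (f : MPoly n) (I : Ideal (MPoly n)) : Prop := ∀ g, f * g ∈ I → g ∈ I

/-- `I` is saturated with respect to the irrelevant ideal. -/
def IsSat {n : ℕ} (I : Ideal (MPoly n)) : Prop :=
  ∀ f, (∃ N, ∀ g ∈ Rk n N, g * f ∈ I) → f ∈ I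

variable {n : ℕ}

lemma finrank_map_inj {K V W : Type*} [Field K] [AddCommGroup V] [Module K V] [AddCommGroup W]
    [Module K W] {f : V →ₗ[K] W} (hf : Function.Injective f) (p : Submodule K V) :
    Module.finrank K (p.map f) = Module.finrank K p :=
  (LinearEquiv.finrank_eq (Submodule.equivMapOfInjective f hf p)).symm

lemma mem_Ik {I : Ideal (MPoly n)} {k : ℕ} {f : MPoly n} : f ∈ Ik I k ↔ f ∈ Rk n k ∧ f ∈ I := by
  simp only [Ik, Submodule.mem_inf, Submodule.restrictScalars_mem]

lemma Ik_le (I : Ideal (MPoly n)) (k : ℕ) : Ik I k ≤ Rk n k := inf_le_left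

instance instFiniteIk (I : Ideal (MPoly n)) (k : ℕ) : Module.Finite ℂ (Ik I k) :=
  Submodule.finiteDimensional_of_le (Ik_le I k)

lemma Ik_mono {I J : Ideal (MPoly n)} (h : I ≤ J) (k : ℕ) : Ik I k ≤ Ik J k := fun f hf => by
  rw [mem_Ik] at hf ⊢; exact ⟨hf.1, h hf.2⟩

lemma hf_add (I : Ideal (MPoly n)) (k : ℕ) :
    hf I k + Module.finrank ℂ (Ik I k) = Module.finrank ℂ (Rk n k) := by
  have h := LinearMap.finrank_range_add_finrank_ker
    ((Ideal.Quotient.mkₐ ℂ I).toLinearMap.domRestrict (Rk n k))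
  rw [LinearMap.range_domRestrict] at h
  have h2 : (LinearMap.ker ((Ideal.Quotient.mkₐ ℂ I).toLinearMap.domRestrict (Rk n k))).map
      (Rk n k).subtype = Ik I k := by
    ext f
    simp only [Submodule.mem_map, LinearMap.mem_ker, mem_Ik]
    constructor
    · rintro ⟨⟨g, hg⟩, h1, rfl⟩
      exact ⟨hg, Ideal.Quotient.eq_zero_iff_mem.1 h1⟩
    · rintro ⟨h1, h2⟩
      exact ⟨⟨f, h1⟩, Ideal.Quotient.eq_zero_iff_mem.2 h2, rfl⟩
  have h3 := finrank_map_inj (Rk n k).subtype_injective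
    (LinearMap.ker ((Ideal.Quotient.mkₐ ℂ I).toLinearMap.domRestrict (Rk n k)))
  rw [h2] at h3
  rw [hf, degQ, h3]
  exact h

lemma hf_anti {I J : Ideal (MPoly n)} (h : I ≤ J) (k : ℕ) : hf J k ≤ hf I k := by
  have h1 := hf_add I k
  have h2 := hf_add J k
  have h3 := Submodule.finrank_mono (Ik_mono h k)
  omega

lemma hf_eq_iff {I J : Ideal (MPoly n)} (h : I ≤ J) (k : ℕ) :
    hf I k = hf J k ↔ Ik I k = Ik J k := by
  have h1 := hf_add I k
  have h2 := hf_add J k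
  constructor
  · intro h3
    exact Submodule.eq_of_le_of_finrank_eq (Ik_mono h k) (by omega)
  · intro h3
    rw [h3] at h1
    omega

lemma hf_eq_zero_iff (I : Ideal (MPoly n)) (k : ℕ) :
    hf I k = 0 ↔ ∀ f ∈ Rk n k, f ∈ I := by
  have h1 := hf_add I k
  constructor
  · intro h f hf
    have : Ik I k = Rk n k := Submodule.eq_of_le_of_finrank_eq (Ik_le I k) (by omega)
    rw [← this] at hf
    exact (mem_Ik.1 hf).2
  · intro h
    have : Ik I k = Rk n k := le_antisymm (Ik_le I k) (fun f hf => mem_Ik.2 ⟨hf, h f hf⟩)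
    rw [this] at h1
    omega

section Graded

attribute [local instance] MvPolynomial.gradedAlgebra

lemma coe_decompose (f : MPoly n) (k : ℕ) :
    ((DirectSum.decompose (homogeneousSubmodule (Fin n) ℂ) f k : _) : MPoly n) =
      homogeneousComponent k f := decomposition.decompose'_apply f k

lemma hc_mul_left {a : MPoly n} {i : ℕ} (ha : a ∈ Rk n i) (b : MPoly n) (j : ℕ) :
    homogeneousComponent (i + j) (a * b) = a * homogeneousComponent j b := by
  have := DirectSum.coe_decompose_mul_add_of_left_mem (homogeneousSubmodule (Fin n) ℂ)
    (i := i) (j := j) (a := a) (b := b) ha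
  rwa [coe_decompose, coe_decompose] at this

lemma hc_mul_left_lt {a : MPoly n} {i : ℕ} (ha : a ∈ Rk n i) (b : MPoly n) {k : ℕ} (hk : k < i) :
    homogeneousComponent k (a * b) = 0 := by
  have := DirectSum.coe_decompose_mul_of_left_mem_of_not_le (homogeneousSubmodule (Fin n) ℂ)
    (i := i) (n := k) (a := a) (b := b) ha (by omega)
  rwa [coe_decompose] at this

lemma isHomog_iff (I : Ideal (MPoly n)) :
    IsHomogIdeal I ↔ I.IsHomogeneous (homogeneousSubmodule (Fin n) ℂ) := by
  constructor
  · intro h k f hf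
    rw [coe_decompose]
    exact h f hf k
  · intro h f hf k
    rw [← coe_decompose]
    exact h k hf

lemma isHomog_sup {I J : Ideal (MPoly n)} (hI : IsHomogIdeal I) (hJ : IsHomogIdeal J) :
    IsHomogIdeal (I ⊔ J) := by
  rw [isHomog_iff] at *
  exact hI.sup hJ

lemma isHomog_span (S : Set (MPoly n)) (hS : ∀ f ∈ S, ∃ k, f ∈ Rk n k) :
    IsHomogIdeal (Ideal.span S) := by
  rw [isHomog_iff]
  exact Ideal.homogeneous_span _ S hS

end Graded

lemma isHomog_sup_span {I : Ideal (MPoly n)} (hI : IsHomogIdeal I) {f : MPoly n} {k : ℕ}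
    (hf : f ∈ Rk n k) : IsHomogIdeal (I ⊔ Ideal.span {f}) :=
  isHomog_sup hI (isHomog_span _ (by rintro g rfl; exact ⟨k, hf⟩))

lemma hc_self {f : MPoly n} {k : ℕ} (hf : f ∈ Rk n k) : homogeneousComponent k f = f := by
  rw [homogeneousComponent_of_mem hf, if_pos rfl]

lemma hc_mem (f : MPoly n) (k : ℕ) : homogeneousComponent k f ∈ Rk n k :=
  homogeneousComponent_mem _ _

lemma mul_mem_Rk {f g : MPoly n} {i j : ℕ} (hf : f ∈ Rk n i) (hg : g ∈ Rk n j) :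
    f * g ∈ Rk n (i + j) := IsHomogeneous.mul hf hg

lemma pow_mem_Rk {f : MPoly n} {i : ℕ} (hf : f ∈ Rk n i) (k : ℕ) :
    f ^ k ∈ Rk n (i * k) := IsHomogeneous.pow hf k

lemma pow_mem_Rk_one {f : MPoly n} (hf : f ∈ Rk n 1) (k : ℕ) :
    f ^ k ∈ Rk n k := by simpa using pow_mem_Rk hf k

lemma Rk_mul (n i j : ℕ) : Rk n i * Rk n j = Rk n (i + j) := by
  have h : ∀ k, Rk n k = Rk n 1 ^ k := fun k => (homogeneousSubmodule_one_pow _ k).symm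
  rw [h i, h j, h (i + j), pow_add]

lemma finrank_Rk_zero : Module.finrank ℂ (Rk n 0) = 1 := by
  rw [Rk, homogeneousSubmodule_zero]
  rw [Submodule.one_eq_span]
  exact finrank_span_singleton one_ne_zero

lemma one_mem_Rk : (1 : MPoly n) ∈ Rk n 0 := isHomogeneous_one _ _

/-- A form in `I + (f)` is the sum of a form in `I` and the product of `f` with a form. -/
lemma mem_sup_span {I : Ideal (MPoly n)} (hI : IsHomogIdeal I) {f : MPoly n} {m : ℕ}
    (hf : f ∈ Rk n m) {k : ℕ} {g : MPoly n} (hg : g ∈ Rk n (m + k))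
    (h : g ∈ I ⊔ Ideal.span {f}) : ∃ a ∈ Rk n k, ∃ b ∈ Ik I (m + k), g = b + f * a := by
  obtain ⟨b, hb, c, hc, rfl⟩ := Submodule.mem_sup.1 h
  obtain ⟨a, rfl⟩ := Ideal.mem_span_singleton.1 hc
  refine ⟨homogeneousComponent k a, hc_mem _ _, homogeneousComponent (m + k) b,
    mem_Ik.2 ⟨hc_mem _ _, hI b hb _⟩, ?_⟩
  rw [← hc_mul_left hf, ← map_add, hc_self hg]

lemma hf_sup_span {I : Ideal (MPoly n)} (hI : IsHomogIdeal I) {f : MPoly n} {m : ℕ}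
    (hf' : f ∈ Rk n m) (h0 : f ≠ 0) (hreg : RegMod f I) (k : ℕ) :
    hf (I ⊔ Ideal.span {f}) (m + k) + hf I k = hf I (m + k) := by
  have e1 : Ik (I ⊔ Ideal.span {f}) (m + k) =
      Ik I (m + k) ⊔ (Rk n k).map (LinearMap.mulLeft ℂ f) := by
    apply le_antisymm
    · intro g hg
      rw [mem_Ik] at hg
      obtain ⟨a, ha, b, hb, rfl⟩ := mem_sup_span hI hf' hg.1 hg.2
      exact Submodule.add_mem_sup hb ⟨a, ha, rfl⟩
    · refine sup_le (Ik_mono le_sup_left _) ?_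
      rintro _ ⟨a, ha, rfl⟩
      refine mem_Ik.2 ⟨mul_mem_Rk hf' ha, ?_⟩
      exact Ideal.mem_sup_right (Ideal.mul_mem_right _ _ (Ideal.mem_span_singleton_self f))
  have e2 : Ik I (m + k) ⊓ (Rk n k).map (LinearMap.mulLeft ℂ f) =
      (Ik I k).map (LinearMap.mulLeft ℂ f) := by
    apply le_antisymm
    · rintro _ ⟨h1, a, ha, rfl⟩
      exact ⟨a, mem_Ik.2 ⟨ha, hreg a (mem_Ik.1 h1).2⟩, rfl⟩
    · rintro _ ⟨a, ha, rfl⟩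
      exact ⟨mem_Ik.2 ⟨mul_mem_Rk hf' (mem_Ik.1 ha).1, I.mul_mem_left _ (mem_Ik.1 ha).2⟩,
        a, (mem_Ik.1 ha).1, rfl⟩
  have hinj : Function.Injective (LinearMap.mulLeft ℂ f) := fun a b hab =>
    mul_left_cancel₀ h0 hab
  have h1 := Submodule.finrank_sup_add_finrank_inf_eq (Ik I (m + k))
    ((Rk n k).map (LinearMap.mulLeft ℂ f))
  rw [← e1, e2, finrank_map_inj hinj,
    finrank_map_inj hinj] at h1
  have h2 := hf_add I k
  have h3 := hf_add I (m + k)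
  have h4 := hf_add (I ⊔ Ideal.span {f}) (m + k)
  omega

lemma mId_pow_le {N : ℕ} {J : Ideal (MPoly n)} (h : mId n ^ N ≤ J) : ∀ g ∈ Rk n N, g ∈ J := by
  intro g hg
  apply h
  rw [Rk, ← homogeneousSubmodule_one_pow] at hg
  have h1 : homogeneousSubmodule (Fin n) ℂ 1 ≤ (mId n).restrictScalars ℂ := by
    rw [homogeneousSubmodule_one_eq_span_X, Submodule.span_le]
    exact Ideal.subset_span
  have h2 : ∀ N, ((mId n).restrictScalars ℂ) ^ N ≤ ((mId n) ^ N).restrictScalars ℂ := by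
    intro N
    induction N with
    | zero => intro x _; simp
    | succ N ih =>
      rw [pow_succ, pow_succ, Submodule.mul_le]
      intro a ha b hb
      exact Ideal.mul_mem_mul (ih ha) hb
  exact h2 N (pow_le_pow_left' h1 N hg)

lemma mem_sat_iff {J : Ideal (MPoly n)} {f : MPoly n} :
    f ∈ satIdeal J ↔ ∃ N, ∀ g ∈ Rk n N, g * f ∈ J := by
  constructor
  · rintro ⟨k, hk⟩
    let Q : Ideal (MPoly n) := Submodule.colon J {f}
    have hQ : mId n ≤ Q.radical := by
      rw [mId, Ideal.span_le]
      rintro _ ⟨j, rfl⟩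
      exact ⟨k, Submodule.mem_colon_singleton.2 (by simpa using hk j)⟩
    obtain ⟨N, hN⟩ := Ideal.exists_pow_le_of_le_radical_of_fg hQ (IsNoetherian.noetherian _)
    refine ⟨N, fun g hg => ?_⟩
    have := mId_pow_le hN g hg
    simpa using Submodule.mem_colon_singleton.1 this
  · rintro ⟨N, hN⟩
    exact ⟨N, fun j => hN _ (isHomogeneous_X_pow j N)⟩

lemma le_sat (J : Ideal (MPoly n)) : J ≤ satIdeal J := fun _ hf =>
  mem_sat_iff.2 ⟨0, fun _ _ => J.mul_mem_left _ hf⟩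

lemma isHomog_sat {J : Ideal (MPoly n)} (hJ : IsHomogIdeal J) : IsHomogIdeal (satIdeal J) := by
  intro f hf k
  obtain ⟨N, hN⟩ := mem_sat_iff.1 hf
  refine mem_sat_iff.2 ⟨N, fun g hg => ?_⟩
  rw [← hc_mul_left hg]
  exact hJ _ (hN g hg) _

/-- A large power of the irrelevant ideal multiplies the saturation into the ideal. -/
lemma exists_pow_mul_sat_le (J : Ideal (MPoly n)) :
    ∃ N, ∀ f ∈ satIdeal J, ∀ g, (∀ k < N, homogeneousComponent k g = 0) → g * f ∈ J := by
  have hX : ∀ (f : MPoly n) (N : ℕ), (∀ g ∈ Rk n N, g * f ∈ J) →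
      ∀ M, N ≤ M → ∀ g ∈ Rk n M, g * f ∈ J := by
    intro f N h M hM g hg
    obtain ⟨j, rfl⟩ := Nat.exists_eq_add_of_le hM
    rw [← Rk_mul] at hg
    induction hg using Submodule.mul_induction_on' with
    | mem_mul_mem a ha b hb =>
      have : a * b * f = b * (a * f) := by ring
      rw [this]
      exact J.mul_mem_left _ (h a ha)
    | add x _ y _ hx hy => rw [add_mul]; exact J.add_mem hx hy
  obtain ⟨S, hS⟩ : (satIdeal J).FG := IsNoetherian.noetherian _
  have h1 : ∀ f : S, ∃ N, ∀ g ∈ Rk n N, g * f.1 ∈ J := fun f =>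
    mem_sat_iff.1 (hS ▸ Submodule.subset_span f.2)
  choose N hN using h1
  refine ⟨∑ p, N p, fun f hf g hg => ?_⟩
  have key : ∀ f ∈ S, g * f ∈ J := by
    intro f hf
    rw [← sum_homogeneousComponent g, Finset.sum_mul]
    refine J.sum_mem fun k _ => ?_
    by_cases hk : k < ∑ f, N f
    · rw [hg k hk]; simp
    · refine hX f (N ⟨f, hf⟩) (hN ⟨f, hf⟩) k ?_ _ (hc_mem _ _)
      have := Finset.single_le_sum (f := N) (fun _ _ => Nat.zero_le _) (Finset.mem_univ ⟨f, hf⟩)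
      omega
  rw [← hS] at hf
  induction hf using Submodule.span_induction with
  | mem x hx => exact key x hx
  | zero => simp
  | add x y _ _ hx hy => rw [mul_add]; exact J.add_mem hx hy
  | smul a x _ hx =>
    have : g * (a • x) = a * (g * x) := by rw [smul_eq_mul]; ring
    rw [this]; exact J.mul_mem_left _ hx

lemma isSat_sat (J : Ideal (MPoly n)) : IsSat (satIdeal J) := by
  rintro f ⟨N, hN⟩
  obtain ⟨M, hM⟩ := exists_pow_mul_sat_le J
  refine mem_sat_iff.2 ⟨M + N, fun g hg => ?_⟩
  rw [← Rk_mul] at hg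
  induction hg using Submodule.mul_induction_on' with
  | mem_mul_mem a ha b hb =>
    rw [mul_assoc]
    refine hM _ (hN b hb) a fun k hk => ?_
    rw [homogeneousComponent_of_mem ha, if_neg (by omega)]
  | add x _ y _ hx hy => rw [add_mul]; exact J.add_mem hx hy

lemma sat_le_of_isSat {I J : Ideal (MPoly n)} (hJ : IsSat J) (h : I ≤ J) : satIdeal I ≤ J := by
  intro f hf
  obtain ⟨N, hN⟩ := mem_sat_iff.1 hf
  exact hJ f ⟨N, fun g hg => h (hN g hg)⟩

/-- The saturation agrees with the ideal in all large degrees. -/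
lemma sat_eq_large {J : Ideal (MPoly n)} (hJ : IsHomogIdeal J) :
    ∃ N, ∀ k, N ≤ k → Ik (satIdeal J) k = Ik J k := by
  obtain ⟨M, hM⟩ := exists_pow_mul_sat_le J
  obtain ⟨S, hS⟩ : (satIdeal J).FG := IsNoetherian.noetherian _
  refine ⟨M + ∑ f ∈ S, f.totalDegree + 1, fun k hk => le_antisymm ?_ (Ik_mono (le_sat J) k)⟩
  intro f hf
  rw [mem_Ik] at hf ⊢
  refine ⟨hf.1, ?_⟩
  obtain ⟨h1, h2⟩ := hf
  have key : ∀ x ∈ S, ∀ a, homogeneousComponent k (a * x) ∈ J := by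
    intro x hx a
    set a' := ∑ i ∈ Finset.range M, homogeneousComponent i a with ha'
    have hdeg : (a' * x).totalDegree < k := by
      refine lt_of_le_of_lt (totalDegree_mul _ _) ?_
      have e1 : a'.totalDegree ≤ M := by
        refine totalDegree_finsetSum_le fun i hi => ?_
        exact (IsHomogeneous.totalDegree_le (hc_mem a i)).trans (Finset.mem_range.1 hi).le
      have e2 := Finset.single_le_sum (f := fun f : MPoly n => f.totalDegree)
        (fun _ _ => Nat.zero_le _) hx
      omega
    have hsplit : a * x = a' * x + (a - a') * x := by ring
    rw [hsplit, map_add, homogeneousComponent_eq_zero _ _ hdeg, zero_add]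
    refine hJ _ (hM x (hS ▸ Submodule.subset_span hx) _ fun i hi => ?_) k
    rw [map_sub, ha', map_sum, Finset.sum_eq_single i, hc_self (hc_mem a i), sub_self]
    · intro j _ hj
      rw [homogeneousComponent_of_mem (hc_mem a j), if_neg (Ne.symm hj)]
    · intro h; exact absurd (Finset.mem_range.2 hi) h
  have : ∀ f ∈ satIdeal J, homogeneousComponent k f ∈ J := by
    intro f hf
    rw [← hS] at hf
    induction hf using Submodule.span_induction with
    | mem x hx => simpa using key x hx 1
    | zero => simp
    | add x y _ _ hx hy => rw [map_add]; exact J.add_mem hx hy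
    | smul a x hx' hx =>
      refine Submodule.span_induction
        (p := fun x _ => ∀ a, homogeneousComponent k (a * x) ∈ J) ?_ ?_ ?_ ?_ hx' a
      · exact fun x hx a => key x hx a
      · simp
      · intro x y _ _ hx hy a; rw [mul_add, map_add]; exact J.add_mem (hx a) (hy a)
      · intro b x _ hx a; rw [smul_eq_mul, ← mul_assoc]; exact hx _
  rw [← hc_self h1]
  exact this f h2

lemma hf_sat_eq_large {J : Ideal (MPoly n)} (hJ : IsHomogIdeal J) :
    ∃ N, ∀ k, N ≤ k → hf (satIdeal J) k = hf J k := by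
  obtain ⟨N, hN⟩ := sat_eq_large hJ
  exact ⟨N, fun k hk => ((hf_eq_iff (le_sat J) k).2 (hN k hk).symm).symm⟩

lemma isSat_of_isPrime {I : Ideal (MPoly n)} (hI : I.IsPrime) {f : MPoly n} (hf1 : f ∈ Rk n 1)
    (hf : f ∉ I) : IsSat I := by
  rintro g ⟨N, hN⟩
  refine (hI.mem_or_mem (hN (f ^ N) (pow_mem_Rk_one hf1 N))).resolve_left fun h => ?_
  exact hf (hI.mem_of_pow_mem _ h)

/-- A saturated ideal admits a linear nonzerodivisor. -/
lemma exists_regMod {I : Ideal (MPoly n)} (hI : IsSat I) :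
    ∃ y ∈ Rk n 1, RegMod y I := by
  classical
  have hfin : (associatedPrimes (MPoly n) (MPoly n ⧸ I)).Finite := associatedPrimes.finite _ _
  let F : Ideal (MPoly n) → Submodule ℂ (Rk n 1) :=
    fun P => (P.restrictScalars ℂ).comap (Rk n 1).subtype
  have htop : (⊤ : Submodule ℂ (Rk n 1)) ∉ hfin.toFinset.image F := by
    intro h
    obtain ⟨P, hP, hPt⟩ := Finset.mem_image.1 h
    rw [Set.Finite.mem_toFinset, AssociatedPrimes.mem_iff, isAssociatedPrime_iff] at hP
    obtain ⟨hp, x, hx⟩ := hP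
    obtain ⟨x, rfl⟩ := Ideal.Quotient.mk_surjective x
    have hxI : x ∈ I := by
      refine hI x ⟨1, fun g hg => ?_⟩
      have hgP : g ∈ P := by
        have : (⟨g, hg⟩ : Rk n 1) ∈ F P := hPt ▸ Submodule.mem_top
        exact this
      rw [hx] at hgP
      have h2 : g • Ideal.Quotient.mk I x = 0 := by simpa using hgP
      exact Ideal.Quotient.eq_zero_iff_mem.1 h2
    apply hp.ne_top
    rw [hx, Ideal.Quotient.eq_zero_iff_mem.2 hxI]
    ext a; simp
  have h := Subspace.biUnion_ne_univ_of_top_notMem htop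
  obtain ⟨y, hy⟩ := (Set.ne_univ_iff_exists_notMem _).1 h
  refine ⟨y.1, y.2, fun g hg => ?_⟩
  by_contra hgI
  apply hy
  have : y.1 ∈ ⋃ p ∈ associatedPrimes (MPoly n) (MPoly n ⧸ I), (p : Set (MPoly n)) := by
    rw [biUnion_associatedPrimes_eq_zero_divisors]
    exact ⟨Ideal.Quotient.mk I g, fun h => hgI (Ideal.Quotient.eq_zero_iff_mem.1 h),
      Ideal.Quotient.eq_zero_iff_mem.2 hg⟩
  simp only [Set.mem_iUnion] at this ⊢
  obtain ⟨P, hP, hyP⟩ := this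
  exact ⟨F P, Finset.mem_image.2 ⟨P, hfin.mem_toFinset.2 hP, rfl⟩, hyP⟩

end S17
end

/-! ### Hilbert functions of points and curves -/

section
namespace S17
open MvPolynomial
variable {n : ℕ}

lemma regMod_ne_zero {I : Ideal (MPoly n)} (h1 : (1 : MPoly n) ∉ I) {y : MPoly n}
    (hy : RegMod y I) : y ≠ 0 := by
  rintro rfl
  exact h1 (hy 1 (by simp))

lemma hf_zero {I : Ideal (MPoly n)} (h1 : (1 : MPoly n) ∉ I) : hf I 0 = 1 := by
  have h := hf_add I 0
  rw [finrank_Rk_zero] at h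
  have : hf I 0 ≠ 0 := fun h0 => h1 ((hf_eq_zero_iff I 0).1 h0 1 one_mem_Rk)
  omega

lemma Rk_le_ideal_succ {J : Ideal (MPoly n)} {k : ℕ} (h : ∀ f ∈ Rk n k, f ∈ J) :
    ∀ f ∈ Rk n (k + 1), f ∈ J := by
  intro f hf
  rw [← Rk_mul] at hf
  induction hf using Submodule.mul_induction_on' with
  | mem_mul_mem a ha b hb => exact J.mul_mem_right _ (h a ha)
  | add x _ y _ hx hy => exact J.add_mem hx hy

lemma Rk_le_ideal_of_le {J : Ideal (MPoly n)} {k l : ℕ} (hkl : k ≤ l) (h : ∀ f ∈ Rk n k, f ∈ J) :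
    ∀ f ∈ Rk n l, f ∈ J := by
  induction l, hkl using Nat.le_induction with
  | base => exact h
  | succ l _ ih => exact Rk_le_ideal_succ ih

/-- The Hilbert function of a zero-dimensional scheme of degree `s`. -/
lemma hf_points {J : Ideal (MPoly n)} (hJ : IsHomogIdeal J) (hsat : IsSat J)
    (h1 : (1 : MPoly n) ∉ J) {s : ℕ} (hs : ∃ N, ∀ k, N ≤ k → hf J k = s) :
    (∀ k, min s (k + 1) ≤ hf J k) ∧ (∀ k, s ≤ k + 1 → hf J k = s) := by
  obtain ⟨y, hy1, hy⟩ := exists_regMod hsat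
  have hy0 := regMod_ne_zero h1 hy
  have hstep : ∀ k, hf (J ⊔ Ideal.span {y}) (k + 1) + hf J k = hf J (k + 1) := by
    intro k
    have := hf_sup_span hJ hy1 hy0 hy k
    rwa [add_comm 1 k] at this
  have hmono : Monotone (hf J) := monotone_nat_of_le_succ fun k => by have := hstep k; omega
  obtain ⟨N, hN⟩ := hs
  have hle : ∀ k, hf J k ≤ s := fun k => by
    rw [← hN (max N k) (le_max_left _ _)]
    exact hmono (le_max_right _ _)
  have hstab : ∀ k, hf J (k + 1) = hf J k → hf J k = s := by
    intro k hk
    have h0 : hf (J ⊔ Ideal.span {y}) (k + 1) = 0 := by have := hstep k; omega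
    rw [hf_eq_zero_iff] at h0
    have : ∀ l, k ≤ l → hf J l = hf J k := by
      intro l hl
      induction l, hl using Nat.le_induction with
      | base => rfl
      | succ l hl ih =>
        have h2 := (hf_eq_zero_iff _ _).2
          (Rk_le_ideal_of_le (Nat.succ_le_succ hl) h0)
        have := hstep l
        have h3 : hf (J ⊔ Ideal.span {y}) (l + 1) = 0 := h2
        omega
    rw [← this (max N k) (le_max_right _ _), hN _ (le_max_left _ _)]
  have hmin : ∀ k, min s (k + 1) ≤ hf J k := by
    intro k
    induction k with
    | zero => rw [hf_zero h1]; exact min_le_right _ _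
    | succ k ih =>
      by_cases h : hf J (k + 1) = hf J k
      · have := hstab k h
        rw [h, this]; exact min_le_left _ _
      · have := hmono (Nat.le_succ k)
        simp only [Nat.succ_eq_add_one] at this
        omega
  exact ⟨hmin, fun k hk => by have := hmin k; have := hle k; omega⟩

/-- The ideal of a zero-dimensional scheme of degree `s` is generated in degrees at most `s`. -/
lemma points_gen {J J' : Ideal (MPoly n)} (hJ : IsHomogIdeal J) (hsat : IsSat J)
    (h1 : (1 : MPoly n) ∉ J) {s : ℕ} (hs : ∃ N, ∀ k, N ≤ k → hf J k = s)
    {k : ℕ} (hk : s ≤ k) (h : Ik J' k = Ik J k) :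
    Ik J (k + 1) ≤ Ik J' (k + 1) := by
  obtain ⟨y, hy1, hy⟩ := exists_regMod hsat
  have hy0 := regMod_ne_zero h1 hy
  have hp := (hf_points hJ hsat h1 hs).2
  have hs0 : s ≠ 0 := by
    rintro rfl
    have := hp 0 (by omega)
    rw [hf_zero h1] at this
    omega
  obtain ⟨k, rfl⟩ : ∃ l, k = 1 + l := ⟨k - 1, by omega⟩
  have hz : ∀ f ∈ Rk n (1 + k), f ∈ J ⊔ Ideal.span {y} := by
    rw [← hf_eq_zero_iff]
    have := hf_sup_span hJ hy1 hy0 hy k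
    rw [hp k (by omega), hp (1 + k) (by omega)] at this
    omega
  intro f hf
  rw [mem_Ik] at hf ⊢
  refine ⟨hf.1, ?_⟩
  -- the decomposition is refined: the `J'`-part is a form of `J`, so `y * b` lies in `J`
  have key2 : ∀ f ∈ Rk n (1 + k + 1), ∃ a ∈ J', a ∈ J ∧ ∃ b, b ∈ Rk n (1 + k) ∧ f = a + y * b := by
    intro f hf
    rw [← Rk_mul] at hf
    induction hf using Submodule.mul_induction_on' with
    | mem_mul_mem f hf x hx =>
      obtain ⟨b, hb, a, ha, rfl⟩ := mem_sup_span hJ hy1 hf (hz f hf)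
      have haJ := (mem_Ik.1 ha).2
      rw [← h, mem_Ik] at ha
      refine ⟨a * x, J'.mul_mem_right _ ha.2, J.mul_mem_right _ haJ, b * x, ?_, by ring⟩
      rw [add_comm 1 k]; exact mul_mem_Rk hb hx
    | add f _ f' _ hf hf' =>
      obtain ⟨a, ha, haJ, b, hb, rfl⟩ := hf
      obtain ⟨a', ha', haJ', b', hb', rfl⟩ := hf'
      exact ⟨a + a', J'.add_mem ha ha', J.add_mem haJ haJ', b + b',
        Submodule.add_mem _ hb hb', by ring⟩
  obtain ⟨a, ha, haJ, b, hb, rfl⟩ := key2 f hf.1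
  have hyb : y * b ∈ J := by simpa using J.sub_mem hf.2 haJ
  have hbJ : b ∈ Ik J (1 + k) := mem_Ik.2 ⟨hb, hy b hyb⟩
  rw [← h, mem_Ik] at hbJ
  exact J'.add_mem ha (J'.mul_mem_left _ hbJ.2)

/-- A one-dimensional scheme of degree `s ≥ 1` with `χ(𝒪) = c ≤ 1` attains its Hilbert
polynomial in all degrees at least `s(s-1)/2`. -/
lemma hf_curve {I : Ideal (MPoly n)} (hI : IsHomogIdeal I) (hsat : IsSat I)
    {s : ℕ} {c : ℤ} (hs0 : 1 ≤ s) (hc : c ≤ 1)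
    (hs : ∃ N, ∀ k, N ≤ k → (hf I k : ℤ) = s * k + c) :
    ∀ k : ℕ, s * (s - 1) ≤ 2 * k → (hf I k : ℤ) = s * k + c := by
  obtain ⟨N, hN⟩ := hs
  have h1 : (1 : MPoly n) ∉ I := by
    intro h
    have hz : ∀ k, hf I k = 0 := fun k =>
      (hf_eq_zero_iff I k).2 fun f _ => by simpa using I.mul_mem_left f h
    have a1 := hN N le_rfl
    have a2 := hN (N + 1) (by omega)
    rw [hz] at a1 a2
    push_cast at a1 a2
    nlinarith
  obtain ⟨y, hy1, hy⟩ := exists_regMod hsat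
  have hy0 := regMod_ne_zero h1 hy
  set I' := I ⊔ Ideal.span {y} with hI'
  have hI'h : IsHomogIdeal I' := isHomog_sup_span hI hy1
  have hstep : ∀ k, hf I' (k + 1) + hf I k = hf I (k + 1) := by
    intro k
    have := hf_sup_span hI hy1 hy0 hy k
    rwa [add_comm 1 k] at this
  set J := satIdeal I' with hJ
  have hJh : IsHomogIdeal J := isHomog_sat hI'h
  have hJs : IsSat J := isSat_sat I'
  obtain ⟨N1, hN1⟩ := hf_sat_eq_large hI'h
  have hI's : ∀ k, N ≤ k → hf I' (k + 1) = s := by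
    intro k hk
    have := hstep k
    have a1 := hN k hk
    have a2 := hN (k + 1) (by omega)
    push_cast at a2
    have : (hf I' (k + 1) : ℤ) = s := by
      have h3 : (hf I' (k + 1) : ℤ) + hf I k = hf I (k + 1) := by exact_mod_cast this
      linarith
    exact_mod_cast this
  have hJs' : ∃ N, ∀ k, N ≤ k → hf J k = s := by
    refine ⟨N + N1 + 1, fun k hk => ?_⟩
    rw [hN1 k (by omega)]
    obtain ⟨l, rfl⟩ : ∃ l, k = l + 1 := ⟨k - 1, by omega⟩
    exact hI's l (by omega)
  have hJ1 : (1 : MPoly n) ∉ J := by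
    intro h
    obtain ⟨M, hM⟩ := hJs'
    have hz : hf J M = 0 :=
      (hf_eq_zero_iff J M).2 fun f _ => by simpa using J.mul_mem_left f h
    have := hM M le_rfl
    omega
  obtain ⟨hp1, hp2⟩ := hf_points hJh hJs hJ1 hJs'
  have hge : ∀ k, hf J k ≤ hf I' k := fun k => hf_anti (le_sat I') k
  have hlow : ∀ k, k + 1 ≤ s → (k + 1) * (k + 2) ≤ 2 * hf I k := by
    intro k
    induction k with
    | zero => intro _; rw [hf_zero h1]
    | succ k ih =>
      intro hk
      have := ih (by omega)
      have a := hstep k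
      have b := hp1 (k + 1)
      have b' := hge (k + 1)
      rw [min_eq_right (by omega)] at b
      nlinarith
  -- the defect `ξ k` drops strictly until it vanishes
  set ξ : ℕ → ℤ := fun k => s * k + c - hf I k with hξ
  have hξstep : ∀ k, ξ (k + 1) = ξ k + s - hf I' (k + 1) := by
    intro k
    have := hstep k
    have h3 : (hf I' (k + 1) : ℤ) + hf I k = hf I (k + 1) := by exact_mod_cast this
    simp only [hξ]; push_cast; linarith
  have hanti : ∀ k, s ≤ k + 2 → ξ (k + 1) ≤ ξ k := by
    intro k hk
    have a := hξstep k
    have b := hge (k + 1)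
    rw [hp2 (k + 1) (by omega)] at b
    have : (s : ℤ) ≤ hf I' (k + 1) := by exact_mod_cast b
    linarith
  have hξN : ∀ k, N ≤ k → ξ k = 0 := fun k hk => by simp only [hξ]; rw [hN k hk]; ring
  have hstab : ∀ k, s ≤ k + 1 → ξ (k + 1) = ξ k → ξ k = 0 := by
    intro k hk he
    have hs1 : hf I' (k + 1) = s := by
      have := hξstep k
      have : (hf I' (k + 1) : ℤ) = s := by linarith
      exact_mod_cast this
    have hall : ∀ l, k + 1 ≤ l → Ik I' l = Ik J l := by
      intro l hl
      induction l, hl using Nat.le_induction with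
      | base => exact (hf_eq_iff (le_sat I') _).1 (by rw [hs1, hp2 _ (by omega)])
      | succ l hl ih =>
        exact le_antisymm (Ik_mono (le_sat I') _) (points_gen hJh hJs hJ1 hJs' (by omega) ih)
    have : ∀ l, k ≤ l → ξ l = ξ k := by
      intro l hl
      induction l, hl using Nat.le_induction with
      | base => rfl
      | succ l hl ih =>
        rw [hξstep, ih, (hf_eq_iff (le_sat I') _).2 (hall (l + 1) (by omega)),
          hp2 _ (by omega)]
        ring
    rw [← this (max N k) (le_max_right _ _), hξN _ (le_max_left _ _)]
  have hnonneg : ∀ k, s ≤ k + 2 → 0 ≤ ξ k := by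
    intro k hk
    have : ∀ l, k ≤ l → ξ l ≤ ξ k := by
      intro l hl
      induction l, hl using Nat.le_induction with
      | base => rfl
      | succ l hl ih => exact (hanti l (by omega)).trans ih
    rw [← hξN (max N k) (le_max_left _ _)]
    exact this _ (le_max_right _ _)
  obtain ⟨q, rfl⟩ : ∃ q, s = q + 1 := ⟨s - 1, by omega⟩
  have hdrop : ∀ j, ξ (q + j) ≤ max 0 (ξ q - j) := by
    intro j
    induction j with
    | zero => simp
    | succ j ih =>
      by_cases h : ξ (q + j + 1) = ξ (q + j)
      · have := hstab (q + j) (by omega) h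
        rw [← add_assoc, h, this]; exact le_max_left _ _
      · have h2 := hanti (q + j) (by omega)
        have h3 : ξ (q + j + 1) < ξ (q + j) := lt_of_le_of_ne h2 h
        have h4 := hnonneg (q + j + 1) (by omega)
        rw [← add_assoc]; push_cast
        omega
  intro k hk
  have hq : 2 * ξ q ≤ q * (q - 1) := by
    have := hlow q (by omega)
    have h5 : ((q : ℤ) + 1) * (q + 2) ≤ 2 * hf I q := by exact_mod_cast this
    simp only [hξ]; push_cast; nlinarith
  have hk' : (q + 1) * q ≤ 2 * k := by simpa using hk
  have hqk : q ≤ k := by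
    by_contra hlt
    have h6 : k + 1 ≤ q := by omega
    have : 2 ≤ q ∨ q = 1 := by omega
    rcases this with h7 | h7
    · nlinarith
    · subst h7; omega
  obtain ⟨j, rfl⟩ := Nat.exists_eq_add_of_le hqk
  have h8 := hdrop j
  have h9 : ξ q - j ≤ 0 := by
    have : ((q : ℤ) + 1) * q ≤ 2 * (q + j) := by exact_mod_cast hk'
    nlinarith
  rw [max_eq_left h9] at h8
  have h10 := hnonneg (q + j) (by omega)
  have h11 : ξ (q + j) = 0 := le_antisymm h8 h10
  simp only [hξ] at h11
  linarith

end S17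
end

/-! ### The Hopf lemma -/

section
namespace S17
open MvPolynomial
open scoped IntermediateField.algebraAdjoinAdjoin

section Hopf

/-- The bidegree of the variables of `ℂ[Y, Ω]`. -/
def biwt (v w : ℕ) : Fin v ⊕ Fin w → ℕ × ℕ := Sum.elim (fun _ => (1, 0)) (fun _ => (0, 1))

/-- Polynomials of bidegree `(k, k)` in `Y, Ω`. -/
noncomputable abbrev biS (v w k : ℕ) : Submodule ℂ (MvPolynomial (Fin v ⊕ Fin w) ℂ) :=
  weightedHomogeneousSubmodule ℂ (biwt v w) (k, k)

lemma biwt_weight {v w : ℕ} (d : Fin v ⊕ Fin w →₀ ℕ) :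
    Finsupp.weight (biwt v w) d = (∑ i, d (Sum.inl i), ∑ j, d (Sum.inr j)) := by
  rw [Finsupp.weight_apply, Finsupp.sum_fintype _ _ (by simp), Fintype.sum_sum_type]
  simp only [biwt, Sum.elim_inl, Sum.elim_inr]
  ext <;> simp [Prod.fst_sum, Prod.snd_sum]

lemma biS_fg (v w k : ℕ) : (biS v w k).FG := by
  have : biS v w k ≤ homogeneousSubmodule (Fin v ⊕ Fin w) ℂ (k + k) := by
    intro p hp d hd
    have h := hp hd
    rw [biwt_weight] at h
    simp only [Prod.mk.injEq] at h
    rw [Finsupp.weight_apply, Finsupp.sum_fintype _ _ (by simp), Fintype.sum_sum_type]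
    simp [h.1, h.2]
  have hfin : Module.Finite ℂ (homogeneousSubmodule (Fin v ⊕ Fin w) ℂ (k + k)) :=
    Module.Finite.iff_fg.2 (homogeneousSubmodule_fg _ ℂ _)
  exact Module.Finite.iff_fg.1 (Submodule.finiteDimensional_of_le this)

attribute [local instance] weightedGradedAlgebra in
lemma bicomp_mul_left {v w : ℕ} {a : MvPolynomial (Fin v ⊕ Fin w) ℂ} {i : ℕ}
    (ha : a ∈ biS v w i) (b : MvPolynomial (Fin v ⊕ Fin w) ℂ) (j : ℕ) :
    weightedHomogeneousComponent (biwt v w) (i + j, i + j) (a * b) =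
      a * weightedHomogeneousComponent (biwt v w) (j, j) b := by
  have := DirectSum.coe_decompose_mul_add_of_left_mem
    (weightedHomogeneousSubmodule ℂ (biwt v w)) (i := (i, i)) (j := (j, j)) (a := a) (b := b) ha
  have h2 : ∀ (f : MvPolynomial (Fin v ⊕ Fin w) ℂ) (k : ℕ × ℕ),
    ((DirectSum.decompose (weightedHomogeneousSubmodule ℂ (biwt v w)) f k : _) :
      MvPolynomial (Fin v ⊕ Fin w) ℂ) = weightedHomogeneousComponent (biwt v w) k f :=
    fun f k => decompose'_apply ℂ (biwt v w) f k
  rw [h2, h2] at this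
  exact this

/-- Coordinate form of the Hopf lemma: a bilinear map `ℂ^v × ℂ^w → ℂ^u` without zero products has
`v + w ≤ u + 1`.  By the Nullstellensatz the algebra generated by the `Y_i Ω_j` is integral over
the one generated by the `u` components, so that `ℂ(Y, Ω)` is algebraic over the field
generated by these components and `Y_0`. -/
lemma hopf_coord {u v w : ℕ} (c : Fin u → Fin (v + 1) → Fin (w + 1) → ℂ)
    (hc : ∀ (y : Fin (v + 1) → ℂ) (ω : Fin (w + 1) → ℂ), (∀ k, ∑ i, ∑ j, c k i j * (y i * ω j) = 0) → y = 0 ∨ ω = 0) :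
    v + 1 + (w + 1) ≤ u + 1 := by
  classical
  set σ := Fin (v + 1) ⊕ Fin (w + 1) with hσ
  let S := MvPolynomial σ ℂ
  let t : Fin (v + 1) → Fin (w + 1) → S := fun i j => X (Sum.inl i) * X (Sum.inr j)
  let q : Fin u → S := fun k => ∑ i, ∑ j, C (c k i j) * t i j
  have ht : ∀ i j, t i j ∈ biS (v + 1) (w + 1) 1 := by
    intro i j
    have h1 := (isWeightedHomogeneous_X ℂ (biwt (v + 1) (w + 1)) (Sum.inl i)).mul
      (isWeightedHomogeneous_X ℂ (biwt (v + 1) (w + 1)) (Sum.inr j))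
    exact h1
  have hq : ∀ k, q k ∈ biS (v + 1) (w + 1) 1 := by
    intro k
    refine Submodule.sum_mem _ fun i _ => Submodule.sum_mem _ fun j _ => ?_
    rw [← smul_eq_C_mul]
    exact Submodule.smul_mem _ _ (ht i j)
  have hrad : ∀ i j, t i j ∈ (Ideal.span (Set.range q)).radical := by
    intro i j
    rw [← vanishingIdeal_zeroLocus_eq_radical (K := ℂ), mem_vanishingIdeal_iff]
    intro x hx
    rw [zeroLocus_span] at hx
    have h0 := hc (fun i => x (Sum.inl i)) (fun j => x (Sum.inr j)) (by
      intro k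
      have := hx (q k) ⟨k, rfl⟩
      simpa [q, t] using this)
    rcases h0 with h0 | h0
    · have := congrFun h0 i; simp only [Pi.zero_apply] at this; simp [t, this]
    · have := congrFun h0 j; simp only [Pi.zero_apply] at this; simp [t, this]
  choose K hK using hrad
  let K0 := ∑ i, ∑ j, K i j
  have hK0 : ∀ i j, t i j ^ K0 ∈ Ideal.span (Set.range q) := by
    intro i j
    refine Ideal.pow_mem_of_pow_mem _ (hK i j) ?_
    exact (Finset.single_le_sum (f := fun j => K i j) (fun _ _ => Nat.zero_le _)
      (Finset.mem_univ j)).trans (Finset.single_le_sum (f := fun i => ∑ j, K i j)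
      (fun _ _ => Nat.zero_le _) (Finset.mem_univ i))
  let N := (v + 1) * (w + 1) * K0
  have hN : ∀ p ∈ biS (v + 1) (w + 1) (N + 1), p ∈ Ideal.span (Set.range q) := by
    intro p hp
    rw [p.as_sum]
    refine Ideal.sum_mem _ fun d hd => ?_
    have h := hp (mem_support_iff.1 hd)
    rw [biwt_weight] at h
    simp only [Prod.mk.injEq] at h
    have hi : ∃ i, K0 ≤ d (Sum.inl i) := by
      by_contra hcon
      push Not at hcon
      have h3 := Finset.sum_le_sum (fun i (_ : i ∈ Finset.univ) => (hcon i).le)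
      rw [h.1] at h3
      simp only [Finset.sum_const, Finset.card_univ, Fintype.card_fin, smul_eq_mul] at h3
      simp only [N] at h3
      nlinarith [Nat.zero_le K0, Nat.zero_le v, Nat.zero_le (w * ((v + 1) * K0))]
    have hj : ∃ j, K0 ≤ d (Sum.inr j) := by
      by_contra hcon
      push Not at hcon
      have h3 := Finset.sum_le_sum (fun i (_ : i ∈ Finset.univ) => (hcon i).le)
      rw [h.2] at h3
      simp only [Finset.sum_const, Finset.card_univ, Fintype.card_fin, smul_eq_mul] at h3
      simp only [N] at h3
      nlinarith [Nat.zero_le K0, Nat.zero_le w, Nat.zero_le (v * ((w + 1) * K0))]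
    obtain ⟨i, hi⟩ := hi
    obtain ⟨j, hj⟩ := hj
    refine Ideal.mem_of_dvd _ ?_ (hK0 i j)
    have e1 : t i j ^ K0 = monomial (Finsupp.single (Sum.inl i) K0 +
        Finsupp.single (Sum.inr j) K0) (1 : ℂ) := by
      change (X _ * X _) ^ K0 = _
      rw [mul_pow, X_pow_eq_monomial, X_pow_eq_monomial, monomial_mul, mul_one]
    rw [e1]
    have e2 : Finsupp.single (Sum.inl i) K0 + Finsupp.single (Sum.inr j) K0 ≤ d := by
      intro a
      rcases a with a | a
      · by_cases ha : a = i
        · subst ha; simpa using hi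
        · simp [Ne.symm ha]
      · by_cases ha : a = j
        · subst ha; simpa using hj
        · simp [Ne.symm ha]
    refine ⟨monomial (d - (Finsupp.single (Sum.inl i) K0 + Finsupp.single (Sum.inr j) K0))
      (coeff d p), ?_⟩
    rw [monomial_mul, one_mul, add_tsub_cancel_of_le e2]
  let A := Algebra.adjoin ℂ (Set.range q)
  let M : Submodule A S := Submodule.span A (⋃ k ∈ Finset.range (N + 1), (biS (v + 1) (w + 1) k : Set S))
  have hsub : ∀ k, k ≤ N → ∀ p ∈ biS (v + 1) (w + 1) k, p ∈ M := by
    intro k hk p hp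
    exact Submodule.subset_span (Set.mem_iUnion₂.2 ⟨k, Finset.mem_range.2 (by omega), hp⟩)
  have hN' : ∀ p ∈ biS (v + 1) (w + 1) (N + 1), p ∈ M := by
    intro p hp
    have h1 := hN p hp
    have h2 : weightedHomogeneousComponent (biwt (v + 1) (w + 1)) (N + 1, N + 1) p = p := by
      exact IsWeightedHomogeneous.weightedHomogeneousComponent_same hp
    rw [← h2]
    obtain ⟨a, ha⟩ := (Ideal.mem_span_range_iff_exists_fun).1 h1
    rw [← ha, map_sum]
    refine Submodule.sum_mem _ fun k _ => ?_
    rw [mul_comm, add_comm N 1, bicomp_mul_left (hq k)]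
    exact M.smul_mem (⟨q k, Algebra.subset_adjoin ⟨k, rfl⟩⟩ : A)
      (hsub N le_rfl _ (weightedHomogeneousComponent_mem _ _ _))
  have hMfg : M.FG := by
    have : M = ⨆ k ∈ Finset.range (N + 1), Submodule.span A (biS (v + 1) (w + 1) k : Set S) := by
      simp only [M, Submodule.span_iUnion]
    rw [this]
    refine Submodule.fg_biSup _ _ fun k _ => ?_
    obtain ⟨F, hF⟩ := biS_fg (v + 1) (w + 1) k
    refine ⟨F, le_antisymm (Submodule.span_mono (hF ▸ Submodule.subset_span)) ?_⟩
    rw [Submodule.span_le, ← hF]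
    exact Submodule.span_le_restrictScalars ℂ A _
  have hIntg : ∀ i j, IsIntegral A (t i j) := by
    intro i j
    refine isIntegral_of_smul_mem_submodule M ?_ hMfg (t i j) ?_
    · intro hbot
      have h1 : (1 : S) ∈ M := hsub 0 (Nat.zero_le _) _ (isWeightedHomogeneous_one ℂ _)
      rw [hbot] at h1
      exact one_ne_zero ((Submodule.mem_bot _).1 h1)
    · intro p hp
      induction hp using Submodule.span_induction with
      | mem x hx =>
        obtain ⟨k, hk, hx⟩ := Set.mem_iUnion₂.1 hx
        have h3 : t i j • x ∈ biS (v + 1) (w + 1) (k + 1) := by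
          have := IsWeightedHomogeneous.mul (ht i j) hx
          rw [add_comm k 1]
          exact this
        have hk' := Finset.mem_range.1 hk
        rcases Nat.lt_or_ge k N with h4 | h4
        · exact hsub (k + 1) (by omega) _ h3
        · obtain rfl : k = N := by omega
          exact hN' _ h3
      | zero => simp
      | add x y _ _ hx hy => rw [smul_add]; exact M.add_mem hx hy
      | smul a x _ hx => rw [smul_comm]; exact M.smul_mem a hx
  -- passing to the fraction field
  let L := FractionRing S
  let ι : S →ₐ[ℂ] L := IsScalarTower.toAlgHom ℂ S L
  have hιinj : Function.Injective ι := IsFractionRing.injective S L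
  let T : Set L := insert (ι (X (Sum.inl 0))) (Set.range fun k => ι (q k))
  let B : IntermediateField ℂ L := IntermediateField.adjoin ℂ T
  have hAB : ∀ a : A, ι a ∈ B := by
    rintro ⟨a, ha⟩
    have : A ≤ (B.toSubalgebra).comap ι := by
      refine Algebra.adjoin_le ?_
      rintro _ ⟨k, rfl⟩
      exact IntermediateField.subset_adjoin _ _ (Set.mem_insert_of_mem _ ⟨k, rfl⟩)
    exact this ha
  have hintL : ∀ i j, IsAlgebraic B (ι (t i j)) := by
    intro i j
    obtain ⟨p, hp, hp0⟩ := hIntg i j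
    let φ : A →+* B := (ι.toRingHom.comp A.val.toRingHom).codRestrict B hAB
    refine ⟨p.map φ, (hp.map φ).ne_zero, ?_⟩
    have h5 := congrArg ι hp0
    rw [map_zero] at h5
    rw [Polynomial.aeval_def, Polynomial.eval₂_map, ← h5]
    rw [show ι (Polynomial.eval₂ (algebraMap A S) (t i j) p) =
      ι.toRingHom (Polynomial.eval₂ (algebraMap A S) (t i j) p) from rfl, Polynomial.hom_eval₂]
    rfl
  let E' := algebraicClosure B L
  have hY0 : ι (X (Sum.inl 0)) ∈ E' := by
    refine mem_algebraicClosure_iff.2 ?_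
    exact isAlgebraic_algebraMap (⟨ι (X (Sum.inl 0)),
      IntermediateField.subset_adjoin _ _ (Set.mem_insert _ _)⟩ : B)
  have hne : ∀ a, ι (X a) ≠ 0 := fun a h => X_ne_zero a (hιinj (by rw [h, map_zero]))
  have htE : ∀ i j, ι (t i j) ∈ E' := fun i j => mem_algebraicClosure_iff.2 (hintL i j)
  have hΩ : ∀ j, ι (X (Sum.inr j)) ∈ E' := by
    intro j
    have h6 : ι (X (Sum.inr j)) = ι (t 0 j) / ι (X (Sum.inl 0)) := by
      rw [eq_div_iff (hne _), ← map_mul]; congr 1; simp only [t]; ring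
    rw [h6]
    exact div_mem (htE 0 j) hY0
  have hY : ∀ i, ι (X (Sum.inl i)) ∈ E' := by
    intro i
    have h6 : ι (X (Sum.inl i)) = ι (t i 0) / ι (X (Sum.inr 0)) := by
      rw [eq_div_iff (hne _), ← map_mul]
    rw [h6]
    exact div_mem (htE i 0) (hΩ 0)
  have hS : ∀ p : S, ι p ∈ E' := by
    intro p
    induction p using MvPolynomial.induction_on with
    | C a =>
      have : ι (C a) = algebraMap ℂ L a := ι.commutes a
      rw [this, IsScalarTower.algebraMap_apply ℂ B L]
      exact E'.algebraMap_mem _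
    | add p q hp hq => rw [map_add]; exact add_mem hp hq
    | mul_X p a hp =>
      rw [map_mul]
      refine mul_mem hp ?_
      rcases a with a | a
      · exact hY a
      · exact hΩ a
  have halgB : Algebra.IsAlgebraic B L := by
    refine ⟨fun x => mem_algebraicClosure_iff.1 ?_⟩
    obtain ⟨a, b, _, rfl⟩ := IsFractionRing.div_surjective (A := S) x
    exact div_mem (hS a) (hS b)
  have halg : Algebra.IsAlgebraic (Algebra.adjoin ℂ T) L := by
    have : Algebra.IsAlgebraic (Algebra.adjoin ℂ T) (IntermediateField.adjoin ℂ T) := inferInstance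
    exact Algebra.IsAlgebraic.trans (Algebra.adjoin ℂ T) (IntermediateField.adjoin ℂ T) L
  have h7 := Algebra.IsAlgebraic.trdeg_le_cardinalMk ℂ (A := L) T
  have h8 := (trdeg_le_of_injective ι hιinj).trans h7
  rw [show Algebra.trdeg ℂ S = _ from MvPolynomial.trdeg_of_isDomain] at h8
  have h9 : Cardinal.mk T ≤ ((u + 1 : ℕ) : Cardinal) := by
    refine (Cardinal.mk_insert_le).trans ?_
    have := Cardinal.mk_range_le (f := fun k => ι (q k))
    rw [Cardinal.mk_fin] at this
    push_cast
    gcongr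
  have h10 := h8.trans h9
  simp only [hσ, Cardinal.mk_sum, Cardinal.mk_fin, Cardinal.lift_id] at h10
  exact_mod_cast h10

/-- **Hopf lemma**: if `β y` is onto for every `y ≠ 0` then `dim W + dim V ≤ dim U + 1`. -/
lemma hopf {V U W : Type*} [AddCommGroup V] [Module ℂ V] [AddCommGroup U] [Module ℂ U]
    [AddCommGroup W] [Module ℂ W] [FiniteDimensional ℂ V] [FiniteDimensional ℂ U]
    [FiniteDimensional ℂ W] (β : V →ₗ[ℂ] U →ₗ[ℂ] W)
    (hβ : ∀ y, y ≠ 0 → Function.Surjective (β y))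
    (hV : 0 < Module.finrank ℂ V) (hW : 0 < Module.finrank ℂ W) :
    Module.finrank ℂ W + Module.finrank ℂ V ≤ Module.finrank ℂ U + 1 := by
  obtain ⟨v, hv⟩ := Nat.exists_eq_succ_of_ne_zero hV.ne'
  obtain ⟨w, hw⟩ := Nat.exists_eq_succ_of_ne_zero hW.ne'
  let bV := Module.finBasisOfFinrankEq ℂ V hv
  let bW := Module.finBasisOfFinrankEq ℂ W hw
  let bU := Module.finBasis ℂ U
  have key := hopf_coord (fun k i j => bW.repr (β (bV i) (bU k)) j) (by
    intro y ω h0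
    by_cases hy : y = 0
    · exact Or.inl hy
    right
    let Y : V := ∑ i, y i • bV i
    have hY : Y ≠ 0 := by
      intro h
      apply hy
      exact funext fun i => Fintype.linearIndependent_iff.1 bV.linearIndependent y h i
    let f : W →ₗ[ℂ] ℂ := ∑ j, ω j • bW.coord j
    have hf : f ∘ₗ β Y = 0 := by
      refine bU.ext fun k => ?_
      have := h0 k
      simp only [LinearMap.comp_apply, LinearMap.zero_apply, f, Y, map_sum, map_smul,
        LinearMap.sum_apply, LinearMap.smul_apply, Module.Basis.coord_apply, smul_eq_mul,
        Finset.mul_sum]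
      rw [← this]
      refine Finset.sum_congr rfl fun i _ => ?_
      refine Finset.sum_congr rfl fun j _ => ?_
      ring
    have hf0 : f = 0 := by
      ext x
      obtain ⟨a, rfl⟩ := hβ Y hY x
      exact LinearMap.congr_fun hf a
    funext j
    have := LinearMap.congr_fun hf0 (bW j)
    simpa [f, Finsupp.single_apply] using this)
  omega

end Hopf
end S17
end

/-! ### Curves with a birational plane projection -/

section
namespace S17
open Polynomial

section CurveModel

variable {k L : Type*} [Field k] [Field L] [Algebra k L]

/-- Bivariate polynomials of total degree at most `i`. -/
def TD (k : Type*) [Field k] (i : ℕ) : Submodule k (k[X][X]) where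
  carrier := {p | ∀ l a, i < l + a → (p.coeff l).coeff a = 0}
  add_mem' := fun {p q} hp hq l a h => by simp [hp l a h, hq l a h]
  zero_mem' := fun l a _ => by simp
  smul_mem' := fun c p hp l a h => by simp [hp l a h]

lemma TD_mul {i j : ℕ} {p q : k[X][X]} (hp : p ∈ TD k i) (hq : q ∈ TD k j) :
    p * q ∈ TD k (i + j) := by
  intro l a h
  rw [coeff_mul, finsetSum_coeff]
  refine Finset.sum_eq_zero fun u hu => ?_
  rw [coeff_mul]
  refine Finset.sum_eq_zero fun w hw => ?_
  rw [Finset.HasAntidiagonal.mem_antidiagonal] at hu hw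
  rcases Nat.lt_or_ge i (u.1 + w.1) with h1 | h1
  · rw [hp _ _ h1, zero_mul]
  · rw [hq _ _ (by omega), mul_zero]

lemma TD_mono {i j : ℕ} (h : i ≤ j) : TD k i ≤ TD k j := fun _ hp l a hla => hp l a (by omega)

lemma CX_mem_TD : (C X : k[X][X]) ∈ TD k 1 := by
  intro l a h
  rw [coeff_C]
  split_ifs with h1
  · rw [coeff_X, if_neg (by omega)]
  · simp

lemma X_mem_TD : (X : k[X][X]) ∈ TD k 1 := by
  intro l a h
  rw [coeff_X]
  split_ifs with h1
  · rw [coeff_one, if_neg (by omega)]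
  · simp

lemma one_mem_TD (i : ℕ) : (1 : k[X][X]) ∈ TD k i := by
  intro l a h
  rw [coeff_one]
  split_ifs with h1
  · rw [coeff_one, if_neg (by omega)]
  · simp

lemma CC_mem_TD (c : k) : (C (C c) : k[X][X]) ∈ TD k 0 := by
  have := (TD k 0).smul_mem c (one_mem_TD 0)
  convert this using 1
  rw [Algebra.smul_def, mul_one]; rfl

lemma mem_TD_natDegree (p : k[X][X]) : ∃ i, p ∈ TD k i := by
  refine ⟨p.natDegree + p.support.sup fun l => (p.coeff l).natDegree, fun l a h => ?_⟩
  by_cases hl : l ∈ p.support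
  · have h1 := Finset.le_sup (f := fun l => (p.coeff l).natDegree) hl
    have h2 := le_natDegree_of_mem_supp l hl
    exact coeff_eq_zero_of_natDegree_lt (by omega)
  · rw [notMem_support_iff.1 hl]; simp

lemma C_mem_TD {p : k[X]} {i : ℕ} (h : p.natDegree ≤ i) : (C p : k[X][X]) ∈ TD k i := by
  intro l a hl
  rw [coeff_C]
  split_ifs with h1
  · exact coeff_eq_zero_of_natDegree_lt (by omega)
  · simp

/-- The algebraic data of a projective curve over `k` together with a birational plane projection:
`V` is the space of linear forms (dehomogenised, so that `V ^ i` are the forms of degree `i`),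
`x, z` are two of them, `F` is the monic equation of degree `σ` of `z` over `k[x]`, with a rational
root `z₀` at `x = 0`, and `h` is a common denominator of `k[V]` over `k[x, z]` that does not vanish
at `0` and has the expected behaviour at infinity. -/
structure CM (k L : Type*) [Field k] [Field L] [Algebra k L] where
  V : Submodule k L
  x : L
  z : L
  σ : ℕ
  D : ℕ
  F : k[X][X]
  h : k[X]
  z₀ : k
  fg : V.FG
  one_mem : 1 ∈ V
  x_mem : x ∈ V
  z_mem : z ∈ V
  two_le : 2 ≤ σ
  monic : F.Monic
  natDegree_F : F.natDegree = σ
  F_mem : F ∈ TD k σ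
  F_eq : aevalAeval x z F = 0
  F_root : F.evalEval 0 z₀ = 0
  indep : ∀ p : k[X][X], p.degree < σ → aevalAeval x z p = 0 → p = 0
  h_deg : h.natDegree = D
  h_zero : h.eval 0 ≠ 0
  h_mul : ∀ i, ∀ v ∈ V ^ i, aeval x h * v ∈ (Submodule.span k {1, x, z}) ^ (i + D)
  gen : V ^ σ ≤ Submodule.span k {1, x} * V ^ (σ - 1)

namespace CM
variable (M : CM k L)

/-- Evaluation of bivariate polynomials at `(x, z)`. -/
noncomputable abbrev T : k[X][X] →ₐ[k] L := aevalAeval M.x M.z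

/-- The linear forms `⟨1, x, z⟩` of the plane projection. -/
noncomputable def Q : Submodule k L := Submodule.span k {1, M.x, M.z}

lemma T_C (p : k[X]) : M.T (C p) = aeval M.x p := by simp [T, aevalAeval]

lemma T_X : M.T X = M.z := by simp [T, aevalAeval]

lemma T_CX : M.T (C X) = M.x := by rw [T_C, aeval_X]

lemma Q_le : M.Q ≤ M.V := by
  rw [Q, Submodule.span_le]
  rintro _ (rfl | rfl | rfl)
  exacts [M.one_mem, M.x_mem, M.z_mem]

lemma one_le_V : (1 : Submodule k L) ≤ M.V := Submodule.one_le.2 M.one_mem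

lemma one_mem_Q : (1 : L) ∈ M.Q := Submodule.subset_span (by simp)
lemma x_mem_Q : M.x ∈ M.Q := Submodule.subset_span (by simp)
lemma z_mem_Q : M.z ∈ M.Q := Submodule.subset_span (by simp)

lemma V_mono {i j : ℕ} (h : i ≤ j) : M.V ^ i ≤ M.V ^ j := by
  obtain ⟨n, rfl⟩ := Nat.exists_eq_add_of_le h
  rw [pow_add]
  conv_lhs => rw [← mul_one (M.V ^ i)]
  exact mul_le_mul' le_rfl (Submodule.one_le.2 (by
    simpa using Submodule.pow_mem_pow M.V M.one_mem n))

lemma Q_le_V (i : ℕ) : M.Q ^ i ≤ M.V ^ i := pow_le_pow_left' M.Q_le i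

lemma Q_mono {i j : ℕ} (h : i ≤ j) : M.Q ^ i ≤ M.Q ^ j := by
  obtain ⟨n, rfl⟩ := Nat.exists_eq_add_of_le h
  rw [pow_add]
  conv_lhs => rw [← mul_one (M.Q ^ i)]
  exact mul_le_mul' le_rfl (Submodule.one_le.2 (by
    simpa using Submodule.pow_mem_pow M.Q M.one_mem_Q n))

lemma T_mem_Q {i : ℕ} {p : k[X][X]} (hp : p ∈ TD k i) : M.T p ∈ M.Q ^ i := by
  rw [p.as_sum_support, map_sum]
  refine Submodule.sum_mem _ fun l _ => ?_
  rw [← C_mul_X_pow_eq_monomial, (p.coeff l).as_sum_support, map_sum, Finset.sum_mul, map_sum]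
  refine Submodule.sum_mem _ fun a ha => ?_
  have h1 : l + a ≤ i := by
    by_contra h
    exact (mem_support_iff.1 ha) (hp l a (by omega))
  rw [map_mul, map_pow, T_C, T_X, aeval_monomial, mul_assoc, ← Algebra.smul_def]
  refine Submodule.smul_mem _ _ (M.Q_mono h1 ?_)
  rw [add_comm, pow_add]
  exact Submodule.mul_mem_mul (Submodule.pow_mem_pow _ M.x_mem_Q _)
    (Submodule.pow_mem_pow _ M.z_mem_Q _)

lemma Q_exists_TD {i : ℕ} {w : L} (hw : w ∈ M.Q ^ i) : ∃ p ∈ TD k i, M.T p = w := by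
  suffices h : M.Q ^ i ≤ (TD k i).map M.T.toLinearMap by
    obtain ⟨p, hp, hw⟩ := h hw; exact ⟨p, hp, hw⟩
  induction i generalizing w with
  | zero => rw [pow_zero]; exact Submodule.one_le.2 ⟨1, one_mem_TD 0, by simp⟩
  | succ i ih =>
    have ih' : M.Q ^ i ≤ (TD k i).map M.T.toLinearMap := fun w hw => (ih hw) hw
    have hQ : M.Q ≤ (TD k 1).map M.T.toLinearMap := by
      rw [Q, Submodule.span_le]
      rintro _ (rfl | rfl | rfl)
      · exact ⟨1, one_mem_TD 1, by simp⟩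
      · exact ⟨C X, CX_mem_TD, M.T_CX⟩
      · exact ⟨X, X_mem_TD, M.T_X⟩
    rw [pow_succ, Submodule.mul_le]
    intro a ha b hb
    obtain ⟨p, hp, rfl⟩ := ih' ha
    obtain ⟨q, hq, rfl⟩ := hQ hb
    exact ⟨p * q, TD_mul hp hq, by simp⟩

lemma F_mul_C_deg {i n : ℕ} {p : k[X][X]} (hp : p ∈ TD k i) (h : M.σ ≤ n) :
    C (p.coeff n) * X ^ (n - M.σ) * M.F ∈ TD k i := by
  by_cases h0 : p.coeff n = 0
  · simp [h0]
  have hni : n ≤ i := by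
    by_contra h1
    exact h0 (Polynomial.ext fun a => by rw [hp n a (by omega)]; simp)
  have h1 : (p.coeff n).natDegree ≤ i - n := natDegree_le_iff_coeff_eq_zero.2 fun a ha =>
    hp n a (by omega)
  have hX : ∀ e, (X : k[X][X]) ^ e ∈ TD k e := by
    intro e
    induction e with
    | zero => exact one_mem_TD 0
    | succ e ih => rw [pow_succ]; exact TD_mul ih X_mem_TD
  have := TD_mul (TD_mul (C_mem_TD h1) (hX (n - M.σ))) M.F_mem
  exact TD_mono (by omega) this

/-- Reduction modulo `F` does not raise the total degree. -/
lemma exists_red {i : ℕ} {p : k[X][X]} (hp : p ∈ TD k i) :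
    ∃ p' ∈ TD k i, p'.degree < M.σ ∧ M.T p' = M.T p := by
  suffices H : ∀ n, ∀ p ∈ TD k i, p.natDegree ≤ n → ∃ p' ∈ TD k i, p'.degree < M.σ ∧ M.T p' = M.T p
    from H _ p hp le_rfl
  intro n
  induction n with
  | zero =>
    intro p hp hn
    refine ⟨p, hp, ?_, rfl⟩
    refine (natDegree_le_iff_degree_le.1 hn).trans_lt ?_
    have := M.two_le
    exact_mod_cast (by omega : 0 < M.σ)
  | succ n ih =>
    intro p hp hn
    by_cases h : n + 1 < M.σ
    · exact ⟨p, hp, (natDegree_le_iff_degree_le.1 hn).trans_lt (by exact_mod_cast h), rfl⟩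
    have hq := M.F_mul_C_deg (n := n + 1) hp (by omega)
    obtain ⟨p', h1, h2, h3⟩ := ih (p - C (p.coeff (n + 1)) * X ^ (n + 1 - M.σ) * M.F)
      ((TD k i).sub_mem hp hq) (by
        rw [natDegree_le_iff_coeff_eq_zero]
        intro N hN
        have e1 : (C (p.coeff (n + 1)) * X ^ (n + 1 - M.σ) * M.F).natDegree ≤ n + 1 := by
          refine natDegree_mul_le.trans ?_
          have := natDegree_C_mul_X_pow_le (p.coeff (n + 1)) (n + 1 - M.σ)
          rw [M.natDegree_F]; omega
        rcases Nat.lt_or_ge (n + 1) N with h4 | h4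
        · rw [coeff_sub, coeff_eq_zero_of_natDegree_lt (by omega : p.natDegree < N),
            coeff_eq_zero_of_natDegree_lt (by omega), sub_zero]
        · obtain rfl : N = n + 1 := by omega
          rw [coeff_sub, mul_assoc, coeff_C_mul]
          have : (X ^ (n + 1 - M.σ) * M.F).coeff (n + 1) = 1 := by
            have e2 : M.F.natDegree + (n + 1 - M.σ) = n + 1 := by rw [M.natDegree_F]; omega
            have e3 := coeff_mul_X_pow M.F (n + 1 - M.σ) M.F.natDegree
            rw [e2] at e3
            rw [mul_comm, e3]; exact M.monic
          rw [this, mul_one, sub_self])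
    refine ⟨p', h1, h2, ?_⟩
    rw [h3, map_sub, map_mul, show M.T M.F = 0 from M.F_eq, mul_zero, sub_zero]

end CM
end CurveModel
end S17
end

section
namespace S17
open Polynomial

section CurveModel

variable {k L : Type*} [Field k] [Field L] [Algebra k L]

namespace CM
variable (M : CM k L)

lemma exists_cf : ∃ f : L →ₗ[k] k[X][X], (∀ p : k[X][X], p.degree < M.σ → f (M.T p) = p) ∧
    ∀ b, (f b).degree < M.σ := by
  let S : Submodule k k[X][X] := (degreeLT k[X] M.σ).restrictScalars k
  obtain ⟨g, hg⟩ := LinearMap.exists_leftInverse_of_injective (K := k) (V := S) (V' := L)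
    (M.T.toLinearMap.domRestrict S) (by
    rw [LinearMap.ker_eq_bot']
    rintro ⟨p, hp⟩ h0
    exact Subtype.ext (M.indep p (mem_degreeLT.1 hp) h0))
  refine ⟨S.subtype ∘ₗ g, fun p hp => ?_, fun b => mem_degreeLT.1 (g b).2⟩
  exact congrArg Subtype.val (LinearMap.congr_fun hg ⟨p, mem_degreeLT.2 hp⟩)

/-- The polynomial of degree `< σ` in `z` representing an element of `k[x, z]`
(extended linearly to `L` in an arbitrary way). -/
noncomputable def cf : L →ₗ[k] k[X][X] := M.exists_cf.choose

lemma cf_T {p : k[X][X]} (hp : p.degree < M.σ) : M.cf (M.T p) = p := M.exists_cf.choose_spec.1 p hp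

lemma degree_cf (b : L) : (M.cf b).degree < M.σ := M.exists_cf.choose_spec.2 b

lemma T_cf {b : L} (hb : b ∈ M.T.range) : M.T (M.cf b) = b := by
  obtain ⟨p, rfl⟩ := hb
  obtain ⟨i, hi⟩ := mem_TD_natDegree p
  obtain ⟨p', -, h1, h2⟩ := M.exists_red hi
  change M.T (M.cf (M.T p)) = M.T p
  rw [← h2, M.cf_T h1]

lemma Q_le_range {i : ℕ} {b : L} (hb : b ∈ M.Q ^ i) : b ∈ M.T.range := by
  obtain ⟨p, -, hp⟩ := M.Q_exists_TD hb
  exact ⟨p, hp⟩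

lemma cf_mem_TD {i : ℕ} {b : L} (hb : b ∈ M.Q ^ i) : M.cf b ∈ TD k i := by
  obtain ⟨p, hp, rfl⟩ := M.Q_exists_TD hb
  obtain ⟨p', h1, h2, h3⟩ := M.exists_red hp
  rw [← h3, M.cf_T h2]; exact h1

lemma mem_Q_of_cf {i : ℕ} {b : L} (hb : b ∈ M.T.range) (h : M.cf b ∈ TD k i) : b ∈ M.Q ^ i := by
  rw [← M.T_cf hb]; exact M.T_mem_Q h

lemma exists_mem_Q {b : L} (hb : b ∈ M.T.range) : ∃ i, b ∈ M.Q ^ i := by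
  obtain ⟨i, hi⟩ := mem_TD_natDegree (M.cf b)
  exact ⟨i, M.mem_Q_of_cf hb hi⟩

lemma cf_mul {b : L} (hb : b ∈ M.T.range) (p : k[X]) :
    M.cf (aeval M.x p * b) = C p * M.cf b := by
  conv_lhs => rw [← M.T_cf hb, ← M.T_C, ← map_mul]
  refine M.cf_T ?_
  by_cases hp : p = 0
  · rw [hp, C_0, zero_mul, degree_zero]; exact WithBot.bot_lt_coe _
  rw [degree_C_mul hp]; exact M.degree_cf b

lemma mem_Q_of_mul {b : L} (hb : b ∈ M.T.range) {p : k[X]} (hp : p ≠ 0) {N : ℕ}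
    (h : aeval M.x p * b ∈ M.Q ^ (N + p.natDegree)) : b ∈ M.Q ^ N := by
  refine M.mem_Q_of_cf hb ?_
  have h1 := M.cf_mem_TD h
  rw [M.cf_mul hb] at h1
  intro l a hla
  set q := (M.cf b).coeff l with hq
  by_cases hq0 : q = 0
  · rw [hq0, coeff_zero]
  refine coeff_eq_zero_of_natDegree_lt ?_
  by_contra hcon
  have h2 := h1 l (p.natDegree + q.natDegree) (by omega)
  rw [coeff_C_mul, ← hq, coeff_mul_degree_add_degree] at h2
  exact mul_ne_zero (leadingCoeff_ne_zero.2 hp) (leadingCoeff_ne_zero.2 hq0) h2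

/-- The affine coordinate ring `k[V]` of the curve. -/
noncomputable def O : Subalgebra k L := Algebra.adjoin k (M.V : Set L)

lemma V_le_O (i : ℕ) : M.V ^ i ≤ Subalgebra.toSubmodule M.O := by
  induction i with
  | zero => rw [pow_zero]; exact Submodule.one_le.2 M.O.one_mem
  | succ i ih =>
    rw [pow_succ, Submodule.mul_le]
    intro a ha b hb
    exact M.O.mul_mem (ih ha) (Algebra.subset_adjoin hb)

lemma exists_mem_V {g : L} (hg : g ∈ M.O) : ∃ i, g ∈ M.V ^ i := by
  induction hg using Algebra.adjoin_induction with
  | mem x hx => exact ⟨1, by simpa using hx⟩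
  | algebraMap r => exact ⟨0, by rw [pow_zero]; exact Submodule.algebraMap_mem r⟩
  | add a b _ _ ha hb =>
    obtain ⟨i, hi⟩ := ha
    obtain ⟨j, hj⟩ := hb
    exact ⟨max i j, add_mem (M.V_mono (le_max_left _ _) hi) (M.V_mono (le_max_right _ _) hj)⟩
  | mul a b _ _ ha hb =>
    obtain ⟨i, hi⟩ := ha
    obtain ⟨j, hj⟩ := hb
    exact ⟨i + j, by rw [pow_add]; exact Submodule.mul_mem_mul hi hj⟩

lemma range_le_O {b : L} (hb : b ∈ M.T.range) : b ∈ M.O := by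
  obtain ⟨i, hi⟩ := M.exists_mem_Q hb
  exact M.V_le_O i (M.Q_le_V i hi)

/-- The value of `h` in `L`. -/
noncomputable abbrev hL : L := aeval M.x M.h

lemma h_ne : M.h ≠ 0 := fun h => M.h_zero (by rw [h, eval_zero])

lemma hL_mul {i : ℕ} {v : L} (hv : v ∈ M.V ^ i) : M.hL * v ∈ M.Q ^ (i + M.D) := M.h_mul i v hv

lemma hL_mul_O {g : L} (hg : g ∈ M.O) : M.hL * g ∈ M.T.range := by
  obtain ⟨i, hi⟩ := M.exists_mem_V hg
  exact M.Q_le_range (M.hL_mul hi)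

lemma aeval_x_range (p : k[X]) : aeval M.x p ∈ M.T.range := ⟨C p, M.T_C p⟩

lemma aeval_x_ne {p : k[X]} (hp : p ≠ 0) : aeval M.x p ≠ 0 := by
  intro h
  have := M.indep (C p) ?_ (by rw [show aevalAeval M.x M.z (C p) = M.T (C p) from rfl, M.T_C, h])
  · exact hp (by simpa using this)
  · refine degree_C_le.trans_lt ?_
    have := M.two_le
    exact_mod_cast (by omega : 0 < M.σ)

lemma hL_ne : M.hL ≠ 0 := M.aeval_x_ne M.h_ne

lemma x_pow_mem_Q (n : ℕ) : M.x ^ n ∈ M.Q ^ n := Submodule.pow_mem_pow _ M.x_mem_Q n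

lemma aeval_mem_Q {p : k[X]} {n : ℕ} (hp : p.natDegree ≤ n) : aeval M.x p ∈ M.Q ^ n := by
  rw [← M.T_C]; exact M.T_mem_Q (C_mem_TD hp)

/-- Global sections of the `N`-th twist of the structure sheaf. -/
noncomputable def G (N : ℕ) : Submodule k L :=
  Subalgebra.toSubmodule M.O ⊓ (M.Q ^ (N + M.D)).comap (LinearMap.mulLeft k M.hL)

lemma mem_G {N : ℕ} {g : L} : g ∈ M.G N ↔ g ∈ M.O ∧ M.hL * g ∈ M.Q ^ (N + M.D) := Iff.rfl

lemma V_le_G (N : ℕ) : M.V ^ N ≤ M.G N := fun _ hv => ⟨M.V_le_O N hv, M.hL_mul hv⟩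

lemma Q_fg (i : ℕ) : (M.Q ^ i).FG := by
  refine Submodule.FG.pow ?_ i
  rw [Q]
  exact Submodule.fg_span (by simp)

lemma V_fg (i : ℕ) : (M.V ^ i).FG := Submodule.FG.pow M.fg i

instance (i : ℕ) : Module.Finite k ↥(M.V ^ i) := Module.Finite.iff_fg.2 (M.V_fg i)
instance (i : ℕ) : Module.Finite k ↥(M.Q ^ i) := Module.Finite.iff_fg.2 (M.Q_fg i)

instance (N : ℕ) : Module.Finite k ↥(M.G N) := by
  let f : M.G N →ₗ[k] ↥(M.Q ^ (N + M.D)) :=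
    (LinearMap.mulLeft k M.hL).restrict fun g hg => hg.2
  refine Module.Finite.of_injective f fun a b hab => ?_
  have := congrArg Subtype.val hab
  exact Subtype.ext (mul_left_cancel₀ M.hL_ne this)

lemma mem_G_iff {N : ℕ} {g : L} (hg : g ∈ M.O) : g ∈ M.G N ↔ ∃ n, M.x ^ n * g ∈ M.V ^ (N + n) := by
  constructor
  · rintro ⟨-, h2⟩
    obtain ⟨a, ha⟩ := M.exists_mem_V hg
    refine ⟨a + M.D, ?_⟩
    -- divide `x ^ (a + D)` by `h`
    have hdeg : IsUnit (M.h.leadingCoeff) := (leadingCoeff_ne_zero.2 M.h_ne).isUnit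
    have e1 := EuclideanDomain.div_add_mod (X ^ (a + M.D)) M.h
    have e2 : M.x ^ (a + M.D) = M.hL * aeval M.x (X ^ (a + M.D) / M.h) +
        aeval M.x (X ^ (a + M.D) % M.h) := by
      rw [← map_mul, ← map_add, e1, map_pow, aeval_X]
    have e3 : (X ^ (a + M.D) / M.h).natDegree ≤ a := by
      have h0 := degree_add_div (p := X ^ (a + M.D)) M.h_ne ?_
      · by_cases hq : X ^ (a + M.D) / M.h = 0
        · rw [hq]; simp
        rw [degree_X_pow, degree_eq_natDegree M.h_ne, degree_eq_natDegree hq, M.h_deg] at h0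
        have : M.D + (X ^ (a + M.D) / M.h).natDegree = a + M.D := by exact_mod_cast h0
        omega
      · rw [degree_X_pow, degree_eq_natDegree M.h_ne, M.h_deg]
        exact_mod_cast Nat.le_add_left _ _
    have e4 : (X ^ (a + M.D) % M.h).natDegree ≤ M.D := by
      have := degree_mod_lt (X ^ (a + M.D)) M.h_ne
      have := natDegree_le_natDegree this.le
      rwa [M.h_deg] at this
    rw [e2, add_mul]
    refine add_mem ?_ ?_
    · rw [mul_right_comm, show N + (a + M.D) = (N + M.D) + a by ring, pow_add]
      exact Submodule.mul_mem_mul (M.Q_le_V _ h2) (M.Q_le_V _ (M.aeval_mem_Q e3))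
    · refine M.V_mono (by omega : M.D + a ≤ N + (a + M.D)) ?_
      rw [pow_add]
      exact Submodule.mul_mem_mul (M.Q_le_V _ (M.aeval_mem_Q e4)) ha
  · rintro ⟨n, hn⟩
    refine ⟨hg, ?_⟩
    refine M.mem_Q_of_mul (M.hL_mul_O hg) (p := X ^ n) (pow_ne_zero _ X_ne_zero) ?_
    have := M.hL_mul hn
    rw [natDegree_X_pow, map_pow, aeval_X, mul_left_comm]
    rwa [show N + M.D + n = N + n + M.D by ring]

lemma finrank_G_succ (N : ℕ) :
    Module.finrank k (M.G (N + 1)) ≤ Module.finrank k (M.G N) + M.σ := by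
  let f : L →ₗ[k] (Fin M.σ → k) := LinearMap.pi fun l =>
    (lcoeff k (N + 1 + M.D - l)) ∘ₗ ((lcoeff k[X] (l : ℕ)).restrictScalars k) ∘ₗ M.cf ∘ₗ
      LinearMap.mulLeft k M.hL
  let f' := f.domRestrict (M.G (N + 1))
  have h1 := LinearMap.finrank_range_add_finrank_ker f'
  have h2 : Module.finrank k (LinearMap.range f') ≤ M.σ := by
    have := Submodule.finrank_le (LinearMap.range f')
    simpa using this
  have h3 : Module.finrank k (LinearMap.ker f') ≤ Module.finrank k (M.G N) := by
    have h4 : (LinearMap.ker f').map (M.G (N + 1)).subtype ≤ M.G N := by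
      rintro _ ⟨⟨g, hg⟩, hk, rfl⟩
      refine ⟨hg.1, ?_⟩
      refine M.mem_Q_of_cf (M.Q_le_range hg.2) ?_
      have h5 := M.cf_mem_TD hg.2
      intro l a hla
      rcases Nat.lt_or_ge (N + 1 + M.D) (l + a) with h6 | h6
      · exact h5 l a h6
      by_cases hl : l < M.σ
      · have h7 := congrFun (LinearMap.mem_ker.1 hk) ⟨l, hl⟩
        have : a = N + 1 + M.D - l := by omega
        rw [this]; exact h7
      · rw [coeff_eq_zero_of_degree_lt ((M.degree_cf _).trans_le (by exact_mod_cast (not_lt.1 hl))),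
          coeff_zero]
    have h8 := Submodule.finrank_mono h4
    rwa [finrank_map_inj (Submodule.subtype_injective _)] at h8
  omega

end CM
end CurveModel
end S17
end

/-! ### Residues and duality for plane curves -/

section
namespace S17
open Polynomial

section CurveModel

variable {k L : Type*} [Field k] [Field L] [Algebra k L]

namespace CM
variable (M : CM k L)

/-- Evaluation at the point `(0, z₀)` of the plane projection is well defined on `k[x, z]`. -/
lemma evalEval_eq {p q : k[X][X]} (h : M.T p = M.T q) :
    p.evalEval 0 M.z₀ = q.evalEval 0 M.z₀ := by
  have h0 : (p - q) %ₘ M.F = 0 := by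
    refine M.indep _ ?_ ?_
    · have := degree_modByMonic_lt (p - q) M.monic
      rwa [degree_eq_natDegree M.monic.ne_zero, M.natDegree_F] at this
    · have e := congrArg M.T (modByMonic_add_div (p - q) M.F)
      rw [map_add, map_mul, show M.T M.F = 0 from M.F_eq, zero_mul, add_zero, map_sub, h,
        sub_self] at e
      exact e
  have e := congrArg (evalEval 0 M.z₀) (modByMonic_add_div (p - q) M.F)
  rw [h0, zero_add, evalEval_mul, M.F_root, zero_mul, evalEval_sub] at e
  exact (sub_eq_zero.1 e.symm)

/-- The point of the curve over `(0, z₀)`, where `h` is invertible, forces the global regular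
functions to be constant. -/
lemma mem_one_of_mem_G {θ : L} (hθ : θ ∈ M.G 0) : θ ∈ (1 : Submodule k L) := by
  set c : k := (M.cf (M.hL * θ)).evalEval 0 M.z₀ / M.h.eval 0 with hc
  set θ' := θ - algebraMap k L c with hθ'
  have h1 : algebraMap k L c ∈ M.G 0 := by
    refine M.V_le_G 0 ?_
    rw [pow_zero]; exact Submodule.algebraMap_mem c
  have hm : θ' ∈ M.G 0 := (M.G 0).sub_mem hθ h1
  by_cases h0 : θ' = 0
  · rw [sub_eq_zero.1 h0]; exact Submodule.algebraMap_mem c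
  exfalso
  have hmul : ∀ a ∈ M.G 0, θ' * a ∈ M.G 0 := by
    intro a ha
    obtain ⟨n, hn⟩ := (M.mem_G_iff hm.1).1 hm
    obtain ⟨m, hm'⟩ := (M.mem_G_iff ha.1).1 ha
    refine (M.mem_G_iff (M.O.mul_mem hm.1 ha.1)).2 ⟨n + m, ?_⟩
    rw [show M.x ^ (n + m) * (θ' * a) = (M.x ^ n * θ') * (M.x ^ m * a) by ring,
      show 0 + (n + m) = (0 + n) + (0 + m) by ring, pow_add]
    exact Submodule.mul_mem_mul hn hm'
  let f : M.G 0 →ₗ[k] M.G 0 := (LinearMap.mulLeft k θ').restrict hmul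
  have hinj : Function.Injective f := fun a b hab =>
    Subtype.ext (mul_left_cancel₀ h0 (congrArg Subtype.val hab))
  have hone : (1 : L) ∈ M.G 0 := M.V_le_G 0 (by rw [pow_zero]; exact Submodule.one_le.1 le_rfl)
  obtain ⟨⟨η, hη⟩, he⟩ := (LinearMap.injective_iff_surjective.1 hinj) ⟨1, hone⟩
  have he' : θ' * η = 1 := congrArg Subtype.val he
  have e1 : M.T (C (M.h * M.h)) = M.T (M.cf (M.hL * θ') * M.cf (M.hL * η)) := by
    rw [map_mul M.T (M.cf _), M.T_cf (M.hL_mul_O hm.1), M.T_cf (M.hL_mul_O hη.1), M.T_C, map_mul,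
      mul_mul_mul_comm, he', mul_one]
  have e2 := M.evalEval_eq e1
  have e3 : M.T (M.cf (M.hL * θ')) = M.T (M.cf (M.hL * θ) - C (C c * M.h)) := by
    rw [map_sub, M.T_cf (M.hL_mul_O hm.1), M.T_cf (M.hL_mul_O hθ.1), M.T_C, map_mul, aeval_C, hθ']
    ring
  have e4 := M.evalEval_eq e3
  rw [evalEval_mul, e4, evalEval_sub, evalEval_C, evalEval_C, eval_mul, eval_mul, eval_C, hc,
    div_mul_cancel₀ _ M.h_zero, sub_self, zero_mul] at e2
  exact mul_self_ne_zero.2 M.h_zero e2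

lemma finrank_G_zero : Module.finrank k (M.G 0) = 1 := by
  have : M.G 0 = Submodule.span k {1} := by
    refine le_antisymm (fun θ hθ => ?_) ?_
    · have := M.mem_one_of_mem_G hθ
      rwa [Submodule.one_eq_span] at this
    · rw [Submodule.span_singleton_le_iff_mem]
      exact M.V_le_G 0 (by rw [pow_zero]; exact Submodule.one_le.1 le_rfl)
  rw [this]; exact finrank_span_singleton one_ne_zero

/-- `h` made monic. -/
noncomputable def hm : k[X] := M.h * C (M.h.leadingCoeff⁻¹)

lemma hm_monic : M.hm.Monic := monic_mul_leadingCoeff_inv M.h_ne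

lemma hm_natDegree : M.hm.natDegree = M.D := by
  rw [hm, natDegree_mul_C (inv_ne_zero (leadingCoeff_ne_zero.2 M.h_ne)), M.h_deg]

lemma h_eq_hm : M.h = M.hm * C M.h.leadingCoeff := by
  rw [hm, mul_assoc, ← C_mul, inv_mul_cancel₀ (leadingCoeff_ne_zero.2 M.h_ne), C_1, mul_one]

/-- The residue at infinity of `p / h`, up to a constant. -/
noncomputable def ρ : k[X] →ₗ[k] k := lcoeff k (M.D - 1) ∘ₗ modByMonicHom M.hm

lemma ρ_h_mul (p : k[X]) : M.ρ (M.h * p) = 0 := by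
  have : (M.h * p) %ₘ M.hm = 0 := by
    rw [modByMonic_eq_zero_iff_dvd M.hm_monic, M.h_eq_hm, mul_assoc]
    exact dvd_mul_right _ _
  simp [ρ, modByMonicHom, this]

lemma ρ_of_degree_lt {p : k[X]} (hp : ∀ a, M.D ≤ a → p.coeff a = 0) :
    M.ρ p = p.coeff (M.D - 1) := by
  have : p %ₘ M.hm = p := by
    rw [modByMonic_eq_self_iff M.hm_monic, degree_eq_natDegree M.hm_monic.ne_zero, M.hm_natDegree]
    exact (degree_lt_iff_coeff_zero _ _).2 fun a ha => hp a ha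
  simp [ρ, modByMonicHom, this]

lemma coeff_zero_of_ρ {p : k[X]} (hp : ∀ a, M.D ≤ a → p.coeff a = 0) {J : ℕ}
    (h : ∀ m < J, M.ρ (X ^ m * p) = 0) : ∀ a, M.D ≤ J + a → p.coeff a = 0 := by
  induction J with
  | zero => intro a ha; exact hp a (by omega)
  | succ J ih =>
    intro a ha
    have ih' := ih fun m hm => h m (by omega)
    rcases Nat.lt_or_ge (J + a) M.D with h1 | h1
    · have h2 := h J (by omega)
      rw [M.ρ_of_degree_lt] at h2
      · rwa [show M.D - 1 = a + J by omega, coeff_X_pow_mul] at h2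
      · intro b hb
        rw [coeff_X_pow_mul']
        split_ifs with h3
        · exact ih' _ (by omega)
        · rfl
    · exact ih' a h1

/-- The residue functional on `L`. -/
noncomputable def ψ : L →ₗ[k] k :=
  M.ρ ∘ₗ ((lcoeff k[X] (M.σ - 1)).restrictScalars k) ∘ₗ M.cf ∘ₗ LinearMap.mulLeft k M.hL

lemma ψ_apply (g : L) : M.ψ g = M.ρ ((M.cf (M.hL * g)).coeff (M.σ - 1)) := rfl

lemma ψ_range {b : L} (hb : b ∈ M.T.range) : M.ψ b = 0 := by
  rw [ψ_apply, M.cf_mul hb, coeff_C_mul, ρ_h_mul]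

lemma xz_mem_Q (m l : ℕ) : M.x ^ m * M.z ^ l ∈ M.Q ^ (m + l) := by
  rw [pow_add]
  exact Submodule.mul_mem_mul (M.x_pow_mem_Q m) (Submodule.pow_mem_pow _ M.z_mem_Q _)

/-- The pairing of `k[V] / k[x, z]` with the forms of degree `σ - 2` is nondegenerate on the
left. -/
lemma mem_range_of_ψ {g : L} (hg : g ∈ M.O)
    (h : ∀ m l, m + l ≤ M.σ - 2 → M.ψ (g * (M.x ^ m * M.z ^ l)) = 0) : g ∈ M.T.range := by
  have hσ := M.two_le
  set P := M.cf (M.hL * g) with hP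
  let R0 : k[X][X] := ∑ l ∈ Finset.range M.σ, C (P.coeff l /ₘ M.hm) * X ^ l
  have hR0 : ∀ l, R0.coeff l = P.coeff l /ₘ M.hm := by
    intro l
    simp only [R0, finsetSum_coeff, coeff_C_mul_X_pow]
    rw [Finset.sum_ite_eq]
    split_ifs with h1
    · rfl
    · rw [Finset.mem_range, not_lt] at h1
      rw [coeff_eq_zero_of_degree_lt ((M.degree_cf _).trans_le (by exact_mod_cast h1)),
        zero_divByMonic]
  set P' := P - C M.hm * R0 with hP'
  have hP'c : ∀ l, P'.coeff l = P.coeff l %ₘ M.hm := by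
    intro l
    rw [hP', coeff_sub, coeff_C_mul, hR0, modByMonic_eq_sub_mul_div]
  have hP'd : ∀ l a, M.D ≤ a → (P'.coeff l).coeff a = 0 := by
    intro l a ha
    rw [hP'c]
    refine coeff_eq_zero_of_degree_lt ((degree_modByMonic_lt _ M.hm_monic).trans_le ?_)
    rw [degree_eq_natDegree M.hm_monic.ne_zero, M.hm_natDegree]
    exact_mod_cast ha
  have hP'σ : P'.degree < M.σ := by
    refine (degree_lt_iff_coeff_zero _ _).2 fun l hl => ?_
    rw [hP'c, coeff_eq_zero_of_degree_lt ((M.degree_cf _).trans_le (by exact_mod_cast hl)),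
      zero_modByMonic]
  set b := M.h.leadingCoeff⁻¹ • M.T R0 with hb
  have hbr : b ∈ M.T.range := M.T.range.smul_mem ⟨R0, rfl⟩ _
  set g' := g - b with hg'
  have hg'O : g' ∈ M.O := M.O.sub_mem hg (M.range_le_O hbr)
  have hTP : M.hL * g' = M.T P' := by
    rw [hP', map_sub, M.T_cf (M.hL_mul_O hg), map_mul, M.T_C, hg', hb, hm, map_mul, aeval_C,
      Algebra.smul_def]
    ring
  have hψ : ∀ m l, m + l ≤ M.σ - 2 → M.ψ (g' * (M.x ^ m * M.z ^ l)) = 0 := by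
    intro m l hml
    rw [hg', sub_mul, map_sub, h m l hml, M.ψ_range, sub_zero]
    exact M.T.range.mul_mem hbr (M.Q_le_range (M.xz_mem_Q m l))
  have hS : ∀ n, n ≤ M.σ → ∀ l a, M.σ ≤ l + n → M.D ≤ l + a → (P'.coeff l).coeff a = 0 := by
    intro n
    induction n with
    | zero =>
      intro _ l a hl _
      rw [coeff_eq_zero_of_degree_lt (hP'σ.trans_le (by exact_mod_cast hl)), coeff_zero]
    | succ n ih =>
      intro hn l a hl hla
      rcases Nat.lt_or_ge (l + n) M.σ with h1 | h1
      swap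
      · exact ih (by omega) l a h1 hla
      have hJ : l + n + 1 = M.σ := by omega
      by_cases hD : M.D = 0
      · exact hP'd l a (by omega)
      -- split `P'` into terms of degree less than, equal to and greater than `l`
      let P1 : k[X][X] := ∑ i ∈ Finset.range l, C (P'.coeff i) * X ^ i
      let P2 : k[X][X] := P' - P1 - C (P'.coeff l) * X ^ l
      have hP1 : ∀ i, P1.coeff i = if i < l then P'.coeff i else 0 := by
        intro i
        simp only [P1, finsetSum_coeff, coeff_C_mul_X_pow]
        rw [Finset.sum_ite_eq]
        simp only [Finset.mem_range]
      have hP2 : P2 ∈ TD k (M.D - 1) := by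
        intro i c hic
        simp only [P2, coeff_sub, hP1, coeff_C_mul_X_pow]
        rcases lt_trichotomy i l with h2 | h2 | h2
        · rw [if_pos h2, if_neg h2.ne]; simp
        · subst h2; simp
        · rw [if_neg h2.not_gt, if_neg h2.ne', coeff_zero, sub_zero, sub_zero]
          exact ih (by omega) i c (by omega) (by omega)
      have hXn : ∀ e, (X : k[X][X]) ^ e ∈ TD k e := by
        intro e
        induction e with
        | zero => exact one_mem_TD 0
        | succ e ih => rw [pow_succ]; exact TD_mul ih X_mem_TD
      set q := (M.cf (M.T (P2 * X ^ n))).coeff (M.σ - 1) with hq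
      have hq0 : ∀ c, M.D ≤ l + c → q.coeff c = 0 := by
        intro c hc
        exact M.cf_mem_TD (M.T_mem_Q (TD_mul hP2 (hXn n))) _ _ (by omega)
      have hsum : (M.cf (M.T (P' * X ^ n))).coeff (M.σ - 1) = P'.coeff l + q := by
        have e0 : P' * X ^ n = (P1 * X ^ n + C (P'.coeff l) * X ^ (M.σ - 1)) + P2 * X ^ n := by
          have : M.σ - 1 = l + n := by omega
          rw [this, pow_add]; simp only [P2]; ring
        have e1 : (P1 * X ^ n + C (P'.coeff l) * X ^ (M.σ - 1)).degree < (M.σ : WithBot ℕ) := by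
          refine (degree_lt_iff_coeff_zero _ _).2 fun i hi => ?_
          rw [coeff_add, coeff_mul_X_pow', coeff_C_mul_X_pow, if_neg (by omega : ¬ i = M.σ - 1),
            add_zero]
          split_ifs
          · rw [hP1, if_neg (by omega)]
          · rfl
        rw [e0, map_add, map_add, M.cf_T e1, coeff_add, ← hq]
        congr 1
        rw [coeff_add, coeff_mul_X_pow', coeff_C_mul_X_pow, if_pos rfl, hP1]
        rw [if_pos (by omega : n ≤ M.σ - 1), if_neg (by omega), zero_add]
      have h3 := M.coeff_zero_of_ρ (p := P'.coeff l + q) (J := l) (fun c hc => by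
        rw [coeff_add, hP'd l c hc, hq0 c (by omega), add_zero]) (fun m hm => by
        have h4 := hψ m n (by omega)
        have e5 : M.hL * (g' * (M.x ^ m * M.z ^ n)) = aeval M.x (X ^ m : k[X]) * M.T (P' * X ^ n) := by
          rw [map_mul, map_pow, map_pow, M.T_X, ← hTP, aeval_X]; ring
        rw [ψ_apply, e5, M.cf_mul (b := M.T (P' * X ^ n)) ⟨_, rfl⟩, coeff_C_mul, hsum] at h4
        exact h4) a hla
      rwa [coeff_add, hq0 a hla, add_zero] at h3
  have hgG : g' ∈ M.G 0 := by
    refine M.mem_G.2 ⟨hg'O, ?_⟩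
    rw [hTP]
    refine M.T_mem_Q fun l a hla => hS M.σ le_rfl l a (by omega) (by omega)
  have h6 := M.mem_one_of_mem_G hgG
  have : g = g' + b := by rw [hg']; ring
  rw [this]
  refine M.T.range.add_mem ?_ hbr
  obtain ⟨c, hc⟩ := Submodule.mem_one.1 h6
  rw [← hc]; exact M.T.range.algebraMap_mem c

end CM
end CurveModel
end S17
end

section
namespace S17
open Polynomial

section CurveModel

variable {k L : Type*} [Field k] [Field L] [Algebra k L]

namespace CM
variable (M : CM k L)

/-- Modulo the conductor, every element of `k[x, z]` is represented by a form of degree `σ - 2`: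
this is the duality for plane curves. -/
lemma exists_adjoint {b : L} (hb : b ∈ M.T.range) :
    ∃ b₀ ∈ M.Q ^ (M.σ - 2), ∀ g ∈ M.O, (b - b₀) * g ∈ M.T.range := by
  let E := Subalgebra.toSubmodule M.O
  let ι := {p : Fin (M.σ - 1) × Fin (M.σ - 1) // (p.1 : ℕ) + p.2 ≤ M.σ - 2}
  let ev : L → (E →ₗ[k] k) := fun c => M.ψ ∘ₗ LinearMap.mulLeft k c ∘ₗ E.subtype
  let Λ : ι → E →ₗ[k] k := fun p => ev (M.x ^ (p.1.1 : ℕ) * M.z ^ (p.1.2 : ℕ))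
  have hK : ev b ∈ Submodule.span k (Set.range Λ) := by
    refine mem_span_of_iInf_ker_le_ker fun g hg => ?_
    rw [Submodule.mem_iInf] at hg
    have h1 : (g : L) ∈ M.T.range := M.mem_range_of_ψ g.2 fun m l hml => by
      have hσ := M.two_le
      have := hg ⟨(⟨m, by omega⟩, ⟨l, by omega⟩), hml⟩
      rw [mul_comm]
      exact this
    exact M.ψ_range (M.T.range.mul_mem hb h1)
  have key : ∀ K ∈ Submodule.span k (Set.range Λ), ∃ b₀ ∈ M.Q ^ (M.σ - 2), K = ev b₀ := by
    intro K hK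
    induction hK using Submodule.span_induction with
    | mem _ h =>
      obtain ⟨p, rfl⟩ := h
      exact ⟨_, M.Q_mono p.2 (M.xz_mem_Q _ _), rfl⟩
    | zero => exact ⟨0, Submodule.zero_mem _, by ext g; simp [ev]⟩
    | add _ _ _ _ h1 h2 =>
      obtain ⟨a, ha, rfl⟩ := h1
      obtain ⟨c, hc, rfl⟩ := h2
      exact ⟨a + c, Submodule.add_mem _ ha hc, by ext g; simp [ev, add_mul]⟩
    | smul t _ _ h1 =>
      obtain ⟨a, ha, rfl⟩ := h1
      exact ⟨t • a, Submodule.smul_mem _ t ha, by ext g; simp [ev]⟩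
  obtain ⟨b₀, hb₀, h0⟩ := key _ hK
  refine ⟨b₀, hb₀, fun g hg => ?_⟩
  have hO : ∀ m l, M.x ^ m * M.z ^ l ∈ M.O := fun m l => M.range_le_O (M.Q_le_range (M.xz_mem_Q m l))
  refine M.mem_range_of_ψ (M.O.mul_mem (M.O.sub_mem (M.range_le_O hb)
    (M.range_le_O (M.Q_le_range hb₀))) hg) fun m l _ => ?_
  have h2 := LinearMap.congr_fun h0 ⟨g * (M.x ^ m * M.z ^ l), M.O.mul_mem hg (hO m l)⟩
  have h3 : M.ψ (b * (g * (M.x ^ m * M.z ^ l))) = M.ψ (b₀ * (g * (M.x ^ m * M.z ^ l))) := h2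
  rw [mul_assoc, sub_mul, map_sub, h3, sub_self]

lemma V_le_span_mul (n : ℕ) :
    M.V ^ (M.σ - 1 + n) ≤ Submodule.span k {1, M.x} ^ n * M.V ^ (M.σ - 1) := by
  induction n with
  | zero => simp
  | succ n ih =>
    rw [← add_assoc, pow_succ]
    refine (mul_le_mul' ih le_rfl).trans ?_
    have hσ := M.two_le
    rw [mul_assoc, ← pow_succ, show M.σ - 1 + 1 = M.σ by omega, pow_succ, mul_assoc]
    exact mul_le_mul' le_rfl M.gen

lemma O_le : Subalgebra.toSubmodule M.O ≤
    M.V ^ (2 * M.σ - 3) ⊔ Subalgebra.toSubmodule M.T.range := by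
  intro g hg
  obtain ⟨i, hi⟩ := M.exists_mem_V hg
  have h1 := M.V_le_span_mul i (M.V_mono (by omega) hi)
  clear hi
  have hx : Submodule.span k {1, M.x} ≤ M.Q := Submodule.span_le.2 (by
    rintro _ (rfl | rfl)
    exacts [M.one_mem_Q, M.x_mem_Q])
  refine (Submodule.mul_le.2 fun a ha v hv => ?_ :
    Submodule.span k {1, M.x} ^ i * M.V ^ (M.σ - 1) ≤ _) h1
  obtain ⟨b₀, hb₀, h2⟩ := M.exists_adjoint (M.Q_le_range (pow_le_pow_left' hx i ha))
  have : a * v = b₀ * v + (a - b₀) * v := by ring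
  rw [this]
  have hσ := M.two_le
  refine Submodule.add_mem_sup ?_ (h2 v (M.V_le_O _ hv))
  rw [show 2 * M.σ - 3 = M.σ - 2 + (M.σ - 1) by omega, pow_add]
  exact Submodule.mul_mem_mul (M.Q_le_V _ hb₀) hv

/-- The linear system of forms of degree `N ≥ 2σ - 3` is complete. -/
lemma G_eq_V {N : ℕ} (hN : 2 * M.σ - 3 ≤ N) : M.G N = M.V ^ N := by
  refine le_antisymm (fun g hg => ?_) (M.V_le_G N)
  obtain ⟨a, ha, b, hb, rfl⟩ := Submodule.mem_sup.1 (M.O_le hg.1)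
  have ha' := M.V_mono hN ha
  have hbG : b ∈ M.G N := by
    have := (M.G N).sub_mem hg (M.V_le_G N ha')
    rwa [add_sub_cancel_left] at this
  refine Submodule.add_mem _ ha' (M.Q_le_V _ ?_)
  refine M.mem_Q_of_mul hb M.h_ne ?_
  rw [M.h_deg]; exact hbG.2

end CM
end CurveModel
end S17
end

/-! ### Growth of pencils of subspaces -/

section
namespace S17
open Polynomial IntermediateField

section Pencil

variable {F L : Type*} [Field F] [Field L] [Algebra F L]

/-- Polynomials in `θ` of degree at most `n`. -/
noncomputable def TT (F : Type*) {L : Type*} [Field F] [Field L] [Algebra F L] (θ : L) (n : ℕ) :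
    Submodule F L := (degreeLT F (n + 1)).map (aeval θ).toLinearMap

variable {θ : L}

lemma mem_TT {n : ℕ} {a : L} : a ∈ TT F θ n ↔ ∃ p : F[X], p.natDegree ≤ n ∧ aeval θ p = a := by
  simp only [TT, Submodule.mem_map, mem_degreeLT, AlgHom.toLinearMap_apply]
  refine exists_congr fun p => and_congr_left fun _ => ?_
  rw [natDegree_le_iff_degree_le]
  exact Order.lt_succ_iff (a := p.degree) (b := (n : WithBot ℕ))

lemma TT_zero : TT F θ 0 = 1 := by
  ext a
  rw [mem_TT, Submodule.mem_one]
  constructor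
  · rintro ⟨p, hp, rfl⟩
    rw [eq_C_of_natDegree_le_zero hp]
    exact ⟨p.coeff 0, by simp⟩
  · rintro ⟨c, rfl⟩
    exact ⟨C c, by simp, by simp⟩

lemma TT_mul (m n : ℕ) : TT F θ m * TT F θ n ≤ TT F θ (m + n) := by
  rw [Submodule.mul_le]
  intro a ha b hb
  obtain ⟨p, hp, rfl⟩ := mem_TT.1 ha
  obtain ⟨q, hq, rfl⟩ := mem_TT.1 hb
  exact mem_TT.2 ⟨p * q, natDegree_mul_le_of_le hp hq, map_mul _ _ _⟩

lemma TT_mono {m n : ℕ} (h : m ≤ n) : TT F θ m ≤ TT F θ n := fun a ha => by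
  obtain ⟨p, hp, rfl⟩ := mem_TT.1 ha
  exact mem_TT.2 ⟨p, hp.trans h, rfl⟩

lemma pow_mem_TT {n l : ℕ} (h : l ≤ n) : θ ^ l ∈ TT F θ n :=
  mem_TT.2 ⟨X ^ l, by simpa using h, by simp⟩

lemma TT_succ (n : ℕ) : TT F θ (n + 1) = TT F θ n ⊔ Submodule.span F {θ ^ (n + 1)} := by
  refine le_antisymm (fun a ha => ?_) (sup_le (TT_mono n.le_succ) ?_)
  · obtain ⟨p, hp, rfl⟩ := mem_TT.1 ha
    have h1 : p = p.erase (n + 1) + C (p.coeff (n + 1)) * X ^ (n + 1) := by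
      rw [C_mul_X_pow_eq_monomial, add_comm, monomial_add_erase]
    rw [h1, map_add]
    refine Submodule.add_mem_sup (mem_TT.2 ⟨_, ?_, rfl⟩) ?_
    · rw [natDegree_le_iff_coeff_eq_zero]
      intro N hN
      rw [coeff_erase]
      split_ifs with h2
      · rfl
      · exact coeff_eq_zero_of_natDegree_lt (by omega)
    · rw [map_mul, aeval_C, map_pow, aeval_X, ← Algebra.smul_def]
      exact Submodule.smul_mem _ _ (Submodule.mem_span_singleton_self _)
  · rw [Submodule.span_singleton_le_iff_mem]
    exact pow_mem_TT le_rfl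

lemma TT_succ_mul (n : ℕ) (W : Submodule F L) :
    TT F θ (n + 1) * W = TT F θ n * W ⊔ W.map (LinearMap.mulLeft F (θ ^ (n + 1))) := by
  rw [TT_succ, Submodule.sup_mul, Submodule.span_singleton_mul]
  rfl

lemma TT_fg (n : ℕ) : (TT F θ n).FG := by
  refine Submodule.FG.map _ ?_
  rw [← Module.Finite.iff_fg]
  exact Module.Finite.equiv (degreeLTEquiv F (n + 1)).symm

instance finite_TT_mul (n : ℕ) (W : Submodule F L) [Module.Finite F W] :
    Module.Finite F ↥(TT F θ n * W) :=
  Module.Finite.iff_fg.2 ((TT_fg n).mul (Module.Finite.iff_fg.1 inferInstance))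

lemma mulLeft_inj {a : L} (ha : a ≠ 0) : Function.Injective (LinearMap.mulLeft F a) :=
  mul_right_injective₀ ha

/-- The map `(pᵢ) ↦ ∑ pᵢ(θ) wᵢ` on tuples of polynomials of degree at most `n`. -/
noncomputable def ΦP (θ : L) (n : ℕ) {r : ℕ} (w : Fin r → L) :
    (Fin r → degreeLT F (n + 1)) →ₗ[F] L :=
  ∑ i, LinearMap.mulRight F (w i) ∘ₗ (aeval θ).toLinearMap ∘ₗ (degreeLT F (n + 1)).subtype ∘ₗ
    LinearMap.proj i

lemma ΦP_apply (n : ℕ) {r : ℕ} (w : Fin r → L) (p : Fin r → degreeLT F (n + 1)) :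
    ΦP θ n w p = ∑ i, aeval θ (p i : F[X]) * w i := by
  simp [ΦP]

lemma finrank_dom (n r : ℕ) : Module.finrank F (Fin r → degreeLT F (n + 1)) = r * (n + 1) := by
  rw [Module.finrank_pi_fintype]
  have : Module.finrank F (degreeLT F (n + 1)) = n + 1 := by
    rw [(degreeLTEquiv F (n + 1)).finrank_eq]; simp
  simp [this]

instance (n : ℕ) : Module.Finite F (degreeLT F n) := Module.Finite.equiv (degreeLTEquiv F n).symm

lemma TT_mul_span_le (n : ℕ) {r : ℕ} (w : Fin r → L) :
    TT F θ n * Submodule.span F (Set.range w) ≤ LinearMap.range (ΦP (F := F) θ n w) := by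
  rw [Submodule.mul_le]
  intro a ha b hb
  induction hb using Submodule.span_induction with
  | mem _ h =>
    obtain ⟨i, rfl⟩ := h
    obtain ⟨p, hp, rfl⟩ := ha
    refine ⟨Pi.single i ⟨p, hp⟩, ?_⟩
    rw [ΦP_apply, Finset.sum_eq_single i]
    · simp
    · intro j _ hj; simp [Pi.single_eq_of_ne hj]
    · simp
  | zero => rw [mul_zero]; exact Submodule.zero_mem _
  | add _ _ _ _ h1 h2 => rw [mul_add]; exact Submodule.add_mem _ h1 h2
  | smul c _ _ h1 => rw [mul_smul_comm]; exact Submodule.smul_mem _ _ h1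

lemma finrank_TT_mul_span (n : ℕ) {r : ℕ} (w : Fin r → L) :
    Module.finrank F ↥(TT F θ n * Submodule.span F (Set.range w)) ≤ r * (n + 1) := by
  rw [← finrank_dom (F := F) n r]
  exact (Submodule.finrank_mono (TT_mul_span_le n w)).trans (LinearMap.finrank_range_le _)

lemma le_finrank_TT_mul (hθ : Transcendental F θ) (n : ℕ) {r : ℕ} {w : Fin r → L}
    (hw : LinearIndependent F⟮θ⟯ w) {W : Submodule F L} [Module.Finite F W] (hW : ∀ i, w i ∈ W) :
    r * (n + 1) ≤ Module.finrank F ↥(TT F θ n * W) := by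
  have hinj : Function.Injective (ΦP (F := F) θ n w) := by
    rw [injective_iff_map_eq_zero]
    intro p hp
    rw [ΦP_apply] at hp
    rw [Fintype.linearIndependent_iff] at hw
    have h1 := hw (fun i => aeval (AdjoinSimple.gen F θ) (p i : F[X])) (by
      rw [← hp]
      refine Finset.sum_congr rfl fun i _ => ?_
      rw [Algebra.smul_def]
      congr 1
      change (algebraMap F⟮θ⟯ L) _ = _
      rw [← aeval_algebraMap_apply, AdjoinSimple.algebraMap_gen])
    ext i : 2
    have h2 := congrArg (algebraMap F⟮θ⟯ L) (h1 i)
    rw [← aeval_algebraMap_apply, AdjoinSimple.algebraMap_gen, map_zero] at h2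
    exact (transcendental_iff.1 hθ) _ h2
  rw [← finrank_dom (F := F) n r, ← LinearMap.finrank_range_of_inj hinj]
  refine Submodule.finrank_mono ?_
  rintro _ ⟨p, rfl⟩
  rw [ΦP_apply]
  exact Submodule.sum_mem _ fun i _ => Submodule.mul_mem_mul ⟨p i, (p i).2, rfl⟩ (hW i)

/-- Lower bound for the growth of a pencil `b, θ b : W₀ ⇉ W₁`. -/
lemma pencil_ge (hθ : Transcendental F θ) {b : L} (hb : b ≠ 0) {W₀ W₁ : Submodule F L}
    [Module.Finite F W₁] (h1 : ∀ w ∈ W₀, b * w ∈ W₁) (h2 : ∀ w ∈ W₀, θ * b * w ∈ W₁)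
    {r : ℕ} {w : Fin r → L} (hw : LinearIndependent F⟮θ⟯ w) (hW : ∀ i, w i ∈ W₁) :
    Module.finrank F W₀ + r ≤ Module.finrank F W₁ := by
  have hθ0 : θ ≠ 0 := fun h => by rw [h] at hθ; exact hθ (isAlgebraic_zero)
  have hstep : ∀ n, Module.finrank F ↥(TT F θ (n + 1) * W₁) + Module.finrank F W₀ ≤
      Module.finrank F ↥(TT F θ n * W₁) + Module.finrank F W₁ := by
    intro n
    rw [TT_succ_mul]
    have h3 := Submodule.finrank_sup_add_finrank_inf_eq (TT F θ n * W₁)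
      (W₁.map (LinearMap.mulLeft F (θ ^ (n + 1))))
    rw [finrank_map_inj (mulLeft_inj (pow_ne_zero _ hθ0))] at h3
    have h4 : Module.finrank F W₀ ≤ Module.finrank F
        ↥(TT F θ n * W₁ ⊓ W₁.map (LinearMap.mulLeft F (θ ^ (n + 1)))) := by
      rw [← finrank_map_inj (mulLeft_inj (F := F)
        (mul_ne_zero (pow_ne_zero (n + 1) hθ0) hb)) W₀]
      refine Submodule.finrank_mono ?_
      rintro _ ⟨v, hv, rfl⟩
      refine ⟨?_, b * v, h1 v hv, by simp [mul_assoc]⟩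
      have : (LinearMap.mulLeft F (θ ^ (n + 1) * b)) v = θ ^ n * (θ * b * v) := by
        rw [LinearMap.mulLeft_apply, pow_succ]; ring
      rw [this]
      exact Submodule.mul_mem_mul (pow_mem_TT le_rfl) (h2 v hv)
    omega
  have hall : ∀ n, Module.finrank F ↥(TT F θ n * W₁) + n * Module.finrank F W₀ ≤
      (n + 1) * Module.finrank F W₁ := by
    intro n
    induction n with
    | zero => rw [TT_zero, one_mul]; simp
    | succ n ih => have := hstep n; nlinarith
  by_contra hlt
  have h5 := hall (Module.finrank F W₁)
  have h6 := le_finrank_TT_mul hθ (Module.finrank F W₁) hw hW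
  have h7 : Module.finrank F W₀ ≤ Module.finrank F W₁ := by
    rw [← finrank_map_inj (mulLeft_inj (F := F) hb) W₀]
    exact Submodule.finrank_mono (by rintro _ ⟨v, hv, rfl⟩; exact h1 v hv)
  have h8 := Nat.mul_le_mul_left (Module.finrank F W₁) (not_le.1 hlt)
  nlinarith

/-- Upper bound for the growth of a saturated pencil. -/
lemma pencil_le {b : L} {W₀ W₁ : Submodule F L} [Module.Finite F W₀]
    (hθ : Transcendental F θ) (G : Submodule F⟮θ⟯ L) [Module.Finite F⟮θ⟯ G]
    (hG : ∀ w ∈ W₁, w ∈ G)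
    (hsat : ∀ n, ∀ φ ∈ W₁, θ ^ (n + 1) * φ ∈ TT F θ n * W₁ → ∃ w ∈ W₀, φ = b * w) :
    Module.Finite F W₁ ∧
      Module.finrank F W₁ ≤ Module.finrank F W₀ + Module.finrank F⟮θ⟯ G := by
  have hθ0 : θ ≠ 0 := fun h => by rw [h] at hθ; exact hθ (isAlgebraic_zero)
  set r := Module.finrank F⟮θ⟯ G with hr
  have : Module.Free F⟮θ⟯ G := Module.Free.of_divisionRing F⟮θ⟯ G
  let e := Module.finBasis F⟮θ⟯ G
  let w : Fin r → L := fun i => (e i : L)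
  have hden1 : ∀ φ ∈ G, ∃ q : F[X], q ≠ 0 ∧ ∃ D, aeval θ q * φ ∈
      TT F θ D * Submodule.span F (Set.range w) := by
    intro φ hφ
    have h1 : φ = ∑ i, ((e.repr ⟨φ, hφ⟩ i : F⟮θ⟯) : L) * w i := by
      conv_lhs => rw [show φ = ((⟨φ, hφ⟩ : G) : L) from rfl, ← e.sum_repr ⟨φ, hφ⟩]
      rw [Submodule.coe_sum]
      exact Finset.sum_congr rfl fun i _ => by
        rw [Submodule.coe_smul, Algebra.smul_def]; rfl
    rw [h1]
    generalize e.repr ⟨φ, hφ⟩ = c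
    refine Finset.induction_on (Finset.univ : Finset (Fin r)) ⟨1, one_ne_zero, 0, ?_⟩ ?_
    · simp
    · rintro i s his ⟨q, hq, D, hD⟩
      obtain ⟨p, p', hp⟩ := (mem_adjoin_simple_iff F _).1 (c i).2
      rw [Finset.sum_insert his]
      by_cases hp' : p' = 0
      · refine ⟨q, hq, D, ?_⟩
        rw [hp, hp']; simpa using hD
      refine ⟨q * p', mul_ne_zero hq hp', D + p'.natDegree + (q.natDegree + p.natDegree), ?_⟩
      have hne : aeval θ p' ≠ 0 := fun h => hp' ((transcendental_iff.1 hθ) _ h)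
      rw [mul_add]
      refine Submodule.add_mem _ ?_ ?_
      · have : aeval θ (q * p') * ((c i : L) * w i) = aeval θ (q * p) * w i := by
          rw [hp, map_mul, map_mul]; field_simp
        rw [this]
        refine Submodule.mul_mem_mul (mem_TT.2 ⟨_, ?_, rfl⟩) (Submodule.subset_span ⟨i, rfl⟩)
        exact natDegree_mul_le.trans (by omega)
      · rw [mul_comm q, map_mul, mul_assoc]
        have := Submodule.mul_mem_mul (mem_TT.2 ⟨p', le_rfl, rfl⟩ : aeval θ p' ∈ TT F θ _) hD
        rw [← mul_assoc] at this
        refine (mul_le_mul' ((TT_mul _ _).trans (TT_mono ?_)) le_rfl) this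
        omega
  have hden : ∀ W : Submodule F L, W.FG → (∀ φ ∈ W, φ ∈ G) → ∃ q : F[X], q ≠ 0 ∧ ∃ D, ∀ φ ∈ W,
      aeval θ q * φ ∈ TT F θ D * Submodule.span F (Set.range w) := by
    intro W hW
    induction W, hW using Submodule.fg_induction with
    | singleton φ =>
      intro h
      obtain ⟨q, hq, D, hD⟩ := hden1 φ (h φ (Submodule.mem_span_singleton_self φ))
      refine ⟨q, hq, D, fun a ha => ?_⟩
      obtain ⟨c, rfl⟩ := Submodule.mem_span_singleton.1 ha
      rw [mul_smul_comm]; exact Submodule.smul_mem _ _ hD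
    | sup W W' _ _ h1 h2 =>
      intro h
      obtain ⟨q, hq, D, hD⟩ := h1 fun φ hφ => h φ (Submodule.mem_sup_left hφ)
      obtain ⟨q', hq', D', hD'⟩ := h2 fun φ hφ => h φ (Submodule.mem_sup_right hφ)
      refine ⟨q * q', mul_ne_zero hq hq', (q'.natDegree + D) + (q.natDegree + D'), fun φ hφ => ?_⟩
      obtain ⟨a, ha, a', ha', rfl⟩ := Submodule.mem_sup.1 hφ
      rw [mul_add]
      refine Submodule.add_mem _ ?_ ?_
      · rw [mul_comm q, map_mul, mul_assoc]
        have := Submodule.mul_mem_mul (mem_TT.2 ⟨q', le_rfl, rfl⟩ : aeval θ q' ∈ TT F θ _) (hD a ha)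
        rw [← mul_assoc (TT F θ _)] at this
        exact (mul_le_mul' ((TT_mul _ _).trans (TT_mono (by omega))) le_rfl) this
      · rw [map_mul, mul_assoc]
        have := Submodule.mul_mem_mul (mem_TT.2 ⟨q, le_rfl, rfl⟩ : aeval θ q ∈ TT F θ _)
          (hD' a' ha')
        rw [← mul_assoc (TT F θ _)] at this
        exact (mul_le_mul' ((TT_mul _ _).trans (TT_mono (by omega))) le_rfl) this
  have hfin : ∀ W : Submodule F L, Module.Finite F W → W ≤ W₁ →
      Module.finrank F W ≤ Module.finrank F W₀ + r := by
    intro W _ hWW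
    obtain ⟨q, hq, D, hD⟩ := hden W (Module.Finite.iff_fg.1 inferInstance) fun φ hφ => hG φ (hWW hφ)
    have hq0 : aeval θ q ≠ 0 := fun h => hq ((transcendental_iff.1 hθ) _ h)
    have hstep : ∀ n, Module.finrank F ↥(TT F θ n * W) + Module.finrank F W ≤
        Module.finrank F ↥(TT F θ (n + 1) * W) + Module.finrank F W₀ := by
      intro n
      rw [TT_succ_mul]
      have h3 := Submodule.finrank_sup_add_finrank_inf_eq (TT F θ n * W)
        (W.map (LinearMap.mulLeft F (θ ^ (n + 1))))
      rw [finrank_map_inj (mulLeft_inj (pow_ne_zero _ hθ0))] at h3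
      have h4 : Module.finrank F
          ↥(TT F θ n * W ⊓ W.map (LinearMap.mulLeft F (θ ^ (n + 1)))) ≤ Module.finrank F W₀ := by
        refine le_trans (Submodule.finrank_mono (t := W₀.map (LinearMap.mulLeft F
          (θ ^ (n + 1) * b))) ?_) (Submodule.finrank_map_le _ _)
        rintro _ ⟨h5, φ, hφ, rfl⟩
        obtain ⟨v, hv, rfl⟩ := hsat n φ (hWW hφ) ((mul_le_mul' le_rfl hWW) h5)
        exact ⟨v, hv, by simp [mul_assoc]⟩
      omega
    have hall : ∀ n, n * Module.finrank F W ≤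
        Module.finrank F ↥(TT F θ n * W) + n * Module.finrank F W₀ := by
      intro n
      induction n with
      | zero => simp
      | succ n ih => have := hstep n; nlinarith
    have hup : ∀ n, Module.finrank F ↥(TT F θ n * W) ≤ r * (n + D + 1) := by
      intro n
      refine le_trans ?_ (finrank_TT_mul_span (F := F) (θ := θ) (n + D) w)
      rw [← finrank_map_inj (mulLeft_inj hq0) (TT F θ n * W)]
      have : Module.Finite F (Submodule.span F (Set.range w)) :=
        Module.Finite.span_of_finite F (Set.finite_range w)
      refine Submodule.finrank_mono ?_
      rw [Submodule.map_le_iff_le_comap, Submodule.mul_le]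
      intro a ha φ hφ
      have := Submodule.mul_mem_mul ha (hD φ hφ)
      rw [← mul_assoc (TT F θ _)] at this
      have h6 := (mul_le_mul' (TT_mul n D) le_rfl) this
      rw [Submodule.mem_comap, LinearMap.mulLeft_apply]
      convert h6 using 1
      ring
    by_contra hlt
    have h7 := hall (r * (D + 1) + 1)
    have h8 := hup (r * (D + 1) + 1)
    nlinarith
  have : Module.Finite F W₁ := by
    by_contra hn
    have h9 := Submodule.fg_iff_finiteDimensional W₁ |>.not.2 hn
    obtain ⟨W, hW, hWle, hWr⟩ : ∃ W : Submodule F L, Module.Finite F W ∧ W ≤ W₁ ∧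
        Module.finrank F W = Module.finrank F W₀ + r + 1 := by
      have hinf : ¬ Module.rank F W₁ < Cardinal.aleph0 := fun h =>
        hn (Module.rank_lt_aleph0_iff.1 h)
      obtain ⟨s, hs1, hs2⟩ := (le_rank_iff_exists_linearIndependent_finset
        (n := Module.finrank F W₀ + r + 1)).1 ((Cardinal.natCast_lt_aleph0).le.trans (not_lt.1 hinf))
      refine ⟨(Submodule.span F (s : Set W₁)).map W₁.subtype, ?_, Submodule.map_subtype_le _ _, ?_⟩
      · exact Module.Finite.iff_fg.2 (Submodule.FG.map _ (Submodule.fg_span s.finite_toSet))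
      · rw [finrank_map_inj W₁.subtype_injective, finrank_span_finset_eq_card hs2, hs1]
    have := hfin W hW hWle
    omega
  exact ⟨this, hfin W₁ this le_rfl⟩

end Pencil
end S17
end

/-! ### The Castelnuovo bound -/

section
namespace S17
open Polynomial IntermediateField

section Shift

variable {K L : Type*} [Field K] [Field L] [Algebra K L]

/-- A subspace almost stable under multiplication by `z` contains a translate of a space of polynomials
in `z`. -/
lemma exists_chain {z : L} (hz : z ≠ 0) (κ : ℕ) : ∀ U : Submodule K L, Module.Finite K U →
    Module.finrank K U = κ + 1 →
    κ ≤ Module.finrank K ↥(U ⊓ U.comap (LinearMap.mulLeft K z)) →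
    ∃ g : L, g ≠ 0 ∧ ∀ l ≤ κ, g * z ^ l ∈ U := by
  induction κ with
  | zero =>
    intro U _ h1 _
    obtain ⟨g, hg, h0⟩ := (Submodule.ne_bot_iff U).1 (fun h => by rw [h, finrank_bot] at h1; omega)
    refine ⟨g, h0, fun l hl => ?_⟩
    obtain rfl : l = 0 := by omega
    simpa using hg
  | succ κ ih =>
    intro U hU h1 h2
    set U' := U ⊓ U.comap (LinearMap.mulLeft K z) with hU'
    have hle : U' ≤ U := inf_le_left
    have hfin : Module.Finite K U' := Submodule.finiteDimensional_of_le hle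
    have h3 : Module.finrank K U' ≤ κ + 1 + 1 := h1 ▸ Submodule.finrank_mono hle
    rcases h3.eq_or_lt with h4 | h4
    · have h5 : U' = U := Submodule.eq_of_le_of_finrank_eq hle (by rw [h4, h1])
      obtain ⟨g, hg, h0⟩ := (Submodule.ne_bot_iff U).1
        (fun h => by rw [h, finrank_bot] at h1; omega)
      refine ⟨g, h0, fun l _ => ?_⟩
      induction l with
      | zero => simpa using hg
      | succ l ih' =>
        have h6 := ih' (by omega)
        rw [← h5] at h6
        have h7 : z * (g * z ^ l) ∈ U := h6.2
        rwa [show g * z ^ (l + 1) = z * (g * z ^ l) by ring]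
    · have h4' : Module.finrank K U' = κ + 1 := by omega
      have h5 : κ ≤ Module.finrank K ↥(U' ⊓ U'.comap (LinearMap.mulLeft K z)) := by
        have h6 := Submodule.finrank_sup_add_finrank_inf_eq (U'.map (LinearMap.mulLeft K z)) U'
        rw [finrank_map_inj (mulLeft_inj hz)] at h6
        have h7 : Module.finrank K ↥(U'.map (LinearMap.mulLeft K z) ⊔ U') ≤ κ + 1 + 1 := by
          rw [← h1]
          refine Submodule.finrank_mono (sup_le ?_ hle)
          rintro _ ⟨v, hv, rfl⟩
          exact hv.2
        have h8 : Module.finrank K ↥(U'.map (LinearMap.mulLeft K z) ⊓ U') ≤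
            Module.finrank K ↥(U' ⊓ U'.comap (LinearMap.mulLeft K z)) := by
          rw [← finrank_map_inj (mulLeft_inj (F := K) hz)
            (U' ⊓ U'.comap (LinearMap.mulLeft K z))]
          refine Submodule.finrank_mono ?_
          rintro _ ⟨⟨v, hv, rfl⟩, hv'⟩
          exact ⟨v, ⟨hv, hv'⟩, rfl⟩
        omega
      obtain ⟨g, hg, h6⟩ := ih U' hfin h4' h5
      refine ⟨g, hg, fun l hl => ?_⟩
      rcases Nat.lt_or_ge κ l with h7 | h7
      · obtain rfl : l = κ + 1 := by omega
        have h8 : z * (g * z ^ κ) ∈ U := (h6 κ le_rfl).2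
        rwa [show g * z ^ (κ + 1) = z * (g * z ^ κ) by ring]
      · exact hle (h6 l h7)

end Shift

section CurveModel

variable {k L : Type*} [Field k] [Field L] [Algebra k L]

namespace CM
variable (M : CM k L)

lemma x_tr : Transcendental k M.x :=
  transcendental_iff.2 fun p hp => by
    by_contra h
    exact M.aeval_x_ne h hp

/-- The span of the forms of degree `j` over `k(x)`. -/
noncomputable def U (j : ℕ) : Submodule k⟮M.x⟯ L := Submodule.span k⟮M.x⟯ ((M.V ^ j : Submodule k L) : Set L)

/-- Its dimension: the Hilbert function of the general hyperplane section. -/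
noncomputable def κ (j : ℕ) : ℕ := Module.finrank k⟮M.x⟯ (M.U j)

lemma aeval_mem_K (p : k[X]) : aeval M.x p ∈ k⟮M.x⟯ :=
  (mem_adjoin_simple_iff k _).2 ⟨p, 1, by simp⟩

lemma indepK {p : k⟮M.x⟯[X]} (hp : p.degree < M.σ) (h : aeval M.z p = 0) : p = 0 := by
  have h1 : ∀ i, ∃ a b : k[X], b ≠ 0 ∧ (p.coeff i : L) = aeval M.x a / aeval M.x b := by
    intro i
    obtain ⟨a, b, h⟩ := (mem_adjoin_simple_iff k _).1 (p.coeff i).2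
    by_cases hb : b = 0
    · exact ⟨0, 1, one_ne_zero, by rw [h, hb]; simp⟩
    · exact ⟨a, b, hb, h⟩
  choose a b hb hab using h1
  let q : k[X][X] := ∑ i ∈ Finset.range M.σ,
    C ((∏ j ∈ (Finset.range M.σ).erase i, b j) * a i) * X ^ i
  have hq : q = 0 := by
    refine M.indep q ?_ ?_
    · refine (degree_lt_iff_coeff_zero _ _).2 fun i hi => ?_
      simp only [q, finsetSum_coeff, coeff_C_mul_X_pow]
      rw [Finset.sum_ite_eq, if_neg (by simpa using hi)]
    · change M.T q = 0
      have h2 : M.T q = aeval M.x (∏ j ∈ Finset.range M.σ, b j) * aeval M.z p := by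
        rw [aeval_eq_sum_range' (p := p) (n := M.σ) (by
          rcases eq_or_ne p 0 with rfl | h0
          · have := M.two_le; simp; omega
          · exact (natDegree_lt_iff_degree_lt h0).2 hp)]
        simp only [q, map_sum, Finset.mul_sum]
        refine Finset.sum_congr rfl fun i hi => ?_
        rw [map_mul, map_pow, M.T_C, M.T_X, Algebra.smul_def, ← Finset.mul_prod_erase _ _ hi,
          map_mul, map_mul]
        change _ = _ * ((p.coeff i : L) * _)
        rw [hab i]
        have := M.aeval_x_ne (hb i)
        field_simp
      rw [h2, h, mul_zero]
  ext i : 1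
  rw [coeff_zero]
  rcases Nat.lt_or_ge i M.σ with hi | hi
  · have h3 : q.coeff i = 0 := by rw [hq, coeff_zero]
    simp only [q, finsetSum_coeff, coeff_C_mul_X_pow] at h3
    rw [Finset.sum_ite_eq, if_pos (by simpa using hi)] at h3
    have h4 : a i = 0 := by
      refine (mul_eq_zero.1 h3).resolve_left (Finset.prod_ne_zero_iff.2 fun j _ => hb j)
    have h5 := hab i
    rw [h4, map_zero, zero_div] at h5
    exact_mod_cast h5
  · exact (degree_lt_iff_coeff_zero _ _).1 hp i hi

lemma finrank_TTz {n : ℕ} (hn : n < M.σ) :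
    Module.finrank k⟮M.x⟯ (TT k⟮M.x⟯ M.z n) = n + 1 := by
  rw [TT]
  have hinj : Function.Injective ((aeval (R := k⟮M.x⟯) M.z).toLinearMap.domRestrict
      (degreeLT k⟮M.x⟯ (n + 1))) := by
    rw [injective_iff_map_eq_zero]
    rintro ⟨p, hp⟩ h
    ext1
    refine M.indepK (lt_of_lt_of_le (mem_degreeLT.1 hp) ?_) h
    exact_mod_cast hn
  have h1 := LinearMap.finrank_range_of_inj hinj
  rw [LinearMap.range_domRestrict] at h1
  rw [h1, (degreeLTEquiv _ (n + 1)).finrank_eq]; simp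

lemma U_le (j : ℕ) : M.U j ≤ TT k⟮M.x⟯ M.z (M.σ - 1) := by
  rw [U, Submodule.span_le]
  intro v hv
  obtain ⟨p, -, hp⟩ := M.Q_exists_TD (M.hL_mul hv)
  obtain ⟨i, hi⟩ := mem_TD_natDegree p
  obtain ⟨p', -, h1, h2⟩ := M.exists_red hi
  have hσ := M.two_le
  let c : k⟮M.x⟯ := ⟨M.hL, M.aeval_mem_K _⟩
  have hc : c ≠ 0 := fun h => M.hL_ne (congrArg Subtype.val h)
  have h3 : v = c⁻¹ • M.T p' := by
    rw [h2, hp, show M.hL * v = c • v by rw [Algebra.smul_def]; rfl, smul_smul, inv_mul_cancel₀ hc,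
      one_smul]
  rw [h3]
  refine Submodule.smul_mem _ _ ?_
  rw [p'.as_sum_range_C_mul_X_pow, map_sum]
  refine Submodule.sum_mem _ fun l hl => ?_
  rw [map_mul, map_pow, M.T_C, M.T_X]
  have h4 : l < M.σ := by
    rcases eq_or_ne p' 0 with rfl | h0
    · simp at hl; omega
    · have := (natDegree_lt_iff_degree_lt h0).2 h1
      rw [Finset.mem_range] at hl; omega
  have := Submodule.smul_mem (TT k⟮M.x⟯ M.z (M.σ - 1)) (⟨aeval M.x (p'.coeff l), M.aeval_mem_K _⟩ :
    k⟮M.x⟯) (pow_mem_TT (F := k⟮M.x⟯) (θ := M.z) (n := M.σ - 1) (l := l) (by omega))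
  rwa [Algebra.smul_def] at this

instance (n : ℕ) : Module.Finite k⟮M.x⟯ (TT k⟮M.x⟯ M.z n) := Module.Finite.iff_fg.2 (TT_fg n)

instance (j : ℕ) : Module.Finite k⟮M.x⟯ (M.U j) := Submodule.finiteDimensional_of_le (M.U_le j)

lemma κ_le (j : ℕ) : M.κ j ≤ M.σ := by
  have hσ := M.two_le
  have := Submodule.finrank_mono (M.U_le j)
  rw [M.finrank_TTz (by omega)] at this
  rw [κ]; omega

lemma V_mul_U {v : L} (hv : v ∈ M.V) {j : ℕ} {u : L} (hu : u ∈ M.U j) : v * u ∈ M.U (j + 1) := by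
  induction hu using Submodule.span_induction with
  | mem u h =>
    refine Submodule.subset_span ?_
    rw [pow_succ']
    exact Submodule.mul_mem_mul hv h
  | zero => rw [mul_zero]; exact Submodule.zero_mem _
  | add _ _ _ _ h1 h2 => rw [mul_add]; exact Submodule.add_mem _ h1 h2
  | smul c _ _ h => rw [mul_smul_comm]; exact Submodule.smul_mem _ c h

lemma U_mono (j : ℕ) : M.U j ≤ M.U (j + 1) := fun u hu => by
  simpa using M.V_mul_U M.one_mem hu

lemma one_mem_U (j : ℕ) : (1 : L) ∈ M.U j :=
  Submodule.subset_span (M.V_mono (Nat.zero_le j) (by rw [pow_zero]; exact Submodule.one_le.1 le_rfl))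

lemma κ_pos (j : ℕ) : 0 < M.κ j := by
  have h1 : Submodule.span k⟮M.x⟯ {(1 : L)} ≤ M.U j := by
    rw [Submodule.span_singleton_le_iff_mem]; exact M.one_mem_U j
  have h2 := Submodule.finrank_mono h1
  rwa [finrank_span_singleton one_ne_zero] at h2

lemma z_ne : M.z ≠ 0 := by
  intro h
  have hσ := M.two_le
  have := M.indepK (p := X) (by rw [degree_X]; exact_mod_cast hσ) (by simp [h])
  exact X_ne_zero this

lemma κ_succ_one (j : ℕ) : min M.σ (M.κ j + 1) ≤ M.κ (j + 1) := by
  by_contra hlt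
  have h1 : M.κ (j + 1) < M.σ ∧ M.κ (j + 1) ≤ M.κ j := by omega
  have h2 : M.U j = M.U (j + 1) := Submodule.eq_of_le_of_finrank_le (M.U_mono j) h1.2
  have h3 : ∀ l, M.z ^ l ∈ M.U j := by
    intro l
    induction l with
    | zero => rw [pow_zero]; exact M.one_mem_U j
    | succ l ih => rw [h2, pow_succ']; exact M.V_mul_U M.z_mem ih
  have h4 : TT k⟮M.x⟯ M.z (M.σ - 1) ≤ M.U (j + 1) := by
    rw [← h2]
    intro a ha
    obtain ⟨p, -, rfl⟩ := mem_TT.1 ha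
    rw [aeval_eq_sum_range]
    exact Submodule.sum_mem _ fun l _ => Submodule.smul_mem _ _ (h3 l)
  have h5 := Submodule.finrank_mono h4
  have hσ := M.two_le
  rw [M.finrank_TTz (by omega)] at h5
  rw [κ] at h1; omega

lemma κ_succ_two (h3 : 3 ≤ M.κ 1) (j : ℕ) : min M.σ (M.κ j + 2) ≤ M.κ (j + 1) := by
  by_contra hlt
  have h1 := M.κ_succ_one j
  have h2 : M.κ (j + 1) = M.κ j + 1 ∧ M.κ j + 1 < M.σ := by omega
  have hpos := M.κ_pos j
  obtain ⟨κ, hκ⟩ : ∃ κ, M.κ j = κ + 1 := ⟨M.κ j - 1, by omega⟩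
  have hz := M.z_ne
  have h4 : κ ≤ Module.finrank k⟮M.x⟯
      ↥(M.U j ⊓ (M.U j).comap (LinearMap.mulLeft k⟮M.x⟯ M.z)) := by
    have h6 := Submodule.finrank_sup_add_finrank_inf_eq
      ((M.U j).map (LinearMap.mulLeft k⟮M.x⟯ M.z)) (M.U j)
    rw [finrank_map_inj (mulLeft_inj hz)] at h6
    have h7 : Module.finrank k⟮M.x⟯ ↥((M.U j).map (LinearMap.mulLeft k⟮M.x⟯ M.z) ⊔ M.U j) ≤
        M.κ (j + 1) := by
      refine Submodule.finrank_mono (sup_le ?_ (M.U_mono j))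
      rintro _ ⟨v, hv, rfl⟩
      exact M.V_mul_U M.z_mem hv
    have h8 : Module.finrank k⟮M.x⟯ ↥((M.U j).map (LinearMap.mulLeft k⟮M.x⟯ M.z) ⊓ M.U j) ≤
        Module.finrank k⟮M.x⟯ ↥(M.U j ⊓ (M.U j).comap (LinearMap.mulLeft k⟮M.x⟯ M.z)) := by
      rw [← finrank_map_inj (mulLeft_inj (F := k⟮M.x⟯) hz)
        (M.U j ⊓ (M.U j).comap (LinearMap.mulLeft k⟮M.x⟯ M.z))]
      refine Submodule.finrank_mono ?_
      rintro _ ⟨⟨v, hv, rfl⟩, hv'⟩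
      exact ⟨v, ⟨hv, hv'⟩, rfl⟩
    change _ = M.κ j + M.κ j at h6
    omega
  obtain ⟨g, hg, h5⟩ := exists_chain hz κ (M.U j) inferInstance hκ h4
  -- `U (j + 1)` is the translate by `g` of the polynomials of degree at most `κ + 1`
  have hU : ((TT k⟮M.x⟯ M.z (κ + 1)).map (LinearMap.mulLeft k⟮M.x⟯ g)) = M.U (j + 1) := by
    refine Submodule.eq_of_le_of_finrank_le ?_ ?_
    · rintro _ ⟨a, ha, rfl⟩
      obtain ⟨p, hp, rfl⟩ := mem_TT.1 ha
      rw [LinearMap.mulLeft_apply, aeval_eq_sum_range, Finset.mul_sum]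
      refine Submodule.sum_mem _ fun l hl => ?_
      rw [mul_smul_comm]
      refine Submodule.smul_mem _ _ ?_
      rw [Finset.mem_range] at hl
      rcases l with _ | l
      · exact M.U_mono j (h5 0 (Nat.zero_le _))
      · rw [pow_succ, ← mul_assoc, mul_comm]
        exact M.V_mul_U M.z_mem (h5 l (by omega))
    · rw [finrank_map_inj (mulLeft_inj hg), M.finrank_TTz (by omega)]
      change M.κ (j + 1) ≤ _
      omega
  have hV : M.U 1 ≤ TT k⟮M.x⟯ M.z 1 := by
    rw [U, Submodule.span_le]
    intro v hv
    rw [pow_one] at hv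
    have h6 : ∀ l ≤ κ, v * M.z ^ l ∈ TT k⟮M.x⟯ M.z (κ + 1) := by
      intro l hl
      have h7 := M.V_mul_U hv (h5 l hl)
      rw [← hU] at h7
      obtain ⟨a, ha, h8⟩ := h7
      rw [LinearMap.mulLeft_apply, mul_left_comm] at h8
      rwa [← mul_left_cancel₀ hg h8]
    have h60 := h6 0 (Nat.zero_le _)
    rw [pow_zero, mul_one] at h60
    obtain ⟨p, hp, hpv⟩ := mem_TT.1 h60
    refine mem_TT.2 ⟨p, ?_, hpv⟩
    by_contra hp1
    obtain ⟨q, hq, hqv⟩ := mem_TT.1 (h6 (κ + 2 - p.natDegree) (by omega))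
    have hp0 : p ≠ 0 := by rintro rfl; simp at hp1
    have hdeg : (p * X ^ (κ + 2 - p.natDegree)).natDegree = κ + 2 := by
      rw [natDegree_mul_X_pow _ hp0]; omega
    have h9 : p * X ^ (κ + 2 - p.natDegree) - q = 0 := by
      refine M.indepK ?_ ?_
      · refine lt_of_le_of_lt (degree_le_natDegree.trans (Nat.cast_le.2
          ((natDegree_sub_le _ _).trans (max_le hdeg.le (hq.trans (Nat.le_succ _))))))
          (Nat.cast_lt.2 (by omega))
      · rw [map_sub, map_mul, map_pow, aeval_X, hpv, hqv, sub_self]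
    rw [sub_eq_zero] at h9
    rw [h9] at hdeg; omega
  have h10 := Submodule.finrank_mono hV
  have hσ := M.two_le
  rw [M.finrank_TTz (by omega)] at h10
  rw [CM.κ] at h3; omega

lemma finrank_V_succ (N : ℕ) :
    Module.finrank k ↥(M.V ^ N) + M.κ (N + 1) ≤ Module.finrank k ↥(M.V ^ (N + 1)) := by
  have : Module.Finite k⟮M.x⟯ (Submodule.span k⟮M.x⟯ ((M.V ^ (N + 1) : Submodule k L) : Set L)) :=
    inferInstanceAs (Module.Finite k⟮M.x⟯ (M.U (N + 1)))
  obtain ⟨w, h1, -, h2⟩ := Submodule.exists_fun_fin_finrank_span_eq k⟮M.x⟯ ((M.V ^ (N + 1) : Submodule k L) : Set L)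
  refine pencil_ge M.x_tr (b := 1) one_ne_zero (fun w hw => ?_) (fun w hw => ?_) h2 h1
  · rw [pow_succ']; exact Submodule.mul_mem_mul M.one_mem hw
  · rw [pow_succ', mul_one]; exact Submodule.mul_mem_mul M.x_mem hw

lemma finrank_V_le : Module.finrank k M.V ≤ 1 + M.κ 1 := by
  have h0 := M.finrank_G_zero
  suffices h : Module.finrank k M.V ≤ Module.finrank k (M.G 0) + M.κ 1 by omega
  refine (pencil_le (b := 1) M.x_tr (W₀ := M.G 0) (W₁ := M.V) (M.U 1) (fun w hw => ?_) ?_).2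
  · exact Submodule.subset_span (by simpa using hw)
  · intro n φ hφ h
    have hφ1 : φ ∈ M.V ^ 1 := by simpa using hφ
    refine ⟨φ, (M.mem_G_iff (M.V_le_O 1 hφ1)).2 ⟨n + 1, ?_⟩, (one_mul _).symm⟩
    rw [zero_add]
    refine (Submodule.mul_le.2 fun a ha v hv => ?_ : TT k M.x n * M.V ≤ M.V ^ (n + 1)) h
    rw [pow_succ]
    obtain ⟨p, hp, rfl⟩ := mem_TT.1 ha
    exact Submodule.mul_mem_mul (M.Q_le_V n (M.aeval_mem_Q hp)) hv

lemma finrank_G_le (N : ℕ) : Module.finrank k (M.G N) ≤ M.σ * N + 1 := by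
  induction N with
  | zero => rw [M.finrank_G_zero]; simp
  | succ N ih => have := M.finrank_G_succ N; nlinarith

lemma finrank_V_zero : Module.finrank k ↥(M.V ^ 0) = 1 := by
  rw [pow_zero, Submodule.one_eq_span]; exact finrank_span_singleton one_ne_zero

lemma finrank_V_ge (N : ℕ) :
    1 + ∑ j ∈ Finset.range N, M.κ (j + 1) ≤ Module.finrank k ↥(M.V ^ N) := by
  induction N with
  | zero => rw [M.finrank_V_zero]; simp
  | succ N ih => have := M.finrank_V_succ N; rw [Finset.sum_range_succ]; omega

lemma defect_le (N : ℕ) :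
    Module.finrank k (M.G N) ≤ Module.finrank k ↥(M.V ^ N) +
      ∑ j ∈ Finset.range N, (M.σ - M.κ (j + 1)) := by
  have h1 := M.finrank_G_le N
  have h2 := M.finrank_V_ge N
  have h3 : ∑ j ∈ Finset.range N, M.κ (j + 1) + ∑ j ∈ Finset.range N, (M.σ - M.κ (j + 1)) =
      M.σ * N := by
    rw [← Finset.sum_add_distrib, Finset.sum_congr rfl (fun j _ =>
      Nat.add_sub_cancel' (M.κ_le (j + 1)))]
    simp [mul_comm]
  omega

lemma le_κ (j : ℕ) : min M.σ (j + 1) ≤ M.κ j := by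
  induction j with
  | zero =>
    have hpos := M.κ_pos 0
    omega
  | succ j ih => have := M.κ_succ_one j; omega

/-- The Hilbert function agrees with its polynomial from degree `2σ - 3` on. -/
lemma exists_hilb : ∃ c : ℤ, c ≤ 1 ∧ ∀ N, 2 * M.σ - 3 ≤ N →
    (Module.finrank k ↥(M.V ^ N) : ℤ) = M.σ * N + c := by
  have hσ := M.two_le
  refine ⟨Module.finrank k ↥(M.V ^ (2 * M.σ - 3)) - M.σ * (2 * M.σ - 3 : ℕ), ?_, ?_⟩
  · have := M.finrank_G_le (2 * M.σ - 3)
    rw [M.G_eq_V le_rfl] at this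
    have : (Module.finrank k ↥(M.V ^ (2 * M.σ - 3)) : ℤ) ≤ M.σ * (2 * M.σ - 3 : ℕ) + 1 := by
      exact_mod_cast this
    linarith
  · intro N hN
    induction N, hN using Nat.le_induction with
    | base => ring
    | succ N hN ih =>
      have h1 := M.finrank_V_succ N
      have h2 := M.finrank_G_succ N
      rw [M.G_eq_V hN, M.G_eq_V (by omega)] at h2
      have h3 := M.le_κ (N + 1)
      have h4 : Module.finrank k ↥(M.V ^ (N + 1)) = Module.finrank k ↥(M.V ^ N) + M.σ := by omega
      rw [h4]; push_cast; rw [ih]; ring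

/-- Castelnuovo's bound for the failure of completeness, with no assumption on the
embedding dimension. -/
lemma defect_one (N : ℕ) : 2 * ∑ j ∈ Finset.range N, (M.σ - M.κ (j + 1)) ≤
    (M.σ - 1) * (M.σ - 2) := by
  have hσ := M.two_le
  have key : 2 * ∑ j ∈ Finset.range N, (M.σ - M.κ (j + 1)) + (M.σ - 1 - N) * (M.σ - 2 - N) ≤
      (M.σ - 1) * (M.σ - 2) := by
    induction N with
    | zero => simp
    | succ N ih =>
      rw [Finset.sum_range_succ]
      have h1 := M.le_κ (N + 1)
      rcases Nat.lt_or_ge (M.σ - 2) (N + 1) with h2 | h2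
      · have e1 : M.σ - 2 - (N + 1) = 0 := by omega
        have e2 : M.σ - κ M (N + 1) = 0 := by omega
        rw [e1, e2]; nlinarith
      · obtain ⟨w, hw⟩ := Nat.exists_eq_add_of_le h2
        have e1 : M.σ - 2 - N = w + 1 := by omega
        have e2 : M.σ - 1 - N = w + 2 := by omega
        have e3 : M.σ - 2 - (N + 1) = w := by omega
        have e4 : M.σ - 1 - (N + 1) = w + 1 := by omega
        have e5 : M.σ - κ M (N + 1) ≤ w + 1 := by omega
        rw [e1, e2] at ih
        rw [e3, e4]
        nlinarith
  omega

/-- Castelnuovo's bound for the failure of completeness, in higher dimensional spaces. -/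
lemma defect_two {e : ℕ} (he : 2 ≤ e) (hV : e + 2 ≤ Module.finrank k M.V) (N : ℕ) :
    4 * ∑ j ∈ Finset.range N, (M.σ - M.κ (j + 1)) ≤ (M.σ - e) ^ 2 := by
  have hσ := M.two_le
  have h1 := M.finrank_V_le
  have hκ : ∀ j, min M.σ (e + 1 + 2 * j) ≤ M.κ (j + 1) := by
    intro j
    induction j with
    | zero =>
      rw [mul_zero, zero_add]
      omega
    | succ j ih => have := M.κ_succ_two (by omega) (j + 1); omega
  have key : 4 * ∑ j ∈ Finset.range N, (M.σ - M.κ (j + 1)) + (M.σ - e - 2 * N) ^ 2 ≤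
      (M.σ - e) ^ 2 := by
    induction N with
    | zero => simp
    | succ N ih =>
      rw [Finset.sum_range_succ]
      have h2 := hκ N
      rcases Nat.lt_or_ge (M.σ - e - 2 * N) 2 with h3 | h3
      · have e1 : M.σ - e - 2 * (N + 1) = 0 := by omega
        have e2 : M.σ - κ M (N + 1) = 0 := by omega
        rw [e1, e2]; nlinarith
      · obtain ⟨w, hw⟩ := Nat.exists_eq_add_of_le h3
        have e1 : M.σ - e - 2 * (N + 1) = w := by omega
        have e2 : M.σ - κ M (N + 1) ≤ w + 1 := by omega
        rw [hw] at ih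
        rw [e1]; nlinarith
  omega

lemma le_σ {e : ℕ} (hV : e + 2 ≤ Module.finrank k M.V) : e + 1 ≤ M.σ := by
  have h1 := M.finrank_V_le
  have := M.κ_le 1
  omega

end CM
end CurveModel
end S17
end

/-! ### Surfaces with a finite projection to the plane -/

section
namespace S17
open Polynomial IntermediateField

section SurfaceModel

/-- The algebraic data of a projective surface with a finite projection to the plane:
`V` is the space of linear forms, divided by one of them, `1, y₀, y₁` are the coordinates of
a finite projection to `ℙ²`, `z` is a further linear form generating the function field, with
its integral equation `rel`, and `H` is a common denominator in general position. -/
structure SM (L : Type*) [Field L] [Algebra ℂ L] where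
  V : Submodule ℂ L
  y₀ : L
  y₁ : L
  z : L
  σ : ℕ
  D : ℕ
  H : MvPolynomial (Fin 3) ℂ
  fg : V.FG
  one_mem : 1 ∈ V
  y₀_mem : y₀ ∈ V
  y₁_mem : y₁ ∈ V
  z_mem : z ∈ V
  two_le : 2 ≤ σ
  indep : LinearIndependent ℂ (fun p : (ℕ × ℕ) × Fin σ => y₀ ^ p.1.1 * y₁ ^ p.1.2 * z ^ (p.2 : ℕ))
  rel : ∃ c : ℕ → L, (∀ j, c j ∈ (Submodule.span ℂ {1, y₀, y₁}) ^ (σ - j)) ∧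
    z ^ σ = ∑ j ∈ Finset.range σ, c j * z ^ j
  gen : V ^ σ ≤ Submodule.span ℂ {1, y₀, y₁} * V ^ (σ - 1)
  H_hom : H.IsHomogeneous D
  H_a : MvPolynomial.eval ![0, 0, 1] H ≠ 0
  H_b : MvPolynomial.eval ![0, 1, 0] H ≠ 0
  h_mul : ∀ i, ∀ v ∈ V ^ i, MvPolynomial.aeval ![y₀, y₁, 1] H * v ∈
    (Submodule.span ℂ {1, y₀, y₁, z}) ^ (i + D)

namespace SM
variable {L : Type*} [Field L] [Algebra ℂ L] (S : SM L)

/-- The coordinates of the projection to the plane. -/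
noncomputable def P : Submodule ℂ L := Submodule.span ℂ {1, S.y₀, S.y₁}

/-- The coordinates of the birational projection to space. -/
noncomputable def B : Submodule ℂ L := Submodule.span ℂ {1, S.y₀, S.y₁, S.z}

/-- The denominator. -/
noncomputable def hL : L := MvPolynomial.aeval ![S.y₀, S.y₁, 1] S.H

/-- The monomial basis of `ℂ[y₀, y₁, z]`. -/
noncomputable def e (p : (ℕ × ℕ) × Fin S.σ) : L := S.y₀ ^ p.1.1 * S.y₁ ^ p.1.2 * S.z ^ (p.2 : ℕ)

/-- Exponents of degree at most `i`. -/
def Sx (i : ℕ) : Set ((ℕ × ℕ) × Fin S.σ) := {p | p.1.1 + p.1.2 + p.2 ≤ i}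

/-- Combinations of basis monomials of degree at most `i`. -/
noncomputable def E (i : ℕ) : Submodule ℂ L := Submodule.span ℂ (S.e '' S.Sx i)

lemma P_le : S.P ≤ S.B := Submodule.span_mono (by
  intro a; simp only [Set.mem_insert_iff, Set.mem_singleton_iff]; tauto)

lemma B_le : S.B ≤ S.V := by
  rw [B, Submodule.span_le]
  rintro _ (rfl | rfl | rfl | rfl)
  exacts [S.one_mem, S.y₀_mem, S.y₁_mem, S.z_mem]

lemma V_mono {i j : ℕ} (h : i ≤ j) : S.V ^ i ≤ S.V ^ j := by
  obtain ⟨n, rfl⟩ := Nat.exists_eq_add_of_le h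
  rw [pow_add]
  conv_lhs => rw [← mul_one (S.V ^ i)]
  exact mul_le_mul' le_rfl (Submodule.one_le.2 (by
    simpa using Submodule.pow_mem_pow S.V S.one_mem n))

instance (i : ℕ) : Module.Finite ℂ ↥(S.V ^ i) := Module.Finite.iff_fg.2 (Submodule.FG.pow S.fg i)

lemma E_mono {i j : ℕ} (h : i ≤ j) : S.E i ≤ S.E j :=
  Submodule.span_mono (Set.image_mono fun _ hp => le_trans hp h)

lemma e_mem_E {i a b l : ℕ} (hl : l < S.σ) (h : a + b + l ≤ i) :
    S.y₀ ^ a * S.y₁ ^ b * S.z ^ l ∈ S.E i :=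
  Submodule.subset_span ⟨((a, b), ⟨l, hl⟩), h, rfl⟩

lemma E_le {i : ℕ} {N : Submodule ℂ L}
    (h : ∀ a b l, l < S.σ → a + b + l ≤ i → S.y₀ ^ a * S.y₁ ^ b * S.z ^ l ∈ N) : S.E i ≤ N := by
  rw [E, Submodule.span_le]
  rintro _ ⟨⟨⟨a, b⟩, l⟩, hp, rfl⟩
  exact h a b l l.2 hp

lemma P_mul_E (i : ℕ) : S.P * S.E i ≤ S.E (i + 1) := by
  rw [P, E, Submodule.span_mul_span, Submodule.span_le]
  rintro _ ⟨y, hy, _, ⟨⟨⟨a, b⟩, l⟩, hp, rfl⟩, rfl⟩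
  have hp' : a + b + l ≤ i := hp
  change y * (S.y₀ ^ a * S.y₁ ^ b * S.z ^ (l : ℕ)) ∈ _
  rcases hy with rfl | rfl | rfl
  · rw [one_mul]; exact S.e_mem_E l.2 (by omega)
  · rw [show S.y₀ * (S.y₀ ^ a * S.y₁ ^ b * S.z ^ (l : ℕ)) =
      S.y₀ ^ (a + 1) * S.y₁ ^ b * S.z ^ (l : ℕ) by ring]
    exact S.e_mem_E l.2 (by omega)
  · rw [show S.y₁ * (S.y₀ ^ a * S.y₁ ^ b * S.z ^ (l : ℕ)) =
      S.y₀ ^ a * S.y₁ ^ (b + 1) * S.z ^ (l : ℕ) by ring]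
    exact S.e_mem_E l.2 (by omega)

lemma P_pow_mul_E (q i : ℕ) : S.P ^ q * S.E i ≤ S.E (q + i) := by
  induction q with
  | zero => simp
  | succ q ih =>
    rw [pow_succ', mul_assoc, add_right_comm]
    exact (mul_le_mul' le_rfl ih).trans (S.P_mul_E _)

lemma B_mul_E (i : ℕ) : S.B * S.E i ≤ S.E (i + 1) := by
  rw [B, show ({1, S.y₀, S.y₁, S.z} : Set L) = {1, S.y₀, S.y₁} ∪ {S.z} by ext; simp; tauto,
    Submodule.span_union, Submodule.sup_mul]
  refine sup_le (S.P_mul_E i) ?_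
  rw [E, Submodule.span_mul_span, Submodule.span_le]
  rintro _ ⟨y, hy, _, ⟨⟨⟨a, b⟩, l⟩, hp, rfl⟩, rfl⟩
  have hp' : a + b + l ≤ i := hp
  change y * (S.y₀ ^ a * S.y₁ ^ b * S.z ^ (l : ℕ)) ∈ _
  obtain rfl : y = S.z := hy
  have hl := l.2
  rcases Nat.lt_or_ge (l + 1) S.σ with h1 | h1
  · rw [show S.z * (S.y₀ ^ a * S.y₁ ^ b * S.z ^ (l : ℕ)) =
      S.y₀ ^ a * S.y₁ ^ b * S.z ^ ((l : ℕ) + 1) by ring]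
    exact S.e_mem_E h1 (by omega)
  · have h2 : (l : ℕ) + 1 = S.σ := by omega
    obtain ⟨c, hc, hz⟩ := S.rel
    rw [show S.z * (S.y₀ ^ a * S.y₁ ^ b * S.z ^ (l : ℕ)) =
      S.y₀ ^ a * S.y₁ ^ b * S.z ^ ((l : ℕ) + 1) by ring, h2, hz, Finset.mul_sum]
    refine Submodule.sum_mem _ fun j hj => ?_
    rw [Finset.mem_range] at hj
    rw [show S.y₀ ^ a * S.y₁ ^ b * (c j * S.z ^ j) = c j * (S.y₀ ^ a * S.y₁ ^ b * S.z ^ j) by ring]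
    refine S.E_mono ?_ (S.P_pow_mul_E _ _ (Submodule.mul_mem_mul (hc j)
      (S.e_mem_E hj (le_refl (a + b + j)))))
    omega

lemma B_le_E (i : ℕ) : S.B ^ i ≤ S.E i := by
  induction i with
  | zero =>
    rw [pow_zero, Submodule.one_le]
    have := S.e_mem_E (i := 0) (a := 0) (b := 0) (l := 0) (by have := S.two_le; omega) le_rfl
    simpa using this
  | succ i ih =>
    rw [pow_succ']
    exact (mul_le_mul' le_rfl ih).trans (S.B_mul_E i)

lemma one_mem_B : (1 : L) ∈ S.B := Submodule.subset_span (by simp)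
lemma y₀_mem_B : S.y₀ ∈ S.B := Submodule.subset_span (by simp)
lemma y₁_mem_B : S.y₁ ∈ S.B := Submodule.subset_span (by simp)
lemma z_mem_B : S.z ∈ S.B := Submodule.subset_span (by simp)

lemma B_mono {i j : ℕ} (h : i ≤ j) : S.B ^ i ≤ S.B ^ j := by
  obtain ⟨n, rfl⟩ := Nat.exists_eq_add_of_le h
  rw [pow_add]
  conv_lhs => rw [← mul_one (S.B ^ i)]
  exact mul_le_mul' le_rfl (Submodule.one_le.2 (by
    simpa using Submodule.pow_mem_pow S.B S.one_mem_B n))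

lemma E_le_B (i : ℕ) : S.E i ≤ S.B ^ i := by
  refine S.E_le fun a b l _ h => S.B_mono h ?_
  rw [pow_add, pow_add]
  exact Submodule.mul_mem_mul (Submodule.mul_mem_mul (Submodule.pow_mem_pow _ S.y₀_mem_B _)
    (Submodule.pow_mem_pow _ S.y₁_mem_B _)) (Submodule.pow_mem_pow _ S.z_mem_B _)

lemma y₀_ne : S.y₀ ≠ 0 := by
  have := S.indep.ne_zero ((1, 0), ⟨0, by have := S.two_le; omega⟩)
  simpa using this

lemma y₁_ne : S.y₁ ≠ 0 := by
  have := S.indep.ne_zero ((0, 1), ⟨0, by have := S.two_le; omega⟩)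
  simpa using this

/-- Divisibility in `ℂ[y₀, y₁, z]`, which is free over `ℂ[y₀, y₁]`: `y₀ ^ n, y₁ ^ n` is a regular
sequence. -/
lemma mem_E_of_mul {w : L} {n i : ℕ} (h1 : S.y₁ ^ n * w ∈ S.E (i + n))
    (h0 : S.y₀ ^ n * w ∈ S.E (i + n)) : w ∈ S.E i := by
  let lc := Finsupp.linearCombination ℂ S.e
  have hinj : Function.Injective lc := S.indep
  let s0 : (ℕ × ℕ) × Fin S.σ → (ℕ × ℕ) × Fin S.σ := fun p => ((p.1.1 + n, p.1.2), p.2)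
  let s1 : (ℕ × ℕ) × Fin S.σ → (ℕ × ℕ) × Fin S.σ := fun p => ((p.1.1, p.1.2 + n), p.2)
  have hs1 : Function.Injective s1 := by
    rintro ⟨⟨a, b⟩, l⟩ ⟨⟨a', b'⟩, l'⟩ h
    simp only [s1, Prod.mk.injEq] at h ⊢
    omega
  have hs0 : Function.Injective s0 := by
    rintro ⟨⟨a, b⟩, l⟩ ⟨⟨a', b'⟩, l'⟩ h
    simp only [s0, Prod.mk.injEq] at h ⊢
    omega
  have hm0 : ∀ β, lc (Finsupp.mapDomain s0 β) = S.y₀ ^ n * lc β := by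
    intro β
    rw [Finsupp.linearCombination_mapDomain]
    simp only [lc, Finsupp.linearCombination_apply, Finsupp.sum, Finset.mul_sum]
    refine Finset.sum_congr rfl fun p _ => ?_
    rw [mul_smul_comm]
    congr 1
    simp only [Function.comp, e, s0]; ring
  have hm1 : ∀ β, lc (Finsupp.mapDomain s1 β) = S.y₁ ^ n * lc β := by
    intro β
    rw [Finsupp.linearCombination_mapDomain]
    simp only [lc, Finsupp.linearCombination_apply, Finsupp.sum, Finset.mul_sum]
    refine Finset.sum_congr rfl fun p _ => ?_
    rw [mul_smul_comm]
    congr 1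
    simp only [Function.comp, e, s1]; ring
  rw [E, Finsupp.mem_span_image_iff_linearCombination] at h1 h0
  obtain ⟨β, hβ, hβ'⟩ := h1
  obtain ⟨β', -, hβ''⟩ := h0
  have h2 : Finsupp.mapDomain s0 β = Finsupp.mapDomain s1 β' := by
    apply hinj
    rw [hm0, hm1, show lc β = _ from hβ', show lc β' = _ from hβ'']; ring
  have h3 : ∀ p ∈ β.support, n ≤ p.1.2 := by
    intro p hp
    have h4 : s0 p ∈ (Finsupp.mapDomain s0 β).support := by
      rw [Finsupp.mem_support_iff, Finsupp.mapDomain_apply hs0]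
      exact Finsupp.mem_support_iff.1 hp
    rw [h2] at h4
    obtain ⟨q, -, hq⟩ := Finset.mem_image.1 (Finsupp.mapDomain_support h4)
    have := congrArg (fun r => r.1.2) hq
    simp only [s0, s1] at this
    omega
  let γ := Finsupp.comapDomain s1 β hs1.injOn
  have h5 : Finsupp.mapDomain s1 γ = β := by
    refine Finsupp.mapDomain_comapDomain s1 hs1 β ?_
    intro p hp
    exact ⟨((p.1.1, p.1.2 - n), p.2), by simp only [s1]; rw [Nat.sub_add_cancel (h3 p hp)]⟩
  have h6 : S.y₁ ^ n * lc γ = S.y₁ ^ n * w := by rw [← hm1, h5]; exact hβ'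
  have h7 := mul_left_cancel₀ (pow_ne_zero n S.y₁_ne) h6
  rw [E, Finsupp.mem_span_image_iff_linearCombination]
  refine ⟨γ, ?_, h7⟩
  rw [Finsupp.mem_supported] at hβ ⊢
  intro p hp
  have h8 : s1 p ∈ β.support := by
    have := Finsupp.mem_support_iff.1 (Finset.mem_coe.1 hp)
    rw [Finsupp.comapDomain_apply] at this
    exact Finsupp.mem_support_iff.2 this
  have h9 := hβ h8
  simp only [Sx, s1, Set.mem_setOf_eq] at h9 ⊢
  omega

/-- Sections of the `N`-th twist of the structure sheaf over the complement of the finitely many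
points `y₀ = y₁ = 0`. -/
noncomputable def A (N : ℕ) : Submodule ℂ L where
  carrier := {φ | ∃ n, S.y₁ ^ n * φ ∈ S.V ^ (N + n) ∧ S.y₀ ^ n * φ ∈ S.V ^ (N + n)}
  zero_mem' := ⟨0, by simp⟩
  add_mem' := by
    rintro a b ⟨n, h1, h0⟩ ⟨m, h1', h0'⟩
    refine ⟨n + m, ?_, ?_⟩
    · rw [mul_add]
      refine Submodule.add_mem _ ?_ ?_
      · rw [show S.y₁ ^ (n + m) * a = S.y₁ ^ n * a * S.y₁ ^ m by ring, ← add_assoc, pow_add]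
        exact Submodule.mul_mem_mul h1 (Submodule.pow_mem_pow _ S.y₁_mem m)
      · rw [show S.y₁ ^ (n + m) * b = S.y₁ ^ m * b * S.y₁ ^ n by ring,
          show N + (n + m) = N + m + n by ring, pow_add]
        exact Submodule.mul_mem_mul h1' (Submodule.pow_mem_pow _ S.y₁_mem n)
    · rw [mul_add]
      refine Submodule.add_mem _ ?_ ?_
      · rw [show S.y₀ ^ (n + m) * a = S.y₀ ^ n * a * S.y₀ ^ m by ring, ← add_assoc, pow_add]
        exact Submodule.mul_mem_mul h0 (Submodule.pow_mem_pow _ S.y₀_mem m)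
      · rw [show S.y₀ ^ (n + m) * b = S.y₀ ^ m * b * S.y₀ ^ n by ring,
          show N + (n + m) = N + m + n by ring, pow_add]
        exact Submodule.mul_mem_mul h0' (Submodule.pow_mem_pow _ S.y₀_mem n)
  smul_mem' := by
    rintro c a ⟨n, h1, h0⟩
    refine ⟨n, ?_, ?_⟩
    · rw [mul_smul_comm]; exact Submodule.smul_mem _ _ h1
    · rw [mul_smul_comm]; exact Submodule.smul_mem _ _ h0

lemma mem_A {N : ℕ} {φ : L} :
    φ ∈ S.A N ↔ ∃ n, S.y₁ ^ n * φ ∈ S.V ^ (N + n) ∧ S.y₀ ^ n * φ ∈ S.V ^ (N + n) := Iff.rfl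

lemma V_le_A (N : ℕ) : S.V ^ N ≤ S.A N := fun v hv => ⟨0, by simpa using hv, by simpa using hv⟩

lemma V_mul_A {i N : ℕ} {v φ : L} (hv : v ∈ S.V ^ i) (hφ : φ ∈ S.A N) : v * φ ∈ S.A (N + i) := by
  obtain ⟨n, h1, h0⟩ := hφ
  refine ⟨n, ?_, ?_⟩
  · rw [mul_left_comm, show N + i + n = i + (N + n) by ring, pow_add]
    exact Submodule.mul_mem_mul hv h1
  · rw [mul_left_comm, show N + i + n = i + (N + n) by ring, pow_add]
    exact Submodule.mul_mem_mul hv h0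

/-- If `y₁ ^ a φ` and `y₀ ^ a φ` are sections, so is `φ`. -/
lemma mem_A_of {N a : ℕ} {φ : L} (h1 : S.y₁ ^ a * φ ∈ S.A (N + a))
    (h0 : S.y₀ ^ a * φ ∈ S.A (N + a)) : φ ∈ S.A N := by
  obtain ⟨n, h1, -⟩ := h1
  obtain ⟨m, -, h0⟩ := h0
  refine ⟨a + n + m, ?_, ?_⟩
  · rw [show S.y₁ ^ (a + n + m) * φ = S.y₁ ^ n * (S.y₁ ^ a * φ) * S.y₁ ^ m by ring,
      show N + (a + n + m) = N + a + n + m by ring, pow_add]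
    exact Submodule.mul_mem_mul h1 (Submodule.pow_mem_pow _ S.y₁_mem m)
  · rw [show S.y₀ ^ (a + n + m) * φ = S.y₀ ^ m * (S.y₀ ^ a * φ) * S.y₀ ^ n by ring,
      show N + (a + n + m) = N + a + m + n by ring, pow_add]
    exact Submodule.mul_mem_mul h0 (Submodule.pow_mem_pow _ S.y₀_mem n)

lemma h_mul_A {N : ℕ} {φ : L} (hφ : φ ∈ S.A N) : S.hL * φ ∈ S.B ^ (N + S.D) := by
  obtain ⟨n, h1, h0⟩ := hφ
  refine S.E_le_B _ (S.mem_E_of_mul (n := n) (S.B_le_E _ ?_) (S.B_le_E _ ?_))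
  · rw [mul_left_comm, show N + S.D + n = N + n + S.D by ring]
    exact S.h_mul _ _ h1
  · rw [mul_left_comm, show N + S.D + n = N + n + S.D by ring]
    exact S.h_mul _ _ h0

/-- The coordinate ring of the affine part. -/
noncomputable def O : Subalgebra ℂ L := Algebra.adjoin ℂ (S.V : Set L)

lemma V_le_O (i : ℕ) : S.V ^ i ≤ Subalgebra.toSubmodule S.O := by
  induction i with
  | zero => rw [pow_zero]; exact Submodule.one_le.2 S.O.one_mem
  | succ i ih =>
    rw [pow_succ, Submodule.mul_le]
    exact fun a ha b hb => S.O.mul_mem (ih ha) (Algebra.subset_adjoin hb)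

lemma exists_mem_V {g : L} (hg : g ∈ S.O) : ∃ i, g ∈ S.V ^ i := by
  induction hg using Algebra.adjoin_induction with
  | mem x hx => exact ⟨1, by simpa using hx⟩
  | algebraMap r => exact ⟨0, by rw [pow_zero]; exact Submodule.algebraMap_mem r⟩
  | add a b _ _ ha hb =>
    obtain ⟨i, hi⟩ := ha
    obtain ⟨j, hj⟩ := hb
    exact ⟨i + j, Submodule.add_mem _ (S.V_mono (by omega) hi) (S.V_mono (by omega) hj)⟩
  | mul a b _ _ ha hb =>
    obtain ⟨i, hi⟩ := ha
    obtain ⟨j, hj⟩ := hb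
    exact ⟨i + j, by rw [pow_add]; exact Submodule.mul_mem_mul hi hj⟩

/-- Sections extend over the points `y₀ = y₁ = 0`, since the denominator does not vanish there. -/
lemma A_le_O {N : ℕ} {φ : L} (hφ : φ ∈ S.A N) : φ ∈ S.O := by
  have hh := S.h_mul_A hφ
  obtain ⟨n, h1, h0⟩ := hφ
  let J : Ideal S.O :=
    { carrier := {a | (a : L) * φ ∈ S.O}
      zero_mem' := by simp
      add_mem' := fun {a b} ha hb => by
        simp only [Set.mem_setOf_eq] at ha hb ⊢
        rw [Subalgebra.coe_add, add_mul]; exact S.O.add_mem ha hb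
      smul_mem' := fun c a ha => by
        simp only [Set.mem_setOf_eq] at ha ⊢
        rw [smul_eq_mul, Subalgebra.coe_mul, mul_assoc]; exact S.O.mul_mem c.2 ha }
  let Y : Fin 3 → S.O := ![⟨S.y₀, Algebra.subset_adjoin S.y₀_mem⟩,
    ⟨S.y₁, Algebra.subset_adjoin S.y₁_mem⟩, 1]
  have hY0 : Y 0 ∈ J.radical := ⟨n, S.V_le_O _ h0⟩
  have hY1 : Y 1 ∈ J.radical := ⟨n, S.V_le_O _ h1⟩
  have hval : ((MvPolynomial.aeval Y S.H : S.O) : L) = S.hL := by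
    rw [hL, ← Subalgebra.coe_val, MvPolynomial.comp_aeval_apply]
    congr 1
    congr 1
    ext i
    fin_cases i <;> rfl
  have hH : MvPolynomial.aeval Y S.H ∈ J.radical := by
    refine Ideal.le_radical ?_
    change ((MvPolynomial.aeval Y S.H : S.O) : L) * φ ∈ S.O
    rw [hval]
    exact S.V_le_O _ (pow_le_pow_left' S.B_le _ hh)
  have h2 : algebraMap ℂ S.O (MvPolynomial.eval ![0, 0, 1] S.H) ∈ J.radical := by
    have h3 : Ideal.Quotient.mk J.radical (MvPolynomial.aeval Y S.H) =
        Ideal.Quotient.mk J.radical (algebraMap ℂ S.O (MvPolynomial.eval ![0, 0, 1] S.H)) := by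
      have e1 : ∀ a, Ideal.Quotient.mk J.radical a = Ideal.Quotient.mkₐ ℂ J.radical a := fun _ => rfl
      rw [e1, e1, MvPolynomial.comp_aeval_apply, AlgHom.commutes, MvPolynomial.aeval_def,
        MvPolynomial.eval₂_eq, MvPolynomial.eval_eq, map_sum]
      refine Finset.sum_congr rfl fun m _ => ?_
      rw [map_mul, map_prod]
      congr 1
      refine Finset.prod_congr rfl fun i _ => ?_
      rw [map_pow]
      congr 1
      fin_cases i
      · simpa using Ideal.Quotient.eq_zero_iff_mem.2 hY0
      · simpa using Ideal.Quotient.eq_zero_iff_mem.2 hY1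
      · simp [Y]
    rw [← Ideal.Quotient.eq_zero_iff_mem, ← h3, Ideal.Quotient.eq_zero_iff_mem]
    exact hH
  have h4 : (1 : S.O) ∈ J.radical := by
    have := J.radical.mul_mem_left (algebraMap ℂ S.O (MvPolynomial.eval ![0, 0, 1] S.H)⁻¹) h2
    rwa [← map_mul, inv_mul_cancel₀ S.H_a, map_one] at this
  obtain ⟨m, hm⟩ := h4
  rw [one_pow] at hm
  have h5 : ((1 : S.O) : L) * φ ∈ S.O := hm
  simpa using h5

lemma V_le_P_mul (n : ℕ) : S.V ^ (S.σ - 1 + n) ≤ S.P ^ n * S.V ^ (S.σ - 1) := by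
  induction n with
  | zero => simp
  | succ n ih =>
    rw [← add_assoc, pow_succ]
    refine (mul_le_mul' ih le_rfl).trans ?_
    have hσ := S.two_le
    rw [mul_assoc, ← pow_succ, show S.σ - 1 + 1 = S.σ by omega, pow_succ, mul_assoc]
    exact mul_le_mul' le_rfl S.gen

lemma P_pow_le (q : ℕ) : S.P ^ q ≤
    Submodule.span ℂ {w | ∃ a b, a + b ≤ q ∧ w = S.y₀ ^ a * S.y₁ ^ b} := by
  induction q with
  | zero =>
    rw [pow_zero, Submodule.one_le]
    exact Submodule.subset_span ⟨0, 0, le_rfl, by simp⟩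
  | succ q ih =>
    rw [pow_succ']
    refine (mul_le_mul' le_rfl ih).trans ?_
    rw [P, Submodule.span_mul_span, Submodule.span_le]
    rintro _ ⟨y, hy, _, ⟨a, b, hab, rfl⟩, rfl⟩
    refine Submodule.subset_span ?_
    rcases hy with rfl | rfl | rfl
    · exact ⟨a, b, by omega, by simp⟩
    · exact ⟨a + 1, b, by omega, by simp only; ring⟩
    · exact ⟨a, b + 1, by omega, by simp only; ring⟩

/-- A section is multiplied into the homogeneous coordinate ring by all forms of large degree. -/
lemma exists_V_mul {N : ℕ} {φ : L} (hφ : φ ∈ S.A N) :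
    ∃ M, ∀ v ∈ S.V ^ M, v * φ ∈ S.V ^ (N + M) := by
  obtain ⟨j, hj⟩ := S.exists_mem_V (S.A_le_O hφ)
  obtain ⟨n, h1, h0⟩ := hφ
  have hP : ∀ p ∈ S.P ^ (2 * n + j), p * φ ∈ S.V ^ (N + (2 * n + j)) := by
    intro p hp
    have h2 := S.P_pow_le _ hp
    clear hp
    induction h2 using Submodule.span_induction with
    | mem _ h =>
      obtain ⟨a, b, hab, rfl⟩ := h
      have hm : ∀ a b, S.y₀ ^ a * S.y₁ ^ b ∈ S.V ^ (a + b) := fun a b => by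
        rw [pow_add]
        exact Submodule.mul_mem_mul (Submodule.pow_mem_pow _ S.y₀_mem _)
          (Submodule.pow_mem_pow _ S.y₁_mem _)
      rcases Nat.lt_or_ge a n with ha | ha
      · rcases Nat.lt_or_ge b n with hb | hb
        · refine S.V_mono (i := (a + b) + j) (by omega) ?_
          rw [pow_add]
          exact Submodule.mul_mem_mul (hm a b) hj
        · obtain ⟨b, rfl⟩ := Nat.exists_eq_add_of_le hb
          rw [show S.y₀ ^ a * S.y₁ ^ (n + b) * φ = (S.y₀ ^ a * S.y₁ ^ b) * (S.y₁ ^ n * φ) by ring]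
          refine S.V_mono (i := (a + b) + (N + n)) (by omega) ?_
          rw [pow_add]
          exact Submodule.mul_mem_mul (hm a b) h1
      · obtain ⟨a, rfl⟩ := Nat.exists_eq_add_of_le ha
        rw [show S.y₀ ^ (n + a) * S.y₁ ^ b * φ = (S.y₀ ^ a * S.y₁ ^ b) * (S.y₀ ^ n * φ) by ring]
        refine S.V_mono (i := (a + b) + (N + n)) (by omega) ?_
        rw [pow_add]
        exact Submodule.mul_mem_mul (hm a b) h0
    | zero => rw [zero_mul]; exact Submodule.zero_mem _
    | add _ _ _ _ h1 h2 => rw [add_mul]; exact Submodule.add_mem _ h1 h2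
    | smul c _ _ h => rw [smul_mul_assoc]; exact Submodule.smul_mem _ _ h
  refine ⟨S.σ - 1 + (2 * n + j), fun v hv => ?_⟩
  have h3 := S.V_le_P_mul _ hv
  have h4 : S.P ^ (2 * n + j) * S.V ^ (S.σ - 1) ≤
      (S.V ^ (N + (S.σ - 1 + (2 * n + j)))).comap (LinearMap.mulRight ℂ φ) := by
    rw [Submodule.mul_le]
    intro p hp w hw
    rw [Submodule.mem_comap, LinearMap.mulRight_apply, mul_right_comm,
      show N + (S.σ - 1 + (2 * n + j)) = N + (2 * n + j) + (S.σ - 1) by ring, pow_add]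
    exact Submodule.mul_mem_mul (hP p hp) hw
  exact h4 h3

lemma A_zero : S.A 0 = 1 := by
  refine le_antisymm (fun φ hφ => ?_) ?_
  · obtain ⟨M, hM⟩ := S.exists_V_mul hφ
    rw [zero_add] at hM
    have hIntg : IsIntegral ℂ φ := by
      refine isIntegral_of_smul_mem_submodule (A := L) (M := L) (S.V ^ M) ?_
        (Submodule.FG.pow S.fg M) φ (fun v hv => ?_)
      · intro h
        have h1 : (1 : L) ∈ S.V ^ M := by simpa using Submodule.pow_mem_pow S.V S.one_mem M
        rw [h] at h1
        exact one_ne_zero ((Submodule.mem_bot ℂ).1 h1)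
      · rw [smul_eq_mul, mul_comm]; exact hM v hv
    obtain ⟨c, hc⟩ := minpoly.mem_range_of_degree_eq_one ℂ φ
      (IsAlgClosed.degree_eq_one_of_irreducible ℂ (minpoly.irreducible hIntg))
    exact Submodule.mem_one.2 ⟨c, hc⟩
  · have := S.V_le_A 0
    rwa [pow_zero] at this

end SM
end SurfaceModel
end S17
end

/-! ### The generic member of a pencil -/

section
namespace S17
open Polynomial IntermediateField

section Adjoin
variable {F L ι : Type*} [Field F] [Field L] [Algebra F L] {θ : L} {w : ι → L}

/-- Linear independence of the `θ ^ n * w i` in terms of polynomials in `θ`. -/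
lemma poly_indep (h : LinearIndependent F (fun p : ℕ × ι => θ ^ p.1 * w p.2)) (s : Finset ι)
    (c : ι → F[X]) (hc : ∑ i ∈ s, aeval θ (c i) * w i = 0) : ∀ i ∈ s, c i = 0 := by
  classical
  set N := (s.sup fun i => (c i).natDegree) + 1 with hN
  have hlt : ∀ i ∈ s, (c i).natDegree < N := fun i hi =>
    Nat.lt_succ_of_le (Finset.le_sup (f := fun i => (c i).natDegree) hi)
  rw [linearIndependent_iff'] at h
  have h1 := h (Finset.range N ×ˢ s) (fun p => (c p.2).coeff p.1) (by
    rw [← hc, Finset.sum_product_right]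
    refine Finset.sum_congr rfl fun i hi => ?_
    rw [aeval_eq_sum_range' (hlt i hi), Finset.sum_mul]
    exact Finset.sum_congr rfl fun n _ => by rw [smul_mul_assoc])
  intro i hi
  ext n
  rcases Nat.lt_or_ge n N with hn | hn
  · simpa using h1 (n, i) (Finset.mk_mem_product (Finset.mem_range.2 hn) hi)
  · rw [coeff_zero]; exact coeff_eq_zero_of_natDegree_lt (lt_of_lt_of_le (hlt i hi) hn)

lemma li_adjoin (h : LinearIndependent F (fun p : ℕ × ι => θ ^ p.1 * w p.2)) :
    LinearIndependent F⟮θ⟯ w := by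
  classical
  rw [linearIndependent_iff']
  intro s g hg
  have h1 : ∀ i, ∃ a b : F[X], aeval θ b ≠ 0 ∧ (g i : L) = aeval θ a / aeval θ b := by
    intro i
    obtain ⟨a, b, h⟩ := (mem_adjoin_simple_iff F _).1 (g i).2
    by_cases hb : aeval θ b = 0
    · exact ⟨0, 1, by simp, by rw [h, hb]; simp⟩
    · exact ⟨a, b, hb, h⟩
  choose a b hb hab using h1
  have h2 := poly_indep h s (fun i => (∏ j ∈ s.erase i, b j) * a i) (by
    have : ∑ i ∈ s, aeval θ ((∏ j ∈ s.erase i, b j) * a i) * w i =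
        aeval θ (∏ j ∈ s, b j) * ∑ i ∈ s, g i • w i := by
      rw [Finset.mul_sum]
      refine Finset.sum_congr rfl fun i hi => ?_
      rw [← Finset.mul_prod_erase _ _ hi, map_mul, map_mul]
      change _ = _ * ((g i : L) * w i)
      rw [hab i]
      have := hb i
      field_simp
    rw [this, hg, mul_zero])
  intro i hi
  have h3 := congrArg (aeval θ) (h2 i hi)
  rw [map_mul, map_zero, map_prod] at h3
  have h4 := (mul_eq_zero.1 h3).resolve_left (Finset.prod_ne_zero_iff.2 fun j _ => hb j)
  have h5 := hab i
  rw [h4, zero_div] at h5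
  exact_mod_cast h5

variable {K : Type*} [Field K] [Algebra F K] [Algebra K L] [IsScalarTower F K L]

lemma spanK_mul (A B : Submodule F L) : Submodule.span K ((A * B : Submodule F L) : Set L) =
    Submodule.span K (A : Set L) * Submodule.span K (B : Set L) := by
  apply le_antisymm
  · rw [Submodule.span_le]
    have : A * B ≤ (Submodule.span K (A : Set L) * Submodule.span K (B : Set L)).restrictScalars F := by
      rw [Submodule.mul_le]
      intro a ha b hb
      have h1 : a ∈ Submodule.span K (A : Set L) := Submodule.subset_span ha
      have h2 : b ∈ Submodule.span K (B : Set L) := Submodule.subset_span hb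
      exact (Submodule.restrictScalars_mem F _ _).2 (Submodule.mul_mem_mul h1 h2)
    exact fun x hx => (Submodule.restrictScalars_mem F _ _).1 (this hx)
  · rw [Submodule.span_mul_span, Submodule.span_le]
    rintro _ ⟨a, ha, b, hb, rfl⟩
    exact Submodule.subset_span (Submodule.mul_mem_mul ha hb)

lemma spanK_pow (A : Submodule F L) (i : ℕ) : Submodule.span K ((A ^ i : Submodule F L) : Set L) =
    Submodule.span K (A : Set L) ^ i := by
  induction i with
  | zero =>
    rw [pow_zero, pow_zero]
    apply le_antisymm
    · rw [Submodule.span_le]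
      intro a ha
      obtain ⟨c, rfl⟩ := Submodule.mem_one.1 ha
      exact Submodule.mem_one.2 ⟨algebraMap F K c, by rw [← IsScalarTower.algebraMap_apply]⟩
    · rw [Submodule.one_le]
      exact Submodule.subset_span (Submodule.one_le.1 le_rfl)
  | succ i ih => rw [pow_succ, pow_succ, spanK_mul, ih]

lemma spanK_mono {A B : Submodule F L} (h : A ≤ B) :
    Submodule.span K (A : Set L) ≤ Submodule.span K (B : Set L) := Submodule.span_mono h

end Adjoin

section SurfaceModel
namespace SM
variable {L : Type*} [Field L] [Algebra ℂ L] (S : SM L)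

/-- The parameter of the pencil. -/
noncomputable def t : L := S.y₀ / S.y₁

lemma t_mul : S.t * S.y₁ = S.y₀ := div_mul_cancel₀ _ S.y₁_ne

lemma li_t : LinearIndependent ℂ
    (fun p : ℕ × (ℕ × Fin S.σ) => S.t ^ p.1 * (S.y₁ ^ p.2.1 * S.z ^ (p.2.2 : ℕ))) := by
  classical
  rw [linearIndependent_iff']
  intro s g hg
  set N := s.sup fun p => p.1 with hN
  have hle : ∀ p ∈ s, p.1 ≤ N := fun p hp => Finset.le_sup (f := fun p => p.1) hp
  let f : s → (ℕ × ℕ) × Fin S.σ := fun p => ((p.1.1, N - p.1.1 + p.1.2.1), p.1.2.2)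
  have hf : Function.Injective f := by
    rintro ⟨⟨b, m, l⟩, hp⟩ ⟨⟨b', m', l'⟩, hp'⟩ h
    simp only [f, Prod.mk.injEq, Subtype.mk.injEq] at h ⊢
    have := hle _ hp
    have := hle _ hp'
    refine ⟨h.1.1, ?_, h.2⟩
    have := h.1.2
    rw [h.1.1] at this
    omega
  have h1 := Fintype.linearIndependent_iff.1 (S.indep.comp f hf) (fun p => g p) (by
    have : ∑ p : s, g p • ((fun p : (ℕ × ℕ) × Fin S.σ => S.y₀ ^ p.1.1 * S.y₁ ^ p.1.2 *
        S.z ^ (p.2 : ℕ)) ∘ f) p = S.y₁ ^ N * ∑ p ∈ s, g p • (S.t ^ p.1 *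
          (S.y₁ ^ p.2.1 * S.z ^ (p.2.2 : ℕ))) := by
      rw [Finset.mul_sum, ← Finset.sum_coe_sort s]
      refine Finset.sum_congr rfl fun p _ => ?_
      rw [mul_smul_comm]
      congr 1
      simp only [f, Function.comp]
      have h2 : S.y₁ ^ N = S.y₁ ^ p.1.1 * S.y₁ ^ (N - p.1.1) := by
        rw [← pow_add, Nat.add_sub_cancel' (hle _ p.2)]
      rw [h2, ← S.t_mul]
      ring
    rw [this, hg, mul_zero])
  exact fun p hp => h1 ⟨p, hp⟩

lemma t_tr : Transcendental ℂ S.t := transcendental_iff.2 fun p hp => by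
  have := poly_indep (w := fun p : ℕ × Fin S.σ => S.y₁ ^ p.1 * S.z ^ (p.2 : ℕ)) S.li_t {(0, ⟨0, by have := S.two_le; omega⟩)} (fun _ => p) (by simp [hp])
  simpa using this

lemma li_k : LinearIndependent ℂ⟮S.t⟯ (fun p : ℕ × Fin S.σ => S.y₁ ^ p.1 * S.z ^ (p.2 : ℕ)) :=
  li_adjoin (w := fun p : ℕ × Fin S.σ => S.y₁ ^ p.1 * S.z ^ (p.2 : ℕ)) S.li_t

/-- The function field of the base of the pencil. -/
noncomputable abbrev K : IntermediateField ℂ L := ℂ⟮S.t⟯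

/-- The generator of `K`. -/
noncomputable def tK : S.K := AdjoinSimple.gen ℂ S.t

lemma coe_tK : (S.tK : L) = S.t := AdjoinSimple.coe_gen ℂ S.t

lemma spanK_P : Submodule.span S.K (S.P : Set L) = Submodule.span S.K {1, S.y₁} := by
  apply le_antisymm
  · rw [Submodule.span_le]
    have : S.P ≤ (Submodule.span S.K {1, S.y₁}).restrictScalars ℂ := by
      rw [P, Submodule.span_le]
      rintro _ (rfl | rfl | rfl)
      · exact Submodule.subset_span (by simp)
      · change S.y₀ ∈ Submodule.span S.K {1, S.y₁}
        have : S.y₀ = S.tK • S.y₁ := by rw [Algebra.smul_def]; exact S.t_mul.symm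
        rw [this]
        exact Submodule.smul_mem _ _ (Submodule.subset_span (by simp))
      · exact Submodule.subset_span (by simp)
    exact this
  · rw [Submodule.span_le]
    rintro _ (rfl | rfl)
    · exact Submodule.subset_span (Submodule.subset_span (by simp))
    · exact Submodule.subset_span (Submodule.subset_span (by simp))

lemma spanK_B : Submodule.span S.K (S.B : Set L) = Submodule.span S.K {1, S.y₁, S.z} := by
  have h1 : S.B = S.P ⊔ Submodule.span ℂ {S.z} := by
    rw [B, P, ← Submodule.span_union]; congr 1; ext; simp; tauto
  have h2 : (Submodule.span S.K (S.B : Set L)) =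
      Submodule.span S.K (S.P : Set L) ⊔ Submodule.span S.K {S.z} := by
    rw [h1]
    apply le_antisymm
    · rw [Submodule.span_le]
      have : S.P ⊔ Submodule.span ℂ {S.z} ≤ (Submodule.span S.K (S.P : Set L) ⊔
          Submodule.span S.K {S.z}).restrictScalars ℂ := by
        refine sup_le (fun a ha => Submodule.mem_sup_left (Submodule.subset_span ha)) ?_
        rw [Submodule.span_le]
        rintro _ rfl
        exact Submodule.mem_sup_right (Submodule.subset_span rfl)
      exact this
    · refine sup_le (Submodule.span_mono (fun a ha => Submodule.mem_sup_left ha)) ?_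
      exact Submodule.span_mono fun a ha =>
        Submodule.mem_sup_right (Submodule.subset_span ha)
  rw [h2, spanK_P, ← Submodule.span_union]
  congr 1; ext; simp; tauto

lemma exists_poly_of_mem_P {i : ℕ} {c : L} (hc : c ∈ S.P ^ i) : ∃ p : S.K[X], p.natDegree ≤ i ∧
    aeval S.y₁ p = c ∧ ∃ a : ℂ, p.coeff 0 = algebraMap ℂ S.K a := by
  have h := S.P_pow_le _ hc
  clear hc
  induction h using Submodule.span_induction with
  | mem _ h =>
    obtain ⟨a, b, hab, rfl⟩ := h
    refine ⟨C (S.tK ^ a) * X ^ (a + b), (natDegree_C_mul_X_pow_le _ _).trans hab, ?_, ?_⟩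
    · rw [map_mul, map_pow (aeval S.y₁) X, aeval_X, aeval_C, map_pow]
      change (S.tK : L) ^ a * _ = _
      rw [coe_tK, ← S.t_mul]; ring
    · rw [coeff_C_mul_X_pow]
      split_ifs with h
      · have : a = 0 := by omega
        exact ⟨1, by rw [this]; simp⟩
      · exact ⟨0, by simp⟩
  | zero => exact ⟨0, by simp, by simp, 0, by simp⟩
  | add _ _ _ _ h1 h2 =>
    obtain ⟨p, hp, hp', a, ha⟩ := h1
    obtain ⟨q, hq, hq', b, hb⟩ := h2
    exact ⟨p + q, natDegree_add_le_of_le hp hq |>.trans (by simp), by rw [map_add, hp', hq'], a + b,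
      by rw [coeff_add, ha, hb, map_add]⟩
  | smul r _ _ h =>
    obtain ⟨p, hp, hp', a, ha⟩ := h
    refine ⟨C (algebraMap ℂ S.K r) * p, (natDegree_C_mul_le _ _).trans hp, ?_, r * a, ?_⟩
    · rw [map_mul, aeval_C, hp', Algebra.smul_def, ← IsScalarTower.algebraMap_apply]
    · rw [coeff_C_mul, ha, map_mul]

/-- The denominator as a polynomial in `y₁` over `K`. -/
noncomputable def hp : S.K[X] := MvPolynomial.aeval ![C S.tK * X, X, 1] S.H

lemma hp_eq : S.hp = ∑ m ∈ S.H.support,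
    C (algebraMap ℂ S.K (S.H.coeff m) * S.tK ^ (m 0)) * X ^ (m 0 + m 1) := by
  rw [hp, MvPolynomial.aeval_def, MvPolynomial.eval₂_eq']
  refine Finset.sum_congr rfl fun m _ => ?_
  rw [Fin.prod_univ_three]
  simp only [Matrix.cons_val_zero, Matrix.cons_val_one, Matrix.cons_val, one_pow, mul_one, mul_pow]
  rw [map_mul, map_pow, pow_add]
  have : algebraMap ℂ S.K[X] (S.H.coeff m) = C (algebraMap ℂ S.K (S.H.coeff m)) := rfl
  rw [this]; ring

lemma deg_H {m : Fin 3 →₀ ℕ} (hm : m ∈ S.H.support) : m 0 + m 1 + m 2 = S.D := by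
  have := S.H_hom (MvPolynomial.mem_support_iff.1 hm)
  rw [Finsupp.weight_apply, Finsupp.sum_fintype _ _ (by simp), Fin.sum_univ_three] at this
  simpa using this

lemma hp_natDegree_le : S.hp.natDegree ≤ S.D := by
  rw [hp_eq]
  refine natDegree_sum_le_of_forall_le _ _ fun m hm => ?_
  exact (natDegree_C_mul_X_pow_le _ _).trans (by have := S.deg_H hm; omega)

lemma hp_coeff : S.hp.coeff S.D = MvPolynomial.aeval ![S.tK, 1, 0] S.H := by
  rw [hp_eq, MvPolynomial.aeval_def, MvPolynomial.eval₂_eq', finsetSum_coeff]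
  refine Finset.sum_congr rfl fun m hm => ?_
  have h1 := S.deg_H hm
  rw [Fin.prod_univ_three, coeff_C_mul_X_pow]
  simp only [Matrix.cons_val_zero, Matrix.cons_val_one, Matrix.cons_val, one_pow, mul_one]
  by_cases h2 : m 2 = 0
  · rw [if_pos (by omega), h2]; simp
  · rw [if_neg (by omega), zero_pow h2]; simp

lemma hp_coeff_ne : S.hp.coeff S.D ≠ 0 := by
  rw [hp_coeff]
  let q : ℂ[X] := MvPolynomial.aeval ![X, 1, 0] S.H
  have hq : q ≠ 0 := by
    intro h
    have h1 : aeval (0 : ℂ) q = MvPolynomial.eval ![0, 1, 0] S.H := by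
      simp only [q]
      rw [MvPolynomial.comp_aeval_apply, ← MvPolynomial.coe_aeval_eq_eval]
      change _ = MvPolynomial.aeval _ S.H
      congr 2
      ext i
      fin_cases i <;> simp
    rw [h, map_zero] at h1
    exact S.H_b h1.symm
  intro h
  have h2 : aeval S.tK q = 0 := by
    rw [← h]
    simp only [q]
    rw [MvPolynomial.comp_aeval_apply]
    congr 2
    ext i
    fin_cases i <;> simp
  have h3 : aeval S.t q = 0 := by
    have h4 := congrArg (algebraMap S.K L) h2
    rw [← aeval_algebraMap_apply, map_zero] at h4
    have : algebraMap S.K L S.tK = S.t := S.coe_tK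
    rwa [this] at h4
  exact hq (transcendental_iff.1 S.t_tr q h3)

lemma hp_eval : S.hp.eval 0 ≠ 0 := by
  have h1 : S.hp.eval 0 = algebraMap ℂ S.K (MvPolynomial.eval ![0, 0, 1] S.H) := by
    have h2 : ∀ p : S.K[X], p.eval 0 = ((aeval (0 : S.K)).restrictScalars ℂ) p := fun p => by
      simp [aeval_def, eval₂_eq_eval_map]
    rw [h2, hp, MvPolynomial.comp_aeval_apply, ← MvPolynomial.coe_aeval_eq_eval]
    change _ = Algebra.ofId ℂ S.K (MvPolynomial.aeval _ S.H)
    rw [MvPolynomial.comp_aeval_apply]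
    congr 2
    ext i
    fin_cases i <;> simp
  rw [h1]
  simpa using S.H_a

lemma aeval_hp : aeval S.y₁ S.hp = S.hL := by
  have h2 : aeval S.y₁ S.hp = ((aeval (R := S.K) S.y₁).restrictScalars ℂ) S.hp := rfl
  rw [h2, hp, MvPolynomial.comp_aeval_apply, hL]
  congr 2
  ext i
  fin_cases i
  · simp only [AlgHom.restrictScalars_apply]
    change aeval S.y₁ (C S.tK * X) = S.y₀
    rw [map_mul, aeval_C, aeval_X]
    change (S.tK : L) * _ = _
    rw [coe_tK, S.t_mul]
  · simp
  · simp

/-- Coefficients, root and polynomial of the integral equation of `z` over `K[y₁]`. -/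
lemma exists_F : ∃ (F : S.K[X][X]) (z₀ : S.K), F.Monic ∧ F.natDegree = S.σ ∧ F ∈ TD S.K S.σ ∧
    aevalAeval S.y₁ S.z F = 0 ∧ F.evalEval 0 z₀ = 0 := by
  have hσ := S.two_le
  obtain ⟨c, hc, hz⟩ := S.rel
  choose p hp hpc a ha using fun j => S.exists_poly_of_mem_P (hc j)
  set G : S.K[X][X] := ∑ j ∈ Finset.range S.σ, C (p j) * X ^ j with hG
  have hGd : G.degree < S.σ := by
    refine (degree_lt_iff_coeff_zero _ _).2 fun i hi => ?_
    simp only [hG, finsetSum_coeff, coeff_C_mul_X_pow]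
    rw [Finset.sum_ite_eq, if_neg (by simpa using hi)]
  obtain ⟨z₀, hz₀⟩ : ∃ z₀ : ℂ, z₀ ^ S.σ = ∑ j ∈ Finset.range S.σ, a j * z₀ ^ j := by
    set g : ℂ[X] := ∑ j ∈ Finset.range S.σ, C (a j) * X ^ j with hg
    have hgd : g.degree < S.σ := by
      refine (degree_lt_iff_coeff_zero _ _).2 fun i hi => ?_
      simp only [hg, finsetSum_coeff, coeff_C_mul_X_pow]
      rw [Finset.sum_ite_eq, if_neg (by simpa using hi)]
    obtain ⟨w, hw⟩ := IsAlgClosed.exists_root (X ^ S.σ - g) (by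
      rw [degree_sub_eq_left_of_degree_lt (by simpa using hgd), degree_X_pow]
      exact_mod_cast (by omega : S.σ ≠ 0))
    refine ⟨w, ?_⟩
    have : w ^ S.σ - g.eval w = 0 := by simpa [IsRoot] using hw
    rw [sub_eq_zero.1 this, hg, eval_finsetSum]
    simp
  refine ⟨X ^ S.σ - G, algebraMap ℂ S.K z₀, monic_X_pow_sub hGd, ?_, ?_, ?_, ?_⟩
  · refine natDegree_eq_of_degree_eq_some ?_
    rw [degree_sub_eq_left_of_degree_lt (by simpa using hGd), degree_X_pow]
  · refine Submodule.sub_mem _ ?_ (Submodule.sum_mem _ fun j hj => ?_)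
    · intro l a h
      rw [coeff_X_pow]
      split_ifs with h1
      · rw [coeff_one, if_neg (by omega)]
      · simp
    · rw [Finset.mem_range] at hj
      intro l a h
      rw [coeff_C_mul_X_pow]
      split_ifs with h1
      · exact coeff_eq_zero_of_natDegree_lt (lt_of_le_of_lt (hp j) (by omega))
      · simp
  · rw [map_sub (aevalAeval (R := S.K) S.y₁ S.z), map_pow, hG, map_sum]
    have h1 : aevalAeval (R := S.K) S.y₁ S.z X = S.z := by simp [aevalAeval]
    have h2 : ∀ p : S.K[X], aevalAeval (R := S.K) S.y₁ S.z (C p) = aeval S.y₁ p := fun p => by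
      simp [aevalAeval]
    rw [h1, hz, sub_eq_zero]
    refine Finset.sum_congr rfl fun j _ => ?_
    rw [map_mul, map_pow, h1, h2, hpc]
  · rw [evalEval, eval_sub, eval_sub, eval_pow, eval_X, hG, eval_finsetSum, eval_finsetSum,
      eval_pow, eval_C, ← map_pow, hz₀, map_sum, sub_eq_zero]
    refine Finset.sum_congr rfl fun j _ => ?_
    rw [eval_mul, eval_C, eval_pow, eval_X, eval_mul, eval_pow, eval_C, ← coeff_zero_eq_eval_zero,
      ha, map_mul, map_pow]

lemma indep_k (p : S.K[X][X]) (hp : p.degree < S.σ) (h : aevalAeval S.y₁ S.z p = 0) : p = 0 := by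
  set N := (p.support.sup fun l => (p.coeff l).natDegree) + 1 with hN
  have hlt : ∀ l, (p.coeff l).natDegree < N := fun l => by
    by_cases hl : l ∈ p.support
    · exact Nat.lt_succ_of_le (Finset.le_sup (f := fun l => (p.coeff l).natDegree) hl)
    · rw [notMem_support_iff.1 hl]; simp [hN]
  have h2 : aevalAeval (R := S.K) S.y₁ S.z p = ∑ l : Fin S.σ, ∑ m ∈ Finset.range N,
      (p.coeff l).coeff m • (S.y₁ ^ m * S.z ^ (l : ℕ)) := by
    have h1 : aevalAeval (R := S.K) S.y₁ S.z X = S.z := by simp [aevalAeval]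
    have h2 : ∀ p : S.K[X], aevalAeval (R := S.K) S.y₁ S.z (C p) = aeval S.y₁ p := fun p => by
      simp [aevalAeval]
    conv_lhs => rw [p.as_sum_range' S.σ (by
      rcases eq_or_ne p 0 with rfl | h0
      · have := S.two_le; simp; omega
      · exact (natDegree_lt_iff_degree_lt h0).2 hp)]
    rw [map_sum, ← Fin.sum_univ_eq_sum_range (fun l => aevalAeval S.y₁ S.z (monomial l (p.coeff l)))]
    refine Finset.sum_congr rfl fun l _ => ?_
    rw [← C_mul_X_pow_eq_monomial, map_mul, map_pow, h1, h2, aeval_eq_sum_range' (hlt l),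
      Finset.sum_mul]
    exact Finset.sum_congr rfl fun n _ => by rw [smul_mul_assoc]
  rw [h2, Finset.sum_comm, ← Finset.sum_product'] at h
  have h3 := linearIndependent_iff'.1 S.li_k (Finset.range N ×ˢ Finset.univ)
    (fun q => (p.coeff q.2).coeff q.1) h
  ext l m : 2
  rw [coeff_zero, coeff_zero]
  rcases Nat.lt_or_ge l S.σ with hl | hl
  · rcases Nat.lt_or_ge m N with hm | hm
    · exact h3 (m, ⟨l, hl⟩) (Finset.mk_mem_product (Finset.mem_range.2 hm) (Finset.mem_univ _))
    · exact coeff_eq_zero_of_natDegree_lt (lt_of_lt_of_le (hlt l) hm)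
  · rw [(degree_lt_iff_coeff_zero _ _).1 hp l hl, coeff_zero]

/-- The curve over `K = ℂ(y₀ / y₁)` that is the generic member of the pencil. -/
noncomputable def M : CM S.K L where
  V := Submodule.span S.K (S.V : Set L)
  x := S.y₁
  z := S.z
  σ := S.σ
  D := S.D
  F := S.exists_F.choose
  h := S.hp
  z₀ := S.exists_F.choose_spec.choose
  fg := by
    obtain ⟨s, hs⟩ := S.fg
    refine ⟨s, le_antisymm (Submodule.span_mono (by rw [← hs]; exact Submodule.subset_span)) ?_⟩
    rw [Submodule.span_le, ← hs]
    have : Submodule.span ℂ (s : Set L) ≤ (Submodule.span S.K (s : Set L)).restrictScalars ℂ :=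
      Submodule.span_le.2 Submodule.subset_span
    exact this
  one_mem := Submodule.subset_span S.one_mem
  x_mem := Submodule.subset_span S.y₁_mem
  z_mem := Submodule.subset_span S.z_mem
  two_le := S.two_le
  monic := S.exists_F.choose_spec.choose_spec.1
  natDegree_F := S.exists_F.choose_spec.choose_spec.2.1
  F_mem := S.exists_F.choose_spec.choose_spec.2.2.1
  F_eq := S.exists_F.choose_spec.choose_spec.2.2.2.1
  F_root := S.exists_F.choose_spec.choose_spec.2.2.2.2
  indep := S.indep_k
  h_deg := le_antisymm S.hp_natDegree_le (le_natDegree_of_ne_zero S.hp_coeff_ne)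
  h_zero := S.hp_eval
  h_mul := by
    intro i v hv
    rw [aeval_hp, ← spanK_B, ← spanK_pow]
    rw [← spanK_pow] at hv
    have h1 : Submodule.span S.K ((S.V ^ i : Submodule ℂ L) : Set L) ≤
        (Submodule.span S.K ((S.B ^ (i + S.D) : Submodule ℂ L) : Set L)).comap
          (LinearMap.mulLeft S.K S.hL) :=
      Submodule.span_le.2 fun v hv => Submodule.subset_span (S.h_mul i v hv)
    exact h1 hv
  gen := by
    rw [← spanK_P, ← spanK_pow, ← spanK_pow, ← spanK_mul]
    exact spanK_mono S.gen

lemma M_σ : S.M.σ = S.σ := rfl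
lemma M_x : S.M.x = S.y₁ := rfl

lemma M_V_pow (i : ℕ) : S.M.V ^ i = Submodule.span S.K ((S.V ^ i : Submodule ℂ L) : Set L) :=
  (spanK_pow _ _).symm

lemma A_le_G {N : ℕ} {φ : L} (hφ : φ ∈ S.A N) : φ ∈ S.M.G N := by
  rw [CM.mem_G]
  constructor
  · obtain ⟨i, hi⟩ := S.exists_mem_V (S.A_le_O hφ)
    refine S.M.V_le_O i ?_
    rw [M_V_pow]
    exact Submodule.subset_span hi
  · have h1 := S.h_mul_A hφ
    have h2 : S.M.hL = S.hL := S.aeval_hp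
    have h3 : S.M.Q = Submodule.span S.K (S.B : Set L) := S.spanK_B.symm
    rw [h2, h3, ← spanK_pow]
    exact Submodule.subset_span h1

end SM
end SurfaceModel
end S17
end

/-! ### The Hilbert function of a surface model -/

section
namespace S17
open Polynomial IntermediateField

section SurfaceModel
namespace SM
variable {L : Type*} [Field L] [Algebra ℂ L] (S : SM L)

lemma t_pow_mul_A {n N : ℕ} {f φ : L} (hf : f ∈ TT ℂ S.t n) (hφ : φ ∈ S.A N) :
    S.y₁ ^ n * (f * φ) ∈ S.A (N + n) := by
  obtain ⟨p, hp, rfl⟩ := mem_TT.1 hf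
  rw [aeval_eq_sum_range' (Nat.lt_succ_of_le hp), Finset.sum_mul, Finset.mul_sum]
  refine Submodule.sum_mem _ fun l hl => ?_
  obtain ⟨r, rfl⟩ := Nat.exists_eq_add_of_le (Finset.mem_range_succ_iff.1 hl)
  rw [smul_mul_assoc, mul_smul_comm, show S.y₁ ^ (l + r) * (S.t ^ l * φ) =
    (S.t * S.y₁) ^ l * S.y₁ ^ r * φ by ring, S.t_mul]
  refine Submodule.smul_mem _ _ (S.V_mul_A ?_ hφ)
  rw [pow_add]
  exact Submodule.mul_mem_mul (Submodule.pow_mem_pow _ S.y₀_mem _)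
    (Submodule.pow_mem_pow _ S.y₁_mem _)

lemma pencil_sat {N n : ℕ} {φ : L} (hφ : φ ∈ S.A (N + 1))
    (h : S.t ^ (n + 1) * φ ∈ TT ℂ S.t n * S.A (N + 1)) : ∃ w ∈ S.A N, φ = S.y₁ * w := by
  have hy := S.y₁_ne
  refine ⟨φ / S.y₁, S.mem_A_of (a := n + 1) ?_ ?_, by field_simp⟩
  · rw [show S.y₁ ^ (n + 1) * (φ / S.y₁) = S.y₁ ^ n * φ by field_simp; ring,
      show N + (n + 1) = N + 1 + n by ring]
    exact S.V_mul_A (Submodule.pow_mem_pow _ S.y₁_mem _) hφ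
  · have h1 : TT ℂ S.t n * S.A (N + 1) ≤ (S.A (N + 1 + n)).comap
        (LinearMap.mulLeft ℂ (S.y₁ ^ n)) := by
      rw [Submodule.mul_le]
      exact fun f hf φ hφ => S.t_pow_mul_A hf hφ
    have h2 : S.y₁ ^ n * (S.t ^ (n + 1) * φ) ∈ S.A (N + 1 + n) := h1 h
    rw [← S.t_mul, show N + (n + 1) = N + 1 + n by ring]
    convert h2 using 1
    field_simp
    ring

instance finite_A (N : ℕ) : Module.Finite ℂ (S.A N) := by
  induction N with
  | zero => rw [A_zero, ← pow_zero S.V]; infer_instance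
  | succ N ih => exact (pencil_le (b := S.y₁) S.t_tr (W₀ := S.A N) (S.M.G (N + 1))
      (fun w hw => S.A_le_G hw) (fun n φ hφ h => S.pencil_sat hφ h)).1

lemma finrank_A_succ_le (N : ℕ) : Module.finrank ℂ (S.A (N + 1)) ≤ Module.finrank ℂ (S.A N) +
    Module.finrank S.K (S.M.G (N + 1)) :=
  (pencil_le (b := S.y₁) S.t_tr (W₀ := S.A N) (S.M.G (N + 1))
      (fun w hw => S.A_le_G hw) (fun n φ hφ h => S.pencil_sat hφ h)).2

lemma finrank_A_zero : Module.finrank ℂ (S.A 0) = 1 := by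
  rw [A_zero, Submodule.one_eq_span]; exact finrank_span_singleton one_ne_zero

lemma finrank_V_zero : Module.finrank ℂ ↥(S.V ^ 0) = 1 := by
  rw [pow_zero, Submodule.one_eq_span]; exact finrank_span_singleton one_ne_zero

lemma finrank_V_le : Module.finrank ℂ S.V ≤ 1 + Module.finrank S.K S.M.V := by
  have : Module.Finite S.K S.M.V := Module.Finite.iff_fg.2 S.M.fg
  have h1 := (pencil_le (b := S.y₁) S.t_tr (W₀ := S.A 0) (W₁ := S.V) S.M.V
    (fun w hw => Submodule.subset_span hw) (fun n φ hφ h => ?_)).2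
  · rwa [S.finrank_A_zero] at h1
  · have hle : S.V ≤ S.A (0 + 1) := by simpa using S.V_le_A 1
    exact S.pencil_sat (hle hφ) ((mul_le_mul' le_rfl hle) h)

lemma exists_w (N : ℕ) : ∃ w : Fin (Module.finrank S.K ↥(S.M.V ^ N)) → L,
    LinearIndependent S.K w ∧ ∀ i, w i ∈ S.V ^ N := by
  have : Module.Finite S.K (Submodule.span S.K ((S.V ^ N : Submodule ℂ L) : Set L)) := by
    rw [← M_V_pow]; infer_instance
  rw [M_V_pow]
  obtain ⟨w, h1, h2, h3⟩ := Submodule.exists_fun_fin_finrank_span_eq S.K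
    ((S.V ^ N : Submodule ℂ L) : Set L)
  exact ⟨w, h3, h1⟩

lemma finrank_A_succ_ge (N : ℕ) : Module.finrank ℂ (S.A N) +
    Module.finrank S.K ↥(S.M.V ^ (N + 1)) ≤ Module.finrank ℂ (S.A (N + 1)) := by
  obtain ⟨w, hw, hw'⟩ := S.exists_w (N + 1)
  refine pencil_ge S.t_tr S.y₁_ne (fun v hv => ?_) (fun v hv => ?_) hw (fun i => S.V_le_A _ (hw' i))
  · exact S.V_mul_A (by simpa using S.y₁_mem) hv
  · rw [S.t_mul]; exact S.V_mul_A (by simpa using S.y₀_mem) hv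

lemma finrank_V_succ_ge (N : ℕ) : Module.finrank ℂ ↥(S.V ^ N) +
    Module.finrank S.K ↥(S.M.V ^ (N + 1)) ≤ Module.finrank ℂ ↥(S.V ^ (N + 1)) := by
  obtain ⟨w, hw, hw'⟩ := S.exists_w (N + 1)
  refine pencil_ge S.t_tr S.y₁_ne (fun v hv => ?_) (fun v hv => ?_) hw hw'
  · rw [pow_succ']; exact Submodule.mul_mem_mul S.y₁_mem hv
  · rw [S.t_mul, pow_succ']; exact Submodule.mul_mem_mul S.y₀_mem hv

lemma finrank_V_le_A (N : ℕ) : Module.finrank ℂ ↥(S.V ^ N) ≤ Module.finrank ℂ (S.A N) :=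
  Submodule.finrank_mono (S.V_le_A N)

/-- The failure of `V ^ k` to contain all sections. -/
noncomputable def Hk (k : ℕ) : Submodule ℂ (L ⧸ S.V ^ k) := (S.A k).map (S.V ^ k).mkQ

instance (k : ℕ) : Module.Finite ℂ (S.Hk k) := Module.Finite.map _ _

lemma finrank_Hk (k : ℕ) : Module.finrank ℂ (S.Hk k) + Module.finrank ℂ ↥(S.V ^ k) =
    Module.finrank ℂ (S.A k) := by
  let f : S.A k →ₗ[ℂ] L ⧸ S.V ^ k := (S.V ^ k).mkQ.domRestrict (S.A k)
  have h1 := LinearMap.finrank_range_add_finrank_ker f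
  have h2 : LinearMap.range f = S.Hk k := by
    rw [Hk, LinearMap.range_domRestrict]
  have h3 : LinearMap.ker f = (S.V ^ k).comap (S.A k).subtype := by
    ext a; simp [f]
  rw [h2, h3, LinearEquiv.finrank_eq (Submodule.comapSubtypeEquivOfLe (S.V_le_A k))] at h1
  exact h1

/-- Multiplication of linear forms on the `H_k`. -/
noncomputable def βk (k : ℕ) : S.V →ₗ[ℂ] S.Hk k →ₗ[ℂ] S.Hk (k + 1) :=
  have hle : ∀ y ∈ S.V, S.V ^ k ≤ (S.V ^ (k + 1)).comap (LinearMap.mulLeft ℂ y) :=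
    fun y hy v hv => by
      rw [Submodule.mem_comap, pow_succ']; exact Submodule.mul_mem_mul hy hv
  LinearMap.mk₂ ℂ (fun y h => ⟨Submodule.mapQ _ _ _ (hle y y.2) h, by
      obtain ⟨_, a, ha, rfl⟩ := h
      exact ⟨y * a, S.V_mul_A (by simpa using y.2) ha, rfl⟩⟩)
    (by
      rintro y y' ⟨_, a, ha, rfl⟩
      ext1
      change (S.V ^ (k + 1)).mkQ ((y + y') * a) = (S.V ^ (k + 1)).mkQ (y * a) +
        (S.V ^ (k + 1)).mkQ (y' * a)
      rw [add_mul, map_add])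
    (by
      rintro c y ⟨_, a, ha, rfl⟩
      ext1
      change (S.V ^ (k + 1)).mkQ ((c • (y : L)) * a) = c • (S.V ^ (k + 1)).mkQ (y * a)
      rw [smul_mul_assoc, map_smul])
    (by
      rintro y h h'
      ext1
      simp)
    (by
      rintro c y h
      ext1
      simp)

lemma βk_surj {k : ℕ} (y : S.V) (h : S.A (k + 1) ≤ S.V ^ (k + 1) ⊔
    (S.A k).map (LinearMap.mulLeft ℂ (y : L))) : Function.Surjective (S.βk k y) := by
  rintro ⟨_, a, ha, rfl⟩
  obtain ⟨v, hv, _, ⟨b, hb, rfl⟩, rfl⟩ := Submodule.mem_sup.1 (h ha)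
  refine ⟨⟨(S.V ^ k).mkQ b, b, hb, rfl⟩, ?_⟩
  ext1
  change (S.V ^ (k + 1)).mkQ (y * b) = (S.V ^ (k + 1)).mkQ (v + y * b)
  rw [map_add, (Submodule.Quotient.mk_eq_zero _).2 hv |> (fun h => (h : (S.V ^ (k+1)).mkQ v = 0)),
    zero_add]

/-- Sections are generated in degree `k + 1` by `V ^ (k + 1)` and the multiples of a linear form,
as soon as the curve cut out by that form is not special in degree `k + 1`. -/
lemma A_le_of {k : ℕ} {y : L} (hy : y ∈ S.V) (hy0 : y ≠ 0)
    (H : ∀ W ≤ S.V ^ (k + 1), (∀ w ∈ W, ∃ M, ∀ u ∈ S.V ^ M, ∃ q ∈ S.V ^ (k + M), u * w = y * q) →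
      Module.finrank ℂ W + Module.finrank S.K (S.M.G (k + 1)) ≤
        Module.finrank ℂ ↥(S.V ^ (k + 1))) :
    S.A (k + 1) ≤ S.V ^ (k + 1) ⊔ (S.A k).map (LinearMap.mulLeft ℂ y) := by
  have h1 := H (S.V ^ (k + 1) ⊓ (S.A k).map (LinearMap.mulLeft ℂ y)) inf_le_left (by
    rintro _ ⟨-, φ, hφ, rfl⟩
    obtain ⟨M, hM⟩ := S.exists_V_mul hφ
    exact ⟨M, fun u hu => ⟨u * φ, hM u hu, by simp only [LinearMap.mulLeft_apply]; ring⟩⟩)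
  have h2 := Submodule.finrank_sup_add_finrank_inf_eq (S.V ^ (k + 1))
    ((S.A k).map (LinearMap.mulLeft ℂ y))
  have h3 : Module.finrank ℂ ((S.A k).map (LinearMap.mulLeft ℂ y)) = Module.finrank ℂ (S.A k) :=
    finrank_map_inj (mulLeft_inj hy0) _
  have h4 := S.finrank_A_succ_le k
  have h5 : S.V ^ (k + 1) ⊔ (S.A k).map (LinearMap.mulLeft ℂ y) ≤ S.A (k + 1) := by
    refine sup_le (S.V_le_A _) ?_
    rintro _ ⟨φ, hφ, rfl⟩
    exact S.V_mul_A (by simpa using hy) hφ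
  exact (Submodule.eq_of_le_of_finrank_le h5 (by omega)).ge

lemma exists_stable {u : ℕ → ℕ} {B : ℕ} (h : ∀ k ≥ B, u (k + 1) ≤ u k) (N : ℕ) :
    ∃ k ≥ N, B ≤ k ∧ u (k + 1) = u k ∧ u (k + 2) = u (k + 1) := by
  obtain ⟨_, ⟨k, hk, rfl⟩, hmin⟩ := WellFounded.has_min (wellFounded_lt (α := ℕ))
    (u '' {k | N ≤ k ∧ B ≤ k}) ⟨_, max N B, ⟨le_max_left _ _, le_max_right _ _⟩, rfl⟩
  have h1 := h k hk.2
  have h2 := h (k + 1) (by have := hk.2; omega)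
  have h3 := hmin _ ⟨k + 1, ⟨by have := hk.1; omega, by have := hk.2; omega⟩, rfl⟩
  have h4 := hmin _ ⟨k + 2, ⟨by have := hk.1; omega, by have := hk.2; omega⟩, rfl⟩
  simp only [not_lt] at h3 h4
  exact ⟨k, hk.1, hk.2, by omega, by rw [show k + 1 + 1 = k + 2 by ring] at h2; omega⟩

/-- The numerical heart of the estimate: a nonzero defect in degree `m` would be too large in
degree about `s ^ 2 / 2`. -/
lemma num_F {s e m T : ℤ} (he : 1 ≤ e) (hs : e + 1 ≤ s) (hm : s ^ 3 ≤ 2 * e * (m + 1))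
    {E R : ℤ} (hR : 2 * R = s * (s - 1)) (hT : 4 * T ≤ (2 * s - 4) * E)
    (hE : (2 ≤ e ∧ E = (s - e) ^ 2) ∨ (e = 1 ∧ E = 2 * ((s - 1) * (s - 2)))) :
    T < 1 + (e + 2) * (m + 1 - R) := by
  have h1 : s ^ 3 - e * (s * (s - 1)) ≤ 2 * e * (m + 1 - R) := by
    rw [← hR]; linarith
  have h2 : (e + 2) * (s ^ 3 - e * (s * (s - 1))) ≤ (e + 2) * (2 * e * (m + 1 - R)) :=
    mul_le_mul_of_nonneg_left h1 (by linarith)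
  by_contra hlt
  push Not at hlt
  have h3 : e * (4 * (1 + (e + 2) * (m + 1 - R))) ≤ e * ((2 * s - 4) * E) :=
    mul_le_mul_of_nonneg_left (by linarith) (by linarith)
  rcases hE with ⟨he2, rfl⟩ | ⟨rfl, rfl⟩
  · obtain ⟨u, rfl⟩ : ∃ u, s = e + u := ⟨s - e, by ring⟩
    have hu : 1 ≤ u := by linarith
    have h4 : e * ((2 * (e + u) - 4) * (e + u - e) ^ 2) ≤
        2 * ((e + 2) * ((e + u) ^ 3 - e * ((e + u) * (e + u - 1)))) := by
      have h5 : 0 ≤ e * u ^ 2 := by positivity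
      have : 2 * ((e + 2) * ((e + u) ^ 3 - e * ((e + u) * (e + u - 1)))) -
        e * ((2 * (e + u) - 4) * (e + u - e) ^ 2) = 2 * e * u * (e + u) * e + 4 * u * (e + u) ^ 2
          + 2 * (e + 2) * e * (e + u) + 4 * e * u ^ 2 := by ring
      have : 0 ≤ 2 * e * u * (e + u) * e + 4 * u * (e + u) ^ 2
          + 2 * (e + 2) * e * (e + u) + 4 * e * u ^ 2 := by positivity
      linarith
    nlinarith
  · have h4 : 1 * ((2 * s - 4) * (2 * ((s - 1) * (s - 2)))) ≤
        2 * ((1 + 2) * (s ^ 3 - 1 * (s * (s - 1)))) := by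
      obtain ⟨u, rfl⟩ : ∃ u, s = 2 + u := ⟨s - 2, by ring⟩
      have hu : 0 ≤ u := by linarith
      have : 2 * ((1 + 2) * ((2 + u) ^ 3 - 1 * ((2 + u) * (2 + u - 1)))) -
        1 * ((2 * (2 + u) - 4) * (2 * ((2 + u - 1) * (2 + u - 2)))) =
          2 * u ^ 3 + 26 * u ^ 2 + 54 * u + 36 := by ring
      have : 0 ≤ 2 * u ^ 3 + 26 * u ^ 2 + 54 * u + 36 := by positivity
      linarith
    linarith

set_option maxHeartbeats 1000000 in
/-- The Hilbert function of a surface agrees with its Hilbert polynomial in degree `m`, when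
`s ^ 3 ≤ 2 e (m + 1)`. -/
theorem hilb_eq {e s : ℕ} (he : 1 ≤ e) (hV : Module.finrank ℂ S.V = e + 3) {c c₀ : ℤ}
    (hpoly : ∃ N : ℕ, ∀ k : ℕ, k ≥ N → 2 * (Module.finrank ℂ ↥(S.V ^ k) : ℤ) = s * (k * (k + 1)) +
      2 * (c * k + c₀))
    (hyp : c ≤ 1 → ∀ y ∈ S.V, y ≠ 0 → ∀ k, s * (s - 1) ≤ 2 * (k + 1) → ∀ W ≤ S.V ^ (k + 1),
      (∀ w ∈ W, ∃ M, ∀ u ∈ S.V ^ M, ∃ q ∈ S.V ^ (k + M), u * w = y * q) →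
      (Module.finrank ℂ W : ℤ) + (s * ((k + 1 : ℕ) : ℤ) + c) ≤ Module.finrank ℂ ↥(S.V ^ (k + 1)))
    {m : ℕ} (hm : s ^ 3 ≤ 2 * e * (m + 1)) :
    2 * (Module.finrank ℂ ↥(S.V ^ m) : ℤ) = s * (m * (m + 1)) + 2 * (c * m + c₀) := by
  set a : ℕ → ℕ := fun k => Module.finrank ℂ (S.A k) with ha
  set v : ℕ → ℕ := fun k => Module.finrank ℂ ↥(S.V ^ k) with hv
  set g : ℕ → ℕ := fun k => Module.finrank S.K (S.M.G k) with hg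
  set x : ℕ → ℕ := fun k => Module.finrank S.K ↥(S.M.V ^ k) with hx
  set u : ℕ → ℕ := fun k => Module.finrank ℂ (S.Hk k) with hu
  have ha1 : ∀ k, a (k + 1) ≤ a k + g (k + 1) := S.finrank_A_succ_le
  have ha2 : ∀ k, a k + x (k + 1) ≤ a (k + 1) := S.finrank_A_succ_ge
  have hv1 : ∀ k, v k + x (k + 1) ≤ v (k + 1) := S.finrank_V_succ_ge
  have huv : ∀ k, u k + v k = a k := S.finrank_Hk
  have hgx : ∀ k, 2 * S.σ - 3 ≤ k → g k = x k := fun k hk => by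
    simp only [hg, hx]; rw [S.M.G_eq_V hk]
  have hu0 : u 0 = 0 := by
    have h1 : a 0 = 1 := S.finrank_A_zero
    have h2 : v 0 = 1 := S.finrank_V_zero
    have := huv 0
    omega
  obtain ⟨c', hc', hxc⟩ := S.M.exists_hilb
  rw [M_σ] at hxc
  have hMV : e + 2 ≤ Module.finrank S.K S.M.V := by have := S.finrank_V_le; omega
  have hσ := S.M.le_σ hMV
  rw [M_σ] at hσ
  have hσ2 := S.two_le
  -- the defect does not increase from degree `2 σ - 4` on
  have hmono : ∀ k ≥ 2 * S.σ - 4, u (k + 1) ≤ u k := fun k hk => by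
    have h1 := ha1 k
    have h2 := hv1 k
    have h3 := hgx (k + 1) (by omega)
    have h4 := huv k
    have h5 := huv (k + 1)
    omega
  obtain ⟨N, hN⟩ := hpoly
  -- comparison of the two polynomials
  obtain ⟨K, hK, hKσ, hK1, hK2⟩ := exists_stable hmono N
  have hcmp : ∀ k : ℕ, k ≥ N → 2 * S.σ - 4 ≤ k → u (k + 1) = u k →
      (S.σ : ℤ) * (k + 1) + c' = s * (k + 1) + c := fun k hk hkσ hkk => by
    have h1 := ha1 k
    have h1' := ha2 k
    have h3 := hgx (k + 1) (by omega)
    have h4 := huv k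
    have h5 := huv (k + 1)
    have h6 : (x (k + 1) : ℤ) = S.σ * ((k + 1 : ℕ) : ℤ) + c' := hxc (k + 1) (by omega)
    have h7 : 2 * (v k : ℤ) = s * (k * (k + 1)) + 2 * (c * k + c₀) := hN k hk
    have h8 : 2 * (v (k + 1) : ℤ) = s * (((k + 1 : ℕ) : ℤ) * (((k + 1 : ℕ) : ℤ) + 1)) +
      2 * (c * ((k + 1 : ℕ) : ℤ) + c₀) := hN (k + 1) (by omega)
    have h9 : v (k + 1) = v k + x (k + 1) := by omega
    rw [h9] at h8
    push_cast at h6 h8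
    linarith
  have hc1 := hcmp K hK hKσ hK1
  have hc2 := hcmp (K + 1) (by omega) (by omega) hK2
  push_cast at hc2
  have hσs : S.σ = s := by
    have : (S.σ : ℤ) = s := by linarith
    exact_mod_cast this
  have hcc : c' = c := by rw [hσs] at hc1; linarith
  subst hcc
  rw [hσs] at hσ hσ2 hmono hxc hgx
  have hxk : ∀ k ≥ 2 * s - 4, (x (k + 1) : ℤ) = s * ((k : ℤ) + 1) + c' := fun k hk => by
    have : (x (k + 1) : ℤ) = s * ((k + 1 : ℕ) : ℤ) + c' := hxc (k + 1) (by omega)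
    rw [this]; push_cast; ring
  -- the bound from which the linear sections are not special
  obtain ⟨R, hR⟩ : ∃ R, s * (s - 1) = 2 * R :=
    (even_iff_two_dvd.1 (Nat.even_mul_pred_self s))
  have hRs : (s * ((s : ℤ) - 1)) = 2 * R := by
    have := congrArg (Nat.cast (R := ℤ)) hR
    push_cast [Nat.cast_sub (show 1 ≤ s by omega)] at this
    exact this
  have hRσ : 2 * s - 3 ≤ R := by
    have : (2 * (s : ℤ) - 3) ≤ R := by
      rcases Nat.lt_or_ge s 3 with h | h
      · have : s = 2 := by omega
        subst this; push_cast at hRs ⊢; linarith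
      · have : (3 : ℤ) ≤ s := by exact_mod_cast h
        nlinarith
    omega
  have hR1 : 1 ≤ R := by omega
  have hstep : ∀ k, R ≤ k + 1 → u (k + 1) = 0 ∨ u (k + 1) + (e + 2) ≤ u k := fun k hk => by
    rcases Nat.eq_zero_or_pos (u (k + 1)) with h0 | h0
    · exact Or.inl h0
    right
    have : Module.Finite ℂ S.V := Module.Finite.iff_fg.2 S.fg
    have h1 := hopf (S.βk k) (fun y hy => S.βk_surj y (S.A_le_of y.2 (by simpa using hy) (by
      intro W hW hW'
      have h2 := hyp hc' y y.2 (by simpa using hy) k (by omega) W hW hW'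
      have h3 := hxk k (by omega)
      have h4 := hgx (k + 1) (by omega)
      change Module.finrank ℂ W + g (k + 1) ≤ _
      rw [h4]
      push_cast at h2
      have h5 : (Module.finrank ℂ W : ℤ) + x (k + 1) ≤ Module.finrank ℂ ↥(S.V ^ (k + 1)) := by
        rw [h3]; exact h2
      exact_mod_cast h5))) (by rw [hV]; omega) h0
    rw [hV] at h1
    change u (k + 1) + _ ≤ u k + 1 at h1
    omega
  -- the defect vanishes eventually, hence `a` is given by the polynomial
  have hdec : ∀ n, u (R + n) = 0 ∨ u (R + n) + n ≤ u R := fun n => by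
    induction n with
    | zero => right; simp
    | succ n ih =>
      rcases hstep (R + n) (by omega) with h | h
      · exact Or.inl h
      · right
        have h1 : u (R + (n + 1)) = u (R + n + 1) := rfl
        rcases ih with h' | h' <;> omega
  have hzero : ∀ k ≥ R + u R + 1, u k = 0 := fun k hk => by
    obtain ⟨n, rfl⟩ := Nat.exists_eq_add_of_le (show R ≤ k by omega)
    rcases hdec n with h | h
    · exact h
    · omega
  have hapoly : ∀ n k, 2 * s - 4 ≤ k → R + u R + 1 ≤ k + n → N ≤ k + n →
      2 * (a k : ℤ) = s * (k * (k + 1)) + 2 * (c' * k + c₀) := fun n => by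
    induction n with
    | zero =>
      intro k _ h2 h3
      rw [← huv k, hzero k h2, zero_add]
      exact hN k h3
    | succ n ih =>
      intro k h1 h2 h3
      have h4 := ih (k + 1) (by omega) (by omega) (by omega)
      have h5 := ha1 k
      have h6 := ha2 k
      have h7 := hgx (k + 1) (by omega)
      have h8 : a (k + 1) = a k + x (k + 1) := by omega
      have h9 := hxk k h1
      rw [h8] at h4
      push_cast at h4
      linarith
  have hRm : R ≤ m := by
    by_contra hlt
    push Not at hlt
    have h1 : 2 * e * (m + 1) ≤ 2 * e * R := Nat.mul_le_mul_left _ hlt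
    have h2 : 2 * e * R ≤ s * (s * s) := by
      rw [show 2 * e * R = e * (2 * R) by ring, ← hR]
      exact Nat.mul_le_mul (by omega) (Nat.mul_le_mul_left _ (by omega))
    have h3 : e * (s * (s - 1)) < s ^ 3 := by
      rw [show s ^ 3 = s * (s * s) by ring]
      exact Nat.mul_lt_mul_of_lt_of_le (by omega) (Nat.mul_le_mul_left _ (by omega))
        (Nat.mul_pos (by omega) (by omega))
    rw [show 2 * e * R = e * (2 * R) by ring, ← hR] at h1
    omega
  have hum : u m = 0 := by
    by_contra hne
    -- growth of the defect below `m`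
    have hgrow : ∀ n k, k + n = m → R ≤ k + 1 → 1 + (e + 2) * n ≤ u k := fun n => by
      induction n with
      | zero => intro k hk _; rw [show k = m by omega]; omega
      | succ n ih =>
        intro k hk hk'
        have h1 := ih (k + 1) (by omega) (by omega)
        rcases hstep k hk' with h | h
        · omega
        · rw [Nat.mul_succ]; omega
    have h1 := hgrow (m + 1 - R) (R - 1) (by omega) (by omega)
    -- bound of the defect through the linear sections
    obtain ⟨E, hE, hEb⟩ : ∃ E : ℕ, ((2 ≤ (e : ℤ) ∧ (E : ℤ) = (s - e) ^ 2) ∨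
        ((e : ℤ) = 1 ∧ (E : ℤ) = 2 * (((s : ℤ) - 1) * (s - 2)))) ∧
        ∀ k, 4 * g k ≤ 4 * x k + E := by
      rcases Nat.lt_or_ge e 2 with h | h
      · have he1 : e = 1 := by omega
        refine ⟨2 * ((s - 1) * (s - 2)), Or.inr ⟨by exact_mod_cast he1, ?_⟩, fun k => ?_⟩
        · push_cast [Nat.cast_sub (show 1 ≤ s by omega), Nat.cast_sub (show 2 ≤ s by omega)]
          ring
        · have h2 := S.M.defect_one k
          have h3 := S.M.defect_le k
          rw [M_σ, hσs] at h2 h3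
          change g k ≤ x k + _ at h3
          omega
      · refine ⟨(s - e) ^ 2, Or.inl ⟨by exact_mod_cast h, ?_⟩, fun k => ?_⟩
        · push_cast [Nat.cast_sub (show e ≤ s by omega)]
          ring
        · have h2 := S.M.defect_two h hMV k
          have h3 := S.M.defect_le k
          rw [M_σ, hσs] at h2 h3
          change g k ≤ x k + _ at h3
          omega
    have h2 : ∀ k, 4 * u k ≤ min k (2 * s - 4) * E := fun k => by
      induction k with
      | zero => rw [hu0]; simp
      | succ k ih =>
        have h3 := ha1 k
        have h4 := hv1 k
        have h5 := huv k
        have h6 := huv (k + 1)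
        rcases Nat.lt_or_ge k (2 * s - 4) with h | h
        · have h7 := hEb (k + 1)
          rw [min_eq_left (by omega)] at ih ⊢
          have h8 : (k + 1) * E = k * E + E := by ring
          rw [h8]
          clear hE
          omega
        · rw [min_eq_right (by omega)] at ih ⊢
          have := hmono k h
          omega
    have h3 : 4 * u (R - 1) ≤ (2 * s - 4) * E :=
      (h2 _).trans (Nat.mul_le_mul_right _ (min_le_right _ _))
    have h4 : 4 * (u (R - 1) : ℤ) ≤ (2 * s - 4) * E := by
      have := (Nat.cast_le (α := ℤ)).2 h3
      push_cast [Nat.cast_sub (show 4 ≤ 2 * s by omega)] at this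
      exact this
    have h5 := num_F (s := s) (e := e) (m := m) (T := u (R - 1)) (R := R)
      (by exact_mod_cast he) (by exact_mod_cast hσ) (by exact_mod_cast hm) hRs.symm h4 hE
    have h6 := (Nat.cast_le (α := ℤ)).2 h1
    push_cast [Nat.cast_sub (show R ≤ m + 1 by omega)] at h6
    linarith
  have h1 := hapoly (R + u R + 1 + N) m (by omega) (by omega) (by omega)
  have h2 := huv m
  rw [hum, zero_add] at h2
  change 2 * (v m : ℤ) = _
  rw [h2]
  exact h1

end SM
end SurfaceModel
end S17
end

/-! ### Primitive elements -/

section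
open Polynomial IntermediateField Module
namespace S17

section
variable {P A K L : Type*} [CommRing P] [IsDomain P] [CommRing A] [IsDomain A]
  [Algebra P A] [Module.Finite P A]
  [Field K] [Algebra P K] [IsFractionRing P K]
  [Field L] [Algebra A L] [IsFractionRing A L] [Algebra P L] [Algebra K L]
  [IsScalarTower P A L] [IsScalarTower P K L]

variable (P A K L) in
theorem finDim_frac (hinj : Function.Injective (algebraMap P A)) : FiniteDimensional K L := by
  have : FaithfulSMul P A := (faithfulSMul_iff_algebraMap_injective P A).2 hinj
  obtain ⟨S, hS⟩ := (Module.Finite.fg_top : (⊤ : Submodule P A).FG)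
  set T : Set L := (algebraMap A L) '' (S : Set A) with hT
  have hIntg : ∀ x : A, IsIntegral K (algebraMap A L x) := fun x => by
    have h1 : IsIntegral P x := Algebra.IsIntegral.isIntegral x
    exact (h1.algebraMap (B := L)).tower_top
  have hTf : T.Finite := (S.finite_toSet).image _
  have : Finite T := hTf
  have hfd : FiniteDimensional K (IntermediateField.adjoin K T) := by
    apply IntermediateField.finiteDimensional_adjoin
    rintro _ ⟨x, -, rfl⟩
    exact hIntg x
  have hA : ∀ x : A, algebraMap A L x ∈ IntermediateField.adjoin K T := by
    intro x
    have hx : x ∈ Submodule.span P (S : Set A) := by rw [hS]; trivial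
    induction hx using Submodule.span_induction with
    | mem x hx => exact IntermediateField.subset_adjoin K T ⟨x, hx, rfl⟩
    | zero => rw [map_zero]; exact zero_mem _
    | add x y _ _ hx hy => rw [map_add]; exact add_mem hx hy
    | smul a x _ hx =>
      rw [Algebra.smul_def, map_mul, ← IsScalarTower.algebraMap_apply P A L,
        IsScalarTower.algebraMap_apply P K L]
      exact mul_mem (IntermediateField.algebraMap_mem _ _) hx
  have htop : IntermediateField.adjoin K T = ⊤ := by
    rw [eq_top_iff]
    intro x _
    obtain ⟨a, b, -, rfl⟩ := IsFractionRing.div_surjective A x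
    exact div_mem (hA a) (hA b)
  rw [htop] at hfd
  exact Module.Finite.equiv (IntermediateField.topEquiv (F := K) (E := L)).toLinearEquiv

end

/-- A `ℂ`-subspace `W` of a finite extension of `K` contains an element `z` with `W ⊆ K(z)`:
there are only finitely many intermediate fields, and a maximal `K(z)` works. -/
theorem exists_prim {K L : Type*} [Field K] [Field L] [Algebra K L] [Algebra ℂ K] [Algebra ℂ L] [IsScalarTower ℂ K L]
    (hfd : FiniteDimensional K L) (W : Submodule ℂ L) :
    ∃ z ∈ W, ∀ v ∈ W, v ∈ K⟮z⟯ := by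
  have : CharZero K := charZero_of_injective_algebraMap (algebraMap ℂ K).injective
  have hfin : Finite (IntermediateField K L) :=
    Field.finite_intermediateField_of_exists_primitive_element K L (Field.exists_primitive_element K L)
  -- choose `z` with `K⟮z⟯` maximal
  have hne : ({F : IntermediateField K L | ∃ z ∈ W, F = K⟮z⟯}).Nonempty := ⟨K⟮(0:L)⟯, 0, W.zero_mem, rfl⟩
  obtain ⟨F, hF⟩ := (Set.toFinite {F : IntermediateField K L | ∃ z ∈ W, F = K⟮z⟯}).exists_maximal hne
  obtain ⟨z, hz, rfl⟩ := hF.prop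
  refine ⟨z, hz, fun v hv => ?_⟩
  obtain ⟨a, b, hab, heq⟩ := Finite.exists_ne_map_eq_of_infinite (fun a : ℂ => K⟮z + a • v⟯)
  set G := K⟮z + a • v⟯ with hG
  have h1 : z + a • v ∈ G := mem_adjoin_simple_self K _
  have h2 : z + b • v ∈ G := by
    have : G = K⟮z + b • v⟯ := heq
    rw [this]; exact mem_adjoin_simple_self K _
  have hsm : ∀ (c : ℂ) (x : L), x ∈ G → c • x ∈ G := fun c x hx => by
    rw [← algebraMap_smul K c x]; exact G.smul_mem hx
  have h3 : v ∈ G := by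
    have h4 : (a - b) • v ∈ G := by
      have := sub_mem h1 h2
      rwa [add_sub_add_left_eq_sub, ← sub_smul] at this
    have := hsm (a - b)⁻¹ _ h4
    rwa [smul_smul, inv_mul_cancel₀ (sub_ne_zero.2 hab), one_smul] at this
  have h5 : z ∈ G := by
    have := sub_mem h1 (hsm a v h3)
    rwa [add_sub_cancel_right] at this
  have h6 : K⟮z⟯ ≤ G := adjoin_simple_le_iff.2 h5
  have h7 : G ≤ K⟮z⟯ := hF.le_of_ge ⟨_, W.add_mem hz (W.smul_mem a hv), rfl⟩ h6
  exact h7 h3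

/-- Primitive element for a finite extension of an integrally closed domain. -/
theorem prim_abs {P A : Type} [CommRing P] [IsDomain P] [IsIntegrallyClosed P] [CommRing A] [IsDomain A]
    [Algebra P A] [Module.Finite P A] [Algebra ℂ P] [Algebra ℂ A] [IsScalarTower ℂ P A]
    (hinj : Function.Injective (algebraMap P A)) (W : Submodule ℂ A)
    (hW : Algebra.adjoin ℂ (W : Set A) = ⊤) :
    ∃ z ∈ W, ∃ σ : ℕ, 1 ≤ σ ∧
      (∀ p : P[X], p.natDegree < σ → aeval z p = 0 → p = 0) ∧
      (∀ v ∈ W, ∃ p : P[X], p.Monic ∧ p.natDegree = σ ∧ aeval v p = 0) ∧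
      (∀ v : A, ∃ b : P, b ≠ 0 ∧ ∃ p : P[X], b • v = aeval z p) := by
  have hfs : FaithfulSMul P A := (faithfulSMul_iff_algebraMap_injective P A).2 hinj
  let K := FractionRing P
  let L := FractionRing A
  have : FaithfulSMul P L := by
    rw [faithfulSMul_iff_algebraMap_injective, IsScalarTower.algebraMap_eq P A L]
    exact (IsFractionRing.injective A L).comp hinj
  letI : Algebra K L := FractionRing.liftAlgebra P L
  have : IsScalarTower P K L := FractionRing.isScalarTower_liftAlgebra P L
  have : IsScalarTower ℂ K L := by
    apply IsScalarTower.of_algebraMap_eq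
    intro x
    rw [IsScalarTower.algebraMap_apply ℂ A L, IsScalarTower.algebraMap_apply ℂ P A,
      ← IsScalarTower.algebraMap_apply P A L, IsScalarTower.algebraMap_apply P K L,
      IsScalarTower.algebraMap_apply ℂ P K]
  have hfd : FiniteDimensional K L := finDim_frac P A K L hinj
  have hAL : Function.Injective (algebraMap A L) := IsFractionRing.injective A L
  have hPK : Function.Injective (algebraMap P K) := IsFractionRing.injective P K
  let W' : Submodule ℂ L := W.map (IsScalarTower.toAlgHom ℂ A L).toLinearMap
  obtain ⟨z', hz', hz⟩ := exists_prim (K := K) hfd W'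
  obtain ⟨z, hzW, rfl⟩ := hz'
  change ∀ v ∈ W', v ∈ K⟮algebraMap A L z⟯ at hz
  have hall : ∀ v : A, algebraMap A L v ∈ K⟮algebraMap A L z⟯ := by
    intro v
    have hv : v ∈ Algebra.adjoin ℂ (W : Set A) := by rw [hW]; trivial
    induction hv using Algebra.adjoin_induction with
    | mem x hx => exact hz _ ⟨x, hx, rfl⟩
    | algebraMap x =>
      rw [← IsScalarTower.algebraMap_apply ℂ A L, IsScalarTower.algebraMap_apply ℂ K L]
      exact IntermediateField.algebraMap_mem _ _
    | add x y _ _ hx hy => rw [map_add]; exact add_mem hx hy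
    | mul x y _ _ hx hy => rw [map_mul]; exact mul_mem hx hy
  have hmin : ∀ v : A, minpoly K (algebraMap A L v) = (minpoly P v).map (algebraMap P K) := fun v =>
    minpoly.isIntegrallyClosed_eq_field_fractions K L (Algebra.IsIntegral.isIntegral v)
  have hdeg : ∀ v : A, (minpoly P v).natDegree = (minpoly K (algebraMap A L v)).natDegree := fun v => by
    rw [hmin, natDegree_map_eq_of_injective hPK]
  have hmz : ∀ v : A, IsIntegral P v := fun v => Algebra.IsIntegral.isIntegral v
  have hmL : ∀ v : L, IsIntegral K v := fun v => Algebra.IsIntegral.isIntegral v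
  have hvd : ∀ v : A, (minpoly P v).natDegree ≤ (minpoly P z).natDegree := by
    intro v
    rw [hdeg, hdeg, ← IntermediateField.adjoin.finrank (hmL _), ← IntermediateField.adjoin.finrank (hmL _)]
    have hle : K⟮algebraMap A L v⟯ ≤ K⟮algebraMap A L z⟯ := adjoin_simple_le_iff.2 (hall v)
    exact LinearMap.finrank_le_finrank_of_injective
      (f := (IntermediateField.inclusion hle).toLinearMap) (IntermediateField.inclusion_injective hle)
  have hta : ∀ (v : A) (p : P[X]), aeval (algebraMap A L v) (p.map (algebraMap P K)) = algebraMap A L (aeval v p) := by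
    intro v p
    rw [aeval_map_algebraMap, aeval_algebraMap_apply]
  refine ⟨z, hzW, (minpoly P z).natDegree, minpoly.natDegree_pos (hmz z), ?_, ?_, ?_⟩
  · intro p hp h0
    by_contra hne
    have h1 : aeval (algebraMap A L z) (p.map (algebraMap P K)) = 0 := by rw [hta, h0, map_zero]
    have h2 := natDegree_le_natDegree (minpoly.degree_le_of_ne_zero K (algebraMap A L z) ((Polynomial.map_ne_zero_iff hPK).2 hne) h1)
    rw [natDegree_map_eq_of_injective hPK, ← hdeg] at h2
    omega
  · intro v _
    refine ⟨minpoly P v * X ^ ((minpoly P z).natDegree - (minpoly P v).natDegree),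
      (minpoly.monic (hmz v)).mul (monic_X_pow _), ?_, by simp⟩
    rw [(minpoly.monic (hmz v)).natDegree_mul (monic_X_pow _), natDegree_X_pow]
    have := hvd v
    omega
  · intro v
    have h1 : algebraMap A L v ∈ Algebra.adjoin K {algebraMap A L z} := by
      have := hall v
      rw [← IntermediateField.mem_toSubalgebra,
        IntermediateField.adjoin_simple_toSubalgebra_of_isAlgebraic (hmL _).isAlgebraic] at this
      exact this
    rw [Algebra.adjoin_singleton_eq_range_aeval] at h1
    obtain ⟨q, hq⟩ := h1
    change aeval (algebraMap A L z) q = _ at hq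
    obtain ⟨b, hb0, hb⟩ := IsLocalization.integerNormalization_spec (nonZeroDivisors P) q
    refine ⟨b, nonZeroDivisors.ne_zero hb0, IsLocalization.integerNormalization (nonZeroDivisors P) q, ?_⟩
    apply hAL
    rw [← hta, hb, Algebra.smul_def, map_mul, ← IsScalarTower.algebraMap_apply P A L,
      IsScalarTower.algebraMap_apply P K L]
    have : (b • q : K[X]) = C (algebraMap P K b) * q := by
      rw [← algebraMap_smul K b q, smul_eq_C_mul]
    rw [this, map_mul, aeval_C, hq]
end S17
end

/-! ### The homogeneous coordinate ring -/

section
open MvPolynomial Module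
namespace S17
variable {n : ℕ}

lemma finrank_Rk (n k : ℕ) : finrank ℂ (Rk n k) = (n + k - 1).choose k := by
  classical
  set b : ((Finset.univ : Finset (Fin n)).finsuppAntidiag k) → MPoly n := fun d => monomial d.1 1
  have hli : LinearIndependent ℂ b := by
    have := (basisMonomials (Fin n) ℂ).linearIndependent.comp
      (fun d : ((Finset.univ : Finset (Fin n)).finsuppAntidiag k) => d.1) Subtype.val_injective
    have h2 : (⇑(basisMonomials (Fin n) ℂ) ∘
        fun d : ((Finset.univ : Finset (Fin n)).finsuppAntidiag k) => d.1) = b := by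
      funext d; simp [b]
    rw [← h2]
    exact this
  have hspan : Rk n k = Submodule.span ℂ (Set.range b) := by
    apply le_antisymm
    · intro f hf
      rw [f.as_sum]
      refine Submodule.sum_mem _ fun d hd => ?_
      have hd' : d ∈ (Finset.univ : Finset (Fin n)).finsuppAntidiag k := by
        rw [Finset.mem_finsuppAntidiag]
        refine ⟨?_, by simp⟩
        have := (mem_homogeneousSubmodule k f).1 hf (mem_support_iff.1 hd)
        rw [← this, Finsupp.weight_apply, Finsupp.sum_fintype _ _ (by simp)]
        simp
      have : monomial d (coeff d f) = coeff d f • b ⟨d, hd'⟩ := by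
        simp [b, smul_monomial]
      rw [this]
      exact Submodule.smul_mem _ _ (Submodule.subset_span ⟨_, rfl⟩)
    · rw [Submodule.span_le]
      rintro _ ⟨d, rfl⟩
      have h := (Finset.mem_finsuppAntidiag.1 d.2).1
      apply isHomogeneous_monomial
      rw [Finsupp.degree_eq_sum]; exact h
  rw [hspan, finrank_span_eq_card hli, Fintype.card_coe, Finset.card_finsuppAntidiag_nat_eq_choose]
  simp

lemma Rk_pow (n k : ℕ) : Rk n 1 ^ k = Rk n k := by
  induction k with
  | zero => rw [pow_zero]; exact (homogeneousSubmodule_zero (Fin n)).symm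
  | succ k ih => rw [pow_succ, ih, Rk_mul]

/-- The homogeneous coordinate ring `R/I`, as a type synonym carrying only its `ℂ`-algebra structure. -/
def CR (I : Ideal (MPoly n)) : Type := MPoly n ⧸ I

noncomputable instance (I : Ideal (MPoly n)) : CommRing (CR I) := inferInstanceAs (CommRing (MPoly n ⧸ I))
noncomputable instance (I : Ideal (MPoly n)) : Algebra ℂ (CR I) := inferInstanceAs (Algebra ℂ (MPoly n ⧸ I))

/-- The quotient map onto the homogeneous coordinate ring. -/
noncomputable def cmk (I : Ideal (MPoly n)) : MPoly n →ₐ[ℂ] CR I := Ideal.Quotient.mkₐ ℂ I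

lemma cmk_surj {I : Ideal (MPoly n)} : Function.Surjective (cmk I) := Ideal.Quotient.mk_surjective

lemma cmk_eq_zero {I : Ideal (MPoly n)} {f : MPoly n} : cmk I f = 0 ↔ f ∈ I :=
  Ideal.Quotient.eq_zero_iff_mem

/-- The degree `k` part of the homogeneous coordinate ring. -/
noncomputable def dQ (I : Ideal (MPoly n)) (k : ℕ) : Submodule ℂ (CR I) :=
  (Rk n k).map (cmk I).toLinearMap

lemma finrank_dQ (I : Ideal (MPoly n)) (k : ℕ) : finrank ℂ (dQ I k) = hf I k := rfl

lemma dQ_mul (I : Ideal (MPoly n)) (i j : ℕ) : dQ I i * dQ I j = dQ I (i + j) := by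
  rw [dQ, dQ, dQ, ← Submodule.map_mul, Rk_mul]

lemma dQ_zero (I : Ideal (MPoly n)) : dQ I 0 = 1 := by
  rw [dQ, show Rk n 0 = 1 from ?_, Submodule.map_one]
  exact homogeneousSubmodule_zero (Fin n)

lemma dQ_pow (I : Ideal (MPoly n)) (k : ℕ) : dQ I 1 ^ k = dQ I k := by
  induction k with
  | zero => rw [pow_zero, dQ_zero]
  | succ k ih => rw [pow_succ, ih, dQ_mul]

instance (I : Ideal (MPoly n)) (k : ℕ) : Module.Finite ℂ (dQ I k) := by
  unfold dQ; infer_instance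

lemma mem_dQ {I : Ideal (MPoly n)} {k : ℕ} {a : CR I} :
    a ∈ dQ I k ↔ ∃ f ∈ Rk n k, cmk I f = a := Iff.rfl

/-- The projection of `R/I` onto its degree `k` part, for a homogeneous ideal `I`. -/
noncomputable def gc {I : Ideal (MPoly n)} (hI : IsHomogIdeal I) (k : ℕ) :
    CR I →ₗ[ℂ] CR I :=
  (Submodule.mapQ (I.restrictScalars ℂ) (I.restrictScalars ℂ) (homogeneousComponent k)
    (fun f hf => hI f hf k) : (MPoly n ⧸ I.restrictScalars ℂ) →ₗ[ℂ] (MPoly n ⧸ I.restrictScalars ℂ))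

section gc
variable {I : Ideal (MPoly n)} (hI : IsHomogIdeal I)

lemma gc_mk (k : ℕ) (f : MPoly n) :
    gc hI k (cmk I f) = cmk I (homogeneousComponent k f) := rfl

lemma gc_mem (k : ℕ) (a : CR I) : gc hI k a ∈ dQ I k := by
  obtain ⟨f, rfl⟩ := cmk_surj a
  exact ⟨_, hc_mem f k, rfl⟩

lemma gc_self {k : ℕ} {a : CR I} (ha : a ∈ dQ I k) : gc hI k a = a := by
  obtain ⟨f, hf, rfl⟩ := mem_dQ.1 ha
  rw [gc_mk, hc_self hf]

lemma gc_mul {i : ℕ} {a : CR I} (ha : a ∈ dQ I i) (b : CR I) (j : ℕ) :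
    gc hI (i + j) (a * b) = a * gc hI j b := by
  obtain ⟨f, hf, rfl⟩ := mem_dQ.1 ha
  obtain ⟨g, rfl⟩ := cmk_surj b
  rw [← map_mul, gc_mk, gc_mk, hc_mul_left hf, map_mul]

lemma gc_mul_lt {i : ℕ} {a : CR I} (ha : a ∈ dQ I i) (b : CR I) {k : ℕ} (hk : k < i) :
    gc hI k (a * b) = 0 := by
  obtain ⟨f, hf, rfl⟩ := mem_dQ.1 ha
  obtain ⟨g, rfl⟩ := cmk_surj b
  rw [← map_mul, gc_mk, hc_mul_left_lt hf _ hk, map_zero]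

/-- A substitution of linear elements is graded. -/
lemma gc_aeval {Y : Fin 3 → CR I} (hY : ∀ i, Y i ∈ dQ I 1) (k : ℕ) (p : MPoly 3) :
    gc hI k (aeval Y p) = aeval Y (homogeneousComponent k p) := by
  choose F hF hFY using fun i => mem_dQ.1 (hY i)
  have h1 : ∀ q : MPoly 3, aeval Y q = cmk I (aeval F q) := by
    intro q
    have := MvPolynomial.comp_aeval_apply (f := F) (cmk I) q
    have h2 : (fun i => (cmk I) (F i)) = Y := funext hFY
    rw [h2] at this
    exact this.symm
  have h2 : ∀ (j : ℕ) (q : MPoly 3), q ∈ Rk 3 j → aeval F q ∈ Rk n j := by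
    intro j q hq
    have := IsHomogeneous.aeval (mem_homogeneousSubmodule j q |>.1 hq) F (n := 1) (fun i => hF i)
    rw [one_mul] at this
    exact this
  rw [h1, h1, gc_mk]
  congr 1
  conv_lhs => rw [← sum_homogeneousComponent p]
  rw [map_sum, map_sum]
  have h3 : ∀ i, homogeneousComponent k (aeval F (homogeneousComponent i p)) =
      if k = i then aeval F (homogeneousComponent i p) else 0 := fun i =>
    homogeneousComponent_of_mem (h2 i _ (hc_mem p i))
  simp_rw [h3]
  rw [Finset.sum_ite_eq]
  split_ifs with h
  · rfl
  · rw [homogeneousComponent_eq_zero k p (by simpa using h), map_zero]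
end gc

/-- Forms of degree `k` in three elements lie in the `k`-th power of their span. -/
lemma aeval_mem_pow {A : Type*} [CommRing A] [Algebra ℂ A] (Y : Fin 3 → A) {k : ℕ} {p : MPoly 3}
    (hp : p ∈ Rk 3 k) : aeval Y p ∈ (Submodule.span ℂ (Set.range Y)) ^ k := by
  have h2 : (Rk 3 1).map (aeval Y : MPoly 3 →ₐ[ℂ] A).toLinearMap = Submodule.span ℂ (Set.range Y) := by
    rw [show Rk 3 1 = Submodule.span ℂ (Set.range X) from homogeneousSubmodule_one_eq_span_X,
      Submodule.map_span, ← Set.range_comp]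
    congr 2; funext i; simp
  rw [← h2, ← Submodule.map_pow, Rk_pow]
  exact ⟨p, hp, rfl⟩
end S17
end

/-! ### Graded Noether normalization -/

section
open MvPolynomial Module
namespace S17
variable {n : ℕ}

/-- Cutting a saturated homogeneous ideal by a linear nonzerodivisor. -/
lemma cut {I : Ideal (MPoly n)} (hI : IsHomogIdeal I) (hs : IsSat I) (h1 : (1 : MPoly n) ∉ I)
    {y : MPoly n} (hy1 : y ∈ Rk n 1) (hy : RegMod y I) :
    ∃ N, ∀ k, N ≤ k → hf (satIdeal (I ⊔ Ideal.span {y})) (k + 1) + hf I k = hf I (k + 1) ∧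
      ∀ f ∈ Rk n k, f ∈ satIdeal (I ⊔ Ideal.span {y}) → f ∈ I ⊔ Ideal.span {y} := by
  have hh := isHomog_sup_span hI hy1
  obtain ⟨N1, hN1⟩ := sat_eq_large hh
  obtain ⟨N2, hN2⟩ := hf_sat_eq_large hh
  refine ⟨max N1 N2, fun k hk => ⟨?_, ?_⟩⟩
  · rw [hN2 (k + 1) (by omega)]
    have := hf_sup_span hI hy1 (regMod_ne_zero h1 hy) hy k
    rwa [add_comm 1 k] at this
  · intro f hf h
    have h2 : f ∈ Ik (satIdeal (I ⊔ Ideal.span {y})) k := mem_Ik.2 ⟨hf, h⟩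
    rw [hN1 k (by omega)] at h2
    exact (mem_Ik.1 h2).2

/-- A saturated homogeneous ideal with a quadratic Hilbert polynomial, together with three suitable
linear forms, contains all forms of large degree. -/
lemma three_forms {I : Ideal (MPoly n)} (hI : IsHomogIdeal I) (hs : IsSat I) (h1 : (1 : MPoly n) ∉ I)
    {s : ℕ} {c c₀ : ℤ}
    (hp : ∃ N : ℕ, ∀ k : ℕ, N ≤ k → 2 * (hf I k : ℤ) = s * (k * (k + 1)) + 2 * (c * k + c₀)) :
    ∃ Y : Fin 3 → MPoly n, (∀ i, Y i ∈ Rk n 1) ∧ ∃ N : ℕ, ∀ k, N ≤ k →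
      ∀ f ∈ Rk n k, f ∈ I ⊔ Ideal.span (Set.range Y) := by
  obtain ⟨N, hN⟩ := hp
  obtain ⟨y0, hy0, hr0⟩ := exists_regMod hs
  set I1 := satIdeal (I ⊔ Ideal.span {y0}) with hI1
  have hh1 : IsHomogIdeal I1 := isHomog_sat (isHomog_sup_span hI hy0)
  obtain ⟨N0, hN0⟩ := cut hI hs h1 hy0 hr0
  have hs1 : IsSat I1 := isSat_sat _
  obtain ⟨y1, hy1, hr1⟩ := exists_regMod hs1
  by_cases hu1 : (1 : MPoly n) ∈ I1
  · refine ⟨![y0, y1, y1], fun i => by fin_cases i <;> assumption, N0, fun k hk f hf => ?_⟩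
    have := (hN0 k hk).2 f hf (by rw [← mul_one f]; exact I1.mul_mem_left _ hu1)
    refine sup_le_sup_left (Ideal.span_mono ?_) I this
    rintro _ rfl
    exact ⟨0, rfl⟩
  set I2 := satIdeal (I1 ⊔ Ideal.span {y1}) with hI2
  have hh2 : IsHomogIdeal I2 := isHomog_sat (isHomog_sup_span hh1 hy1)
  obtain ⟨N1, hN1⟩ := cut hh1 hs1 hu1 hy1 hr1
  have hs2 : IsSat I2 := isSat_sat _
  obtain ⟨y2, hy2, hr2⟩ := exists_regMod hs2
  have hfin : ∀ J : Ideal (MPoly n), I ≤ J → y0 ∈ J → y1 ∈ J → ∀ k, N0 + N1 + 1 ≤ k → ∀ f ∈ Rk n k, f ∈ I2 → f ∈ J := by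
    intro J hJ h0 hy1J k hk f hf hf2
    have h3 := (hN1 k (by omega)).2 f hf hf2
    obtain ⟨j, rfl⟩ : ∃ j, k = 1 + j := ⟨k - 1, by omega⟩
    obtain ⟨a, ha, b, hb, rfl⟩ := mem_sup_span hh1 hy1 hf h3
    refine J.add_mem ?_ (J.mul_mem_right _ hy1J)
    have h4 := (hN0 _ (by omega)).2 b (mem_Ik.1 hb).1 (mem_Ik.1 hb).2
    refine (sup_le hJ ?_ : I ⊔ Ideal.span {y0} ≤ J) h4
    rw [Ideal.span_le]; rintro _ rfl; exact h0
  by_cases hu2 : (1 : MPoly n) ∈ I2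
  · refine ⟨![y0, y1, y2], fun i => by fin_cases i <;> assumption, N0 + N1 + 1, fun k hk f hf => ?_⟩
    refine hfin _ le_sup_left ?_ ?_ k hk f hf (by rw [← mul_one f]; exact I2.mul_mem_left _ hu2)
    · exact Ideal.mem_sup_right (Ideal.subset_span ⟨0, rfl⟩)
    · exact Ideal.mem_sup_right (Ideal.subset_span ⟨1, rfl⟩)
  refine ⟨![y0, y1, y2], fun i => by fin_cases i <;> assumption, N + N0 + N1 + 4, fun k hk f hf => ?_⟩
  obtain ⟨j, rfl⟩ : ∃ j, k = 1 + j := ⟨k - 1, by omega⟩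
  have e1 := (hN0 j (by omega)).1
  have e1' := (hN0 (j - 1) (by omega)).1
  have e1'' := (hN0 (j - 2) (by omega)).1
  have e2 := (hN1 j (by omega)).1
  have e2' := (hN1 (j - 1) (by omega)).1
  have p1 := hN (j + 1) (by omega)
  have p2 := hN j (by omega)
  have p3 := hN (j - 1) (by omega)
  have p4 := hN (j - 2) (by omega)
  obtain ⟨l, rfl⟩ : ∃ l, j = l + 2 := ⟨j - 2, by omega⟩
  simp only [show l + 2 - 1 = l + 1 by omega, show l + 2 - 2 = l by omega, show l + 1 + 1 = l + 2 by omega] at *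
  have e3 := hf_sup_span hh2 hy2 (regMod_ne_zero hu2 hr2) hr2 (l + 2)
  have hzero : S17.hf (I2 ⊔ Ideal.span {y2}) (1 + (l + 2)) = 0 := by
    rw [show 1 + (l + 2) = l + 2 + 1 by omega] at e3 ⊢
    push_cast at p1 p2 p3 p4
    have : (S17.hf I (l + 2 + 1) : ℤ) + 3 * S17.hf I (l + 1) = 3 * S17.hf I (l + 2) + S17.hf I l := by
      nlinarith
    rw [← hI1] at e1 e1' e1''
    rw [← hI2] at e2 e2'
    omega
  have h6 := (hf_eq_zero_iff _ _).1 hzero f hf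
  obtain ⟨a, ha, b, hb, rfl⟩ := mem_sup_span hh2 hy2 hf h6
  refine Ideal.add_mem _ ?_ (Ideal.mul_mem_right _ _ (Ideal.mem_sup_right (Ideal.subset_span ⟨2, rfl⟩)))
  refine hfin _ le_sup_left ?_ ?_ _ (by omega) b (mem_Ik.1 hb).1 (mem_Ik.1 hb).2
  · exact Ideal.mem_sup_right (Ideal.subset_span ⟨0, rfl⟩)
  · exact Ideal.mem_sup_right (Ideal.subset_span ⟨1, rfl⟩)
end S17
end

section
open MvPolynomial Module
namespace S17
variable {n : ℕ}

section
variable {I : Ideal (MPoly n)}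

lemma mk_eq_sum_gc (hI : IsHomogIdeal I) (a : CR I) : ∃ N : ℕ, a = ∑ i ∈ Finset.range N, gc hI i a := by
  obtain ⟨f, rfl⟩ := cmk_surj a
  refine ⟨f.totalDegree + 1, ?_⟩
  simp_rw [gc_mk]
  rw [← map_sum, sum_homogeneousComponent]

/-- Noether normalization, graded form: `A_{k+1} = Π A_k` for `k` large, where `Π` is spanned by three
linear elements. -/
lemma noether (hI : IsHomogIdeal I) {s : ℕ} {c c₀ : ℤ} (hs : IsSat I) (h1 : (1 : MPoly n) ∉ I)
    (hp : ∃ N : ℕ, ∀ k : ℕ, N ≤ k → 2 * (hf I k : ℤ) = s * (k * (k + 1)) + 2 * (c * k + c₀)) :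
    ∃ Y : Fin 3 → CR I, (∀ i, Y i ∈ dQ I 1) ∧ ∃ N : ℕ, ∀ k, N ≤ k →
      dQ I (k + 1) ≤ Submodule.span ℂ (Set.range Y) * dQ I k := by
  obtain ⟨F, hF, N, hN⟩ := three_forms hI hs h1 hp
  refine ⟨fun i => cmk I (F i), fun i => ⟨_, hF i, rfl⟩, N, fun k hk a ha => ?_⟩
  obtain ⟨f, hf, rfl⟩ := mem_dQ.1 ha
  have h2 := hN (k + 1) (by omega) f hf
  obtain ⟨b, hb, w, hw, hbw⟩ := Submodule.mem_sup.1 h2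
  obtain ⟨g, hg⟩ := (Ideal.mem_span_range_iff_exists_fun).1 hw
  have h3 : cmk I f = ∑ i, cmk I (F i) * cmk I (g i) := by
    rw [← hbw, map_add, cmk_eq_zero.2 hb, zero_add, ← hg, map_sum]
    exact Finset.sum_congr rfl fun i _ => by rw [map_mul, mul_comm]
  rw [← gc_self hI ha, h3, map_sum]
  refine Submodule.sum_mem _ fun i _ => ?_
  rw [add_comm k 1, gc_mul hI (i := 1) (mem_dQ.2 ⟨_, hF i, rfl⟩ : cmk I (F i) ∈ dQ I 1)]
  exact Submodule.mul_mem_mul (Submodule.subset_span ⟨i, rfl⟩) (gc_mem hI _ _)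

variable {Y : Fin 3 → CR I}

lemma span_Y_le (hY : ∀ i, Y i ∈ dQ I 1) : Submodule.span ℂ (Set.range Y) ≤ dQ I 1 := by
  rw [Submodule.span_le]; rintro _ ⟨i, rfl⟩; exact hY i

/-- `A` is finite over the polynomial ring in the three linear elements. -/
lemma noether_finite (hI : IsHomogIdeal I) {N : ℕ}
    (hN : ∀ k, N ≤ k → dQ I (k + 1) ≤ Submodule.span ℂ (Set.range Y) * dQ I k) :
    (aeval Y : MPoly 3 →ₐ[ℂ] CR I).toRingHom.Finite := by
  letI : Algebra (MPoly 3) (CR I) := (aeval Y : MPoly 3 →ₐ[ℂ] CR I).toRingHom.toAlgebra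
  have hst : IsScalarTower ℂ (MPoly 3) (CR I) := IsScalarTower.of_algebraMap_eq
    fun x => ((aeval Y : MPoly 3 →ₐ[ℂ] CR I).commutes x).symm
  change Module.Finite (MPoly 3) (CR I)
  set W : Submodule ℂ (CR I) := ⨆ i : Fin (N + 1), dQ I i with hW
  have hWfg : W.FG := Submodule.fg_iSup _ fun i => Module.Finite.iff_fg.1 inferInstance
  obtain ⟨S, hS⟩ := hWfg
  set M := Submodule.span (MPoly 3) (S : Set (CR I)) with hM
  have hWM : ∀ a ∈ W, a ∈ M := by
    intro a ha
    rw [← hS] at ha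
    exact Submodule.span_subset_span ℂ (MPoly 3) _ ha
  have hk : ∀ k, ∀ a ∈ dQ I k, a ∈ M := by
    intro k
    rcases le_total k N with h | h
    · exact fun a ha => hWM a (Submodule.mem_iSup_of_mem (⟨k, by omega⟩ : Fin (N + 1)) ha)
    · induction k, h using Nat.le_induction with
      | base => exact fun a ha => hWM a (Submodule.mem_iSup_of_mem (⟨N, by omega⟩ : Fin (N + 1)) ha)
      | succ k hk ih =>
        intro a ha
        have := hN k hk ha
        have hle : Submodule.span ℂ (Set.range Y) * dQ I k ≤ M.restrictScalars ℂ := by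
          rw [Submodule.mul_le]
          intro y hy b hb
          induction hy using Submodule.span_induction with
          | mem y hy =>
            obtain ⟨i, rfl⟩ := hy
            have : Y i * b = (X i : MPoly 3) • b := by
              rw [Algebra.smul_def]
              congr 1
              exact (aeval_X Y i).symm
            rw [this]
            exact M.smul_mem _ (ih b hb)
          | zero => rw [zero_mul]; exact zero_mem _
          | add x y _ _ hx hy => rw [add_mul]; exact add_mem hx hy
          | smul c x _ hx => rw [smul_mul_assoc]; exact Submodule.smul_mem _ c hx
        exact hle this
  refine ⟨⟨S, ?_⟩⟩
  rw [eq_top_iff]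
  intro a _
  obtain ⟨T, hT⟩ := mk_eq_sum_gc hI a
  rw [hT]
  exact M.sum_mem fun i _ => hk i _ (gc_mem hI i a)

/-- The three linear elements are algebraically independent: otherwise the Hilbert function would
grow at most linearly. -/
lemma noether_inj (hI : IsHomogIdeal I) (hY : ∀ i, Y i ∈ dQ I 1)
    {s : ℕ} (hs : 1 ≤ s) {c c₀ : ℤ}
    (hp : ∃ N : ℕ, ∀ k : ℕ, N ≤ k → 2 * (hf I k : ℤ) = s * (k * (k + 1)) + 2 * (c * k + c₀)) {N : ℕ}
    (hN : ∀ k, N ≤ k → dQ I (k + 1) ≤ Submodule.span ℂ (Set.range Y) * dQ I k) :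
    Function.Injective (aeval Y : MPoly 3 →ₐ[ℂ] CR I) := by
  rw [injective_iff_map_eq_zero]
  intro p hp0
  by_contra hne
  obtain ⟨a, ha⟩ : ∃ a, homogeneousComponent a p ≠ 0 := by
    by_contra! h
    apply hne
    rw [← sum_homogeneousComponent p]
    exact Finset.sum_eq_zero fun i _ => h i
  set f := homogeneousComponent a p with hf
  have hfa : f ∈ Rk 3 a := hc_mem p a
  have hf0 : aeval Y f = 0 := by rw [hf, ← gc_aeval hI hY, hp0, map_zero]
  set Pi := Submodule.span ℂ (Set.range Y) with hPi
  have hpow : ∀ j, dQ I (N + j) ≤ Pi ^ j * dQ I N := by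
    intro j
    induction j with
    | zero => simp
    | succ j ih =>
      calc dQ I (N + (j + 1)) ≤ Pi * dQ I (N + j) := hN (N + j) (Nat.le_add_right _ _)
        _ ≤ Pi * (Pi ^ j * dQ I N) := mul_le_mul' le_rfl ih
        _ = _ := by rw [← mul_assoc, ← pow_succ']
  have hPimap : ∀ j, Pi ^ j = (Rk 3 j).map (aeval Y : MPoly 3 →ₐ[ℂ] CR I).toLinearMap := by
    intro j
    rw [← Rk_pow, Submodule.map_pow, show Rk 3 1 = Submodule.span ℂ (Set.range X) from homogeneousSubmodule_one_eq_span_X,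
      Submodule.map_span, ← Set.range_comp]
    rw [hPi]; congr 3; funext i; simp
  -- dimension of `Π^j`
  have hdim : ∀ j, finrank ℂ ↥(Pi ^ (a + j)) + finrank ℂ (Rk 3 j) ≤ finrank ℂ (Rk 3 (a + j)) := by
    intro j
    rw [hPimap]
    have h1 := LinearMap.finrank_range_add_finrank_ker
      ((aeval Y : MPoly 3 →ₐ[ℂ] CR I).toLinearMap.domRestrict (Rk 3 (a + j)))
    rw [LinearMap.range_domRestrict] at h1
    have h2 : finrank ℂ (Rk 3 j) ≤ finrank ℂ (LinearMap.ker
      ((aeval Y : MPoly 3 →ₐ[ℂ] CR I).toLinearMap.domRestrict (Rk 3 (a + j)))) := by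
      refine LinearMap.finrank_le_finrank_of_injective
        (f := LinearMap.codRestrict _ (LinearMap.codRestrict (Rk 3 (a + j))
          ((LinearMap.mulLeft ℂ f).domRestrict (Rk 3 j)) ?_) ?_) ?_
      · rintro ⟨g, hg⟩
        exact mul_mem_Rk hfa hg
      · rintro ⟨g, hg⟩
        rw [LinearMap.mem_ker]
        change aeval Y (f * g) = 0
        rw [map_mul, hf0, zero_mul]
      · rintro ⟨g, hg⟩ ⟨g', hg'⟩ h
        have h3 : f * g = f * g' := congrArg (fun t => ((t : LinearMap.ker _) : Rk 3 (a + j)).1) h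
        exact Subtype.ext (mul_left_cancel₀ ha h3)
    exact (Nat.add_le_add_left h2 _).trans h1.le
  have hmulrank : ∀ j, S17.hf I (N + j) ≤ finrank ℂ ↥(Pi ^ j) * finrank ℂ (dQ I N) := by
    intro j
    have hfin : Module.Finite ℂ ↥(Pi ^ j) := by rw [hPimap]; infer_instance
    have hfin2 : Module.Finite ℂ ↥(Pi ^ j * dQ I N) := Module.Finite.iff_fg.2
      ((Module.Finite.iff_fg.1 hfin).mul (Module.Finite.iff_fg.1 inferInstance))
    have h6 : finrank ℂ ↥(Pi ^ j * dQ I N) ≤ finrank ℂ ↥(Pi ^ j) * finrank ℂ (dQ I N) := by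
      rw [← Submodule.mulMap_range]
      exact (LinearMap.finrank_range_le _).trans (finrank_tensorProduct).le
    exact (@Submodule.finrank_mono ℂ (CR I) _ _ _ _ _ _ hfin2 (hpow j)).trans h6
  -- contradiction by growth
  have hch : ∀ j, 2 * finrank ℂ (Rk 3 j) = (j + 1) * (j + 2) := by
    intro j
    rw [finrank_Rk, show 3 + j - 1 = j + 2 by omega, ← Nat.choose_symm_of_eq_add (show j + 2 = 2 + j by omega),
      Nat.choose_two_right, show j + 2 - 1 = j + 1 by omega, mul_comm (j + 2)]
    exact Nat.mul_div_cancel' (by rw [mul_comm]; exact (Nat.even_mul_succ_self (j + 1)).two_dvd |> fun h => by rwa [mul_comm] at h)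
  obtain ⟨M, hM⟩ := hp
  set B := finrank ℂ (dQ I N) with hB
  have hbound : ∀ j : ℕ, M ≤ j →
      (s : ℤ) * ((N + (a + j)) * (N + (a + j) + 1)) + 2 * (c * (N + (a + j)) + c₀) ≤ (a * (a + 2 * j + 3)) * B := by
    intro j hj
    have h1 := hM (N + (a + j)) (by omega)
    have h2 := hmulrank (a + j)
    have h3 := hdim j
    have h4 := hch j
    have h5 := hch (a + j)
    have h6 : 2 * finrank ℂ ↥(Pi ^ (a + j)) ≤ a * (a + 2 * j + 3) := by nlinarith
    have h7 : 2 * S17.hf I (N + (a + j)) ≤ (a * (a + 2 * j + 3)) * B := by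
      calc _ ≤ 2 * (finrank ℂ ↥(Pi ^ (a + j)) * B) := by omega
        _ = (2 * finrank ℂ ↥(Pi ^ (a + j))) * B := by ring
        _ ≤ _ := Nat.mul_le_mul_right _ h6
    push_cast at h1
    rw [← h1]
    exact_mod_cast h7
  -- take `j` huge
  set j : ℕ := M + 2 * a * B + a * (a + 3) * B + 2 * c.natAbs * (N + a + 1) + 2 * c₀.natAbs + 1 with hj
  have h := hbound j (by omega)
  have hc1 : -(c.natAbs : ℤ) ≤ c := by omega
  have hc2 : -(c₀.natAbs : ℤ) ≤ c₀ := by omega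
  have h1 : (j : ℤ) * j ≤ (N + (a + j)) * (N + (a + j) + 1) := by
    have : (0:ℤ) ≤ N := by positivity
    have : (0:ℤ) ≤ a := by positivity
    have : (0:ℤ) ≤ j := by positivity
    nlinarith
  have h2 : (j : ℤ) * j ≤ s * ((N + (a + j)) * (N + (a + j) + 1)) := by
    have : (1 : ℤ) ≤ s := by exact_mod_cast hs
    nlinarith
  have h3 : -(c.natAbs : ℤ) * (N + (a + j)) ≤ c * (N + (a + j)) :=
    mul_le_mul_of_nonneg_right hc1 (by positivity)
  have h4 : (j : ℤ) * j ≤ (a * (a + 2 * j + 3)) * B + 2 * c.natAbs * (N + (a + j)) + 2 * c₀.natAbs := by linarith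
  have h5 : j * j ≤ (a * (a + 2 * j + 3)) * B + 2 * c.natAbs * (N + (a + j)) + 2 * c₀.natAbs := by exact_mod_cast h4
  have h6 : 1 ≤ j := by omega
  have hexp : j * j = j * M + j * (2 * a * B) + j * (a * (a + 3) * B) + j * (2 * c.natAbs * (N + a + 1)) + j * (2 * c₀.natAbs) + j := by
    conv_lhs => rw [hj]
    rw [← hj]; ring
  generalize c.natAbs = u at *
  generalize c₀.natAbs = w at *
  have t1 : a * (a + 3) * B ≤ j * (a * (a + 3) * B) := Nat.le_mul_of_pos_left _ h6
  have t2 : 2 * w ≤ j * (2 * w) := Nat.le_mul_of_pos_left _ h6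
  have t3 : 2 * u * (N + a) ≤ j * (2 * u * (N + a)) := Nat.le_mul_of_pos_left _ h6
  nlinarith
end
end S17
end

/-! ### Primitive linear elements and the conductor form -/

section
open Module
namespace S17

/-- A polynomial in `λ` with vector coefficients whose values lie in `X` has its coefficients in `X`. -/
lemma coeff_mem_of_forall {A : Type*} [AddCommGroup A] [Module ℂ A] (X : Submodule ℂ A) (N : ℕ) (a : ℕ → A)
    (h : ∀ t : ℂ, ∑ j ∈ Finset.range N, t ^ j • a j ∈ X) {j : ℕ} (hj : j < N) : a j ∈ X := by
  by_contra hX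
  obtain ⟨f, hf, hfX⟩ := Submodule.exists_le_ker_of_notMem hX
  set p : Polynomial ℂ := ∑ j ∈ Finset.range N, Polynomial.C (f (a j)) * Polynomial.X ^ j with hp
  have hp0 : p = 0 := by
    apply Polynomial.funext
    intro t
    have h1 : f (∑ j ∈ Finset.range N, t ^ j • a j) = 0 := hfX (h t)
    rw [map_sum] at h1
    rw [hp, Polynomial.eval_finsetSum, Polynomial.eval_zero, ← h1]
    refine Finset.sum_congr rfl fun i _ => ?_
    rw [Polynomial.eval_mul, Polynomial.eval_C, Polynomial.eval_pow, Polynomial.eval_X, map_smul,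
      smul_eq_mul, mul_comm]
  have h2 : p.coeff j = f (a j) := by
    rw [hp, Polynomial.finsetSum_coeff, Finset.sum_eq_single j]
    · simp
    · intro b _ hb
      rw [Polynomial.coeff_C_mul, Polynomial.coeff_X_pow, if_neg (Ne.symm hb), mul_zero]
    · intro h; exact absurd (Finset.mem_range.2 hj) h
  rw [hp0, Polynomial.coeff_zero] at h2
  exact hf h2.symm

/-- Polarization: a subspace containing all `σ`-th powers of elements of `W` contains `W ^ σ`. -/
lemma polarize {A : Type*} [CommRing A] [Algebra ℂ A] (W X : Submodule ℂ A) (σ : ℕ)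
    (h : ∀ v ∈ W, v ^ σ ∈ X) : W ^ σ ≤ X := by
  have key : ∀ i, i ≤ σ → ∀ w ∈ W ^ i, ∀ v ∈ W, w * v ^ (σ - i) ∈ X := by
    intro i
    induction i with
    | zero =>
      intro _ w hw v hv
      rw [pow_zero, Submodule.mem_one] at hw
      obtain ⟨c, rfl⟩ := hw
      rw [← Algebra.smul_def]
      exact X.smul_mem _ (h v hv)
    | succ i ih =>
      intro hi w hw v hv
      rw [pow_succ] at hw
      induction hw using Submodule.mul_induction_on' with
      | mem_mul_mem w hw u hu =>
        have h1 : ∀ t : ℂ, ∑ j ∈ Finset.range (σ - i + 1), t ^ j •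
            (((σ - i).choose j : ℂ) • (w * (u ^ j * v ^ (σ - i - j)))) ∈ X := by
          intro t
          have h2 := ih (by omega) w hw (t • u + v) (W.add_mem (W.smul_mem t hu) hv)
          rw [add_pow, Finset.mul_sum] at h2
          convert h2 using 1
          refine Finset.sum_congr rfl fun j _ => ?_
          rw [smul_pow]
          simp only [Algebra.smul_def, map_natCast]
          ring
        have h3 := coeff_mem_of_forall X _ _ h1 (j := 1) (by omega)
        rw [Nat.choose_one_right, pow_one] at h3
        have h4 := X.smul_mem (((σ - i : ℕ) : ℂ))⁻¹ h3
        rw [smul_smul, inv_mul_cancel₀ (by norm_cast; omega), one_smul] at h4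
        rw [mul_assoc, show σ - (i + 1) = σ - i - 1 by omega]
        exact h4
      | add x _ y _ hx hy => rw [add_mul]; exact X.add_mem hx hy
  intro w hw
  rcases Submodule.nonempty W with ⟨v, hv⟩
  have := key σ le_rfl w hw v hv
  rwa [Nat.sub_self, pow_zero, mul_one] at this

open MvPolynomial
variable {n : ℕ} {I : Ideal (MPoly n)}

lemma aeval_as_sum {P A : Type*} [CommRing P] [CommRing A] [Algebra P A] (p : Polynomial P) (z : A)
    {N : ℕ} (hN : p.natDegree < N) :
    Polynomial.aeval z p = ∑ j ∈ Finset.range N, algebraMap P A (p.coeff j) * z ^ j := by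
  rw [Polynomial.aeval_eq_sum_range' hN]
  exact Finset.sum_congr rfl fun j _ => Algebra.smul_def _ _

/-- Homogeneous component of a polynomial expression `∑ c_j v^j` in a linear element `v`. -/
lemma gc_sum_pow (hI : IsHomogIdeal I) {Y : Fin 3 → CR I} (hY : ∀ i, Y i ∈ dQ I 1)
    {v : CR I} (hv : v ∈ dQ I 1) (c : ℕ → MPoly 3) (N k : ℕ) :
    gc hI k (∑ j ∈ Finset.range N, aeval Y (c j) * v ^ j) =
      ∑ j ∈ Finset.range N, if j ≤ k then aeval Y (homogeneousComponent (k - j) (c j)) * v ^ j else 0 := by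
  rw [map_sum]
  refine Finset.sum_congr rfl fun j _ => ?_
  have hvj : v ^ j ∈ dQ I j := by rw [← dQ_pow]; exact Submodule.pow_mem_pow _ hv j
  split_ifs with h
  · obtain ⟨l, rfl⟩ := Nat.exists_eq_add_of_le h
    rw [mul_comm, gc_mul hI hvj, gc_aeval hI hY, Nat.add_sub_cancel_left, mul_comm]
  · rw [mul_comm, gc_mul_lt hI hvj _ (by omega)]

/-- The data obtained from graded Noether normalization and a primitive linear element. -/
lemma prim_data (hI : IsHomogIdeal I) (hprime : I.IsPrime)
    {s : ℕ} (hs1 : 1 ≤ s) {c c₀ : ℤ} (hs : IsSat I)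
    (hp : ∃ N : ℕ, ∀ k : ℕ, N ≤ k → 2 * (hf I k : ℤ) = s * (k * (k + 1)) + 2 * (c * k + c₀)) :
    ∃ (Y : Fin 3 → CR I) (z : CR I) (σ : ℕ),
      (∀ i, Y i ∈ dQ I 1) ∧ z ∈ dQ I 1 ∧ 1 ≤ σ ∧
      (∀ c : ℕ → MPoly 3, ∑ j ∈ Finset.range σ, aeval Y (c j) * z ^ j = 0 → ∀ j < σ, c j = 0) ∧
      (∃ c : ℕ → CR I, (∀ j, c j ∈ Submodule.span ℂ (Set.range Y) ^ (σ - j)) ∧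
        z ^ σ = ∑ j ∈ Finset.range σ, c j * z ^ j) ∧
      dQ I 1 ^ σ ≤ Submodule.span ℂ (Set.range Y) * dQ I 1 ^ (σ - 1) ∧
      (∀ i, ∀ v ∈ dQ I i, ∃ D, ∃ H ∈ Rk 3 D, H ≠ 0 ∧
        aeval Y H * v ∈ (Submodule.span ℂ (Set.range Y) ⊔ Submodule.span ℂ {z}) ^ (i + D)) := by
  have h1 : (1 : MPoly n) ∉ I := (Ideal.ne_top_iff_one I).1 hprime.ne_top
  obtain ⟨Y, hY, N, hN⟩ := noether hI hs h1 hp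
  have hfin := noether_finite hI hN
  have hinj := noether_inj hI hY hs1 hp hN
  letI : Algebra (MPoly 3) (CR I) := (aeval Y : MPoly 3 →ₐ[ℂ] CR I).toRingHom.toAlgebra
  have hst : IsScalarTower ℂ (MPoly 3) (CR I) := IsScalarTower.of_algebraMap_eq
    fun x => ((aeval Y : MPoly 3 →ₐ[ℂ] CR I).commutes x).symm
  have hmap : ∀ p : MPoly 3, algebraMap (MPoly 3) (CR I) p = aeval Y p := fun _ => rfl
  have : Module.Finite (MPoly 3) (CR I) := hfin
  have : IsDomain (CR I) := Ideal.Quotient.isDomain I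
  have hadj : Algebra.adjoin ℂ ((dQ I 1 : Submodule ℂ (CR I)) : Set (CR I)) = ⊤ := by
    rw [eq_top_iff]
    intro a _
    obtain ⟨f, rfl⟩ := cmk_surj a
    induction f using MvPolynomial.induction_on with
    | C c => exact Subalgebra.algebraMap_mem _ c
    | add p q hp hq => rw [map_add]; exact add_mem (hp trivial) (hq trivial)
    | mul_X p i hp =>
      rw [map_mul]
      exact mul_mem (hp trivial) (Algebra.subset_adjoin ⟨X i, isHomogeneous_X ℂ i, rfl⟩)
  obtain ⟨z, hz, σ, hσ, ha, hb, hc⟩ := prim_abs (P := MPoly 3) hinj (dQ I 1) hadj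
  set Pi := Submodule.span ℂ (Set.range Y) with hPi
  have hPiE : Pi ≤ dQ I 1 := span_Y_le hY
  -- homogeneous form of the integral equation
  have hrel : ∀ v ∈ dQ I 1, ∃ c : ℕ → CR I, (∀ j, c j ∈ Pi ^ (σ - j)) ∧
        v ^ σ = ∑ j ∈ Finset.range σ, c j * v ^ j := by
    intro v hv
    obtain ⟨p, hpm, hpd, hp0⟩ := hb v hv
    rw [aeval_as_sum p v (N := σ + 1) (by omega)] at hp0
    simp_rw [hmap] at hp0
    have h2 := gc_sum_pow hI hY hv p.coeff (σ + 1) σ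
    rw [hp0, map_zero, Finset.sum_range_succ, if_pos le_rfl, Nat.sub_self] at h2
    have h3 : p.coeff σ = 1 := by rw [← hpd]; exact hpm
    rw [h3, hc_self one_mem_Rk, map_one, one_mul] at h2
    refine ⟨fun j => -aeval Y (homogeneousComponent (σ - j) (p.coeff j)), fun j => ?_, ?_⟩
    · exact Submodule.neg_mem _ (aeval_mem_pow Y (hc_mem _ _))
    · rw [eq_comm, add_eq_zero_iff_neg_eq] at h2
      rw [← h2, ← Finset.sum_neg_distrib]
      refine Finset.sum_congr rfl fun j hj => ?_
      rw [if_pos (Finset.mem_range.1 hj).le, neg_mul]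
  refine ⟨Y, z, σ, hY, hz, hσ, ?_, hrel z hz, ?_, ?_⟩
  · intro c hc0 j hj
    set p : Polynomial (MPoly 3) := ∑ j ∈ Finset.range σ, Polynomial.C (c j) * Polynomial.X ^ j with hpdef
    have hcoef : ∀ i < σ, p.coeff i = c i := by
      intro i hi
      rw [hpdef, Polynomial.finsetSum_coeff, Finset.sum_eq_single i]
      · simp
      · intro b _ hb
        rw [Polynomial.coeff_C_mul, Polynomial.coeff_X_pow, if_neg (Ne.symm hb), mul_zero]
      · intro h; exact absurd (Finset.mem_range.2 hi) h
    have hdeg : p.natDegree < σ := by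
      rw [Nat.lt_iff_le_pred hσ, Polynomial.natDegree_le_iff_coeff_eq_zero]
      intro N hN
      rw [hpdef, Polynomial.finsetSum_coeff]
      refine Finset.sum_eq_zero fun i hi => ?_
      have := Finset.mem_range.1 hi
      rw [Polynomial.coeff_C_mul, Polynomial.coeff_X_pow, if_neg (by omega), mul_zero]
    have hp0 : Polynomial.aeval z p = 0 := by
      rw [aeval_as_sum p z hdeg, ← hc0]
      exact Finset.sum_congr rfl fun i hi => by rw [hcoef i (Finset.mem_range.1 hi), hmap]
    rw [← hcoef j hj, ha p hdeg hp0, Polynomial.coeff_zero]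
  · apply polarize
    intro v hv
    obtain ⟨c, hc, hv2⟩ := hrel v hv
    rw [hv2]
    refine Submodule.sum_mem _ fun j hj => ?_
    have hj := Finset.mem_range.1 hj
    have h4 : c j * v ^ j ∈ Pi ^ (σ - j) * dQ I 1 ^ j :=
      Submodule.mul_mem_mul (hc j) (Submodule.pow_mem_pow _ hv j)
    have h5 : Pi ^ (σ - j) * dQ I 1 ^ j ≤ Pi * dQ I 1 ^ (σ - 1) := by
      rw [show σ - j = (σ - 1 - j) + 1 by omega, pow_succ', mul_assoc]
      refine mul_le_mul' le_rfl ?_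
      calc _ ≤ dQ I 1 ^ (σ - 1 - j) * dQ I 1 ^ j := mul_le_mul' (pow_le_pow_left' hPiE _) le_rfl
        _ = _ := by rw [← pow_add]; congr 1; omega
    exact h5 h4
  · intro i v hv
    obtain ⟨b, hb0, p, hbp⟩ := hc v
    obtain ⟨D, hD⟩ : ∃ a, homogeneousComponent a b ≠ 0 := by
      by_contra! h
      apply hb0
      rw [← sum_homogeneousComponent b]
      exact Finset.sum_eq_zero fun i _ => h i
    refine ⟨D, homogeneousComponent D b, hc_mem _ _, hD, ?_⟩
    rw [Algebra.smul_def, hmap, aeval_as_sum p z (Nat.lt_succ_self _)] at hbp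
    simp_rw [hmap] at hbp
    have h2 := gc_sum_pow hI hY hz p.coeff (p.natDegree.succ) (i + D)
    rw [← hbp, mul_comm, gc_mul hI hv, gc_aeval hI hY, mul_comm] at h2
    rw [h2]
    refine Submodule.sum_mem _ fun j _ => ?_
    split_ifs with h
    · have h4 : aeval Y (homogeneousComponent (i + D - j) (p.coeff j)) * z ^ j ∈
          (Pi ⊔ Submodule.span ℂ {z}) ^ (i + D - j) * (Pi ⊔ Submodule.span ℂ {z}) ^ j := by
        refine Submodule.mul_mem_mul ?_ ?_
        · have hle : Pi ^ (i + D - j) ≤ (Pi ⊔ Submodule.span ℂ {z}) ^ (i + D - j) :=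
            pow_le_pow_left' le_sup_left _
          exact hle (aeval_mem_pow Y (hc_mem _ _))
        exact Submodule.pow_mem_pow _ (Submodule.mem_sup_right (Submodule.mem_span_singleton_self z)) j
      rwa [← pow_add, Nat.sub_add_cancel h] at h4
    · exact zero_mem _
end S17
end

section
open MvPolynomial Module
namespace S17

section uniform
variable {n : ℕ} {I : Ideal (MPoly n)}

/-- A common conductor form: one form `H` in the three linear elements multiplies all of `A` into the
subring generated by `Y₀, Y₁, Y₂, z`. -/
lemma uniform_form (hprime : I.IsPrime) {Y : Fin 3 → CR I} {z : CR I} {σ : ℕ} (hσ : 1 ≤ σ)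
    (hgen : dQ I 1 ^ σ ≤ Submodule.span ℂ (Set.range Y) * dQ I 1 ^ (σ - 1))
    (hH : ∀ i, ∀ v ∈ dQ I i, ∃ D, ∃ H ∈ Rk 3 D, H ≠ 0 ∧
        aeval Y H * v ∈ (Submodule.span ℂ (Set.range Y) ⊔ Submodule.span ℂ {z}) ^ (i + D)) :
    ∃ D, ∃ H ∈ Rk 3 D, H ≠ 0 ∧ ∀ i, ∀ v ∈ dQ I i,
        aeval Y H * v ∈ (Submodule.span ℂ (Set.range Y) ⊔ Submodule.span ℂ {z}) ^ (i + D) := by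
  classical
  set Pi := Submodule.span ℂ (Set.range Y) with hPi
  set Z := Pi ⊔ Submodule.span ℂ {z} with hZ
  have hPZ : Pi ≤ Z := le_sup_left
  have hform : ∀ D, ∀ H ∈ Rk 3 D, aeval Y H ∈ Z ^ D := by
    intro D H hH
    have hle : Pi ^ D ≤ Z ^ D := pow_le_pow_left' hPZ _
    exact hle (aeval_mem_pow Y hH)
  have key : ∀ S : Finset (ℕ × CR I), (∀ p ∈ S, p.2 ∈ dQ I p.1) →
      ∃ D, ∃ H ∈ Rk 3 D, H ≠ 0 ∧ ∀ p ∈ S, aeval Y H * p.2 ∈ Z ^ (p.1 + D) := by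
    intro S
    induction S using Finset.induction_on with
    | empty => exact fun _ => ⟨0, 1, one_mem_Rk, one_ne_zero, by simp⟩
    | insert p S hp ih =>
      intro h
      obtain ⟨D1, H1, h1, h10, h1S⟩ := ih fun q hq => h q (Finset.mem_insert_of_mem hq)
      obtain ⟨D2, H2, h2, h20, h2p⟩ := hH p.1 p.2 (h p (Finset.mem_insert_self _ _))
      refine ⟨D1 + D2, H1 * H2, mul_mem_Rk h1 h2, mul_ne_zero h10 h20, fun q hq => ?_⟩
      rcases Finset.mem_insert.1 hq with rfl | hq
      · have := Submodule.mul_mem_mul (hform D1 H1 h1) h2p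
        rw [← pow_add] at this
        rw [map_mul, mul_assoc, show q.1 + (D1 + D2) = D1 + (q.1 + D2) by omega]
        exact this
      · have := Submodule.mul_mem_mul (hform D2 H2 h2) (h1S q hq)
        rw [← pow_add] at this
        rw [map_mul, mul_comm (aeval Y H1), mul_assoc, show q.1 + (D1 + D2) = D2 + (q.1 + D1) by omega]
        exact this
  have hfg : ∀ i, ∃ S : Finset (CR I), Submodule.span ℂ (S : Set (CR I)) = dQ I i :=
    fun i => Module.Finite.iff_fg.1 (inferInstance : Module.Finite ℂ (dQ I i))
  choose S hS using hfg
  obtain ⟨D, H, hHD, hH0, hHS⟩ := key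
    ((Finset.range σ).biUnion fun i => (S i).image fun v => (i, v)) (by
      intro p hp
      simp only [Finset.mem_biUnion, Finset.mem_image] at hp
      obtain ⟨i, _, v, hv, rfl⟩ := hp
      change v ∈ dQ I i
      rw [← hS i]
      exact Submodule.subset_span hv)
  refine ⟨D, H, hHD, hH0, ?_⟩
  have hsmall : ∀ i < σ, ∀ v ∈ dQ I i, aeval Y H * v ∈ Z ^ (i + D) := by
    intro i hi v hv
    rw [← hS i] at hv
    have hle : Submodule.span ℂ (S i : Set (CR I)) ≤
        (Z ^ (i + D)).comap (LinearMap.mulLeft ℂ (aeval Y H)) := by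
      rw [Submodule.span_le]
      intro v hv
      refine hHS (i, v) ?_
      simp only [Finset.mem_biUnion, Finset.mem_image]
      exact ⟨i, Finset.mem_range.2 hi, v, hv, rfl⟩
    exact hle hv
  intro i
  induction i using Nat.strong_induction_on with
  | _ i ih =>
    rcases Nat.lt_or_ge i σ with h | h
    · exact hsmall i h
    · have hle : dQ I i ≤ Pi * dQ I (i - 1) := by
        rw [← dQ_pow I i, ← dQ_pow I (i - 1), show i = σ + (i - σ) by omega, pow_add,
          show σ + (i - σ) - 1 = (σ - 1) + (i - σ) by omega, pow_add, ← mul_assoc]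
        exact mul_le_mul' hgen le_rfl
      have hle2 : Pi * dQ I (i - 1) ≤ (Z ^ (i + D)).comap (LinearMap.mulLeft ℂ (aeval Y H)) := by
        rw [Submodule.mul_le]
        intro u hu v hv
        change aeval Y H * (u * v) ∈ Z ^ (i + D)
        rw [mul_left_comm, show i + D = 1 + (i - 1 + D) by omega, pow_add, pow_one]
        exact Submodule.mul_mem_mul (hPZ hu) (ih (i - 1) (by omega) v hv)
      intro v hv
      exact hle2 (hle hv)
end uniform

section genpos

/-- The substitution of a linear change of variables. -/
noncomputable def lin (h : Matrix (Fin 3) (Fin 3) ℂ) : MPoly 3 →ₐ[ℂ] MPoly 3 :=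
  aeval fun i => ∑ j, C (h i j) * X j

lemma aeval_lin {A : Type*} [CommRing A] [Algebra ℂ A] (Y : Fin 3 → A) (h : Matrix (Fin 3) (Fin 3) ℂ)
    (p : MPoly 3) : aeval Y (lin h p) = aeval (fun i => ∑ j, h i j • Y j) p := by
  rw [lin, MvPolynomial.comp_aeval_apply]
  congr 2
  funext i
  rw [map_sum]
  refine Finset.sum_congr rfl fun j _ => ?_
  rw [map_mul, aeval_C, aeval_X, Algebra.smul_def]

lemma lin_mem (h : Matrix (Fin 3) (Fin 3) ℂ) {D : ℕ} {p : MPoly 3} (hp : p ∈ Rk 3 D) : lin h p ∈ Rk 3 D := by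
  have := IsHomogeneous.aeval (mem_homogeneousSubmodule D p |>.1 hp) (fun i => ∑ j, C (h i j) * X j) (n := 1)
    (fun i => IsHomogeneous.sum _ _ _ fun j _ => by
      simpa using (isHomogeneous_C (Fin 3) (h i j)).mul (isHomogeneous_X ℂ j))
  rw [one_mul] at this
  exact this

lemma lin_comp {g h : Matrix (Fin 3) (Fin 3) ℂ} (hgh : g * h = 1) (p : MPoly 3) : lin h (lin g p) = p := by
  have : lin h (lin g p) = aeval (fun i => ∑ j, h i j • (X j : MPoly 3)) (lin g p) := by
    rw [lin]; congr 2; funext i; exact Finset.sum_congr rfl fun j _ => by rw [smul_eq_C_mul]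
  rw [this, aeval_lin]
  conv_rhs => rw [← aeval_X_left_apply p]
  congr 2
  funext i
  have h1 : ∀ j, g i j • ∑ k, h j k • (X k : MPoly 3) = ∑ k, (g i j * h j k) • (X k : MPoly 3) := by
    intro j; rw [Finset.smul_sum]; exact Finset.sum_congr rfl fun k _ => smul_smul _ _ _
  simp_rw [h1]
  rw [Finset.sum_comm]
  have h2 : ∀ k, ∑ j, (g i j * h j k) • (X k : MPoly 3) = (if i = k then (1:ℂ) else 0) • X k := by
    intro k
    rw [← Finset.sum_smul, ← Matrix.mul_apply, hgh, Matrix.one_apply]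
  simp_rw [h2]
  simp

/-- A nonzero form becomes nonzero at two coordinate points after a linear change of variables. -/
lemma exists_lin {H : MPoly 3} (hH : H ≠ 0) : ∃ g h : Matrix (Fin 3) (Fin 3) ℂ, g * h = 1 ∧ h * g = 1 ∧
    eval ![0, 0, 1] (lin h H) ≠ 0 ∧ eval ![0, 1, 0] (lin h H) ≠ 0 := by
  obtain ⟨p, hp⟩ : ∃ p : Fin 3 → ℂ, eval p (H * X 0) ≠ 0 := by
    by_contra! hc
    exact mul_ne_zero hH (X_ne_zero 0) (MvPolynomial.funext fun x => by rw [hc x, map_zero])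
  rw [map_mul, eval_X] at hp
  have hp0 : p 0 ≠ 0 := right_ne_zero_of_mul hp
  have hne : (C (p 0) * X 1 - C (p 1) * X 0 : MPoly 3) ≠ 0 := by
    intro hc
    have := congrArg (eval ![0, 1, 0]) hc
    simp at this
    exact hp0 this
  obtain ⟨q, hq⟩ : ∃ q : Fin 3 → ℂ, eval q (H * (C (p 0) * X 1 - C (p 1) * X 0)) ≠ 0 := by
    by_contra! hc
    exact mul_ne_zero hH hne (MvPolynomial.funext fun x => by rw [hc x, map_zero])
  rw [map_mul] at hq
  have hq1 := left_ne_zero_of_mul hq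
  have hq2 := right_ne_zero_of_mul hq
  simp only [map_sub, map_mul, eval_C, eval_X] at hq2
  set h : Matrix (Fin 3) (Fin 3) ℂ := !![0, q 0, p 0; 0, q 1, p 1; 1, q 2, p 2] with hh
  have hdet : IsUnit h.det := by
    rw [isUnit_iff_ne_zero, Matrix.det_fin_three]
    intro hc
    apply hq2
    simp [hh] at hc
    linear_combination -hc
  have hev : ∀ v : Fin 3 → ℂ, eval v (lin h H) = eval (fun i => ∑ j, h i j * v j) H := by
    intro v
    have := aeval_lin v h H
    simpa [aeval_eq_eval] using this
  refine ⟨h⁻¹, h, Matrix.nonsing_inv_mul _ hdet, Matrix.mul_nonsing_inv _ hdet, ?_, ?_⟩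
  · rw [hev]
    convert left_ne_zero_of_mul hp using 2
    congr 1
    funext i
    fin_cases i <;> simp [hh, Fin.sum_univ_three]
  · rw [hev]
    convert hq1 using 2
    congr 1
    funext i
    fin_cases i <;> simp [hh, Fin.sum_univ_three]
end genpos
end S17
end

/-! ### Dehomogenization -/

section
open MvPolynomial Module
namespace S17
variable {n : ℕ} {I : Ideal (MPoly n)}

/-- Noether normalization in general position with a primitive element and a uniform conductor form. -/
lemma prim_data_gp (hI : IsHomogIdeal I) (hprime : I.IsPrime)
    {s : ℕ} (hs1 : 1 ≤ s) {c c₀ : ℤ} (hs : IsSat I)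
    (hp : ∃ N : ℕ, ∀ k : ℕ, N ≤ k → 2 * (hf I k : ℤ) = s * (k * (k + 1)) + 2 * (c * k + c₀)) :
    ∃ (Y : Fin 3 → CR I) (z : CR I) (σ : ℕ) (D : ℕ) (H : MPoly 3),
      (∀ i, Y i ∈ dQ I 1) ∧ z ∈ dQ I 1 ∧ 1 ≤ σ ∧
      (∀ c : ℕ → MPoly 3, ∑ j ∈ Finset.range σ, aeval Y (c j) * z ^ j = 0 → ∀ j < σ, c j = 0) ∧
      (∃ c : ℕ → CR I, (∀ j, c j ∈ Submodule.span ℂ (Set.range Y) ^ (σ - j)) ∧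
        z ^ σ = ∑ j ∈ Finset.range σ, c j * z ^ j) ∧
      dQ I 1 ^ σ ≤ Submodule.span ℂ (Set.range Y) * dQ I 1 ^ (σ - 1) ∧
      H ∈ Rk 3 D ∧ eval ![0, 0, 1] H ≠ 0 ∧ eval ![0, 1, 0] H ≠ 0 ∧
      (∀ i, ∀ v ∈ dQ I i,
        aeval Y H * v ∈ (Submodule.span ℂ (Set.range Y) ⊔ Submodule.span ℂ {z}) ^ (i + D)) := by
  obtain ⟨Y, z, σ, hY, hz, hσ, hind, hrel, hgen, hH⟩ := prim_data hI hprime hs1 hs hp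
  obtain ⟨D, H, hHD, hH0, hHm⟩ := uniform_form hprime hσ hgen hH
  obtain ⟨g, h, hgh, hhg, he1, he2⟩ := exists_lin hH0
  set Y' : Fin 3 → CR I := fun i => ∑ j, g i j • Y j with hY'
  have hYY : (fun i => ∑ j, h i j • Y' j) = Y := by
    funext i
    have h1 : ∀ j, h i j • Y' j = ∑ k, (h i j * g j k) • Y k := by
      intro j; rw [hY', Finset.smul_sum]; exact Finset.sum_congr rfl fun k _ => smul_smul _ _ _
    simp_rw [h1]
    rw [Finset.sum_comm]
    have h2 : ∀ k, ∑ j, (h i j * g j k) • Y k = (if i = k then (1:ℂ) else 0) • Y k := by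
      intro k
      rw [← Finset.sum_smul, ← Matrix.mul_apply, hhg, Matrix.one_apply]
    simp_rw [h2]
    simp
  have hspan : Submodule.span ℂ (Set.range Y') = Submodule.span ℂ (Set.range Y) := by
    apply le_antisymm
    · rw [Submodule.span_le]
      rintro _ ⟨i, rfl⟩
      exact Submodule.sum_mem _ fun j _ => Submodule.smul_mem _ _ (Submodule.subset_span ⟨j, rfl⟩)
    · rw [Submodule.span_le]
      rintro _ ⟨i, rfl⟩
      rw [← hYY]
      exact Submodule.sum_mem _ fun j _ => Submodule.smul_mem _ _ (Submodule.subset_span ⟨j, rfl⟩)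
  refine ⟨Y', z, σ, D, lin h H, fun i => ?_, hz, hσ, ?_, ?_, ?_, lin_mem h hHD, he1, he2, ?_⟩
  · exact Submodule.sum_mem _ fun j _ => Submodule.smul_mem _ _ (hY j)
  · intro c hc j hj
    have h1 : ∀ p, aeval Y' p = aeval Y (lin g p) := fun p => (aeval_lin Y g p).symm
    simp_rw [h1] at hc
    have h2 := hind (fun j => lin g (c j)) hc j hj
    rw [← lin_comp hgh (c j)]
    have h3 : lin g (c j) = 0 := h2
    rw [h3, map_zero]
  · rw [hspan]; exact hrel
  · rw [hspan]; exact hgen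
  · rw [hspan, aeval_lin, hYY]; exact hHm

section dehom
variable {A L : Type*} [CommRing A] [Algebra ℂ A] [Field L] [Algebra ℂ L]

/-- Dehomogenization of a graded piece: `a ↦ t ^ i * a`. -/
noncomputable def theta (ι : A →ₐ[ℂ] L) (t : L) (i : ℕ) (X : Submodule ℂ A) : Submodule ℂ L :=
  X.map ((LinearMap.mulLeft ℂ (t ^ i)).comp ι.toLinearMap)

variable {ι : A →ₐ[ℂ] L} {t : L}

lemma mem_theta {i : ℕ} {X : Submodule ℂ A} {v : L} : v ∈ theta ι t i X ↔ ∃ a ∈ X, t ^ i * ι a = v := Iff.rfl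

lemma theta_mono (i : ℕ) {X X' : Submodule ℂ A} (h : X ≤ X') : theta ι t i X ≤ theta ι t i X' :=
  Submodule.map_mono h

lemma theta_mul (i j : ℕ) (X X' : Submodule ℂ A) :
    theta ι t i X * theta ι t j X' = theta ι t (i + j) (X * X') := by
  apply le_antisymm
  · rw [Submodule.mul_le]
    rintro _ ⟨a, ha, rfl⟩ _ ⟨b, hb, rfl⟩
    refine ⟨a * b, Submodule.mul_mem_mul ha hb, ?_⟩
    simp only [LinearMap.comp_apply, LinearMap.mulLeft_apply, AlgHom.toLinearMap_apply, map_mul, pow_add]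
    ring
  · unfold theta
    rw [Submodule.map_le_iff_le_comap, Submodule.mul_le]
    intro a ha b hb
    have : ((LinearMap.mulLeft ℂ (t ^ (i + j))).comp ι.toLinearMap) (a * b) =
        ((LinearMap.mulLeft ℂ (t ^ i)).comp ι.toLinearMap) a *
        ((LinearMap.mulLeft ℂ (t ^ j)).comp ι.toLinearMap) b := by
      simp only [LinearMap.comp_apply, LinearMap.mulLeft_apply, AlgHom.toLinearMap_apply, map_mul, pow_add]
      ring
    rw [Submodule.mem_comap, this]
    exact Submodule.mul_mem_mul (Submodule.mem_map_of_mem ha) (Submodule.mem_map_of_mem hb)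

lemma theta_pow (X : Submodule ℂ A) (i : ℕ) : theta ι t 1 X ^ i = theta ι t i (X ^ i) := by
  induction i with
  | zero =>
    rw [pow_zero, pow_zero]
    apply le_antisymm
    · intro x hx
      obtain ⟨c, rfl⟩ := Submodule.mem_one.1 hx
      exact ⟨algebraMap ℂ A c, Submodule.algebraMap_mem c, by simp⟩
    · rintro _ ⟨a, ha, rfl⟩
      obtain ⟨c, rfl⟩ := Submodule.mem_one.1 ha
      simpa using Submodule.algebraMap_mem c
  | succ i ih => rw [pow_succ, ih, theta_mul, pow_succ]

lemma finrank_theta (hι : Function.Injective ι) (ht : t ≠ 0) (i : ℕ) (X : Submodule ℂ A) :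
    finrank ℂ (theta ι t i X) = finrank ℂ X := by
  refine finrank_map_inj (fun a b hab => hι ?_) X
  exact mul_left_cancel₀ (pow_ne_zero i ht) hab
end dehom
end S17
end

section
open MvPolynomial Module
namespace S17

lemma aeval_smul_hom {L : Type*} [Field L] [Algebra ℂ L] {D : ℕ} {H : MPoly 3} (hH : H ∈ Rk 3 D) (t : L)
    (Y : Fin 3 → L) : aeval (fun i => t * Y i) H = t ^ D * aeval Y H := by
  rw [aeval_def, aeval_def, eval₂_eq', eval₂_eq', Finset.mul_sum]
  refine Finset.sum_congr rfl fun d hd => ?_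
  have h1 := (mem_homogeneousSubmodule D H).1 hH (mem_support_iff.1 hd)
  have h2 : ∑ i, d i = D := by
    rw [← h1, Finsupp.weight_apply, Finsupp.sum_fintype _ _ (by simp)]
    simp
  simp_rw [mul_pow]
  rw [Finset.prod_mul_distrib, Finset.prod_pow_eq_pow_sum, h2]
  ring

section
variable {A L : Type*} [CommRing A] [Algebra ℂ A] [Field L] [Algebra ℂ L]

/-- Dehomogenizing the Noether normalization data. -/
lemma exists_SM (ι : A →ₐ[ℂ] L) (hι : Function.Injective ι) (E : Submodule ℂ A) (hE : E.FG)
    (Y : Fin 3 → A) (z : A) (σ D : ℕ) (H : MPoly 3) (hY : ∀ i, Y i ∈ E) (hz : z ∈ E) (hσ : 2 ≤ σ)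
    (hind : ∀ c : ℕ → MPoly 3, ∑ j ∈ Finset.range σ, aeval Y (c j) * z ^ j = 0 → ∀ j < σ, c j = 0)
    (hrel : ∃ c : ℕ → A, (∀ j, c j ∈ Submodule.span ℂ (Set.range Y) ^ (σ - j)) ∧
        z ^ σ = ∑ j ∈ Finset.range σ, c j * z ^ j)
    (hgen : E ^ σ ≤ Submodule.span ℂ (Set.range Y) * E ^ (σ - 1))
    (hH : H ∈ Rk 3 D) (hHa : eval ![0, 0, 1] H ≠ 0) (hHb : eval ![0, 1, 0] H ≠ 0)
    (hHm : ∀ i, ∀ v ∈ E ^ i,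
        aeval Y H * v ∈ (Submodule.span ℂ (Set.range Y) ⊔ Submodule.span ℂ {z}) ^ (i + D)) :
    ∃ (t : L) (S : SM L), t ≠ 0 ∧ S.V = theta ι t 1 E := by
  classical
  have hY2 : Y 2 ≠ 0 := by
    intro h0
    have := hind (fun j => if j = 0 then X 2 else 0) (by
      refine Finset.sum_eq_zero fun j _ => ?_
      split_ifs
      · rw [aeval_X, h0, zero_mul]
      · rw [map_zero, zero_mul]) 0 (by omega)
    simp at this
  have hι2 : ι (Y 2) ≠ 0 := fun h => hY2 (hι (by rw [h, map_zero]))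
  set t : L := (ι (Y 2))⁻¹ with ht
  have ht0 : t ≠ 0 := inv_ne_zero hι2
  have ht2 : t * ι (Y 2) = 1 := inv_mul_cancel₀ hι2
  set Pi := Submodule.span ℂ (Set.range Y) with hPi
  have hP : Submodule.span ℂ {1, t * ι (Y 0), t * ι (Y 1)} = theta ι t 1 Pi := by
    rw [theta, hPi, Submodule.map_span]
    congr 1
    rw [← Set.range_comp]
    ext x
    simp only [Set.mem_insert_iff, Set.mem_singleton_iff, Set.mem_range, Fin.exists_fin_succ, Function.comp,
      LinearMap.comp_apply, LinearMap.mulLeft_apply, AlgHom.toLinearMap_apply, pow_one]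
    simp [ht2, eq_comm]
    tauto
  have hB : Submodule.span ℂ {1, t * ι (Y 0), t * ι (Y 1), t * ι z} =
      theta ι t 1 (Pi ⊔ Submodule.span ℂ {z}) := by
    have h1 : theta ι t 1 (Pi ⊔ Submodule.span ℂ {z}) = theta ι t 1 Pi ⊔ theta ι t 1 (Submodule.span ℂ {z}) :=
      Submodule.map_sup _ _ _
    have h2 : theta ι t 1 (Submodule.span ℂ {z}) = Submodule.span ℂ {t * ι z} := by
      rw [theta, Submodule.map_span, Set.image_singleton]
      simp
    rw [h1, h2, ← hP, ← Submodule.span_union]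
    congr 1
    ext x
    simp only [Set.mem_insert_iff, Set.mem_singleton_iff, Set.mem_union]
    tauto
  have hmem : ∀ a ∈ E, t * ι a ∈ theta ι t 1 E := fun a ha => ⟨a, ha, by simp⟩
  have hindep : LinearIndependent ℂ (fun p : (ℕ × ℕ) × Fin σ =>
      (t * ι (Y 0)) ^ p.1.1 * (t * ι (Y 1)) ^ p.1.2 * (t * ι z) ^ (p.2 : ℕ)) := by
    rw [linearIndependent_iff']
    intro s g hg
    obtain ⟨N, hN⟩ : ∃ N, ∀ p ∈ s, p.1.1 + p.1.2 + (p.2 : ℕ) ≤ N :=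
      ⟨s.sup fun p => p.1.1 + p.1.2 + (p.2 : ℕ), fun p hp =>
        Finset.le_sup (f := fun p : (ℕ × ℕ) × Fin σ => p.1.1 + p.1.2 + (p.2 : ℕ)) hp⟩
    set mon : (ℕ × ℕ) × Fin σ → (Fin 3 →₀ ℕ) := fun p =>
      Finsupp.single 0 p.1.1 + Finsupp.single 1 p.1.2 + Finsupp.single 2 (N - (p.1.1 + p.1.2 + (p.2 : ℕ))) with hmon
    set c : ℕ → MPoly 3 := fun j => ∑ p ∈ s.filter (fun p => (p.2 : ℕ) = j), monomial (mon p) (g p) with hc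
    have hc0 := hind c (by
      apply hι
      rw [map_zero]
      have h1 : ∀ p ∈ s, ι (aeval Y (monomial (mon p) (g p)) * z ^ (p.2 : ℕ)) =
          ι (Y 2) ^ N * (g p • ((t * ι (Y 0)) ^ p.1.1 * (t * ι (Y 1)) ^ p.1.2 * (t * ι z) ^ (p.2 : ℕ))) := by
        intro p hp
        have hN' := hN p hp
        have h2 : aeval Y (monomial (mon p) (g p)) =
            g p • (Y 0 ^ p.1.1 * Y 1 ^ p.1.2 * Y 2 ^ (N - (p.1.1 + p.1.2 + (p.2 : ℕ)))) := by
          rw [aeval_monomial, Algebra.smul_def, Finsupp.prod_fintype _ _ (by simp), Fin.prod_univ_three]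
          simp [hmon]
        have h3 : ι (Y 2) ^ N = ι (Y 2) ^ (N - (p.1.1 + p.1.2 + (p.2 : ℕ))) *
            (ι (Y 2) ^ p.1.1 * ι (Y 2) ^ p.1.2 * ι (Y 2) ^ (p.2 : ℕ)) := by
          rw [← pow_add, ← pow_add, ← pow_add]; congr 1; omega
        have h4 : ∀ k, ι (Y 2) ^ k * t ^ k = 1 := fun k => by
          rw [← mul_pow, mul_comm, ht2, one_pow]
        rw [h2, h3, smul_mul_assoc, map_smul, mul_smul_comm]
        congr 1
        simp only [map_mul, map_pow, mul_pow]
        linear_combination (-(ι (Y 0) ^ p.1.1 * ι (Y 1) ^ p.1.2 * ι (Y 2) ^ (N - (p.1.1 + p.1.2 + (p.2 : ℕ))) * ι z ^ (p.2 : ℕ))) *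
          (h4 p.1.1 * (ι (Y 2) ^ p.1.2 * t ^ p.1.2) * (ι (Y 2) ^ (p.2 : ℕ) * t ^ (p.2 : ℕ)) + h4 p.1.2 * (ι (Y 2) ^ (p.2 : ℕ) * t ^ (p.2 : ℕ)) + h4 p.2)
      have h5 : ∑ j ∈ Finset.range σ, aeval Y (c j) * z ^ j =
          ∑ p ∈ s, aeval Y (monomial (mon p) (g p)) * z ^ (p.2 : ℕ) := by
        rw [← Finset.sum_fiberwise_of_maps_to (s := s) (t := Finset.range σ) (g := fun p => (p.2 : ℕ))
          (fun p _ => Finset.mem_range.2 p.2.2)]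
        refine Finset.sum_congr rfl fun j _ => ?_
        rw [hc, map_sum, Finset.sum_mul]
        refine Finset.sum_congr rfl fun p hp => ?_
        rw [(Finset.mem_filter.1 hp).2]
      rw [h5, map_sum, Finset.sum_congr rfl h1, ← Finset.mul_sum, hg, mul_zero])
    intro p hp
    have h6 := hc0 p.2 p.2.2
    have h7 : coeff (mon p) (c p.2) = g p := by
      rw [hc, coeff_sum, Finset.sum_eq_single p]
      · rw [coeff_monomial, if_pos rfl]
      · intro q hq hqp
        rw [coeff_monomial, if_neg]
        intro he
        apply hqp
        have hq2 := (Finset.mem_filter.1 hq).2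
        have e0 := DFunLike.congr_fun he 0
        have e1 := DFunLike.congr_fun he 1
        simp [hmon] at e0 e1
        exact Prod.ext (Prod.ext e0 e1) (Fin.ext hq2)
      · intro h
        exact (h (Finset.mem_filter.2 ⟨hp, rfl⟩)).elim
    rw [← h7, h6, coeff_zero]
  refine ⟨t, SM.mk (theta ι t 1 E) (t * ι (Y 0)) (t * ι (Y 1)) (t * ι z) σ D H (hE.map _)
    (by rw [← ht2]; exact hmem _ (hY 2)) (hmem _ (hY 0)) (hmem _ (hY 1)) (hmem _ hz) hσ hindep ?_ ?_ hH hHa hHb ?_,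
    ht0, rfl⟩
  · obtain ⟨c, hc, hz⟩ := hrel
    refine ⟨fun j => t ^ (σ - j) * ι (c j), fun j => ?_, ?_⟩
    · rw [hP, theta_pow]
      exact ⟨c j, hc j, rfl⟩
    · rw [mul_pow, ← map_pow, hz, map_sum, Finset.mul_sum]
      refine Finset.sum_congr rfl fun j hj => ?_
      have := Finset.mem_range.1 hj
      rw [map_mul, map_pow, mul_pow, show t ^ σ = t ^ (σ - j) * t ^ j by rw [← pow_add]; congr 1; omega]
      ring
  · rw [hP, theta_pow, theta_pow, theta_mul, show 1 + (σ - 1) = σ by omega]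
    exact theta_mono _ hgen
  · intro i v hv
    rw [theta_pow] at hv
    obtain ⟨a, ha, rfl⟩ := mem_theta.1 hv
    rw [hB, theta_pow]
    refine ⟨aeval Y H * a, hHm i a ha, ?_⟩
    have h1 : (![t * ι (Y 0), t * ι (Y 1), 1] : Fin 3 → L) = fun i => t * ι (Y i) := by
      funext i; fin_cases i <;> simp [ht2]
    rw [h1, aeval_smul_hom hH]
    have h2 : aeval (fun i => ι (Y i)) H = ι (aeval Y H) := (MvPolynomial.comp_aeval_apply Y ι H).symm
    rw [h2]
    simp only [LinearMap.comp_apply, LinearMap.mulLeft_apply, AlgHom.toLinearMap_apply, map_mul, pow_add]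
    ring
end
end S17
end

/-! ### The Hilbert function of an integral surface -/

section
open MvPolynomial Module
namespace S17
variable {n : ℕ} {I : Ideal (MPoly n)}

/-- The Hilbert function of the subspace of `A_k` cut out by a larger ideal. -/
lemma finrank_Ik_map {J : Ideal (MPoly n)} (hIJ : I ≤ J) (k : ℕ) :
    finrank ℂ ((Ik J k).map (cmk I).toLinearMap) + hf J k = hf I k := by
  have h1 := LinearMap.finrank_range_add_finrank_ker ((cmk I).toLinearMap.domRestrict (Ik J k))
  rw [LinearMap.range_domRestrict] at h1
  have h2 : finrank ℂ (LinearMap.ker ((cmk I).toLinearMap.domRestrict (Ik J k))) = finrank ℂ (Ik I k) := by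
    rw [← finrank_map_inj (Submodule.subtype_injective (Ik J k))]
    have : Submodule.map (Ik J k).subtype (LinearMap.ker ((cmk I).toLinearMap.domRestrict (Ik J k))) = Ik I k := by
      ext f
      constructor
      · rintro ⟨⟨g, hg⟩, h, rfl⟩
        exact mem_Ik.2 ⟨(mem_Ik.1 hg).1, cmk_eq_zero.1 h⟩
      · intro hf
        have := mem_Ik.1 hf
        exact ⟨⟨f, mem_Ik.2 ⟨this.1, hIJ this.2⟩⟩, cmk_eq_zero.2 this.2, rfl⟩
    rw [this]
  have h3 := hf_add I k
  have h4 := hf_add J k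
  rw [h2] at h1
  have h1' : finrank ℂ ((Ik J k).map (cmk I).toLinearMap) + finrank ℂ (Ik I k) = finrank ℂ (Ik J k) := h1
  omega

/-- The Hilbert function of a nondegenerate integral surface of degree `s` in `ℙ^(e+2)` agrees with its
Hilbert polynomial in degree `m`, as soon as `s ^ 3 ≤ 2 e (m + 1)`. -/
theorem surface_hilb (hI : IsHomogIdeal I) (hprime : I.IsPrime) {e s : ℕ} (he : 1 ≤ e)
    (hV : hf I 1 = e + 3) (hs1 : 1 ≤ s) {c c₀ : ℤ} (hs : IsSat I)
    (hp : ∃ N : ℕ, ∀ k : ℕ, N ≤ k → 2 * (hf I k : ℤ) = s * (k * (k + 1)) + 2 * (c * k + c₀))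
    {m : ℕ} (hm : s ^ 3 ≤ 2 * e * (m + 1)) :
    2 * (hf I m : ℤ) = s * (m * (m + 1)) + 2 * (c * m + c₀) := by
  have : IsDomain (CR I) := Ideal.Quotient.isDomain I
  have h1 : (1 : MPoly n) ∉ I := (Ideal.ne_top_iff_one I).1 hprime.ne_top
  obtain ⟨Y, z, σ, D, H, hY, hz, hσ, hind, hrel, hgen, hHD, hHa, hHb, hHm⟩ := prim_data_gp hI hprime hs1 hs hp
  have hσ2 : 2 ≤ σ := by
    by_contra hlt
    obtain rfl : σ = 1 := by omega
    have h2 : dQ I 1 ≤ Submodule.span ℂ (Set.range Y) := by simpa using hgen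
    have hfin : Module.Finite ℂ (Submodule.span ℂ (Set.range Y)) := Module.Finite.span_of_finite ℂ (Set.finite_range Y)
    have h3 := Submodule.finrank_mono h2
    have h4 := finrank_range_le_card (R := ℂ) Y
    rw [Set.finrank, Fintype.card_fin] at h4
    rw [finrank_dQ, hV] at h3
    omega
  set L := FractionRing (CR I)
  set ι : CR I →ₐ[ℂ] L := Algebra.ofId (CR I) L |>.restrictScalars ℂ with hι
  have hinj : Function.Injective ι := IsFractionRing.injective (CR I) L
  have hE : (dQ I 1).FG := Module.Finite.iff_fg.1 inferInstance
  obtain ⟨t, S, ht, hSV⟩ := exists_SM ι hinj (dQ I 1) hE Y z σ D H hY hz hσ2 hind hrel hgen hHD hHa hHb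
    (fun i v hv => hHm i v (by rwa [dQ_pow] at hv))
  have hVk : ∀ k, S.V ^ k = theta ι t k (dQ I k) := fun k => by rw [hSV, theta_pow, dQ_pow]
  have hfr : ∀ k, finrank ℂ ↥(S.V ^ k) = hf I k := fun k => by
    rw [hVk, finrank_theta hinj ht, finrank_dQ]
  have hres := S.hilb_eq he (s := s) (c := c) (c₀ := c₀) (m := m)
    (by rw [← pow_one S.V, hfr, hV])
    (by
      obtain ⟨N, hN⟩ := hp
      exact ⟨N, fun k hk => by rw [hfr]; exact hN k hk⟩)
    ?_ hm
  · rwa [hfr] at hres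
  intro hc y hy hy0 k hk W hW hWq
  -- lift `y` to a linear form
  rw [hSV] at hy
  obtain ⟨a, ha, rfl⟩ := mem_theta.1 hy
  obtain ⟨f, hf1, rfl⟩ := mem_dQ.1 ha
  have hfI : f ∉ I := fun h => hy0 (by rw [cmk_eq_zero.2 h, map_zero, mul_zero])
  have hreg : RegMod f I := by
    intro g hg
    exact (hprime.mem_or_mem hg).resolve_left hfI
  set J := satIdeal (I ⊔ Ideal.span {f}) with hJ
  have hhom := isHomog_sup_span hI hf1
  have hIJ : I ≤ J := le_sup_left.trans (le_sat _)
  obtain ⟨N1, hN1⟩ := cut hI hs h1 hf1 hreg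
  obtain ⟨N, hN⟩ := hp
  have hJp : ∃ N : ℕ, ∀ k : ℕ, N ≤ k → (hf J k : ℤ) = s * k + c := by
    refine ⟨N + N1 + 1, fun k hk => ?_⟩
    obtain ⟨j, rfl⟩ : ∃ j, k = j + 1 := ⟨k - 1, by omega⟩
    have e1 := (hN1 j (by omega)).1
    have e2 := hN j (by omega)
    have e3 := hN (j + 1) (by omega)
    push_cast at e3 ⊢
    have e1' : (hf J (j + 1) : ℤ) + hf I j = hf I (j + 1) := by exact_mod_cast e1
    linarith
  have hJk := hf_curve (isHomog_sat hhom) (isSat_sat _) hs1 hc hJp (k + 1) hk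
  have hWW : W ≤ theta ι t (k + 1) ((Ik J (k + 1)).map (cmk I).toLinearMap) := by
    intro w hw
    have hwV := hW hw
    rw [hVk] at hwV
    obtain ⟨b, hb, rfl⟩ := mem_theta.1 hwV
    obtain ⟨F, hF, rfl⟩ := mem_dQ.1 hb
    refine ⟨cmk I F, ⟨F, mem_Ik.2 ⟨hF, ?_⟩, rfl⟩, rfl⟩
    obtain ⟨M, hM⟩ := hWq _ hw
    rw [hJ, mem_sat_iff]
    refine ⟨M, fun g hg => ?_⟩
    obtain ⟨q, hq, hgq⟩ := hM (t ^ M * ι (cmk I g)) (by rw [hVk]; exact ⟨_, ⟨g, hg, rfl⟩, rfl⟩)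
    rw [hVk] at hq
    obtain ⟨b, hb, rfl⟩ := mem_theta.1 hq
    obtain ⟨G, hG, rfl⟩ := mem_dQ.1 hb
    have h5 : t ^ (M + (k + 1)) * ι (cmk I (g * F)) = t ^ (M + (k + 1)) * ι (cmk I (f * G)) := by
      rw [map_mul, map_mul, map_mul, map_mul]
      linear_combination hgq
    have h6 := hinj (mul_left_cancel₀ (pow_ne_zero _ ht) h5)
    have h7 : g * F - f * G ∈ I := cmk_eq_zero.1 (by rw [map_sub, h6, sub_self])
    have : g * F = (g * F - f * G) + f * G := by ring
    rw [this]
    exact Ideal.add_mem _ (Ideal.mem_sup_left h7)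
      (Ideal.mul_mem_right _ _ (Ideal.mem_sup_right (Ideal.mem_span_singleton_self f)))
  have hfin : Module.Finite ℂ (theta ι t (k + 1) ((Ik J (k + 1)).map (cmk I).toLinearMap)) := by
    unfold theta; infer_instance
  have h8 := Submodule.finrank_mono hWW
  rw [finrank_theta hinj ht] at h8
  have h9 := finrank_Ik_map hIJ (k + 1)
  rw [hfr, ← hJk]
  exact_mod_cast (by omega : finrank ℂ W + hf J (k + 1) ≤ hf I (k + 1))
end S17
end

/-! ### Hyperplane sections and graded homomorphisms -/

section
open MvPolynomial Module
namespace S17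
variable {n : ℕ} {I : Ideal (MPoly n)}

/-- Hopf's inequality for the multiplication of a domain. -/
lemma hopf_mul {A : Type*} [CommRing A] [IsDomain A] [Algebra ℂ A] {P Q T : Submodule ℂ A}
    [FiniteDimensional ℂ P] [FiniteDimensional ℂ Q] [FiniteDimensional ℂ T]
    (h : ∀ x ∈ P, ∀ y ∈ Q, x * y ∈ T) (hP : 0 < finrank ℂ P) (hQ : 0 < finrank ℂ Q) :
    finrank ℂ P + finrank ℂ Q ≤ finrank ℂ T + 1 := by
  let b : P →ₗ[ℂ] Q →ₗ[ℂ] T :=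
    LinearMap.mk₂ ℂ (fun x y => ⟨x.1 * y.1, h _ x.2 _ y.2⟩)
      (fun _ _ _ => Subtype.ext (add_mul _ _ _))
      (fun _ _ _ => Subtype.ext (smul_mul_assoc _ _ _))
      (fun _ _ _ => Subtype.ext (mul_add _ _ _))
      (fun _ _ _ => Subtype.ext (mul_smul_comm _ _ _))
  have hinj : ∀ x : P, x ≠ 0 → Function.Injective (b x) := by
    intro x hx y y' hyy
    have h1 : x.1 * y.1 = x.1 * y'.1 := congrArg Subtype.val hyy
    exact Subtype.ext (mul_left_cancel₀ (by simpa using hx) h1)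
  have h1 := hopf (V := P) (U := Dual ℂ T) (W := Dual ℂ Q) (Module.Dual.transpose.comp b)
    (fun x hx => LinearMap.dualMap_surjective_of_injective (hinj x hx)) hP
    (by rwa [Subspace.dual_finrank_eq])
  rw [Subspace.dual_finrank_eq, Subspace.dual_finrank_eq] at h1
  omega

lemma degQZ_cast (I : Ideal (MPoly n)) (t : ℕ) : degQZ I (t : ℤ) = degQ I t := by
  rw [degQZ, if_pos (by positivity), Int.toNat_natCast]

lemma hilbNat_cast (I : Ideal (MPoly n)) (t : ℕ) : hilbNat I (t : ℤ) = hf I t := by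
  rw [hilbNat, degQZ_cast, hf]

lemma mem_degQ {k : ℕ} {a : MPoly n ⧸ I} :
    a ∈ degQ I k ↔ ∃ f ∈ Rk n k, Ideal.Quotient.mk I f = a := Iff.rfl

lemma mId_pow_le_of {N : ℕ} {J : Ideal (MPoly n)} (h : ∀ g ∈ Rk n N, g ∈ J) : mId n ^ N ≤ J := by
  have h1 : mId n ^ N ≤ Ideal.span (Rk n N : Set (MPoly n)) := by
    clear h
    induction N with
    | zero =>
      rw [pow_zero, Ideal.one_eq_top, top_le_iff, Ideal.eq_top_iff_one]
      exact Ideal.subset_span one_mem_Rk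
    | succ N ih =>
      rw [pow_succ]
      refine (Ideal.mul_mono_left ih).trans ?_
      rw [mId, Ideal.span_mul_span', Ideal.span_le]
      rintro _ ⟨f, hf, _, ⟨j, rfl⟩, rfl⟩
      exact Ideal.subset_span (mul_mem_Rk hf (isHomogeneous_X ℂ j))
  exact h1.trans (Ideal.span_le.2 h)

lemma Rk_le_mId_pow {N k : ℕ} (hk : N ≤ k) {g : MPoly n} (hg : g ∈ Rk n k) : g ∈ mId n ^ N :=
  Ideal.pow_le_pow_right hk (mId_pow_le le_rfl g hg)

section Hom
variable {l : MPoly n}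

/-- Evaluation of a homomorphism `m^k → R/I` at the `k`-th power of a linear form. -/
noncomputable def evPow (I : Ideal (MPoly n)) (hl : l ∈ Rk n 1) (k : ℕ) :
    ((mId n ^ k : Ideal (MPoly n)) →ₗ[MPoly n] (MPoly n ⧸ I)) →ₗ[ℂ] (MPoly n ⧸ I) where
  toFun φ := φ ⟨l ^ k, Rk_le_mId_pow le_rfl (pow_mem_Rk_one hl k)⟩
  map_add' _ _ := rfl
  map_smul' _ _ := rfl

lemma evPow_mul (hl : l ∈ Rk n 1) {k : ℕ} (φ : (mId n ^ k : Ideal (MPoly n)) →ₗ[MPoly n] (MPoly n ⧸ I))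
    {g : MPoly n} (hg : g ∈ mId n ^ k) :
    Ideal.Quotient.mk I g * evPow I hl k φ = Ideal.Quotient.mk I l ^ k * φ ⟨g, hg⟩ := by
  have h : ∀ (f : MPoly n) (x : MPoly n ⧸ I), Ideal.Quotient.mk I f * x = f • x := fun f x => rfl
  rw [← map_pow, h, h, evPow]
  simp only [LinearMap.coe_mk, AddHom.coe_mk]
  rw [← map_smul, ← map_smul]
  congr 1
  exact Subtype.ext (mul_comm _ _)

lemma mk_ne_zero (hlI : l ∉ I) : Ideal.Quotient.mk I l ≠ 0 := fun h => hlI (Ideal.Quotient.eq_zero_iff_mem.1 h)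

lemma evPow_injective [I.IsPrime] (hl : l ∈ Rk n 1) (hlI : l ∉ I)
    (k : ℕ) : Function.Injective (evPow I hl k) := by
  rw [← LinearMap.ker_eq_bot, LinearMap.ker_eq_bot']
  intro φ hφ
  ext ⟨g, hg⟩
  have h1 := evPow_mul hl φ hg
  rw [hφ, mul_zero] at h1
  simpa using (mul_eq_zero.1 h1.symm).resolve_left (pow_ne_zero _ (mk_ne_zero hlI))

/-- The degree of the value of a graded homomorphism on `l ^ k`. -/
lemma evPow_mem (hl : l ∈ Rk n 1) {k t : ℕ} {φ} (hφ : φ ∈ gradedHomSub I k (t : ℤ)) :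
    evPow I hl k φ ∈ degQ I (k + t) := by
  have := hφ k (l ^ k) (Rk_le_mId_pow le_rfl (pow_mem_Rk_one hl k)) (pow_mem_Rk_one hl k)
  rw [← Nat.cast_add, degQZ_cast] at this
  exact this

/-- Multiplication by a power of a linear form on `R/I`. -/
noncomputable def mulPow (I : Ideal (MPoly n)) (l : MPoly n) (k : ℕ) :
    (MPoly n ⧸ I) →ₗ[ℂ] (MPoly n ⧸ I) := LinearMap.mulLeft ℂ (Ideal.Quotient.mk I l ^ k)

lemma mulPow_injective [I.IsPrime] (hlI : l ∉ I) (k : ℕ) : Function.Injective (mulPow I l k) :=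
  fun _ _ h => mul_left_cancel₀ (pow_ne_zero k (mk_ne_zero hlI)) h

/-- Multiplication by an element of degree `t` is a graded homomorphism `m^k → R/I` of degree `t`. -/
lemma mulPow_le (hl : l ∈ Rk n 1) (k t : ℕ) :
    (degQ I t).map (mulPow I l k) ≤ (gradedHomSub I k (t : ℤ)).map (evPow I hl k) := by
  rintro _ ⟨a, ha, rfl⟩
  refine ⟨(LinearMap.toSpanSingleton (MPoly n) (MPoly n ⧸ I) a).comp (Submodule.subtype _), ?_, ?_⟩
  · intro j f hf hj
    rw [← Nat.cast_add, degQZ_cast]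
    obtain ⟨F, hF, rfl⟩ := mem_degQ.1 ha
    exact mem_degQ.2 ⟨f * F, mul_mem_Rk hj hF, by rw [map_mul]; rfl⟩
  · change l ^ k • a = Ideal.Quotient.mk I l ^ k * a
    rw [← map_pow]; rfl

instance instFiniteDegQ (I : Ideal (MPoly n)) (k : ℕ) : Module.Finite ℂ (degQ I k) :=
  inferInstanceAs (Module.Finite ℂ ((Rk n k).map (Ideal.Quotient.mkₐ ℂ I).toLinearMap))

lemma map_evPow_le (hl : l ∈ Rk n 1) (k t : ℕ) :
    (gradedHomSub I k (t : ℤ)).map (evPow I hl k) ≤ degQ I (k + t) := by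
  rintro _ ⟨φ, hφ, rfl⟩
  exact evPow_mem hl hφ

lemma finrank_hom [I.IsPrime] (hl : l ∈ Rk n 1) (hlI : l ∉ I)
    (k t : ℕ) :
    finrank ℂ ((gradedHomSub I k (t : ℤ)).map (evPow I hl k)) =
      finrank ℂ (gradedHomSub I k (t : ℤ)) :=
  finrank_map_inj (evPow_injective hl hlI k) _

/-- If every form of degree `> t` of the saturation of `I + (l)` lies in `I + (l)`, all graded
homomorphisms `m^k → R/I` of degree `t` are multiplications, so that their space has dimension at
most the Hilbert function of `R/I` in degree `t`. -/
lemma finrank_hom_le [I.IsPrime] (hl : l ∈ Rk n 1) (hlI : l ∉ I)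
    (hI : IsHomogIdeal I) {k t : ℕ}
    (hc : ∀ i, t + 1 ≤ i → ∀ f ∈ Rk n i, f ∈ sect I l → f ∈ I ⊔ Ideal.span {l}) :
    finrank ℂ (gradedHomSub I k (t : ℤ)) ≤ hf I t := by
  have hle : (gradedHomSub I k (t : ℤ)).map (evPow I hl k) ≤ (degQ I t).map (mulPow I l k) := by
    rintro _ ⟨φ, hφ, rfl⟩
    -- successive division of `φ (l ^ k)` by `l`
    have hdiv : ∀ j i : ℕ, j + i = k → ∃ B ∈ Rk n (i + t),
        evPow I hl k φ = Ideal.Quotient.mk I l ^ j * Ideal.Quotient.mk I B := by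
      intro j
      induction j with
      | zero =>
        intro i hi
        obtain rfl : i = k := by omega
        obtain ⟨B, hB, hB'⟩ := mem_degQ.1 (evPow_mem hl hφ)
        exact ⟨B, hB, by rw [hB']; simp⟩
      | succ j ih =>
        intro i hi
        obtain ⟨B, hB, hB'⟩ := ih (i + 1) (by omega)
        have hBs : B ∈ sect I l := by
          refine mem_sat_iff.2 ⟨k, fun g hg => ?_⟩
          have hg' := Rk_le_mId_pow le_rfl hg
          have h1 := evPow_mul hl φ hg'
          obtain ⟨F, hF⟩ := Ideal.Quotient.mk_surjective (φ ⟨g, hg'⟩)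
          rw [← hF, hB', show k = j + (i + 1) by omega, pow_add] at h1
          have h2 : Ideal.Quotient.mk I l ^ j * Ideal.Quotient.mk I (g * B) =
              Ideal.Quotient.mk I l ^ j * Ideal.Quotient.mk I (l * (l ^ i * F)) := by
            simp only [map_mul, map_pow]
            linear_combination h1
          have h3 := mul_left_cancel₀ (pow_ne_zero j (mk_ne_zero hlI)) h2
          rw [Ideal.Quotient.eq] at h3
          have h4 : l * (l ^ i * F) ∈ I ⊔ Ideal.span {l} :=
            Ideal.mul_mem_right _ _ (Ideal.mem_sup_right (Ideal.mem_span_singleton_self l))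
          simpa using Ideal.add_mem _ (Ideal.mem_sup_left h3 : _ ∈ I ⊔ Ideal.span {l}) h4
        have hB2 := hc _ (by omega) B hB hBs
        rw [show i + 1 + t = 1 + (i + t) by omega] at hB
        obtain ⟨a, ha, b, hb, rfl⟩ := mem_sup_span hI hl hB hB2
        refine ⟨a, ha, ?_⟩
        rw [hB', map_add, Ideal.Quotient.eq_zero_iff_mem.2 (mem_Ik.1 hb).2, map_mul]
        ring
    obtain ⟨B, hB, h⟩ := hdiv k 0 (by omega)
    rw [zero_add] at hB
    exact ⟨_, mem_degQ.2 ⟨B, hB, rfl⟩, h.symm⟩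
  have h1 := Submodule.finrank_mono hle
  rw [finrank_hom hl hlI, finrank_map_inj (mulPow_injective hlI k)] at h1
  exact h1

/-- The dimensions of the spaces of graded homomorphisms `m^k → R/I` of degree `t` are bounded
independently of `k` by Hopf's inequality, when the Hilbert function is eventually linear. -/
lemma finrank_hom_bdd [I.IsPrime] (hl : l ∈ Rk n 1) (hlI : l ∉ I)
    {d g : ℤ} (hp : ∃ N : ℕ, ∀ k : ℕ, N ≤ k → (hf I k : ℤ) = d * k + 1 - g)
    (t : ℕ) : BddAbove (Set.range fun k : ℕ => finrank ℂ (gradedHomSub I k (t : ℤ))) := by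
  refine ⟨(d * t + 1).toNat, ?_⟩
  rintro _ ⟨k, rfl⟩
  dsimp only
  obtain ⟨N, hN⟩ := hp
  rcases Nat.eq_zero_or_pos (finrank ℂ (gradedHomSub I k (t : ℤ))) with h0 | h0
  · omega
  have hA : 0 < finrank ℂ (degQ I (N + k)) := by
    have : Nontrivial (degQ I (N + k)) := ⟨⟨⟨_, mem_degQ.2 ⟨l ^ (N + k), pow_mem_Rk_one hl _, rfl⟩⟩, 0,
      fun h => pow_ne_zero (N + k) (mk_ne_zero hlI) (by simpa using congrArg Subtype.val h)⟩⟩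
    exact finrank_pos
  have hfd := Submodule.finiteDimensional_of_le (map_evPow_le (I := I) hl k t)
  have h1 := hopf_mul (P := (gradedHomSub I k (t : ℤ)).map (evPow I hl k)) (Q := degQ I (N + k))
    (T := (degQ I (N + k + t)).map (mulPow I l k)) (by
      rintro _ ⟨φ, hφ, rfl⟩ y hy
      obtain ⟨f, hf, rfl⟩ := mem_degQ.1 hy
      have hf' : f ∈ mId n ^ k := Rk_le_mId_pow (by omega) hf
      refine ⟨φ ⟨f, hf'⟩, ?_, ?_⟩
      · have := hφ _ f hf' hf
        rw [← Nat.cast_add, degQZ_cast] at this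
        exact this
      · rw [mul_comm, evPow_mul hl φ hf']; rfl)
    (by rwa [finrank_hom hl hlI]) hA
  rw [finrank_hom hl hlI, finrank_map_inj (mulPow_injective hlI k)] at h1
  have h2 := hN (N + k) (by omega)
  have h3 := hN (N + k + t) (by omega)
  have h4 : finrank ℂ (gradedHomSub I k (t : ℤ)) + hf I (N + k) ≤ hf I (N + k + t) + 1 := h1
  push_cast at h2 h3
  have h5 : d * ((N : ℤ) + k + t) = d * (N + k) + d * t := by ring
  omega

/-- If the space of graded homomorphisms `m^k → R/I` of degree `t` has dimension at most the Hilbert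
function in degree `t`, so that they are all multiplications, the saturation of `I + (l)` agrees
with `I + (l)` in degree `t + 1`: for a form `F` in the saturation, division of `g F` by `l` is such
a homomorphism. -/
lemma sect_of_hom [I.IsPrime] (hl : l ∈ Rk n 1) (hlI : l ∉ I)
    (hI : IsHomogIdeal I) {t : ℕ}
    (hG : ∀ k, finrank ℂ (gradedHomSub I k (t : ℤ)) ≤ hf I t) {F : MPoly n} (hF : F ∈ Rk n (1 + t))
    (hFs : F ∈ sect I l) : F ∈ I ⊔ Ideal.span {l} := by
  obtain ⟨N, hN⟩ := mem_sat_iff.1 hFs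
  have hN' : ∀ g ∈ mId n ^ N, g * F ∈ I ⊔ Ideal.span {l} := by
    have h := mId_pow_le_of
      (J := Submodule.comap (LinearMap.mulRight (MPoly n) F) (I ⊔ Ideal.span {l})) hN
    exact fun g hg => h hg
  have hex : ∀ g : (mId n ^ N : Ideal (MPoly n)), ∃ c : MPoly n ⧸ I,
      Ideal.Quotient.mk I l * c = Ideal.Quotient.mk I (g.1 * F) := by
    intro g
    obtain ⟨b, hb, c, hc, h⟩ := Submodule.mem_sup.1 (hN' g.1 g.2)
    obtain ⟨c, rfl⟩ := Ideal.mem_span_singleton'.1 hc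
    refine ⟨Ideal.Quotient.mk I c, ?_⟩
    rw [← h, map_add, Ideal.Quotient.eq_zero_iff_mem.2 hb, zero_add, map_mul, mul_comm]
  choose q hq using hex
  have hl0 := mk_ne_zero (I := I) hlI
  let φ : (mId n ^ N : Ideal (MPoly n)) →ₗ[MPoly n] (MPoly n ⧸ I) :=
    { toFun := q
      map_add' := fun x y => mul_left_cancel₀ hl0 (by
        rw [hq, mul_add, hq, hq, ← map_add, ← add_mul]; rfl)
      map_smul' := fun c x => mul_left_cancel₀ hl0 (by
        change _ = Ideal.Quotient.mk I l * (Ideal.Quotient.mk I c * q x)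
        rw [hq, mul_left_comm, hq, ← map_mul, ← mul_assoc]; rfl) }
  have hφ : φ ∈ gradedHomSub I N (t : ℤ) := by
    intro j f hf hj
    rw [← Nat.cast_add, degQZ_cast]
    have h1 : f * F ∈ Rk n (1 + (j + t)) := by
      rw [show 1 + (j + t) = j + (1 + t) by omega]; exact mul_mem_Rk hj hF
    obtain ⟨a, ha, b, hb, h⟩ := mem_sup_span hI hl h1 (hN' f hf)
    refine mem_degQ.2 ⟨a, ha, mul_left_cancel₀ hl0 ?_⟩
    change _ = Ideal.Quotient.mk I l * q ⟨f, hf⟩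
    rw [hq, h, map_add, Ideal.Quotient.eq_zero_iff_mem.2 (mem_Ik.1 hb).2, zero_add, map_mul]
  have hfd := Submodule.finiteDimensional_of_le (map_evPow_le (I := I) hl N t)
  have heq := Submodule.eq_of_le_of_finrank_le (mulPow_le (I := I) hl N t) (by
    rw [finrank_hom hl hlI, finrank_map_inj (mulPow_injective hlI N)]; exact hG N)
  have h1 : evPow I hl N φ ∈ (degQ I t).map (mulPow I l N) := heq ▸ ⟨φ, hφ, rfl⟩
  obtain ⟨a, ha, h2⟩ := h1
  obtain ⟨B, hB, rfl⟩ := mem_degQ.1 ha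
  have h3 : Ideal.Quotient.mk I l * evPow I hl N φ = Ideal.Quotient.mk I (l ^ N * F) := hq _
  rw [← h2] at h3
  change _ * (Ideal.Quotient.mk I l ^ N * Ideal.Quotient.mk I B) = _ at h3
  have h4 : Ideal.Quotient.mk I l ^ N * Ideal.Quotient.mk I F =
      Ideal.Quotient.mk I l ^ N * Ideal.Quotient.mk I (l * B) := by
    simp only [map_mul, map_pow] at h3 ⊢
    linear_combination -h3
  have h5 := mul_left_cancel₀ (pow_ne_zero N hl0) h4
  rw [Ideal.Quotient.eq] at h5
  have h6 : l * B ∈ I ⊔ Ideal.span {l} :=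
    Ideal.mul_mem_right _ _ (Ideal.mem_sup_right (Ideal.mem_span_singleton_self l))
  simpa using Ideal.add_mem _ (Ideal.mem_sup_left h5 : _ ∈ I ⊔ Ideal.span {l}) h6

/-- Cohomological meaning of the saturation of `I + (l)` in degrees `> m`. -/
lemma h1_vanish_iff [I.IsPrime] (hl : l ∈ Rk n 1) (hlI : l ∉ I)
    (hI : IsHomogIdeal I) {d g : ℤ}
    (hp : ∃ N : ℕ, ∀ k : ℕ, N ≤ k → (hf I k : ℤ) = d * k + 1 - g) (m : ℕ) :
    (∀ i : ℤ, (m : ℤ) ≤ i → h1INat I i = 0) ↔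
      ∀ i, m + 1 ≤ i → hf (sect I l) i = hf (I ⊔ Ideal.span {l}) i := by
  have hcond : ∀ i, hf (sect I l) i = hf (I ⊔ Ideal.span {l}) i ↔
      ∀ f ∈ Rk n i, f ∈ sect I l → f ∈ I ⊔ Ideal.span {l} := by
    intro i
    rw [eq_comm, sect, hf_eq_iff (le_sat _)]
    constructor
    · intro h f hf hs
      exact (mem_Ik.1 (h ▸ mem_Ik.2 ⟨hf, hs⟩ : f ∈ Ik (I ⊔ Ideal.span {l}) i)).2
    · intro h
      refine le_antisymm (Ik_mono (le_sat _) i) fun f hf => ?_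
      exact mem_Ik.2 ⟨(mem_Ik.1 hf).1, h f (mem_Ik.1 hf).1 (mem_Ik.1 hf).2⟩
  simp only [hcond]
  constructor
  · intro h i hi F hF hFs
    obtain ⟨t, rfl⟩ : ∃ t, i = 1 + t := ⟨i - 1, by omega⟩
    refine sect_of_hom hl hlI hI (fun k => ?_) hF hFs
    have h1 := h t (by omega)
    rw [h1INat, hilbNat_cast, Nat.sub_eq_zero_iff_le] at h1
    exact (le_ciSup (finrank_hom_bdd hl hlI hp t) k).trans h1
  · intro h i hi
    obtain ⟨t, rfl⟩ : ∃ t : ℕ, i = t := ⟨i.toNat, by omega⟩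
    rw [h1INat, hilbNat_cast, Nat.sub_eq_zero_iff_le]
    exact ciSup_le fun k => finrank_hom_le hl hlI hI fun i hi => h i (by omega)

end Hom
end S17
end

/-! ### Curves on surfaces -/

section
open MvPolynomial Module
namespace S17
variable {n : ℕ}

lemma finsum_Ici (f : ℤ → ℤ) (a T : ℕ) (h : ∀ i : ℕ, a + T ≤ i → f i = 0) :
    ∑ᶠ i ∈ Set.Ici (a : ℤ), f i = ∑ k ∈ Finset.range T, f ((a + k : ℕ) : ℤ) := by
  have hinj : Function.Injective fun k : ℕ => ((a + k : ℕ) : ℤ) := fun x y hxy => by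
    simpa using hxy
  rw [finsum_mem_eq_sum_of_inter_support_eq (t := (Finset.range T).map ⟨_, hinj⟩), Finset.sum_map]
  · rfl
  · ext i
    simp only [Set.mem_inter_iff, Set.mem_Ici, Function.mem_support, Finset.coe_map,
      Function.Embedding.coeFn_mk, Set.mem_image, Finset.mem_coe, Finset.mem_range]
    constructor
    · rintro ⟨h1, h2⟩
      obtain ⟨j, rfl⟩ : ∃ j : ℕ, i = ((a + j : ℕ) : ℤ) := ⟨(i - a).toNat, by omega⟩
      refine ⟨⟨j, ?_, rfl⟩, h2⟩
      by_contra hj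
      exact h2 (h _ (by omega))
    · rintro ⟨⟨j, hj, rfl⟩, h2⟩
      exact ⟨by omega, h2⟩

/-- A form of degree `m` vanishing on a curve of degree `d > s m` vanishes on any integral surface of
degree `s` containing the curve, by comparison of Hilbert polynomials. -/
lemma curve_eq_surface {IS IC : Ideal (MPoly n)} (hS : IsHomogIdeal IS) (hSp : IS.IsPrime)
    (hsub : IS ≤ IC) {s d g c c₀ : ℤ}
    (hpS : ∃ N : ℕ, ∀ k : ℕ, N ≤ k → 2 * (hf IS k : ℤ) = s * (k * (k + 1)) + 2 * (c * k + c₀))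
    (hpC : ∃ N : ℕ, ∀ k : ℕ, N ≤ k → (hf IC k : ℤ) = d * k + 1 - g)
    {m : ℕ} (hm : s * m < d) : hf IC m = hf IS m := by
  refine ((hf_eq_iff hsub m).2 (le_antisymm (Ik_mono hsub m) fun f hf' => ?_)).symm
  obtain ⟨hfm, hfC⟩ := mem_Ik.1 hf'
  by_contra hcon
  have hfS : f ∉ IS := fun h => hcon (mem_Ik.2 ⟨hfm, h⟩)
  have hf0 : f ≠ 0 := fun h => hfS (h ▸ IS.zero_mem)
  have hreg : RegMod f IS := fun g hg => (hSp.mem_or_mem hg).resolve_left hfS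
  obtain ⟨N, hN⟩ := hpS
  obtain ⟨M, hM⟩ := hpC
  -- in degree `m + k` the inequality below reads `(d - s m) k ≤ const`
  set B : ℤ := s * (m * (m + 1)) + 2 * c * m - 2 * d * m - 2 + 2 * g with hB
  set k : ℕ := N + M + B.natAbs + 1 with hk
  have h1 := hf_sup_span hS hfm hf0 hreg k
  have hle : IS ⊔ Ideal.span {f} ≤ IC := sup_le hsub ((Ideal.span_singleton_le_iff_mem _).2 hfC)
  have h2 := hf_anti hle (m + k)
  have h3 := hN k (by omega)
  have h4 := hN (m + k) (by omega)
  have h5 := hM (m + k) (by omega)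
  have h6 : 2 * ((d - s * m) * k) ≤ B := by
    zify at h1 h2
    push_cast at h4 h5
    have e1 : 2 * ((d - s * m) * (k : ℤ)) =
        B + 2 * (d * (m + k) + 1 - g) - (s * ((m + k) * (m + k + 1)) + 2 * (c * (m + k) + c₀))
          + (s * (k * (k + 1)) + 2 * (c * k + c₀)) := by rw [hB]; ring
    rw [e1, ← h3, ← h4, ← h5]
    linarith
  have h7 : (k : ℤ) ≤ (d - s * m) * k := by nlinarith
  omega

lemma hilbZ_cast (I : Ideal (MPoly n)) (t : ℕ) : hilbZ I (t : ℤ) = hf I t := by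
  rw [hilbZ, hilbNat_cast]

lemma two_mul_div (z : ℤ) : 2 * (z * (z + 1) / 2) = z * (z + 1) :=
  Int.mul_ediv_cancel' (Int.even_mul_succ_self z).two_dvd

lemma two_mul_binom2 (z : ℤ) : 2 * binom2 z = z * (z - 1) := by
  rw [binom2]
  have := two_mul_div (z - 1)
  rw [sub_add_cancel, mul_comm (z - 1) z] at this
  exact this

lemma hf_one_of_nondeg {I : Ideal (MPoly n)} (h : Nondeg I) : hf I 1 = n := by
  have h1 := hf_add I 1
  have h2 : Ik I 1 = ⊥ := by
    rw [eq_bot_iff]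
    intro f hf
    exact h f (mem_Ik.1 hf).1 (mem_Ik.1 hf).2
  rw [h2, finrank_bot, finrank_Rk] at h1
  simpa using h1

lemma linForm_mem (c : Fin n → ℂ) : (∑ j : Fin n, C (c j) * X j : MPoly n) ∈ Rk n 1 :=
  Submodule.sum_mem _ fun j _ => by
    simpa using mul_mem_Rk (isHomogeneous_C (Fin n) (c j) : C (c j) ∈ Rk n 0) (isHomogeneous_X ℂ j)

lemma linForm_ne_zero (c : Fin n → ℂ) (j : Fin n) (hj : c j ≠ 0) :
    (∑ i : Fin n, C (c i) * X i : MPoly n) ≠ 0 := by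
  intro h
  have h1 := congrArg (eval (Pi.single j 1)) h
  simp only [map_sum, map_mul, eval_C, eval_X, map_zero, Pi.single_apply, mul_ite, mul_one,
    mul_zero, Finset.sum_ite_eq', Finset.mem_univ, if_true] at h1
  exact hj h1

/-- The numerical content of the assumption on the degree of the curve. -/
lemma degree_bound {r : ℕ} {d s : ℤ} (hr : 3 ≤ r) (hs1 : (r : ℤ) - 1 ≤ s)
    (hd : (s : ℚ) ^ 4 / (2 * ((r : ℚ) - 2)) ≤ (d : ℚ)) :
    1 ≤ d ∧ s ^ 3 ≤ 2 * ((r : ℤ) - 2) * ((d - 1) / s + 1) := by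
  have hs2 : 2 ≤ s := by omega
  have hr' : (0 : ℚ) < 2 * ((r : ℚ) - 2) := by
    have : (3 : ℚ) ≤ r := by exact_mod_cast hr
    linarith
  have h1 : s ^ 4 ≤ d * (2 * ((r : ℤ) - 2)) := by
    rw [div_le_iff₀ hr'] at hd
    exact_mod_cast hd
  have hs4 : 0 < s ^ 4 := by positivity
  have hd1 : 1 ≤ d := by
    by_contra hlt
    have : d * (2 * ((r : ℤ) - 2)) ≤ 0 := mul_nonpos_of_nonpos_of_nonneg (by omega) (by omega)
    omega
  refine ⟨hd1, ?_⟩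
  have h2 : d ≤ s * ((d - 1) / s + 1) := by
    have := Int.mul_ediv_add_emod (d - 1) s
    have := Int.emod_lt_of_pos (d - 1) (by omega : 0 < s)
    rw [mul_add, mul_one]
    omega
  have h3 : s * s ^ 3 ≤ s * (2 * ((r : ℤ) - 2) * ((d - 1) / s + 1)) := by
    calc s * s ^ 3 = s ^ 4 := by ring
      _ ≤ d * (2 * ((r : ℤ) - 2)) := h1
      _ ≤ (s * ((d - 1) / s + 1)) * (2 * ((r : ℤ) - 2)) :=
          mul_le_mul_of_nonneg_right h2 (by omega)
      _ = _ := by ring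
  exact le_of_mul_le_mul_left h3 (by omega)

/-- The value of the Hilbert function of the curve in degree `m = ⌊(d - 1) / s⌋`. -/
lemma hilb_curve_m {r : ℕ} {d s π pa g : ℤ} (hr : 3 ≤ r) (hs1 : (r : ℤ) - 1 ≤ s)
    {IS IC : Ideal (MPoly (r + 1))} (hsurf : IsSurface IS) (hsnd : Nondeg IS)
    (hsinv : SurfInv IS s π pa) (hcinv : ∃ N : ℕ, ∀ k : ℕ, N ≤ k → (hf IC k : ℤ) = d * k + 1 - g)
    (hsub : IS ≤ IC) (hd : (s : ℚ) ^ 4 / (2 * ((r : ℚ) - 2)) ≤ (d : ℚ)) {m : ℕ}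
    (hm : (m : ℤ) = (d - 1) / s) :
    2 * (hf IC m : ℤ) = s * (m * (m + 1)) + 2 * ((1 - π) * m + (1 + pa)) := by
  obtain ⟨hd1, hb⟩ := degree_bound hr hs1 hd
  obtain ⟨hSh, hSp, -⟩ := hsurf
  obtain ⟨S, rfl⟩ : ∃ S : ℕ, s = S := ⟨s.toNat, by omega⟩
  have hpS : ∃ N : ℕ, ∀ k : ℕ, N ≤ k →
      2 * (hf IS k : ℤ) = (S : ℤ) * (k * (k + 1)) + 2 * ((1 - π) * k + (1 + pa)) := by
    obtain ⟨N, hN⟩ := hsinv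
    refine ⟨N.toNat, fun k hk => ?_⟩
    have h1 := hN k (by omega)
    rw [hilbZ_cast] at h1
    rw [h1]
    linear_combination (S : ℤ) * two_mul_div k
  have hX : (X 0 : MPoly (r + 1)) ∉ IS := fun h =>
    X_ne_zero (R := ℂ) (0 : Fin (r + 1)) (hsnd _ (isHomogeneous_X ℂ _) h)
  have hsat := isSat_of_isPrime hSp (isHomogeneous_X ℂ _) hX
  have hsm : (S : ℤ) * m < d := by
    have := Int.mul_ediv_add_emod (d - 1) S
    have := Int.emod_nonneg (d - 1) (by omega : (S : ℤ) ≠ 0)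
    rw [hm]
    omega
  rw [curve_eq_surface hSh hSp hsub hpS hcinv hsm]
  obtain ⟨e, rfl⟩ : ∃ e, r = e + 2 := ⟨r - 2, by omega⟩
  refine surface_hilb hSh hSp (e := e) (by omega) (hf_one_of_nondeg hsnd) (by omega) hsat hpS ?_
  rw [← hm] at hb
  push_cast at hb
  rw [add_sub_cancel_right] at hb
  exact_mod_cast hb

end S17
end

/-- Proposition 3.8.  Let `S ⊆ ℙ^r` be an integral nondegenerate surface of
degree `s ≥ r-1 ≥ 2`, sectional genus `π` and arithmetic genus `p_a(S)`, and let `C ⊆ S` be an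
integral nondegenerate curve of degree `d ≥ s⁴/(2(r-2))`, genus `p_a(C)`, with general
hyperplane section `Γ`.  With `m = (d-1)/s`, `ε = (d-1)%s`:
(i)  `p_a(C) = binom(m,2)s + m(ε+π) - p_a(S) + ∑_{i≥m+1} (d - Δh_C(i))`;
(ii) `p_a(C) ≤ binom(m,2)s + m(ε+π) - p_a(S) + ∑_{i≥m+1} (d - h_Γ(i))`; and
(iii) equality holds in (ii) iff `h¹(ℙ^r, I_C(i)) = 0` for all `i ≥ m`. -/
theorem statement_17 (r : ℕ) (d s π pa g : ℤ) (hr : 3 ≤ r) (hs1 : (r : ℤ) - 1 ≤ s)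
    (IS IC : Ideal (MPoly (r + 1)))
    (hsurf : IsSurface IS) (hsnd : Nondeg IS) (hsinv : SurfInv IS s π pa)
    (hcurve : IsCurve IC) (hcnd : Nondeg IC) (hcinv : CurveInv IC d g)
    (hsub : IS ≤ IC)
    (hd : (s : ℚ) ^ 4 / (2 * ((r : ℚ) - 2)) ≤ (d : ℚ)) :
    g = binom2 ((d - 1) / s) * s + ((d - 1) / s) * ((d - 1) % s + π) - pa
        + (∑ᶠ i ∈ Set.Ici ((d - 1) / s + 1), (d - (hilbZ IC i - hilbZ IC (i - 1)))) ∧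
    GenericForms (r + 1) 1 fun L =>
      g ≤ binom2 ((d - 1) / s) * s + ((d - 1) / s) * ((d - 1) % s + π) - pa
          + (∑ᶠ i ∈ Set.Ici ((d - 1) / s + 1), (d - hilbZ (sect IC (L 0)) i)) ∧
      (g = binom2 ((d - 1) / s) * s + ((d - 1) / s) * ((d - 1) % s + π) - pa
            + (∑ᶠ i ∈ Set.Ici ((d - 1) / s + 1), (d - hilbZ (sect IC (L 0)) i))
        ↔ ∀ i : ℤ, (d - 1) / s ≤ i → h1INat IC i = 0) := by
  have hpC : ∃ N : ℕ, ∀ k : ℕ, N ≤ k → (S17.hf IC k : ℤ) = d * k + 1 - g := by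
    obtain ⟨N, hN⟩ := hcinv
    refine ⟨N.toNat, fun k hk => ?_⟩
    have h1 := hN k (by omega)
    rwa [S17.hilbZ_cast] at h1
  have hd1 := (S17.degree_bound hr hs1 hd).1
  obtain ⟨m, hm⟩ : ∃ m : ℕ, (m : ℤ) = (d - 1) / s :=
    ⟨((d - 1) / s).toNat, Int.toNat_of_nonneg (Int.ediv_nonneg (by omega) (by omega))⟩
  have hCm := S17.hilb_curve_m hr hs1 hsurf hsnd hsinv hpC hsub hd hm
  have hε := Int.mul_ediv_add_emod (d - 1) s
  rw [← hm] at hε ⊢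
  obtain ⟨N, hN⟩ := hpC
  have hm1 : (m : ℤ) + 1 = ((m + 1 : ℕ) : ℤ) := by push_cast; rfl
  have hbin := S17.two_mul_binom2 m
  -- telescoping sum of the first differences of the Hilbert function of the curve
  have htel : ∀ T : ℕ, N ≤ T →
      g = binom2 m * s + m * ((d - 1) % s + π) - pa + ∑ k ∈ Finset.range T,
        (d - ((S17.hf IC (m + 1 + k) : ℤ) - S17.hf IC (m + k))) := by
    intro T hT
    have h1 : ∀ T : ℕ, ∑ k ∈ Finset.range T,
        (d - ((S17.hf IC (m + 1 + k) : ℤ) - S17.hf IC (m + k))) =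
          d * T - S17.hf IC (m + T) + S17.hf IC m := by
      intro T
      induction T with
      | zero => simp
      | succ T ih =>
        rw [Finset.sum_range_succ, ih, show m + 1 + T = m + (T + 1) by omega]
        push_cast
        ring
    have h2 := hN (m + T) (by omega)
    rw [h1, h2]
    push_cast
    have h3 : d = s * m + (d - 1) % s + 1 := by omega
    generalize (d - 1) % s = ε at *
    subst h3
    refine mul_left_cancel₀ (two_ne_zero (α := ℤ)) ?_
    linear_combination (-s) * hbin - hCm
  refine ⟨?_, MvPolynomial.X (0, 0), MvPolynomial.X_ne_zero _, fun c hc => ?_⟩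
  · rw [hm1, S17.finsum_Ici _ (m + 1) N, htel N le_rfl]
    · congr 1
      refine Finset.sum_congr rfl fun k _ => ?_
      rw [S17.hilbZ_cast, show ((m + 1 + k : ℕ) : ℤ) - 1 = ((m + k : ℕ) : ℤ) by push_cast; ring,
        S17.hilbZ_cast]
    · intro i hi
      rw [S17.hilbZ_cast, show (i : ℤ) - 1 = ((i - 1 : ℕ) : ℤ) by omega, S17.hilbZ_cast,
        hN i (by omega), hN (i - 1) (by omega), Nat.cast_sub (by omega)]
      push_cast
      ring
  · obtain ⟨hCh, hCp, -⟩ := hcurve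
    have hlmem := S17.linForm_mem (c 0)
    have hl0 := S17.linForm_ne_zero (c 0) 0 (by simpa using hc)
    dsimp only
    generalize (∑ j : Fin (r + 1), MvPolynomial.C (c 0 j) * MvPolynomial.X j : MPoly (r + 1)) = l at *
    have hlI : l ∉ IC := fun h => hl0 (hcnd l hlmem h)
    have hreg : S17.RegMod l IC := fun g hg => (hCp.mem_or_mem hg).resolve_left hlI
    have hsec : ∀ k, (S17.hf (IC ⊔ Ideal.span {l}) (k + 1) : ℤ) =
        S17.hf IC (k + 1) - S17.hf IC k := by
      intro k
      have := S17.hf_sup_span hCh hlmem hl0 hreg k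
      rw [add_comm 1 k] at this
      omega
    obtain ⟨M, hM⟩ := S17.hf_sat_eq_large (S17.isHomog_sup_span hCh hlmem)
    have hanti : ∀ k, S17.hf (sect IC l) k ≤ S17.hf (IC ⊔ Ideal.span {l}) k :=
      fun k => S17.hf_anti (S17.le_sat _) k
    have hzero : ∀ i, m + 1 + (N + M) ≤ i → S17.hf (sect IC l) i = S17.hf (IC ⊔ Ideal.span {l}) i :=
      fun i hi => hM i (by omega)
    have hsum : ∑ᶠ i ∈ Set.Ici ((m : ℤ) + 1), (d - hilbZ (sect IC l) i) =
        ∑ k ∈ Finset.range (N + M), (d - (S17.hf (sect IC l) (m + 1 + k) : ℤ)) := by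
      rw [hm1, S17.finsum_Ici _ (m + 1) (N + M)]
      · simp only [S17.hilbZ_cast]
      · intro i hi
        obtain ⟨j, rfl⟩ : ∃ j, i = j + 1 := ⟨i - 1, by omega⟩
        rw [S17.hilbZ_cast, hzero _ hi, hsec, hN _ (by omega), hN _ (by omega)]
        push_cast
        ring
    have hle : ∀ k ∈ Finset.range (N + M),
        d - ((S17.hf IC (m + 1 + k) : ℤ) - S17.hf IC (m + k)) ≤
          d - (S17.hf (sect IC l) (m + 1 + k) : ℤ) := by
      intro k _
      have h1 := hsec (m + k)
      have h2 := hanti (m + k + 1)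
      rw [show m + 1 + k = m + k + 1 by omega]
      omega
    rw [hsum, S17.h1_vanish_iff hlmem hlI hCh ⟨N, hN⟩ m]
    have ht := htel (N + M) (by omega)
    refine ⟨ht.le.trans (by linarith [Finset.sum_le_sum hle]), ?_⟩
    constructor
    · intro h i hi
      have h1 := (Finset.sum_eq_sum_iff_of_le hle).1 (by linarith)
      obtain ⟨k, rfl⟩ : ∃ k, i = m + 1 + k := ⟨i - (m + 1), by omega⟩
      rcases lt_or_ge k (N + M) with hk | hk
      · have h2 := h1 k (Finset.mem_range.2 hk)
        have h3 := hsec (m + k)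
        rw [show m + 1 + k = m + k + 1 by omega] at h2 ⊢
        omega
      · exact hzero _ (by omega)
    · intro h
      refine ht.trans ?_
      congr 1
      refine Finset.sum_congr rfl fun k _ => ?_
      have h3 := hsec (m + k)
      rw [h _ (by omega), show m + 1 + k = m + k + 1 by omega, h3]
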